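/- Let R be a commutative noetherian ring of finite Krull dimension. If R satisfies one of the following conditions: (i) R is a localization of a finitely generated algebra over a commutative noetherian local ring; (ii) R has prime characteristic p and R is finitely generated as a module over its subring R^p of p-th powers; (iii) R is a localization of a finitely generated algebra over the ring of integers ℤ; then i(R) < ∞, i.e. there exists an integer k ≥ 0 such that \overline{J}^n ⊆ J^{n−k} for every ideal J of R and every n ≥ k. -/

import Mathlib

/-!
Throughout, `\overline J ^ n` is compared with `J ^ n` through reductions `J ≤ K`,
`K ^ (m + 1) ≤ J * K ^ m`: the integral closure of `J` is contained in such a `K`, so a bound `BSk R R k`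
for reductions suffices (`intDimBound_of_BSk`).

*Dévissage.* Uniform Briançon-Skoda bounds (`BSk`) do not pass to extensions of modules by themselves; they do
so together with uniform Artin-Rees bounds (`UARk`), the latter phrased as a uniform killing property of
Koszul cycles of `X[[U]]` on the elements `U j - a j`. By noetherian induction both hold for all finite
modules as soon as, for every prime `P`, some `c ≠ 0` in `R ⧸ P` multiplies all obstructions to zero up to a
uniform shift: this is `GEN (R ⧸ P)`, and `intDimBound_of_gen` is the resulting criterion.

*Domains of characteristic `p` with finite Frobenius* (`GEN.of_frob`). A generic free basis over the
subring of `p`-th powers supplies `p ^ e`-root-linear maps sending a given `d ≠ 0` to the fixed element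
`c ^ 3` (`FS.te`). Relations multiplied by elements of some `K ^ m` and raised to the power `p ^ e` thus come
down to relations multiplied by `c ^ 3`. The loss is governed by the number of generators of a reduction, and
generic linear combinations over a polynomial extension reduce this number to the dimension plus one. Together
with dévissage this settles case (ii).

*Domains of characteristic zero, finite over a domain `A` of finite global dimension*
(`GEN.of_finite_over`). A separability element of `D` over `A` makes `D`-modules retracts, up to a factor,
of modules induced from `A`; hence every ideal `N` has a resolution of bounded length that is, up to `c`, a
retract of finite free modules. As `N = K ^ m` has exact Koszul complexes in the relevant
range, lifting along the resolution and taking traces yields the bounds for the ring itself.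

*Complete local rings.* By Cohen structure theory a complete local domain with perfect residue field is
finite over a power series ring over a field or a ring of Witt vectors, of finite global dimension
(`gen_charZero`), or has finite Frobenius (`gen_charP`).

*Local rings* (`intDimBound_of_local`). `exists_T` adjoins all `p`-power roots of lifts of a `p`-basis
of the residue field, which becomes perfect. Completing gives a complete local ring whose ideals contract
back, and bounds descend (`intDimBound_of_contract`).

*Finitely generated algebras.* Homogenization replaces an algebra `A` over `B`, near a prime `q` of `B`, by a
noetherian local ring (`exists_bound_at_prime`). Over `ℤ` a generic bound coming from Noether normalization and
the characteristic zero case leaves finitely many primes (`intDimBound_of_finiteType_pid`). Bounds pass to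
localizations, which settles (i) and (iii).
-/

universe u

/-- An element `x` is integral over the ideal `J`: it satisfies an equation
`x ^ n + a 1 * x ^ (n - 1) + ⋯ + a n = 0` with `a i ∈ J ^ i` for `1 ≤ i ≤ n`. -/
def IsIntegralOverIdeal {R : Type*} [CommRing R] (J : Ideal R) (x : R) : Prop :=
  ∃ n : ℕ, 0 < n ∧ ∃ a : ℕ → R, (∀ i, 1 ≤ i → i ≤ n → a i ∈ J ^ i) ∧
    x ^ n + ∑ i ∈ Finset.Icc 1 n, a i * x ^ (n - i) = 0

/-- The integral closure `\overline J` of an ideal `J`: the ideal of all elements integral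
over `J` (realized as the ideal generated by this set, which is in fact already an ideal). -/
def Ideal.intClosure {R : Type*} [CommRing R] (J : Ideal R) : Ideal R :=
  Ideal.span {x | IsIntegralOverIdeal J x}

/-- `IntDimBound R k` : `\overline J ^ n ⊆ J ^ (n - k)` for every ideal `J` of `R` and
every `n ≥ k`. -/
def IntDimBound (R : Type*) [CommRing R] (k : ℕ) : Prop :=
  ∀ (J : Ideal R) (n : ℕ), k ≤ n → (Ideal.intClosure J) ^ n ≤ J ^ (n - k)

/-- `R` is essentially of finite type over a noetherian local ring: `R` is a localization of
a finitely generated algebra over a commutative noetherian local ring. -/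
inductive IsEssentiallyOfFiniteTypeOverLocalRing (R : Type u) [CommRing R] : Prop where
  | intro : ∀ (S A : Type u) [CommRing S] [CommRing A] [IsNoetherianRing S] [IsLocalRing S]
      [Algebra S A] (_ : Algebra.FiniteType S A) [Algebra A R] (M : Submonoid A)
      (_ : IsLocalization M R), IsEssentiallyOfFiniteTypeOverLocalRing R

/-- `R` is essentially of finite type over `ℤ`: `R` is a localization of a finitely generated
`ℤ`-algebra. -/
inductive IsEssentiallyOfFiniteTypeOverInt (R : Type u) [CommRing R] : Prop where
  | intro : ∀ (A : Type u) [CommRing A] (_ : Algebra.FiniteType ℤ A) [Algebra A R]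
      (M : Submonoid A) (_ : IsLocalization M R), IsEssentiallyOfFiniteTypeOverInt R

/-- `R` has prime characteristic `p` and is finitely generated as a module over its subring
`R^p` of `p`-th powers; the latter is expressed as finiteness of the Frobenius ring
homomorphism `x ↦ x ^ p`. -/
def ModuleFiniteOverPthPowers (R : Type u) [CommRing R] : Prop :=
  ∃ p : ℕ, p.Prime ∧ CharP R p ∧ ∃ f : R →+* R, (∀ x : R, f x = x ^ p) ∧ f.Finite

set_option linter.all false

namespace UBS

/-! ### Koszul complexes with power series coefficients -/

section Koszul
variable {σ : Type*} [Fintype σ] [LinearOrder σ] {R : Type*} [CommRing R]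
  {N : Type*} [AddCommGroup N] [Module R N]

/-- The sign of moving the `j`-th basis vector to its place in the wedge product over `A`. -/
def sg (j : σ) (A : Finset σ) : ℤ := (-1) ^ (A.filter (· < j)).card

lemma sg_sq (j : σ) (A : Finset σ) : sg j A * sg j A = 1 := by
  unfold sg; rw [← pow_add, ← two_mul, pow_mul]; simp

lemma sg_insert_self (j : σ) (A : Finset σ) : sg j (insert j A) = sg j A := by
  unfold sg; rw [Finset.filter_insert]; simp

lemma sg_erase_self (j : σ) (A : Finset σ) : sg j (A.erase j) = sg j A := by
  unfold sg
  congr 2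
  ext i
  simp only [Finset.mem_filter, Finset.mem_erase]
  grind

lemma sg_insert (j i : σ) (A : Finset σ) (hi : i ∉ A) :
    sg j (insert i A) = if i < j then - sg j A else sg j A := by
  unfold sg; rw [Finset.filter_insert]
  split_ifs with h
  · rw [Finset.card_insert_of_notMem (by simp [hi]), pow_succ]; ring
  · rfl

lemma sg_erase (j i : σ) (A : Finset σ) (hi : i ∈ A) :
    sg j (A.erase i) = if i < j then - sg j A else sg j A := by
  have := sg_insert j i (A.erase i) (Finset.notMem_erase i A)
  rw [Finset.insert_erase hi] at this
  rw [this]; split_ifs <;> simp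

variable (R N) in
/-- Contraction with the `j`-th basis vector on the exterior algebra. -/
def pd (j : σ) : Module.End R (Finset σ → N) where
  toFun z A := if j ∈ A then 0 else sg j A • z (insert j A)
  map_add' x y := by ext A; simp; split_ifs <;> simp
  map_smul' r x := by ext A; simp; split_ifs <;> simp [smul_comm _ r]

variable (R N) in
/-- Exterior multiplication by the `j`-th basis vector. -/
def ex (j : σ) : Module.End R (Finset σ → N) where
  toFun z A := if j ∈ A then sg j A • z (A.erase j) else 0
  map_add' x y := by ext A; simp; split_ifs <;> simp
  map_smul' r x := by ext A; simp; split_ifs <;> simp [smul_comm _ r]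

lemma pd_apply (j : σ) (z : Finset σ → N) (A : Finset σ) :
    pd R N j z A = if j ∈ A then 0 else sg j A • z (insert j A) := rfl
lemma ex_apply (j : σ) (z : Finset σ → N) (A : Finset σ) :
    ex R N j z A = if j ∈ A then sg j A • z (A.erase j) else 0 := rfl

lemma pd_sq (j : σ) : pd R N j * pd R N j = 0 := by
  refine LinearMap.ext fun z => funext fun A => ?_; simp [pd_apply]

lemma pd_anti (i j : σ) : pd R N i * pd R N j = - (pd R N j * pd R N i) := by
  by_cases hij : i = j
  · subst hij; simp [pd_sq]
  refine LinearMap.ext fun z => funext fun A => ?_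
  simp only [Module.End.mul_apply, pd_apply, LinearMap.neg_apply, Pi.neg_apply,
    Finset.mem_insert, hij, Ne.symm hij, false_or]
  by_cases hi : i ∈ A <;> by_cases hj : j ∈ A <;> simp [hi, hj]
  rw [sg_insert _ _ _ hi, sg_insert _ _ _ hj, smul_smul, smul_smul, ← neg_smul,
    Finset.insert_comm]
  congr 1
  rcases lt_or_gt_of_ne hij with h | h
  · rw [if_pos h, if_neg (not_lt_of_gt h)]; ring
  · rw [if_neg (not_lt_of_gt h), if_pos h]; ring

lemma pd_ex_self (j : σ) : pd R N j * ex R N j + ex R N j * pd R N j = 1 := by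
  refine LinearMap.ext fun z => funext fun A => ?_
  simp only [Module.End.mul_apply, pd_apply, ex_apply, LinearMap.add_apply, Pi.add_apply,
    Module.End.one_apply]
  by_cases hj : j ∈ A
  · simp [hj, sg_erase_self, smul_smul, sg_sq, Finset.insert_erase hj]
  · simp [hj, sg_insert_self, smul_smul, sg_sq]

lemma pd_ex (i j : σ) (hij : i ≠ j) :
    pd R N i * ex R N j + ex R N j * pd R N i = 0 := by
  refine LinearMap.ext fun z => funext fun A => ?_
  simp only [Module.End.mul_apply, pd_apply, ex_apply, LinearMap.add_apply, Pi.add_apply,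
    Finset.mem_insert, Finset.mem_erase, LinearMap.zero_apply, Pi.zero_apply]
  by_cases hi : i ∈ A <;> by_cases hj : j ∈ A <;> simp [hi, hj, hij, hij.symm]
  rw [sg_insert _ _ _ hi, sg_erase _ _ _ hj, smul_smul, smul_smul,
    Finset.erase_insert_of_ne hij, ← add_smul]
  convert zero_smul ℤ _ using 2
  rcases lt_or_gt_of_ne hij with h | h
  · rw [if_pos h, if_neg (not_lt_of_gt h)]; ring
  · rw [if_neg (not_lt_of_gt h), if_pos h]; ring

variable (σ) in
/-- Coefficientwise action of an endomorphism. -/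
def pw : Module.End R N →+* Module.End R (Finset σ → N) where
  toFun f := f.compLeft (Finset σ)
  map_one' := rfl
  map_mul' _ _ := rfl
  map_zero' := rfl
  map_add' _ _ := rfl

@[simp] lemma pw_apply (f : Module.End R N) (z : Finset σ → N) (A : Finset σ) :
    pw σ f z A = f (z A) := rfl

lemma pw_pd (f : Module.End R N) (j : σ) : pw σ f * pd R N j = pd R N j * pw σ f := by
  refine LinearMap.ext fun z => funext fun A => ?_; simp [pd_apply]; split_ifs <;> simp

lemma pw_ex (f : Module.End R N) (j : σ) : pw σ f * ex R N j = ex R N j * pw σ f := by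
  refine LinearMap.ext fun z => funext fun A => ?_; simp [ex_apply]; split_ifs <;> simp

/-- The Koszul differential of a family of endomorphisms. -/
def kd (f : σ → Module.End R N) : Module.End R (Finset σ → N) := ∑ j, pw σ (f j) * pd R N j

lemma kd_apply (f : σ → Module.End R N) (z : Finset σ → N) (A : Finset σ) :
    kd f z A = ∑ j, if j ∈ A then 0 else sg j A • f j (z (insert j A)) := by
  simp only [kd, LinearMap.sum_apply, Finset.sum_apply, Module.End.mul_apply, pw_apply, pd_apply]
  refine Finset.sum_congr rfl fun j _ => ?_
  split_ifs <;> simp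

lemma kd_sub (f g : σ → Module.End R N) : kd (fun j => f j - g j) = kd f - kd g := by
  simp [kd, sub_mul, Finset.sum_sub_distrib]

lemma sum_antisymm_zero {ι G : Type*} [AddCommGroup G] [DecidableEq ι] (s : Finset ι)
    (g : ι → ι → G) (h0 : ∀ i, g i i = 0) (h1 : ∀ i j, g i j + g j i = 0) :
    ∑ i ∈ s, ∑ j ∈ s, g i j = 0 := by
  induction s using Finset.induction_on with
  | empty => simp
  | insert a s ha ih =>
    rw [Finset.sum_insert ha, Finset.sum_insert ha]
    simp_rw [Finset.sum_insert ha]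
    rw [Finset.sum_add_distrib, ih, h0, zero_add, add_zero, ← Finset.sum_add_distrib]
    exact Finset.sum_eq_zero fun i _ => h1 _ _

lemma kd_sq (f : σ → Module.End R N) (hf : ∀ i j, f i * f j = f j * f i) :
    kd f * kd f = 0 := by
  unfold kd
  rw [Finset.sum_mul_sum]
  have key : ∀ i j, pw σ (f i) * pd R N i * (pw σ (f j) * pd R N j)
      = pw σ (f i * f j) * (pd R N i * pd R N j) := fun i j => by
    rw [map_mul, mul_assoc, ← mul_assoc (pd R N i), ← pw_pd]; simp only [mul_assoc]
  simp_rw [key]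
  apply sum_antisymm_zero
  · intro i; rw [pd_sq, mul_zero]
  · intro i j; rw [hf i j, pd_anti i j, ← mul_add, neg_add_cancel, mul_zero]

/-- Exterior multiplication is a null-homotopy for the action of a coefficient. -/
lemma kd_ex (f : σ → Module.End R N) (j : σ) :
    kd f * ex R N j + ex R N j * kd f = pw σ (f j) := by
  unfold kd
  rw [Finset.sum_mul, Finset.mul_sum, ← Finset.sum_add_distrib, Finset.sum_eq_single j]
  · rw [← mul_assoc (ex R N j), ← pw_ex, mul_assoc, mul_assoc, ← mul_add, pd_ex_self, mul_one]
  · intro i _ hij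
    rw [← mul_assoc (ex R N j), ← pw_ex, mul_assoc, mul_assoc, ← mul_add, pd_ex i j hij, mul_zero]
  · simp

/-- The differential only sees the components of positive exterior degree. -/
lemma kd_congr (f : σ → Module.End R N) {z w : Finset σ → N} (h : ∀ A, A ≠ ∅ → z A = w A) :
    kd f z = kd f w := by
  ext A
  rw [kd_apply, kd_apply]
  refine Finset.sum_congr rfl fun j _ => ?_
  rw [h _ (Finset.insert_ne_empty j A)]

lemma kd_mem (f : σ → Module.End R N) {P Q : AddSubgroup N}
    (hPQ : ∀ j, ∀ x ∈ P, f j x ∈ Q) (z : Finset σ → N) (hz : ∀ A, z A ∈ P) (A : Finset σ) :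
    kd f z A ∈ Q := by
  rw [kd_apply]
  refine AddSubgroup.sum_mem _ fun j _ => ?_
  split_ifs
  · exact zero_mem _
  · exact AddSubgroup.zsmul_mem _ (hPQ j _ (hz _)) _

end Koszul

section PowerSeries
variable {σ : Type*} [Fintype σ] [LinearOrder σ] {R : Type*} [CommRing R]
  {X : Type*} [AddCommGroup X] [Module R X]

/-- Total degree of an exponent. -/
def dg (α : σ → ℕ) : ℕ := ∑ i, α i

/-- raise the `j`-th exponent -/
def up (j : σ) (α : σ → ℕ) : σ → ℕ := Function.update α j (α j + 1)
/-- lower the `j`-th exponent -/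
def lo (j : σ) (α : σ → ℕ) : σ → ℕ := Function.update α j (α j - 1)

lemma dg_up (j : σ) (α : σ → ℕ) : dg (up j α) = dg α + 1 := by
  unfold dg up
  rw [← Finset.add_sum_erase _ _ (Finset.mem_univ j), ← Finset.add_sum_erase _ α (Finset.mem_univ j)]
  rw [Finset.sum_congr rfl (g := α)]
  · simp; ring
  · intro i hi; simp [Finset.ne_of_mem_erase hi]

lemma up_lo (j : σ) (α : σ → ℕ) (h : α j ≠ 0) : up j (lo j α) = α := by
  ext i; unfold up lo; by_cases hi : i = j
  · subst hi; simp; omega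
  · simp [hi]

lemma lo_up (j : σ) (α : σ → ℕ) : lo j (up j α) = α := by
  ext i; unfold up lo; by_cases hi : i = j
  · subst hi; simp
  · simp [hi]

lemma up_ne (j : σ) (α : σ → ℕ) : up j α j ≠ 0 := by simp [up]

lemma up_of_ne {i j : σ} (h : i ≠ j) (α : σ → ℕ) : up j α i = α i := by simp [up, h]
lemma lo_of_ne {i j : σ} (h : i ≠ j) (α : σ → ℕ) : lo j α i = α i := by simp [lo, h]

lemma dg_lo (j : σ) (α : σ → ℕ) (h : α j ≠ 0) : dg (lo j α) + 1 = dg α := by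
  conv_rhs => rw [← up_lo j α h, dg_up]

lemma lo_up_comm {i j : σ} (h : i ≠ j) (α : σ → ℕ) : lo i (up j α) = up j (lo i α) := by
  unfold lo up
  rw [Function.update_of_ne h, Function.update_of_ne h.symm, Function.update_comm h]

lemma lo_lo (i j : σ) (α : σ → ℕ) : lo i (lo j α) = lo j (lo i α) := by
  by_cases h : i = j
  · rw [h]
  · unfold lo; rw [Function.update_of_ne h, Function.update_of_ne (Ne.symm h), Function.update_comm h]

variable (R X) in
/-- Multiplication by the `j`-th variable on power series with coefficients in `X`. -/
def U (j : σ) : Module.End R ((σ → ℕ) → X) where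
  toFun n α := if α j = 0 then 0 else n (lo j α)
  map_add' x y := by ext A; simp; split_ifs <;> simp
  map_smul' r x := by ext A; simp

variable (R X) in
/-- Division by the `j`-th variable. -/
def dn (j : σ) : Module.End R ((σ → ℕ) → X) where
  toFun n α := n (up j α)
  map_add' x y := rfl
  map_smul' r x := rfl

lemma U_apply (j : σ) (n : (σ → ℕ) → X) (α : σ → ℕ) :
    U R X j n α = if α j = 0 then 0 else n (lo j α) := rfl
@[simp] lemma dn_apply (j : σ) (n : (σ → ℕ) → X) (α : σ → ℕ) :
    dn R X j n α = n (up j α) := rfl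

lemma U_comm (i j : σ) : U R X i * U R X j = U R X j * U R X i := by
  by_cases h : i = j
  · rw [h]
  refine LinearMap.ext fun n => funext fun α => ?_
  simp only [Module.End.mul_apply, U_apply, lo_of_ne h, lo_of_ne (Ne.symm h), lo_lo i j]
  split_ifs <;> rfl

lemma dn_U_self (j : σ) : dn R X j * U R X j = 1 := by
  refine LinearMap.ext fun n => funext fun α => ?_
  simp [U_apply, up_ne, lo_up]

lemma dn_U {i j : σ} (h : i ≠ j) : dn R X j * U R X i = U R X i * dn R X j := by
  refine LinearMap.ext fun n => funext fun α => ?_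
  simp [U_apply, up_of_ne h, lo_up_comm h]

/-- Koszul differential of `U` alone. -/
abbrev dU : Module.End R (Finset σ → (σ → ℕ) → X) := kd (U R X)

/-- Koszul differential of `a` alone. -/
abbrev da {N : Type*} [AddCommGroup N] [Module R N] (a : σ → R) :
    Module.End R (Finset σ → N) := kd (fun j => a j • 1)
end PowerSeries

/-! ### Contraction of the variables and killing of cycles -/

section Contraction
variable {σ : Type*} [Fintype σ] [LinearOrder σ] {R : Type*} [CommRing R]
  {X : Type*} [AddCommGroup X] [Module R X]

lemma kd_sum_zero_comm (f : σ → Module.End R X) (g : Module.End R X)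
    (h : ∀ j, g * f j = f j * g) : pw σ g * kd f = kd f * pw σ g := by
  unfold kd
  rw [Finset.mul_sum, Finset.sum_mul]
  refine Finset.sum_congr rfl fun j _ => ?_
  rw [← mul_assoc, ← map_mul, h, map_mul, mul_assoc, pw_pd, mul_assoc]

variable (R X) in
/-- The contracting homotopy for the `j`-th variable. -/
def hc (j : σ) : Module.End R (Finset σ → (σ → ℕ) → X) := ex R _ j * pw σ (dn R X j)

variable (R X) in
/-- The projection setting the `j`-th variable and the `j`-th basis vector to zero. -/
def pic (j : σ) : Module.End R (Finset σ → (σ → ℕ) → X) :=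
  pw σ (1 - U R X j * dn R X j) * (pd R _ j * ex R _ j)

lemma dU_hc (j : σ) : dU * hc R X j + hc R X j * dU = 1 - pic R X j := by
  have key : ∀ i, pw σ (U R X i) * pd R _ i * hc R X j + hc R X j * (pw σ (U R X i) * pd R _ i)
      = if i = j then 1 - pic R X j else 0 := by
    intro i
    unfold hc pic
    have e1 : pw σ (U R X i) * pd R _ i * (ex R _ j * pw σ (dn R X j))
        = pw σ (U R X i * dn R X j) * (pd R _ i * ex R _ j) := by
      rw [map_mul]; simp only [mul_assoc]; congr 1
      rw [← pw_ex, ← mul_assoc, ← pw_pd]; simp only [mul_assoc]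
    have e2 : ex R _ j * pw σ (dn R X j) * (pw σ (U R X i) * pd R _ i)
        = pw σ (dn R X j * U R X i) * (ex R _ j * pd R _ i) := by
      rw [map_mul, ← pw_ex]; simp only [mul_assoc]; congr 1
      rw [← mul_assoc, ← pw_ex, mul_assoc]
    rw [e1, e2]
    split_ifs with h
    · subst h
      rw [dn_U_self, map_one, one_mul, map_sub, map_one, sub_mul, one_mul,
        eq_sub_of_add_eq' (pd_ex_self (R := R) (N := (σ → ℕ) → X) i)]
      abel
    · rw [dn_U (Ne.symm (Ne.symm h)), ← mul_add, pd_ex _ _ h, mul_zero]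
  unfold dU
  rw [kd, Finset.sum_mul, Finset.mul_sum, ← Finset.sum_add_distrib, Finset.sum_congr rfl
    (fun i _ => key i)]
  simp

lemma dU_sq : (dU : Module.End R (Finset σ → (σ → ℕ) → X)) * dU = 0 := kd_sq _ U_comm

lemma dU_pic (j : σ) : dU * pic R X j = pic R X j * dU := by
  have h := dU_hc (R := R) (X := X) j
  have h2 : pic R X j = 1 - (dU * hc R X j + hc R X j * dU) := by rw [h]; abel
  have s := dU_sq (σ := σ) (R := R) (X := X)
  rw [h2, mul_sub, sub_mul, mul_add, add_mul, ← mul_assoc, s, zero_mul, mul_assoc _ dU dU, s,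
    mul_zero, mul_one, one_mul, zero_add, add_zero, mul_assoc]

variable (R X) in
/-- The contracting homotopy for the variables in a list. -/
def Hc : List σ → Module.End R (Finset σ → (σ → ℕ) → X)
  | [] => 0
  | j :: l => hc R X j + pic R X j * Hc l

variable (R X) in
/-- The product of the projections `pic` over a list. -/
def Pic : List σ → Module.End R (Finset σ → (σ → ℕ) → X)
  | [] => 1
  | j :: l => pic R X j * Pic l

lemma dU_Hc (l : List σ) : dU * Hc R X l + Hc R X l * dU = 1 - Pic R X l := by
  induction l with
  | nil => simp [Hc, Pic]
  | cons j l ih =>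
    simp only [Hc, Pic]
    calc dU * (hc R X j + pic R X j * Hc R X l) + (hc R X j + pic R X j * Hc R X l) * dU
        = (dU * hc R X j + hc R X j * dU) + (dU * pic R X j * Hc R X l
          + pic R X j * (Hc R X l * dU)) := by rw [mul_add, add_mul]; simp only [mul_assoc]; abel
      _ = 1 - pic R X j + pic R X j * (1 - Pic R X l) := by
        rw [dU_hc, dU_pic, ← ih, mul_add]; simp only [mul_assoc]
      _ = _ := by rw [mul_sub, mul_one]; abel

lemma hc_apply (j : σ) (z : Finset σ → (σ → ℕ) → X) (A : Finset σ) (α : σ → ℕ) :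
    hc R X j z A α = if j ∈ A then sg j A • z (A.erase j) (up j α) else 0 := by
  simp only [hc, Module.End.mul_apply, ex_apply]
  split_ifs <;> simp

lemma pic_apply (j : σ) (z : Finset σ → (σ → ℕ) → X) (A : Finset σ) (α : σ → ℕ) :
    pic R X j z A α = if j ∈ A ∨ α j ≠ 0 then 0 else z A α := by
  have : pd R _ j (ex R _ j z) A = if j ∈ A then 0 else z A := by
    simp only [pd_apply, ex_apply]
    split_ifs <;> simp_all [sg_insert_self, smul_smul, sg_sq]
  simp only [pic, Module.End.mul_apply, pw_apply, this]
  by_cases h : j ∈ A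
  · simp [h]
  · by_cases h2 : α j = 0 <;> simp [h, h2, U_apply, up_lo]

lemma Pic_apply (l : List σ) (z : Finset σ → (σ → ℕ) → X) (A : Finset σ) (α : σ → ℕ) :
    Pic R X l z A α = if (∃ j ∈ l, j ∈ A ∨ α j ≠ 0) then 0 else z A α := by
  induction l with
  | nil => simp [Pic]
  | cons j l ih =>
    simp only [Pic, Module.End.mul_apply, pic_apply, ih]
    by_cases h1 : j ∈ A ∨ α j ≠ 0 <;> by_cases h2 : (∃ j ∈ l, j ∈ A ∨ α j ≠ 0)
    · simp [h1]
    · simp [h1]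
    · simp only [h1, h2, if_true, if_false]
      rw [if_pos]; obtain ⟨i, hi, h⟩ := h2; exact ⟨i, by simp [hi], h⟩
    · simp only [h1, h2, if_true, if_false]
      rw [if_neg]; rintro ⟨i, hi, h⟩
      rcases List.mem_cons.1 hi with rfl | hi
      · exact h1 h
      · exact h2 ⟨i, hi, h⟩

/-- `Hc` lowers the degree in the variables by one. -/
lemma Hc_mem (l : List σ) (P : ℕ → AddSubgroup X) (z : Finset σ → (σ → ℕ) → X)
    (hz : ∀ A α, z A α ∈ P (dg α)) (A : Finset σ) (α : σ → ℕ) :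
    Hc R X l z A α ∈ P (dg α + 1) := by
  induction l with
  | nil => simp [Hc]
  | cons j l ih =>
    simp only [Hc, LinearMap.add_apply, Pi.add_apply, Module.End.mul_apply, pic_apply, hc_apply]
    refine add_mem ?_ ?_
    · split_ifs
      · exact AddSubgroup.zsmul_mem _ (by rw [← dg_up]; exact hz _ _) _
      · exact zero_mem _
    · split_ifs
      · exact zero_mem _
      · exact ih

/-- The differential of the Koszul complex on the elements `U j - a j`. -/
def dd (a : σ → R) : Module.End R (Finset σ → (σ → ℕ) → X) := kd fun j => U R X j - a j • 1

lemma dd_eq (a : σ → R) :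
    (dd a : Module.End R (Finset σ → (σ → ℕ) → X)) = dU (R := R) (X := X) - da a := by
  rw [dd]; exact kd_sub (U R X) (fun j => a j • 1)

lemma dd_apply (a : σ → R) (z : Finset σ → (σ → ℕ) → X) (A : Finset σ) (α : σ → ℕ) :
    dd a z A α = ∑ j, if j ∈ A then 0 else
      sg j A • ((if α j = 0 then 0 else z (insert j A) (lo j α)) - a j • z (insert j A) α) := by
  rw [dd, kd_apply, Finset.sum_apply]
  refine Finset.sum_congr rfl fun j _ => ?_
  split_ifs <;> simp_all [U_apply]

lemma dd_sq (a : σ → R) (z : Finset σ → (σ → ℕ) → X) : dd a (dd a z) = 0 := by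
  rw [← Module.End.mul_apply, dd, kd_sq]; rfl
  intro i j
  simp only [mul_sub, sub_mul, smul_mul_assoc, mul_smul_comm, one_mul, mul_one, U_comm i j,
    smul_smul, mul_comm (a i), smul_sub]
  abel

lemma da_apply' (a : σ → R) (z : Finset σ → (σ → ℕ) → X) (A : Finset σ) (α : σ → ℕ) :
    da a z A α = da a (fun B => z B α) A := by
  rw [kd_apply, kd_apply, Finset.sum_apply]
  refine Finset.sum_congr rfl fun j _ => ?_
  split_ifs <;> simp

lemma dU_mem (P : ℕ → AddSubgroup X) (z : Finset σ → (σ → ℕ) → X)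
    (hz : ∀ A α, z A α ∈ P (dg α + 1)) (A : Finset σ) (α : σ → ℕ) :
    dU (R := R) z A α ∈ P (dg α) := by
  rw [kd_apply, Finset.sum_apply]
  refine AddSubgroup.sum_mem _ fun j _ => ?_
  split_ifs
  · exact zero_mem _
  · rw [Pi.smul_apply, U_apply]
    split_ifs with h
    · simp
    · refine AddSubgroup.zsmul_mem _ ?_ _
      rw [← dg_lo j α h]; exact hz _ _

lemma da_mem (a : σ → R) {P Q : Submodule R X} (h : ∀ j, ∀ x ∈ P, a j • x ∈ Q)
    (z : Finset σ → X) (hz : ∀ A, z A ∈ P) (A : Finset σ) : da a z A ∈ Q :=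
  kd_mem (P := P.toAddSubgroup) (Q := Q.toAddSubgroup) _ h z hz A

/-- Fundamental identity for one step of the approximation. -/
lemma sub_dd_Hc (a : σ → R) (l : List σ) (hl : ∀ j, j ∈ l) (z : Finset σ → (σ → ℕ) → X)
    (hz : z ∅ = 0) :
    z - dd a (Hc R X l z) = Hc R X l (dd a z) + (Hc R X l (da a z) + da a (Hc R X l z)) := by
  have h := LinearMap.congr_fun (dU_Hc (R := R) (X := X) l) z
  simp only [LinearMap.add_apply, Module.End.mul_apply, LinearMap.sub_apply,
    Module.End.one_apply] at h
  have h0 : Pic R X l z = 0 := by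
    funext A α
    rw [Pic_apply]
    split_ifs with hh
    · rfl
    · push Not at hh
      have : A = ∅ := Finset.eq_empty_of_forall_notMem fun j => (hh j (hl j)).1
      rw [this, hz]; rfl
  rw [h0, sub_zero] at h
  rw [dd_eq]
  simp only [LinearMap.sub_apply, map_sub]
  nth_rewrite 1 [← h]
  abel

/-- Elements without component of exterior degree `0` that are cycles modulo
`U`-degree `n` are boundaries of such elements modulo degree `n - k`, with all coefficients in
the submodule `M`. -/
def KillOn (a : σ → R) (k : ℕ) (M : Submodule R X) : Prop :=
  ∀ (n : ℕ) (z : Finset σ → (σ → ℕ) → X), z ∅ = 0 → (∀ A α, z A α ∈ M) →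
    (∀ A α, dg α < n → dd a z A α = 0) →
    ∃ w : Finset σ → (σ → ℕ) → X, w ∅ = 0 ∧ (∀ A α, w A α ∈ M) ∧
      ∀ A α, dg α + k < n → (z - dd a w) A α = 0

lemma dd_zero_empty (a : σ → R) (w : Finset σ → (σ → ℕ) → X) :
    dd a (Function.update w ∅ 0) = dd a w :=
  kd_congr _ fun A hA => by simp [hA]

lemma dd_memM (a : σ → R) (M : Submodule R X) (z : Finset σ → (σ → ℕ) → X)
    (hz : ∀ A α, z A α ∈ M) (A : Finset σ) (α : σ → ℕ) : dd a z A α ∈ M := by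
  rw [dd_apply]
  refine Submodule.sum_mem _ fun j _ => ?_
  split_ifs
  · exact zero_mem _
  · exact M.toAddSubgroup.zsmul_mem (by simpa using M.smul_mem _ (hz _ _)) _
  · exact M.toAddSubgroup.zsmul_mem (sub_mem (hz _ _) (M.smul_mem _ (hz _ _))) _

/-- Drop the components of exterior degree at most one. -/
def tr {Y : Type*} [Zero Y] (w : Finset σ → Y) : Finset σ → Y :=
  fun A => if A.card ≤ 1 then 0 else w A

lemma kd_tr {Y : Type*} [AddCommGroup Y] [Module R Y] (f : σ → Module.End R Y)
    (w : Finset σ → Y) (A : Finset σ) :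
    kd f (tr w) A = if A = ∅ then 0 else kd f w A := by
  rw [kd_apply, kd_apply]
  split_ifs with hA
  · subst hA; simp [tr]
  · refine Finset.sum_congr rfl fun j _ => ?_
    split_ifs with hj
    · rfl
    · have : 0 < A.card := Finset.card_pos.2 (Finset.nonempty_of_ne_empty hA)
      rw [tr, if_neg]; rw [Finset.card_insert_of_notMem hj]; omega

lemma tr_mem {Y : Type*} [AddCommGroup Y] (P : AddSubgroup Y) (w : Finset σ → Y) (A : Finset σ)
    (h : w A ∈ P) : tr w A ∈ P := by
  unfold tr; split_ifs
  · exact zero_mem _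
  · exact h

lemma approx_step (a : σ → R) (M : ℕ → Submodule R X) (hM : Antitone M)
    (haM : ∀ w j, ∀ x ∈ M w, a j • x ∈ M (w + 1)) (n t : ℕ) (z : Finset σ → (σ → ℕ) → X)
    (hz0 : z ∅ = 0) (hzM : ∀ A α, z A α ∈ M (min t (n - 1 - dg α)))
    (hz : ∀ A α, dg α < n → dd a z A α = 0) :
    ∃ w : Finset σ → (σ → ℕ) → X, (∀ A α, w A α ∈ M 0) ∧ (z - dd a w) ∅ = 0 ∧
      ∀ A α, (z - dd a w) A α ∈ M (min (t + 1) (n - 1 - dg α)) := by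
  let l : List σ := Finset.univ.toList
  have hl : ∀ j, j ∈ l := fun j => by simp [l]
  have hH : ∀ A α, Hc R X l z A α ∈ M (min t (n - 1 - (dg α + 1))) :=
    Hc_mem l (fun d => (M (min t (n - 1 - d))).toAddSubgroup) z hzM
  refine ⟨tr (Hc R X l z), fun A α => ?_, ?_, fun A α => ?_⟩
  · have : tr (Hc R X l z) A α = tr (fun B => Hc R X l z B α) A := by
      unfold tr; split_ifs <;> rfl
    rw [this]
    exact tr_mem (M 0).toAddSubgroup _ _ (hM (Nat.zero_le _) (hH A α))
  · rw [Pi.sub_apply, dd, kd_tr, if_pos rfl, hz0, sub_zero]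
  · by_cases hA : A = ∅
    · subst hA
      rw [Pi.sub_apply, dd, kd_tr, if_pos rfl, hz0, sub_zero]; exact zero_mem _
    rw [Pi.sub_apply, dd, kd_tr, if_neg hA, ← dd, ← Pi.sub_apply, sub_dd_Hc a l hl z hz0,
      Pi.add_apply, Pi.add_apply, Pi.add_apply, Pi.add_apply]
    refine add_mem ?_ (add_mem ?_ ?_)
    · refine Hc_mem l (fun d => (M (min (t + 1) (n - d))).toAddSubgroup) (dd a z) ?_ A α |> fun h =>
        hM (a := min (t + 1) (n - 1 - dg α)) (by omega) h
      intro B β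
      by_cases h : dg β < n
      · rw [hz B β h]; exact zero_mem _
      · have : n - dg β = 0 := by omega
        simp only [this, Nat.min_zero]
        refine dd_memM a (M 0) z (fun A α => hM (Nat.zero_le _) (hzM A α)) _ _
    · refine Hc_mem l (fun d => (M (min (t + 1) (n - d))).toAddSubgroup) (da a z) ?_ A α |> fun h =>
        hM (a := min (t + 1) (n - 1 - dg α)) (by omega) h
      intro B β
      rw [da_apply']
      exact da_mem a (P := M (min t (n - 1 - dg β))) (Q := M (min (t + 1) (n - dg β)))
        (fun j x hx => hM (by omega) (haM _ j x hx)) _ (fun A => hzM A β) B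
    · rw [da_apply']
      exact da_mem a (P := M (min t (n - 1 - (dg α + 1))))
        (fun j x hx => hM (by omega) (haM _ j x hx)) _ (fun A => hH A α) A

lemma clear_step (a : σ → R) (M : ℕ → Submodule R X) (hM : Antitone M)
    (haM : ∀ w j, ∀ x ∈ M w, a j • x ∈ M (w + 1)) (u₀ : ℕ)
    (Ex : ∀ u, u₀ < u → ∀ ζ : Finset σ → X, ζ ∅ = 0 → (∀ A, ζ A ∈ M u) → da a ζ = 0 →
      ∃ ω : Finset σ → X, (∀ A, ω A ∈ M (u - 1)) ∧ da a ω = ζ)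
    (n m : ℕ) (hmn : m + u₀ + 1 < n) (z : Finset σ → (σ → ℕ) → X)
    (hz0 : z ∅ = 0) (hzm : ∀ A α, dg α < m → z A α = 0)
    (hzM : ∀ A α, z A α ∈ M (n - 1 - dg α))
    (hz : ∀ A α, dg α < n → dd a z A α = 0) :
    ∃ w : Finset σ → (σ → ℕ) → X, (∀ A α, w A α ∈ M 0) ∧ (z - dd a w) ∅ = 0 ∧
      (∀ A α, dg α < m + 1 → (z - dd a w) A α = 0) ∧
      ∀ A α, (z - dd a w) A α ∈ M (n - 1 - dg α) := by
  have hζ : ∀ α, dg α = m → ∃ ω : Finset σ → X, (∀ A, ω A ∈ M (n - 1 - m - 1)) ∧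
      da a ω = fun A => z A α := by
    intro α hα
    refine Ex (n - 1 - m) (by omega) (fun A => z A α) (by rw [hz0]; rfl)
      (fun A => hα ▸ hzM A α) ?_
    funext A
    have h := hz A α (by omega)
    have hU : dU (R := R) z A α = 0 := by
      have h := dU_mem (R := R) (fun d => if d ≤ m then ⊥ else ⊤) z (fun B β => by
        split_ifs with hh
        · exact hzm B β (by omega)
        · trivial) A α
      simpa [hα] using h
    rw [dd_eq, LinearMap.sub_apply, Pi.sub_apply, Pi.sub_apply, hU, zero_sub, neg_eq_zero,
      da_apply'] at h
    exact h
  choose ω hωM hω using hζ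
  let w : Finset σ → (σ → ℕ) → X := fun A α => if h : dg α = m then - ω α h A else 0
  have hwM : ∀ A α, w A α ∈ (if dg α = m then M (n - 1 - m - 1) else ⊥) := by
    intro A α
    simp only [w]
    split_ifs with h
    · exact neg_mem (hωM α h A)
    · exact zero_mem _
  have key : ∀ A α, dd a w A α ∈ M (n - 1 - dg α) ∧ (dg α < m → dd a w A α = 0) ∧
      (dg α = m → dd a w A α = z A α) := by
    intro A α
    have hdU : dU (R := R) w A α ∈ (if dg α = m + 1 then M (n - 1 - m - 1) else ⊥) := by
      have := dU_mem (R := R) (fun d => (if d = m + 1 then M (n - 1 - m - 1) else ⊥ :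
        Submodule R X).toAddSubgroup) w (fun B β => by simpa using hwM B β) A α
      exact this
    have hda : (dg α ≠ m → da (R := R) a w A α = 0) ∧
        (dg α = m → da (R := R) a w A α = - z A α) := by
      rw [da_apply']
      constructor
      · intro h
        have : (fun B => w B α) = 0 := by funext B; simp [w, h]
        rw [this, map_zero]; rfl
      · intro h
        have : (fun B => w B α) = - ω α h := by funext B; simp [w, h]
        rw [this, map_neg, hω]; rfl
    rw [dd_eq, LinearMap.sub_apply, Pi.sub_apply, Pi.sub_apply]
    by_cases h : dg α = m
    · rw [if_neg (by omega)] at hdU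
      rw [(Submodule.mem_bot R).1 hdU, hda.2 h, zero_sub, neg_neg]
      exact ⟨hzM A α, by omega, fun _ => rfl⟩
    · rw [hda.1 h, sub_zero]
      refine ⟨?_, fun h1 => ?_, fun h1 => absurd h1 h⟩
      · split_ifs at hdU with h1
        · exact hM (by omega) hdU
        · rw [(Submodule.mem_bot R).1 hdU]; exact zero_mem _
      · rw [if_neg (by omega)] at hdU
        exact (Submodule.mem_bot R).1 hdU
  have hA : ∀ A, dd a (tr w) A = if A = ∅ then 0 else dd a w A := fun A => kd_tr _ _ _
  refine ⟨tr w, fun A α => ?_, ?_, fun A α h => ?_, fun A α => ?_⟩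
  · have : tr w A α = tr (fun B => w B α) A := by
      unfold tr; split_ifs <;> rfl
    rw [this]
    refine tr_mem (M 0).toAddSubgroup _ _ ?_
    have := hwM A α
    split_ifs at this with h
    · exact hM (Nat.zero_le _) this
    · rw [(Submodule.mem_bot R).1 this]; exact zero_mem _
  · rw [Pi.sub_apply, hA, if_pos rfl, hz0, sub_zero]
  · rw [Pi.sub_apply, hA]
    split_ifs with h0
    · subst h0; simp [hz0]
    · rw [Pi.sub_apply]
      rcases Nat.lt_succ_iff_lt_or_eq.1 h with h | h
      · rw [(key A α).2.1 h, hzm A α h, sub_zero]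
      · rw [(key A α).2.2 h, sub_self]
  · rw [Pi.sub_apply, hA]
    split_ifs with h0
    · subst h0; simp [hz0]
    · exact sub_mem (hzM A α) (key A α).1

/-- Lemma R: filtered exactness of the Koszul complex on `a` in high degree implies that
cycles modulo `U`-degree `n` can be killed with bounded loss. -/
theorem killOn_of_exact (a : σ → R) (M : ℕ → Submodule R X) (hM : Antitone M)
    (haM : ∀ w j, ∀ x ∈ M w, a j • x ∈ M (w + 1)) (u₀ : ℕ)
    (Ex : ∀ u, u₀ < u → ∀ ζ : Finset σ → X, ζ ∅ = 0 → (∀ A, ζ A ∈ M u) → da a ζ = 0 →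
      ∃ ω : Finset σ → X, (∀ A, ω A ∈ M (u - 1)) ∧ da a ω = ζ) :
    KillOn a (u₀ + 1) (M 0) := by
  intro n z hz0 hzM hz
  have step1 : ∀ t : ℕ, ∃ w : Finset σ → (σ → ℕ) → X, (∀ A α, w A α ∈ M 0) ∧
      (z - dd a w) ∅ = 0 ∧
      ∀ A α, (z - dd a w) A α ∈ M (min t (n - 1 - dg α)) := by
    intro t
    induction t with
    | zero => exact ⟨0, fun _ _ => zero_mem _, by simpa using hz0, by simpa using hzM⟩
    | succ t ih =>
      obtain ⟨w, hwM, hw0, hw⟩ := ih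
      have hz' : ∀ A α, dg α < n → dd a (z - dd a w) A α = 0 := by
        intro A α h; rw [map_sub, dd_sq, sub_zero]; exact hz A α h
      obtain ⟨v, hvM, hv0, hv⟩ := approx_step a M hM haM n t _ hw0 hw hz'
      refine ⟨w + v, fun A α => add_mem (hwM A α) (hvM A α), ?_, ?_⟩
      · rwa [map_add, ← sub_sub]
      · rwa [map_add, ← sub_sub]
  -- clear the coefficients one degree at a time
  have step2 : ∀ m : ℕ, m + u₀ + 1 ≤ n → ∃ w : Finset σ → (σ → ℕ) → X, (∀ A α, w A α ∈ M 0) ∧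
      (z - dd a w) ∅ = 0 ∧ (∀ A α, dg α < m → (z - dd a w) A α = 0) ∧
      ∀ A α, (z - dd a w) A α ∈ M (n - 1 - dg α) := by
    intro m
    induction m with
    | zero =>
      intro _
      obtain ⟨w, h1, h2, h3⟩ := step1 n
      exact ⟨w, h1, h2, by simp, fun A α => by
        have := h3 A α; rwa [min_eq_right (by omega)] at this⟩
    | succ m ih =>
      intro hmn
      obtain ⟨w, hwM, hw0, hwm, hw⟩ := ih (by omega)
      have hz' : ∀ A α, dg α < n → dd a (z - dd a w) A α = 0 := by
        intro A α h; rw [map_sub, dd_sq, sub_zero]; exact hz A α h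
      obtain ⟨v, hvM, hv0, hvm, hv⟩ :=
        clear_step a M hM haM u₀ Ex n m (by omega) _ hw0 hwm hw hz'
      refine ⟨w + v, fun A α => add_mem (hwM A α) (hvM A α), ?_, ?_, ?_⟩
      · rwa [map_add, ← sub_sub]
      · rwa [map_add, ← sub_sub]
      · rwa [map_add, ← sub_sub]
  by_cases hn : u₀ + 1 ≤ n
  · obtain ⟨w, hwM, hw0, hwm, -⟩ := step2 (n - (u₀ + 1)) (by omega)
    refine ⟨Function.update w ∅ 0, by simp, fun A α => ?_, fun A α h => ?_⟩
    · by_cases hA : A = ∅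
      · subst hA; simp
      · simpa [hA] using hwM A α
    · rw [dd_zero_empty]; exact hwm A α (by omega)
  · exact ⟨0, rfl, fun _ _ => zero_mem _, fun A α h => by omega⟩

end Contraction

/-! ### Exactness in high degree -/

section HighDegree
variable {σ : Type*} [Fintype σ] [LinearOrder σ] {D : Type*} [CommRing D]

lemma mem_smul_top_pi {ι : Type*} [Fintype ι] (I : Ideal D) (ζ : ι → D) :
    ζ ∈ I • (⊤ : Submodule D (ι → D)) ↔ ∀ i, ζ i ∈ I := by
  classical
  constructor
  · intro h i
    have : (I • (⊤ : Submodule D (ι → D))) ≤ Submodule.comap (LinearMap.proj i) I := by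
      rw [Submodule.smul_le]
      intro r hr n _
      simpa using I.mul_mem_right _ hr
    exact this h
  · intro h
    have : ζ = ∑ i, ζ i • (Pi.single i (1 : D) : ι → D) := by
      funext j; simp [Finset.sum_apply, Pi.single_apply]
    rw [this]
    exact Submodule.sum_mem _ fun i _ => Submodule.smul_mem_smul (h i) trivial

lemma exists_sum_of_mem_span_range_smul {M : Type*} [AddCommGroup M] [Module D M] (a : σ → D)
    (N : Submodule D M) {x : M} (hx : x ∈ Ideal.span (Set.range a) • N) :
    ∃ y : σ → M, (∀ j, y j ∈ N) ∧ x = ∑ j, a j • y j := by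
  classical
  refine Submodule.smul_induction_on hx (fun r hr n hn => ?_) ?_
  · obtain ⟨c, rfl⟩ := (Submodule.mem_span_range_iff_exists_fun D).1 hr
    refine ⟨fun j => c j • n, fun j => N.smul_mem _ hn, ?_⟩
    rw [Finset.sum_smul]
    refine Finset.sum_congr rfl fun j _ => ?_
    rw [smul_smul, smul_eq_mul, mul_comm]
  · rintro x x' ⟨y, hy, rfl⟩ ⟨y', hy', rfl⟩
    exact ⟨y + y', fun j => add_mem (hy j) (hy' j), by simp [Finset.sum_add_distrib]⟩

/-- In high degree the Koszul complex of a reduction `a` of `K` is exact on powers of `K`,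
with a shift by one. -/
theorem exact_high [IsNoetherianRing D] (a : σ → D) (K : Ideal D)
    (hK : ∃ m, K ^ (m + 1) ≤ Ideal.span (Set.range a) * K ^ m) :
    ∃ n₀, ∀ n, n₀ ≤ n → ∀ ζ : Finset σ → D, (∀ A, ζ A ∈ K ^ (n + 1)) → da a ζ = 0 →
      ∃ ω : Finset σ → D, (∀ A, ω A ∈ K ^ n) ∧ da a ω = ζ := by
  obtain ⟨m, hm⟩ := hK
  have hm' : ∀ r, K ^ (r + m + 1) ≤ Ideal.span (Set.range a) * K ^ (r + m) := by
    intro r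
    have e1 : K ^ (r + m + 1) = K ^ r * K ^ (m + 1) := by rw [add_assoc, pow_add]
    have e2 : Ideal.span (Set.range a) * K ^ (r + m)
        = K ^ r * (Ideal.span (Set.range a) * K ^ m) := by rw [pow_add]; ac_rfl
    rw [e1, e2]
    exact Ideal.mul_mono_right hm
  let N : Submodule D (Finset σ → D) := LinearMap.ker (da a)
  obtain ⟨k, hk⟩ := Ideal.exists_pow_inf_eq_pow_smul K N
  refine ⟨k + m, fun n hn ζ hζ hd => ?_⟩
  have h1 : ζ ∈ K ^ (n + 1) • (⊤ : Submodule D (Finset σ → D)) ⊓ N :=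
    ⟨(mem_smul_top_pi _ _).2 hζ, hd⟩
  have h2 : K ^ (n + 1) • (⊤ : Submodule D (Finset σ → D)) ⊓ N ≤
      Ideal.span (Set.range a) • (K ^ n • (⊤ : Submodule D (Finset σ → D)) ⊓ N) := by
    rw [hk (n + 1) (by omega), hk n (by omega), ← Submodule.mul_smul]
    refine Submodule.smul_mono_left ?_
    have := hm' (n - k - m)
    rwa [show n - k - m + m + 1 = n + 1 - k by omega, show n - k - m + m = n - k by omega] at this
  obtain ⟨y, hy, hζy⟩ := exists_sum_of_mem_span_range_smul a _ (h2 h1)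
  refine ⟨∑ j, ex D D j (y j), fun A => ?_, ?_⟩
  · rw [Finset.sum_apply]
    refine Ideal.sum_mem _ fun j _ => ?_
    rw [ex_apply]
    split_ifs
    · exact (K ^ n).toAddSubgroup.zsmul_mem ((mem_smul_top_pi _ _).1 (hy j).1 _) _
    · exact zero_mem _
  · rw [map_sum, hζy]
    refine Finset.sum_congr rfl fun j _ => ?_
    have h := LinearMap.congr_fun (kd_ex (R := D) (N := D) (fun j => a j • 1) j) (y j)
    have h3 : da a (y j) = 0 := (hy j).2
    rw [LinearMap.add_apply, Module.End.mul_apply, Module.End.mul_apply, h3, map_zero,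
      add_zero] at h
    rw [h]; rfl

/-- Powers of an ideal `K` with reduction `a` satisfy the killing property with loss one, from
some power on. -/
theorem killOn_pow [IsNoetherianRing D] (a : σ → D) (K : Ideal D)
    (haK : ∀ j, a j ∈ K)
    (hK : ∃ m, K ^ (m + 1) ≤ Ideal.span (Set.range a) * K ^ m) :
    ∃ m₀, ∀ m, m₀ ≤ m → KillOn a 1 (K ^ m : Ideal D) := by
  obtain ⟨n₀, h⟩ := exact_high a K hK
  refine ⟨n₀, fun m hm => ?_⟩
  refine killOn_of_exact a (fun w => K ^ (m + w)) (fun i j hij => Ideal.pow_le_pow_right (by omega))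
    (fun w j x hx => ?_) 0 (fun u hu ζ _ hζ hd => ?_)
  · rw [← add_assoc, pow_succ', smul_eq_mul]; exact Ideal.mul_mem_mul (haK j) hx
  · exact h (m + (u - 1)) (by omega) ζ (fun A => by
      rw [show m + (u - 1) + 1 = m + u by omega]; exact hζ A) hd

/-- The zero sequence. -/
theorem killOn_zero {X : Type*} [AddCommGroup X] [Module D X] (M : Submodule D X) (a : σ → D)
    (ha : ∀ j, a j = 0) : KillOn a 1 M := by
  refine killOn_of_exact a (fun w => if w = 0 then M else ⊥) (fun i j hij => ?_)
    (fun w j x hx => by simp [ha]) 0 (fun u hu ζ _ hζ hd => ?_)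
  · dsimp only
    split_ifs with h1 h2
    · exact le_rfl
    · omega
    · exact bot_le
    · exact bot_le
  · refine ⟨0, fun _ => zero_mem _, ?_⟩
    funext A
    have := hζ A
    rw [if_neg (by omega)] at this
    rw [(Submodule.mem_bot D).1 this, map_zero]; rfl

end HighDegree

/-! ### Uniform Artin-Rees and Briançon-Skoda bounds -/

section Eval
variable {σ : Type*} [Fintype σ] [LinearOrder σ] {R : Type*} [CommRing R]
  {X : Type*} [AddCommGroup X] [Module R X]

/-- Coefficientwise image of a family of power series. -/
def mapC {X Y : Type*} (g : X → Y) (z : Finset σ → (σ → ℕ) → X) : Finset σ → (σ → ℕ) → Y :=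
  fun A α => g (z A α)

lemma dd_mapC {S Y : Type*} [CommRing S] [AddCommGroup Y] [Module S Y] (g : X →+ Y)
    (a : σ → R) (b : σ → S) (h : ∀ j x, g (a j • x) = b j • g x)
    (z : Finset σ → (σ → ℕ) → X) : dd b (mapC g z) = mapC g (dd a z) := by
  funext A α
  rw [mapC, dd_apply, dd_apply, map_sum]
  refine Finset.sum_congr rfl fun j _ => ?_
  split_ifs <;> simp [mapC, h, map_zsmul]

variable (σ) in
/-- The constant power series `x`, in exterior degree `0`. -/
def kap (x : X) : Finset σ → (σ → ℕ) → X :=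
  fun A α => if A = ∅ ∧ α = 0 then x else 0

lemma kap_add (x y : X) : kap σ (x + y) = kap σ x + kap σ y := by
  funext A α; simp only [kap, Pi.add_apply]; split_ifs <;> simp
lemma kap_smul (r : R) (x : X) : kap σ (r • x) = r • kap σ x := by
  funext A α; simp only [kap, Pi.smul_apply]; split_ifs <;> simp

lemma kap_sum {ι : Type*} (s : Finset ι) (f : ι → X) :
    kap σ (∑ i ∈ s, f i) = ∑ i ∈ s, kap σ (f i) :=
  map_sum (⟨⟨kap σ, by funext A α; simp [kap]⟩, kap_add⟩ : X →+ _) f s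

lemma dd_kap (a : σ → R) (x : X) : dd a (kap σ x) = 0 := by
  rw [dd, kd_congr _ (w := 0), map_zero]
  intro A hA; funext α; simp [kap, hA]

lemma dd_ex (a : σ → R) (j : σ) (z : Finset σ → (σ → ℕ) → X) :
    dd a (ex R _ j z) = pw σ (U R X j) z - a j • z - ex R _ j (dd a z) := by
  have h := LinearMap.congr_fun (kd_ex (fun j => U R X j - a j • 1) j) z
  rw [LinearMap.add_apply, Module.End.mul_apply, Module.End.mul_apply] at h
  rw [dd, eq_sub_iff_add_eq, h]; rfl

lemma dd_U (a : σ → R) (j : σ) (z : Finset σ → (σ → ℕ) → X) :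
    dd a (pw σ (U R X j) z) = pw σ (U R X j) (dd a z) := by
  have h := LinearMap.congr_fun (kd_sum_zero_comm (σ := σ) (fun j => U R X j - a j • 1) (U R X j)
    (fun i => by simp only [mul_sub, sub_mul, U_comm i j, mul_smul_comm, smul_mul_assoc,
      mul_one, one_mul])) z
  exact h.symm

/-- An element of `J ^ n X` is a boundary modulo degree `n`. -/
lemma exists_dd_eq_kap (a : σ → R) (n : ℕ) (x : X)
    (hx : x ∈ Ideal.span (Set.range a) ^ n • (⊤ : Submodule R X)) :
    ∃ y : Finset σ → (σ → ℕ) → X, y ∅ = 0 ∧ ∀ A α, dg α < n → dd a y A α = kap σ x A α := by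
  induction n generalizing x with
  | zero => exact ⟨0, rfl, by simp⟩
  | succ n ih =>
    rw [pow_succ', Submodule.mul_smul] at hx
    obtain ⟨t, ht, rfl⟩ := exists_sum_of_mem_span_range_smul a _ hx
    choose y hy0 hy using fun j => ih (t j) (ht j)
    refine ⟨∑ j, (pw σ (U R X j) (y j) - ex R _ j (kap σ (t j))), ?_, fun A α hα => ?_⟩
    · rw [Finset.sum_apply]
      exact Finset.sum_eq_zero fun j _ => by simp [hy0, ex_apply]
    · rw [map_sum, Finset.sum_apply, Finset.sum_apply, kap_sum, Finset.sum_apply, Finset.sum_apply]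
      refine Finset.sum_congr rfl fun j _ => ?_
      rw [map_sub, dd_U, dd_ex, dd_kap, map_zero, sub_zero, kap_smul]
      simp only [Pi.sub_apply, pw_apply, U_apply]
      rw [sub_sub_eq_add_sub, add_sub_right_comm, add_eq_right, sub_eq_zero]
      split_ifs with h
      · rfl
      · exact hy j A _ (by have := dg_lo j α h; omega)

/-- The value at `a` of the degree `d` part of a power series. -/
def Ls (a : σ → R) (d : ℕ) (h : (σ → ℕ) → X) : X :=
  ∑ α ∈ Finset.piAntidiag Finset.univ d, (∏ i, a i ^ α i) • h α

lemma mem_anti (d : ℕ) (α : σ → ℕ) : α ∈ Finset.piAntidiag Finset.univ d ↔ dg α = d := by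
  simp [Finset.mem_piAntidiag, dg]

lemma prod_up (a : σ → R) (j : σ) (α : σ → ℕ) :
    ∏ i, a i ^ (up j α i) = a j * ∏ i, a i ^ α i := by
  rw [← Finset.mul_prod_erase _ _ (Finset.mem_univ j),
    ← Finset.mul_prod_erase _ (fun i => a i ^ α i) (Finset.mem_univ j), ← mul_assoc]
  congr 1
  · simp [up, pow_succ']
  · refine Finset.prod_congr rfl fun i hi => ?_
    rw [up_of_ne (Finset.ne_of_mem_erase hi)]

lemma Ls_U_succ (a : σ → R) (j : σ) (d : ℕ) (h : (σ → ℕ) → X) :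
    Ls a (d + 1) (U R X j h) = a j • Ls a d h := by
  unfold Ls
  rw [Finset.smul_sum]
  symm
  refine Finset.sum_of_injOn (up j) ?_ ?_ ?_ ?_
  · intro α _ β _ hab
    rw [← lo_up j α, hab, lo_up]
  · intro α hα
    simp only [Finset.mem_coe, mem_anti] at hα ⊢
    rw [dg_up, hα]
  · intro α hα hn
    rw [U_apply, if_pos, smul_zero]
    by_contra h0
    refine hn ⟨lo j α, ?_, up_lo j α h0⟩
    rw [mem_anti] at hα
    rw [Finset.mem_coe, mem_anti]
    have := dg_lo j α h0; omega
  · intro α _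
    rw [U_apply, if_neg (up_ne j α), lo_up, prod_up, smul_smul]

lemma Ls_U_zero (a : σ → R) (j : σ) (h : (σ → ℕ) → X) : Ls a 0 (U R X j h) = 0 := by
  unfold Ls
  refine Finset.sum_eq_zero fun α hα => ?_
  rw [mem_anti] at hα
  rw [U_apply, if_pos, smul_zero]
  exact (Finset.sum_eq_zero_iff.1 hα) j (Finset.mem_univ j)

lemma Ls_sum_sub (a : σ → R) (d : ℕ) (y : σ → (σ → ℕ) → X) :
    Ls a d (∑ j, (U R X j (y j) - a j • y j)) =
      ∑ j, (Ls a d (U R X j (y j)) - a j • Ls a d (y j)) := by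
  unfold Ls
  simp only [Finset.sum_apply, Pi.sub_apply, Finset.smul_sum, smul_sub, Finset.sum_sub_distrib,
    Pi.smul_apply]
  rw [Finset.sum_comm]
  congr 1
  rw [Finset.sum_comm]
  refine Finset.sum_congr rfl fun i _ => Finset.sum_congr rfl fun j _ => ?_
  rw [smul_comm]

lemma Ls_telescope (a : σ → R) (m : ℕ) (y : σ → (σ → ℕ) → X) :
    ∑ d ∈ Finset.range (m + 1), Ls a d (∑ j, (U R X j (y j) - a j • y j)) =
      - ∑ j, a j • Ls a m (y j) := by
  induction m with
  | zero =>
    rw [zero_add, Finset.sum_range_one, Ls_sum_sub, ← Finset.sum_neg_distrib]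
    exact Finset.sum_congr rfl fun j _ => by rw [Ls_U_zero, zero_sub]
  | succ m ih =>
    rw [Finset.sum_range_succ, ih, Ls_sum_sub, Finset.sum_sub_distrib]
    simp only [Ls_U_succ]
    abel

lemma prod_mem_pow (a : σ → R) (α : σ → ℕ) :
    ∏ i, a i ^ α i ∈ Ideal.span (Set.range a) ^ dg α := by
  rw [dg, ← Finset.prod_pow_eq_pow_sum]
  exact Ideal.prod_mem_prod fun i _ =>
    Ideal.pow_mem_pow (Ideal.subset_span (Set.mem_range_self i)) _

/-- If the constant `x` is a boundary of an element with coefficients in `N` in low degrees,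
then `x` lies in a corresponding power of the ideal times `N`. -/
lemma mem_of_dd_eq_kap (a : σ → R) (N : Submodule R X) (m : ℕ) (x : X) (hx : x ∈ N)
    (y : Finset σ → (σ → ℕ) → X) (hy : ∀ α, dg α < m → dd a y ∅ α = kap σ x ∅ α)
    (hyN : ∀ A α, dg α < m → y A α ∈ N) : x ∈ Ideal.span (Set.range a) ^ m • N := by
  cases m with
  | zero => simpa using hx
  | succ m =>
    have hy1 : dd a y ∅ = ∑ j, (U R X j (y {j}) - a j • y {j}) := by
      rw [dd, kd_apply]
      refine Finset.sum_congr rfl fun j _ => ?_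
      simp [sg]
    have h1 := Ls_telescope a m (fun j => y {j})
    rw [← hy1, Finset.sum_eq_single 0] at h1
    · have h0 : Ls a 0 (dd a y ∅) = x := by
        unfold Ls
        rw [Finset.sum_eq_single 0]
        · rw [hy 0 (by simp [dg])]; simp [kap]
        · intro α hα h0
          rw [mem_anti] at hα
          exact absurd (funext fun j => (Finset.sum_eq_zero_iff.1 hα) j (Finset.mem_univ j)) h0
        · intro h; exact absurd ((mem_anti 0 0).2 (by simp [dg])) h
      rw [h0] at h1
      rw [h1]
      refine neg_mem (Submodule.sum_mem _ fun j _ => ?_)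
      rw [pow_succ', Submodule.mul_smul]
      refine Submodule.smul_mem_smul (Ideal.subset_span ⟨j, rfl⟩) ?_
      refine Submodule.sum_mem _ fun α hα => ?_
      rw [mem_anti] at hα
      exact Submodule.smul_mem_smul (hα ▸ prod_mem_pow a α) (hyN _ _ (by omega))
    · intro d hd hd0
      unfold Ls
      refine Finset.sum_eq_zero fun α hα => ?_
      rw [mem_anti] at hα
      rw [hy α (by simp at hd; omega), kap, if_neg, smul_zero]
      rintro ⟨-, rfl⟩
      exact hd0 (by simp [dg] at hα; omega)
    · simp

end Eval

section Classes
variable {R : Type*} [CommRing R] {X : Type*} [AddCommGroup X] [Module R X]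
  {X' : Type*} [AddCommGroup X'] [Module R X'] {X'' : Type*} [AddCommGroup X''] [Module R X'']

/-- `KillOn` with all coefficients allowed. -/
abbrev Kill {σ : Type*} [Fintype σ] [LinearOrder σ] (a : σ → R) (k : ℕ) (X : Type*)
    [AddCommGroup X] [Module R X] : Prop := KillOn a k (⊤ : Submodule R X)

/-- Uniform Artin-Rees bound `k` for the module `X`, in Koszul form. -/
def UARk (R X : Type*) [CommRing R] [AddCommGroup X] [Module R X] (k : ℕ) : Prop :=
  ∀ (s : ℕ) (a : Fin s → R), Kill a k X

/-- `K` is an integral (reduction) extension of `J`. -/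
def IsRed {R : Type*} [CommRing R] (J K : Ideal R) : Prop := J ≤ K ∧ ∃ m, K ^ (m + 1) ≤ J * K ^ m

/-- Uniform Briançon-Skoda bound `k` for the module `X`. -/
def BSk (R X : Type*) [CommRing R] [AddCommGroup X] [Module R X] (k : ℕ) : Prop :=
  ∀ J K : Ideal R, IsRed J K → ∀ n, K ^ n • (⊤ : Submodule R X) ≤ J ^ (n - k) • ⊤

/-- Artin-Rees from the killing property of the quotient. -/
theorem inter_of_kill {σ : Type*} [Fintype σ] [LinearOrder σ] (a : σ → R) (k : ℕ)
    (g : X →ₗ[R] X'') (hg : Function.Surjective g) (h : Kill a k X'') (n : ℕ) (x : X)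
    (hx : x ∈ Ideal.span (Set.range a) ^ n • (⊤ : Submodule R X)) (hgx : g x = 0) :
    x ∈ Ideal.span (Set.range a) ^ (n - k) • LinearMap.ker g := by
  obtain ⟨y, hy0, hy⟩ := exists_dd_eq_kap a n x hx
  have hmap : ∀ z : Finset σ → (σ → ℕ) → X, dd a (mapC g z) = mapC g (dd a z) := fun z =>
    dd_mapC g.toAddMonoidHom a a (fun j x => by simp) z
  obtain ⟨w, -, -, hw⟩ := h n (mapC g y) (by funext α; simp [mapC, hy0]) (fun _ _ => trivial)
    (fun A α hα => by
      rw [hmap, mapC, hy A α hα, kap]; split_ifs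
      · exact hgx
      · exact map_zero g)
  choose s hs using hg
  let w' : Finset σ → (σ → ℕ) → X := mapC s w
  have hw' : mapC g w' = w := by funext A α; simp [mapC, w', hs]
  refine mem_of_dd_eq_kap a _ (n - k) x hgx (y - dd a w') (fun α hα => ?_) (fun A α hα => ?_)
  · rw [map_sub, dd_sq, sub_zero]; exact hy _ _ (by omega)
  · have := hw A α (by omega)
    rw [← hw', hmap] at this
    rw [LinearMap.mem_ker, Pi.sub_apply, Pi.sub_apply, map_sub]
    exact this

lemma exists_fin_span [IsNoetherianRing R] (J : Ideal R) :
    ∃ (s : ℕ) (a : Fin s → R), J = Ideal.span (Set.range a) := by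
  obtain ⟨s, a, ha⟩ := Submodule.fg_iff_exists_fin_generating_family.1 (IsNoetherian.noetherian J)
  exact ⟨s, a, ha.symm⟩

theorem inter_of_uar [IsNoetherianRing R] (k : ℕ) (g : X →ₗ[R] X'')
    (hg : Function.Surjective g) (h : UARk R X'' k) (J : Ideal R) (n : ℕ) (x : X)
    (hx : x ∈ J ^ n • (⊤ : Submodule R X)) (hgx : g x = 0) :
    x ∈ J ^ (n - k) • LinearMap.ker g := by
  obtain ⟨s, a, rfl⟩ := exists_fin_span J
  exact inter_of_kill a k g hg (h s a) n x hx hgx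

lemma map_smul_top (g : X →ₗ[R] X'') (hg : Function.Surjective g) (I : Ideal R) :
    (I • (⊤ : Submodule R X)).map g = I • ⊤ := by
  rw [Submodule.map_smul'', Submodule.map_top, LinearMap.range_eq_top.2 hg]

/-- The image of `z` in `X''` is a boundary up to a shift; here its primitive is lifted to `X`. -/
lemma lift_step (g : X →ₗ[R] X'') (hg : Function.Surjective g) {k'' : ℕ} (h'' : UARk R X'' k'')
    {s : ℕ} (a : Fin s → R) (n : ℕ) (z : Finset (Fin s) → (Fin s → ℕ) → X) (hz0 : z ∅ = 0)
    (hz : ∀ A α, dg α < n → dd a z A α = 0) :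
    ∃ w' : Finset (Fin s) → (Fin s → ℕ) → X, w' ∅ = 0 ∧ dd a w' ∅ = 0 ∧
      ∀ A α, dg α + k'' < n → g ((z - dd a w') A α) = 0 := by
  have hmap : ∀ z : Finset (Fin s) → (Fin s → ℕ) → X, dd a (mapC g z) = mapC g (dd a z) := fun z =>
    dd_mapC g.toAddMonoidHom a a (fun j x => by simp) z
  obtain ⟨w, -, -, hw⟩ := h'' s a n (mapC g z) (by funext α; simp [mapC, hz0])
    (fun _ _ => trivial) (fun A α hα => by rw [hmap, mapC, hz A α hα, map_zero])
  choose c hc using hg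
  refine ⟨tr (mapC c w), by simp [tr], by rw [dd, kd_tr]; simp, ?_⟩
  intro A α hα
  have h1 : mapC g (mapC c w) = w := by funext A α; simp [mapC, hc]
  rw [Pi.sub_apply, dd, kd_tr, ← dd]
  split_ifs with h0
  · subst h0; simp [hz0]
  · have := hw A α hα
    rw [← h1, hmap] at this
    rw [Pi.sub_apply, map_sub]; exact this

/-- Both properties are stable under extensions. -/
theorem UARk.ext (f : X' →ₗ[R] X) (g : X →ₗ[R] X'') (hf : Function.Injective f)
    (hg : Function.Surjective g) (hfg : Function.Exact f g) {k' k'' : ℕ}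
    (h' : UARk R X' k') (h'' : UARk R X'' k'') : UARk R X (k' + k'') := by
  intro s a n z hz0 _ hz
  have hmap' : ∀ z : Finset (Fin s) → (Fin s → ℕ) → X', dd a (mapC f z) = mapC f (dd a z) :=
    fun z => dd_mapC f.toAddMonoidHom a a (fun j x => by simp) z
  obtain ⟨w', -, hw0, hw⟩ := lift_step g hg h'' a n z hz0 hz
  have hw' : ∀ A α, dg α + k'' < n → (z - dd a w') A α ∈ LinearMap.range f :=
    fun A α hα => (hfg _).1 (hw A α hα)
  choose v hv using hw'
  let v' : Finset (Fin s) → (Fin s → ℕ) → X' := fun A α =>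
    if h : dg α + k'' < n then (if A = ∅ then 0 else v A α h) else 0
  have hv' : ∀ A α, dg α + k'' < n → f (v' A α) = (z - dd a w') A α := by
    intro A α hα
    simp only [v', hα, dif_pos]
    split_ifs with h0
    · subst h0; simp [hz0, hw0]
    · exact hv A α hα
  obtain ⟨u, hu0, -, hu⟩ := h' s a (n - k'') v' (by funext α; simp [v']) (fun _ _ => trivial)
    (fun A α hα => by
      apply hf
      have h2 : ∀ β, dg β ≤ dg α → ∀ A, mapC f v' A β = (z - dd a w') A β :=
        fun β hβ A => hv' A β (by omega)
      have h3 : f (dd a v' A α) = dd a (z - dd a w') A α := by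
        change mapC f (dd a v') A α = _
        rw [← hmap', dd_apply, dd_apply]
        refine Finset.sum_congr rfl fun j _ => ?_
        rw [h2 α le_rfl]
        split_ifs with h4 h5
        · rfl
        · rfl
        · rw [h2 _ (by have := dg_lo j α h5; omega)]
      rw [h3, map_sub, dd_sq, sub_zero, map_zero]
      exact hz A α (by omega))
  refine ⟨Function.update (w' + mapC f u) ∅ 0, by simp, fun _ _ => trivial, fun A α hα => ?_⟩
  rw [dd_zero_empty, map_add, hmap', ← sub_sub, Pi.sub_apply, Pi.sub_apply, ← hv' A α (by omega)]
  have := hu A α (by omega)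
  rw [Pi.sub_apply, Pi.sub_apply, sub_eq_zero] at this
  rw [this]; simp [mapC]

theorem BSk.ext [IsNoetherianRing R] (f : X' →ₗ[R] X) (g : X →ₗ[R] X'')
    (hf : Function.Injective f)
    (hg : Function.Surjective g) (hfg : Function.Exact f g) {k' k'' l : ℕ}
    (h' : BSk R X' k') (h'' : BSk R X'' k'') (hu : UARk R X'' l) :
    BSk R X (k' + k'' + l) := by
  intro J K hJK n x hx
  have h1 : g x ∈ J ^ (n - k'') • (⊤ : Submodule R X'') := by
    apply h'' J K hJK n
    rw [← map_smul_top g hg]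
    exact Submodule.mem_map_of_mem hx
  rw [← map_smul_top g hg] at h1
  obtain ⟨u, hu1, hu2⟩ := h1
  have hv : x - u ∈ K ^ (n - k'') • (⊤ : Submodule R X) := by
    refine sub_mem (Submodule.smul_mono_left (Ideal.pow_le_pow_right (by omega)) hx)
      (Submodule.smul_mono_left (Ideal.pow_right_mono hJK.1 _) hu1)
  have h2 := inter_of_uar l g hg hu K (n - k'') (x - u) hv (by rw [map_sub, hu2, sub_self])
  have h3 : LinearMap.ker g = (⊤ : Submodule R X').map f := by
    rw [Submodule.map_top]; exact hfg.linearMap_ker_eq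
  rw [h3, ← Submodule.map_smul''] at h2
  have h4 := Submodule.map_mono (f := f) (h' J K hJK (n - k'' - l)) h2
  rw [Submodule.map_smul''] at h4
  have h5 : x - u ∈ J ^ (n - (k' + k'' + l)) • (⊤ : Submodule R X) := by
    refine Submodule.smul_mono (Ideal.pow_le_pow_right (by omega)) le_top h4
  have h6 : u ∈ J ^ (n - (k' + k'' + l)) • (⊤ : Submodule R X) :=
    Submodule.smul_mono_left (Ideal.pow_le_pow_right (by omega)) hu1
  simpa using add_mem h5 h6

end Classes

/-! ### Bounds up to a multiplier -/

section CStep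
variable {R : Type*} [CommRing R] {X : Type*} [AddCommGroup X] [Module R X]
  {X'' : Type*} [AddCommGroup X''] [Module R X'']

/-- Multiplication by `c` kills Koszul homology of `X` up to a shift by `k`. -/
def GK (R X : Type*) [CommRing R] [AddCommGroup X] [Module R X] (c : R) (k : ℕ) : Prop :=
  ∀ (s : ℕ) (a : Fin s → R) (n : ℕ) (z : Finset (Fin s) → (Fin s → ℕ) → X), z ∅ = 0 →
    (∀ A α, dg α < n → dd a z A α = 0) →
    ∃ w : Finset (Fin s) → (Fin s → ℕ) → X, w ∅ = 0 ∧
      ∀ A α, dg α + k < n → (c • z - dd a w) A α = 0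

/-- Multiplication by `c` carries `K ^ n X` into `J ^ (n - k) X` for reductions `J` of `K`. -/
def GB (R X : Type*) [CommRing R] [AddCommGroup X] [Module R X] (c : R) (k : ℕ) : Prop :=
  ∀ J K : Ideal R, IsRed J K → ∀ n, ∀ x ∈ K ^ n • (⊤ : Submodule R X),
    c • x ∈ J ^ (n - k) • (⊤ : Submodule R X)

theorem UARk.cstep (c : R) (hc : ∀ x : X, c • x = 0 → x = 0) (g : X →ₗ[R] X'')
    (hg : Function.Surjective g) (hk : ∀ x, g x = 0 → ∃ y, c • y = x) {k1 k2 : ℕ}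
    (h1 : GK R X c k1) (h2 : UARk R X'' k2) : UARk R X (k1 + k2) := by
  intro s a n z hz0 _ hz
  obtain ⟨w', hw0, hw1, hw⟩ := lift_step g hg h2 a n z hz0 hz
  choose v hv using fun A α h => hk _ (hw A α h)
  let v' : Finset (Fin s) → (Fin s → ℕ) → X := fun A α =>
    if h : dg α + k2 < n then (if A = ∅ then 0 else v A α h) else 0
  have hv' : ∀ A α, dg α + k2 < n → c • v' A α = (z - dd a w') A α := by
    intro A α hα
    simp only [v', hα, dif_pos]
    split_ifs with h0
    · subst h0; simp [hz0, hw1]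
    · exact hv A α hα
  obtain ⟨u, hu0, hu⟩ := h1 s a (n - k2) v' (by funext α; simp [v'])
    (fun A α hα => by
      apply hc
      have h3 : c • (dd a v' A α) = dd a (z - dd a w') A α := by
        rw [dd_apply, dd_apply, Finset.smul_sum]
        refine Finset.sum_congr rfl fun j _ => ?_
        rw [← hv' _ α (by omega)]
        split_ifs with h4 h5
        · rw [smul_zero]
        · simp only [smul_sub, smul_zero, smul_comm c]
        · rw [← hv' _ _ (by have := dg_lo j α h5; omega)]
          simp only [smul_sub, smul_comm c]
      rw [h3, map_sub, dd_sq, sub_zero]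
      exact hz A α (by omega))
  refine ⟨w' + u, by simp [hw0, hu0], fun _ _ => trivial, fun A α hα => ?_⟩
  have := hu A α (by omega)
  rw [Pi.sub_apply, Pi.sub_apply, Pi.smul_apply, Pi.smul_apply, hv' A α (by omega)] at this
  rw [map_add, ← sub_sub]; exact this

theorem BSk.cstep [IsNoetherianRing R] (c : R) (g : X →ₗ[R] X'')
    (hg : Function.Surjective g) (hk : ∀ x, g x = 0 ↔ ∃ y, c • y = x)
    {k1 k2 l : ℕ}
    (h1 : GB R X c k1) (h2 : BSk R X'' k2) (h3 : UARk R X'' l) : BSk R X (k1 + k2 + l) := by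
  intro J K hJK n x hx
  have h1 : g x ∈ J ^ (n - k2) • (⊤ : Submodule R X'') := by
    apply h2 J K hJK n
    rw [← map_smul_top g hg]
    exact Submodule.mem_map_of_mem hx
  rw [← map_smul_top g hg] at h1
  obtain ⟨u, hu1, hu2⟩ := h1
  have hv : x - u ∈ K ^ (n - k2) • (⊤ : Submodule R X) := by
    refine sub_mem (Submodule.smul_mono_left (Ideal.pow_le_pow_right (by omega)) hx)
      (Submodule.smul_mono_left (Ideal.pow_right_mono hJK.1 _) hu1)
  have h4 := inter_of_uar l g hg h3 K (n - k2) (x - u) hv (by rw [map_sub, hu2, sub_self])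
  have h5 : LinearMap.ker g = (⊤ : Submodule R X).map (LinearMap.lsmul R X c) := by
    ext x; simp [hk]
  rw [h5, ← Submodule.map_smul''] at h4
  obtain ⟨y, hy, hy2⟩ := h4
  have h6 := ‹GB R X c k1› J K hJK _ y hy
  have hy2' : c • y = x - u := hy2
  rw [hy2'] at h6
  have h7 : x - u ∈ J ^ (n - (k1 + k2 + l)) • (⊤ : Submodule R X) :=
    Submodule.smul_mono_left (Ideal.pow_le_pow_right (by omega)) h6
  have h8 : u ∈ J ^ (n - (k1 + k2 + l)) • (⊤ : Submodule R X) :=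
    Submodule.smul_mono_left (Ideal.pow_le_pow_right (by omega)) hu1
  simpa using add_mem h7 h8

/-- Invariance under isomorphism. -/
lemma UARk.of_equiv {k : ℕ} (e : X ≃ₗ[R] X'') (h : UARk R X'' k) : UARk R X k := by
  have h0 : UARk R PUnit 0 := fun s a n z _ _ _ =>
    ⟨0, rfl, fun _ _ => trivial, fun _ _ _ => Subsingleton.elim _ _⟩
  have := UARk.ext (e.symm : X'' →ₗ[R] X) (0 : X →ₗ[R] PUnit) e.symm.injective
    (fun _ => ⟨0, Subsingleton.elim _ _⟩) (fun x => ⟨fun _ => ⟨e x, by simp⟩, fun _ => rfl⟩) h h0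
  simpa using this

lemma BSk.of_equiv {k : ℕ} (e : X ≃ₗ[R] X'') (h : BSk R X'' k) : BSk R X k := by
  intro J K hJK n x hx
  have h1 : e x ∈ K ^ n • (⊤ : Submodule R X'') := by
    rw [← map_smul_top (e : X →ₗ[R] X'') e.surjective]
    exact Submodule.mem_map_of_mem hx
  have h2 := h J K hJK n h1
  rw [← map_smul_top (e : X →ₗ[R] X'') e.surjective] at h2
  obtain ⟨y, hy, hy2⟩ := h2
  rwa [← e.injective hy2]

lemma UARk.of_subsingleton [Subsingleton X] (k : ℕ) : UARk R X k := fun s a n z _ _ _ =>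
    ⟨0, rfl, fun _ _ => trivial, fun _ _ _ => Subsingleton.elim _ _⟩

lemma BSk.of_subsingleton [Subsingleton X] (k : ℕ) : BSk R X k := fun J K _ n x _ => by
  rw [Subsingleton.elim x 0]; exact zero_mem _

end CStep

/-! ### Dévissage and integral closure -/

section Dev
variable {R : Type u} [CommRing R] [IsNoetherianRing R]

/-- Dévissage: a property of finite modules stable under extensions holds for all finite modules
if it holds for `R ⧸ P` as soon as it holds for the modules killed by `P` and by
some element outside `P`. -/
theorem devissage (Q : (N : Type u) → [AddCommGroup N] → [Module R N] → Prop)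
    (hz : ∀ (N : Type u) [AddCommGroup N] [Module R N] [Subsingleton N], Q N)
    (hi : ∀ (N N' : Type u) [AddCommGroup N] [Module R N] [AddCommGroup N'] [Module R N']
      (e : N ≃ₗ[R] N'), Q N' → Q N)
    (he : ∀ (N₁ N₂ N₃ : Type u) [AddCommGroup N₁] [Module R N₁] [AddCommGroup N₂] [Module R N₂]
      [AddCommGroup N₃] [Module R N₃] (f : N₁ →ₗ[R] N₂) (g : N₂ →ₗ[R] N₃),
      Function.Injective f → Function.Surjective g → Function.Exact f g → Q N₁ → Q N₃ → Q N₂)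
    (hp : ∀ P : Ideal R, P.IsPrime → (∀ (N : Type u) [AddCommGroup N] [Module R N]
      [Module.Finite R N], (∀ x ∈ P, ∀ y : N, x • y = 0) →
      (∃ c ∉ P, ∀ y : N, c • y = 0) → Q N) → Q (R ⧸ P))
    (N : Type u) [AddCommGroup N] [Module R N] [hN : Module.Finite R N] : Q N := by
  have key : ∀ P : Ideal R, P.IsPrime → Q (R ⧸ P) := by
    intro P
    induction P using WellFoundedGT.induction with
    | ind P ih =>
    intro hP
    refine hp P hP fun N _ _ hN h1 h2 => ?_
    obtain ⟨c, hc, hcN⟩ := h2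
    revert h1 hcN
    refine IsNoetherianRing.induction_on_isQuotientEquivQuotientPrime R hN
      (motive := fun N _ _ _ => (∀ x ∈ P, ∀ y : N, x • y = 0) → (∀ y : N, c • y = 0) → Q N)
      ?_ ?_ ?_
    · intro N _ _ _ _ _ _; exact hz N
    · intro N _ _ _ p e h1 h2
      have h3 : ∀ x : R, (∀ y : N, x • y = 0) → x ∈ p.1 := by
        intro x hx
        have := hx (e.symm 1)
        rw [← map_smul, LinearEquiv.map_eq_zero_iff] at this
        rw [← Ideal.Quotient.eq_zero_iff_mem]
        rw [← this, Algebra.smul_def, mul_one]; rfl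
      refine hi _ _ e (ih p.1 ?_ p.2)
      refine lt_of_le_of_ne (fun x hx => h3 x (h1 x hx)) ?_
      rintro rfl
      exact hc (h3 c h2)
    · intro N₁ _ _ _ N₂ _ _ _ N₃ _ _ _ f g hf hg hfg m1 m3 h1 h2
      refine he N₁ N₂ N₃ f g hf hg hfg (m1 ?_ ?_) (m3 ?_ ?_)
      · intro x hx y; apply hf; rw [map_smul, h1 x hx, map_zero]
      · intro y; apply hf; rw [map_smul, h2, map_zero]
      · intro x hx y; obtain ⟨y, rfl⟩ := hg y; rw [← map_smul, h1 x hx, map_zero]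
      · intro y; obtain ⟨y, rfl⟩ := hg y; rw [← map_smul, h2, map_zero]
  refine IsNoetherianRing.induction_on_isQuotientEquivQuotientPrime R hN
      (motive := fun N _ _ _ => Q N) ?_ ?_ ?_
  · intro N _ _ _ _; exact hz N
  · intro N _ _ _ p e; exact hi _ _ e (key p.1 p.2)
  · intro N₁ _ _ _ N₂ _ _ _ N₃ _ _ _ f g hf hg hfg m1 m3
    exact he N₁ N₂ N₃ f g hf hg hfg m1 m3

/-- The combined uniform property of a module. -/
def UB (R X : Type*) [CommRing R] [AddCommGroup X] [Module R X] : Prop :=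
  (∃ k, UARk R X k) ∧ ∃ k, BSk R X k

lemma UB.of_equiv {X Y : Type*} [AddCommGroup X] [Module R X] [AddCommGroup Y] [Module R Y]
    (e : X ≃ₗ[R] Y) (h : UB R Y) : UB R X :=
  ⟨h.1.imp fun k hk => hk.of_equiv e, h.2.imp fun k hk => hk.of_equiv e⟩

lemma UB.of_subsingleton {X : Type*} [AddCommGroup X] [Module R X] [Subsingleton X] : UB R X :=
  ⟨⟨0, .of_subsingleton 0⟩, ⟨0, .of_subsingleton 0⟩⟩

lemma UB.ext {X Y Z : Type*} [AddCommGroup X] [Module R X] [AddCommGroup Y] [Module R Y]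
    [AddCommGroup Z] [Module R Z] (f : X →ₗ[R] Y) (g : Y →ₗ[R] Z) (hf : Function.Injective f)
    (hg : Function.Surjective g) (hfg : Function.Exact f g) (h1 : UB R X) (h3 : UB R Z) :
    UB R Y := by
  obtain ⟨⟨a, ha⟩, ⟨b, hb⟩⟩ := h1
  obtain ⟨⟨a', ha'⟩, ⟨b', hb'⟩⟩ := h3
  exact ⟨⟨_, ha.ext f g hf hg hfg ha'⟩, ⟨_, hb.ext f g hf hg hfg hb' ha'⟩⟩

/-- The generic statement: some `c ≠ 0` in the domain `D` uniformly kills the obstructions. -/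
def GEN (D : Type*) [CommRing D] : Prop :=
  ∃ c : D, c ≠ 0 ∧ (∃ k, GK D D c k) ∧ ∃ k, GB D D c k

lemma UB.of_gen_quot (P : Ideal R) [P.IsPrime] (c : R) (hc : c ∉ P)
    (h1 : ∃ k, GK R (R ⧸ P) c k) (h2 : ∃ k, GB R (R ⧸ P) c k)
    (h3 : ∀ (N : Type u) [AddCommGroup N] [Module R N]
      [Module.Finite R N], (∀ x ∈ P, ∀ y : N, x • y = 0) →
      (∃ c ∉ P, ∀ y : N, c • y = 0) → UB R N) : UB R (R ⧸ P) := by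
  obtain ⟨k1, h1⟩ := h1
  obtain ⟨k2, h2⟩ := h2
  let W : Submodule R (R ⧸ P) := LinearMap.range (LinearMap.lsmul R (R ⧸ P) c)
  have hP : ∀ x ∈ P, ∀ y : R ⧸ P, x • y = 0 := by
    intro x hx y
    rw [Algebra.smul_def]
    have : algebraMap R (R ⧸ P) x = 0 := Ideal.Quotient.eq_zero_iff_mem.2 hx
    rw [this, zero_mul]
  have h4 : UB R ((R ⧸ P) ⧸ W) := by
    refine h3 _ ?_ ⟨c, hc, ?_⟩
    · intro x hx y
      obtain ⟨y, rfl⟩ := W.mkQ_surjective y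
      rw [← map_smul, hP x hx, map_zero]
    · intro y
      obtain ⟨y, rfl⟩ := W.mkQ_surjective y
      rw [← map_smul, Submodule.mkQ_apply, Submodule.Quotient.mk_eq_zero]
      exact ⟨y, rfl⟩
  obtain ⟨⟨a, ha⟩, ⟨b, hb⟩⟩ := h4
  have hker : ∀ x, W.mkQ x = 0 ↔ ∃ y, c • y = x := by
    intro x
    rw [Submodule.mkQ_apply, Submodule.Quotient.mk_eq_zero]; rfl
  refine ⟨⟨_, UARk.cstep c ?_ W.mkQ W.mkQ_surjective (fun x hx => (hker x).1 hx) h1 ha⟩,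
    ⟨_, BSk.cstep c W.mkQ W.mkQ_surjective hker h2 hb ha⟩⟩
  intro x hx
  rw [Algebra.smul_def] at hx
  refine (mul_eq_zero.1 hx).resolve_left fun h => hc ?_
  exact Ideal.Quotient.eq_zero_iff_mem.1 h

lemma GK.of_quot (P : Ideal R) (c : R) {k : ℕ} (h : GK (R ⧸ P) (R ⧸ P) (Ideal.Quotient.mk P c) k) :
    GK R (R ⧸ P) c k := by
  intro s a n z hz0 hz
  have hmap : ∀ z : Finset (Fin s) → (Fin s → ℕ) → R ⧸ P,
      dd (fun j => Ideal.Quotient.mk P (a j)) z = dd a z := fun z =>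
    dd_mapC (AddMonoidHom.id _) a (fun j => Ideal.Quotient.mk P (a j)) (fun j x => rfl) z
  obtain ⟨w, hw0, hw⟩ := h s (fun j => Ideal.Quotient.mk P (a j)) n z hz0
    (fun A α hα => by rw [hmap]; exact hz A α hα)
  refine ⟨w, hw0, fun A α hα => ?_⟩
  rw [← hmap]; exact hw A α hα

lemma mem_smul_top_quot (P : Ideal R) (J : Ideal R) (x : R ⧸ P) :
    x ∈ J • (⊤ : Submodule R (R ⧸ P)) ↔ x ∈ J.map (Ideal.Quotient.mk P) := by
  rw [← Ideal.Quotient.algebraMap_eq, Ideal.smul_top_eq_map]; rfl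

lemma GB.of_quot (P : Ideal R) (c : R) {k : ℕ} (h : GB (R ⧸ P) (R ⧸ P) (Ideal.Quotient.mk P c) k) :
    GB R (R ⧸ P) c k := by
  intro J K hJK n x hx
  rw [mem_smul_top_quot, Ideal.map_pow] at hx ⊢
  have := h (J.map (Ideal.Quotient.mk P)) (K.map (Ideal.Quotient.mk P)) ⟨Ideal.map_mono hJK.1, by
    obtain ⟨m, hm⟩ := hJK.2
    refine ⟨m, ?_⟩
    rw [← Ideal.map_pow, ← Ideal.map_pow, ← Ideal.map_mul]
    exact Ideal.map_mono hm⟩ n x (by simpa using hx)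
  simp only [smul_eq_mul, Ideal.mul_top] at this
  exact this

theorem UB.of_gen (h : ∀ P : Ideal R, P.IsPrime → GEN (R ⧸ P))
    (N : Type u) [AddCommGroup N] [Module R N] [hN : Module.Finite R N] : UB R N := by
  refine devissage (fun N _ _ => UB R N) (fun N _ _ _ => UB.of_subsingleton)
    (fun N N' _ _ _ _ e h => h.of_equiv e)
    (fun N₁ N₂ N₃ _ _ _ _ _ _ f g hf hg hfg h1 h3 => UB.ext f g hf hg hfg h1 h3) ?_ N
  intro P hP h3
  obtain ⟨c, hc, ⟨k1, h1⟩, ⟨k2, h2⟩⟩ := h P hP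
  obtain ⟨c, rfl⟩ := Ideal.Quotient.mk_surjective c
  exact UB.of_gen_quot P c (fun h => hc (Ideal.Quotient.eq_zero_iff_mem.2 h))
    ⟨k1, .of_quot P c h1⟩ ⟨k2, .of_quot P c h2⟩ h3

end Dev

section IntDim
variable {R : Type*} [CommRing R]

lemma IsRed.trans {J K L : Ideal R} (h1 : IsRed J K) (h2 : IsRed K L) : IsRed J L := by
  obtain ⟨hJK, m, hm⟩ := h1
  obtain ⟨hKL, l, hl⟩ := h2
  have hm' : ∀ t, K ^ (m + t + 1) ≤ J ^ (t + 1) * K ^ m := by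
    intro t
    induction t with
    | zero => simpa using hm
    | succ t ih =>
      have e : K ^ (m + (t + 1) + 1) = K * K ^ (m + t + 1) := by
        rw [← pow_succ']; congr 1
      rw [e]
      refine (Ideal.mul_mono_right ih).trans ?_
      rw [mul_left_comm, ← pow_succ', pow_succ J (t + 1), mul_assoc]
      exact Ideal.mul_mono_right hm
  have hl' : ∀ t, L ^ (l + t + 1) ≤ K ^ (t + 1) * L ^ l := by
    intro t
    induction t with
    | zero => simpa using hl
    | succ t ih =>
      have e : L ^ (l + (t + 1) + 1) = L * L ^ (l + t + 1) := by
        rw [← pow_succ']; congr 1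
      rw [e]
      refine (Ideal.mul_mono_right ih).trans ?_
      rw [mul_left_comm, ← pow_succ', pow_succ K (t + 1), mul_assoc]
      exact Ideal.mul_mono_right hl
  refine ⟨hJK.trans hKL, l + m, ?_⟩
  refine (hl' m).trans ((Ideal.mul_mono_left hm).trans ?_)
  rw [mul_assoc, add_comm l m, pow_add]
  exact Ideal.mul_mono_right (Ideal.mul_mono_left (Ideal.pow_right_mono hKL _))

lemma IsRed.adjoin {J : Ideal R} {x : R} (hx : IsIntegralOverIdeal J x) :
    IsRed J (J ⊔ Ideal.span {x}) := by
  obtain ⟨n, hn, a, ha, h⟩ := hx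
  set K := J ⊔ Ideal.span {x} with hK
  have hJK : J ≤ K := le_sup_left
  have hxK : x ∈ K := Ideal.mem_sup_right (Ideal.mem_span_singleton_self x)
  refine ⟨hJK, n - 1, ?_⟩
  rw [Nat.sub_add_cancel hn]
  have h1 : ∀ t, K ^ (t + 1) ≤ J * K ^ t ⊔ Ideal.span {x ^ (t + 1)} := by
    intro t
    induction t with
    | zero => simp [hK]
    | succ t ih =>
      rw [pow_succ K (t + 1)]
      refine (Ideal.mul_mono_left ih).trans ?_
      rw [Ideal.sup_mul]
      refine sup_le (le_sup_of_le_left ?_) ?_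
      · rw [mul_assoc, ← pow_succ]
      · conv_lhs => rw [hK, Ideal.mul_sup]
        refine sup_le (le_sup_of_le_left ?_) (le_sup_of_le_right ?_)
        · rw [mul_comm]
          refine Ideal.mul_mono_right ?_
          rw [Ideal.span_singleton_le_iff_mem]
          exact Ideal.pow_mem_pow hxK _
        · rw [Ideal.span_singleton_mul_span_singleton, ← pow_succ]
  obtain ⟨m, rfl⟩ : ∃ m, n = m + 1 := ⟨n - 1, by omega⟩
  refine (h1 m).trans (sup_le (by simp) ?_)
  rw [Ideal.span_singleton_le_iff_mem, eq_neg_of_add_eq_zero_left h]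
  refine neg_mem (sum_mem fun i hi => ?_)
  rw [Finset.mem_Icc] at hi
  have h2 : a i ∈ J * K ^ (i - 1) := by
    have : a i ∈ J ^ (i - 1 + 1) := by
      rw [Nat.sub_add_cancel hi.1]; exact ha i hi.1 hi.2
    rw [pow_succ'] at this
    exact Ideal.mul_mono_right (Ideal.pow_right_mono hJK _) this
  have h3 := Ideal.mul_mem_mul h2 (Ideal.pow_mem_pow hxK (m + 1 - i))
  rw [mul_assoc, ← pow_add] at h3
  convert h3 using 3
  omega

lemma IsIntegralOverIdeal.mono' {J K : Ideal R} (hJK : J ≤ K) {x : R}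
    (hx : IsIntegralOverIdeal J x) : IsIntegralOverIdeal K x := by
  obtain ⟨n, hn, a, ha, h⟩ := hx
  exact ⟨n, hn, a, fun i h1 h2 => Ideal.pow_right_mono hJK _ (ha i h1 h2), h⟩

lemma isRed_intClosure [IsNoetherianRing R] (J : Ideal R) : ∃ K, Ideal.intClosure J ≤ K ∧ IsRed J K := by
  have h1 : (Ideal.intClosure J).FG := IsNoetherian.noetherian _
  obtain ⟨S, hS, hS2⟩ := (Submodule.fg_span_iff_fg_span_finset_subset _).1 h1
  have h2 : ∀ T : Finset R, (∀ x ∈ T, IsIntegralOverIdeal J x) →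
      ∃ K : Ideal R, (T : Set R) ⊆ (K : Set R) ∧ IsRed J K := by
    intro T
    classical
    induction T using Finset.induction_on with
    | empty => exact fun _ => ⟨J, by simp, le_rfl, 0, by simp⟩
    | insert x T _ ih =>
      intro hT
      obtain ⟨K, hK, hJK⟩ := ih fun x hx => hT x (Finset.mem_insert_of_mem hx)
      refine ⟨K ⊔ Ideal.span {x}, ?_, hJK.trans (IsRed.adjoin
        (IsIntegralOverIdeal.mono' hJK.1 (hT x (Finset.mem_insert_self _ _))))⟩
      intro y hy
      rw [Finset.coe_insert] at hy
      rcases hy with rfl | hy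
      · exact Ideal.mem_sup_right (Ideal.mem_span_singleton_self y)
      · exact Ideal.mem_sup_left (hK hy)
  obtain ⟨K, hK, hJK⟩ := h2 S hS
  refine ⟨K, ?_, hJK⟩
  unfold Ideal.intClosure
  rw [← Ideal.submodule_span_eq, hS2]
  exact Submodule.span_le.2 hK

theorem intDimBound_of_BSk [IsNoetherianRing R] {k : ℕ} (h : BSk R R k) : IntDimBound R k := by
  intro J n _
  obtain ⟨K, hK, hJK⟩ := isRed_intClosure J
  have := h J K hJK n
  simp only [smul_eq_mul, Ideal.mul_top] at this
  exact (Ideal.pow_right_mono hK n).trans this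

end IntDim

/-! ### Resolutions by retracts of free modules -/

section Cz
variable {R : Type*} [CommRing R] {s : ℕ} (a : Fin s → R)
  {X : Type*} [AddCommGroup X] [Module R X] {Y : Type*} [AddCommGroup Y] [Module R Y]
  {Z : Type*} [AddCommGroup Z] [Module R Z]

/-- Koszul cochains with power series coefficients in `X`. -/
abbrev Cz (s : ℕ) (X : Type*) := Finset (Fin s) → (Fin s → ℕ) → X

/-- The map on Koszul cochains induced by a linear map. -/
def cm (g : X →ₗ[R] Y) : Cz s X →ₗ[R] Cz s Y where
  toFun z := mapC g z
  map_add' x y := by funext A α; simp [mapC]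
  map_smul' r x := by funext A α; simp [mapC]

@[simp] lemma cm_apply (g : X →ₗ[R] Y) (z : Cz s X) (A) (α) : cm g z A α = g (z A α) := rfl

lemma cm_dd (g : X →ₗ[R] Y) (z : Cz s X) : cm g (dd a z) = dd a (cm g z) :=
  (dd_mapC g.toAddMonoidHom a a (fun j x => by simp) z).symm

lemma cm_cm (h : Y →ₗ[R] Z) (g : X →ₗ[R] Y) (z : Cz s X) : cm h (cm g z) = cm (h ∘ₗ g) z := rfl

lemma cm_lift (g : X →ₗ[R] Y) (hg : Function.Surjective g) (z : Cz s Y) :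
    ∃ v : Cz s X, cm g v = z := by
  choose c hc using hg
  exact ⟨fun A α => c (z A α), by funext A α; exact hc _⟩

lemma cm_lift_empty (g : X →ₗ[R] Y) (hg : Function.Surjective g) (z : Cz s Y) (hz : z ∅ = 0) :
    ∃ v : Cz s X, v ∅ = 0 ∧ cm g v = z := by
  choose c hc using hg
  refine ⟨fun A α => if A = ∅ then 0 else c (z A α), by funext α; simp, ?_⟩
  funext A α
  rw [cm_apply]
  split_ifs with h
  · subst h; simp [hz]
  · exact hc _

/-- Cochains with vanishing coefficients in degrees below `n`. -/
def Fil (R : Type*) [CommRing R] (s : ℕ) (X : Type*) [AddCommGroup X] [Module R X] (n : ℕ) :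
    Submodule R (Cz s X) where
  carrier := {t | ∀ A α, dg α < n → t A α = 0}
  add_mem' h h' A α hα := by simp [h A α hα, h' A α hα]
  zero_mem' := by simp
  smul_mem' r x h A α hα := by simp [h A α hα]

lemma Fil_anti : Antitone (Fil R s X) := fun m n h t ht A α hα => ht A α (by omega)

lemma cm_Fil (g : X →ₗ[R] Y) {n : ℕ} {t : Cz s X} (ht : t ∈ Fil R s X n) :
    cm g t ∈ Fil R s Y n := fun A α hα => by rw [cm_apply, ht A α hα, map_zero]

lemma dd_Fil {n : ℕ} {t : Cz s X} (ht : t ∈ Fil R s X n) : dd a t ∈ Fil R s X n := by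
  intro A α hα
  rw [dd_apply]
  refine Finset.sum_eq_zero fun j _ => ?_
  rw [ht _ α hα]
  split_ifs with h1 h2
  · rfl
  · simp
  · rw [ht _ _ (by have := dg_lo j α h2; omega)]; simp

/-- The total differential. -/
def DT (σ δ : X →ₗ[R] X) : Cz s X →ₗ[R] Cz s X := dd a ∘ₗ cm σ + cm δ

lemma DT_apply (σ δ : X →ₗ[R] X) (t : Cz s X) : DT a σ δ t = dd a (cm σ t) + cm δ t := rfl

lemma DT_DT (σ δ : X →ₗ[R] X) (h1 : ∀ x, δ (δ x) = 0) (h2 : ∀ x, σ (δ x) = - δ (σ x))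
    (t : Cz s X) : DT a σ δ (DT a σ δ t) = 0 := by
  simp only [DT_apply, map_add, cm_dd, dd_sq, zero_add]
  have e1 : cm δ (cm δ t) = 0 := by funext A α; simp [h1]
  have e2 : cm σ (cm δ t) = - cm δ (cm σ t) := by funext A α; simp [h2]
  rw [e1, e2, map_neg]; simp

lemma cm_DT (σ δ : X →ₗ[R] X) (σ' δ' : Y →ₗ[R] Y) (g : X →ₗ[R] Y)
    (h1 : ∀ x, g (δ x) = δ' (g x)) (h2 : ∀ x, g (σ x) = σ' (g x)) (t : Cz s X) :
    cm g (DT a σ δ t) = DT a σ' δ' (cm g t) := by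
  simp only [DT_apply, map_add, cm_dd]
  congr 2
  · funext A α; simp [h2]
  · funext A α; simp [h1]

end Cz

/-- Homotopy lifting along `f : E → X`, with `ℓ + 1` uses of the killing hypothesis. -/
def LP (R : Type u) [CommRing R] (X E : Type u) [AddCommGroup X] [Module R X] [AddCommGroup E]
    [Module R E] (dX : X →ₗ[R] X) (dE : E →ₗ[R] E) (f : E →ₗ[R] X) (ℓ : ℕ) : Prop :=
  ∀ (T : Type u) [AddCommGroup T] [Module R T] (Dop : T →ₗ[R] T) (F G : ℕ → Submodule R T)
    (G0 : Submodule R T) (k : ℕ), Antitone F → Antitone G → (∀ n, G0 ≤ G n) →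
    (∀ n, ∀ t ∈ G n, Dop t ∈ F n → ∃ w ∈ G0, t - Dop w ∈ F (n - k)) →
    ∀ (n : ℕ) (η : R), η * η = 1 → ∀ θ : X →ₗ[R] T, (∀ y, θ y ∈ G n) →
      (∀ y, Dop (θ y) - η • θ (dX y) ∈ F n) →
      ∃ s : E →ₗ[R] T, (∀ x, s x ∈ G0) ∧
        ∀ x, θ (f x) - Dop (s x) - η • s (dE x) ∈ F (n - (ℓ + 1) * k)

/-- A resolution of `N` of length `ℓ` (total space `X`, differential `dX`, parity `sX`,
augmentation `ε`) whose underlying module is, up to `c`, a retract of the finite free `E`. -/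
structure Tw (R : Type u) [CommRing R] (N : Type u) [AddCommGroup N] [Module R N] (c : R) (ℓ : ℕ) :
    Type (u + 1) where
  X : Type u
  E : Type u
  [iX : AddCommGroup X]
  [mX : Module R X]
  [iE : AddCommGroup E]
  [mE : Module R E]
  [fE : Module.Free R E]
  [nE : Module.Finite R E]
  dX : X →ₗ[R] X
  sX : X →ₗ[R] X
  dE : E →ₗ[R] E
  sE : E →ₗ[R] E
  ε : X →ₗ[R] N
  f : E →ₗ[R] X
  g : X →ₗ[R] E
  hε : Function.Surjective ε
  εd : ∀ x, ε (dX x) = 0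
  εs : ∀ x, ε (sX x) = ε x
  dd0 : ∀ x, dX (dX x) = 0
  sd : ∀ x, sX (dX x) = - dX (sX x)
  ss : ∀ x, sE (sE x) = x
  sdE : ∀ x, sE (dE x) = - dE (sE x)
  fs : ∀ x, f (sE x) = sX (f x)
  gd : ∀ x, g (dX x) = dE (g x)
  gs : ∀ x, g (sX x) = sE (g x)
  fg : ∀ x, f (g x) = c • x
  acyc : ∀ (s : ℕ) (a : Fin s → R) (n : ℕ) (t : Cz s X), DT a sX dX t ∈ Fil R s X n →
    cm ε t ∈ Fil R s N n → ∃ w, cm ε w = 0 ∧ t - DT a sX dX w ∈ Fil R s X n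
  lp : LP R X E dX dE f ℓ
  tr : LinearMap.trace R E (sE ∘ₗ g ∘ₗ f) = c * (Module.finrank R N : R)

section Base
variable {R : Type u} [CommRing R] [IsDomain R]

lemma trace_retract {N Q : Type u} [AddCommGroup N] [Module R N] [Module.Finite R N] [AddCommGroup Q]
    [Module R Q] [Module.Free R Q] [Module.Finite R Q] (c : R) (f : Q →ₗ[R] N) (g : N →ₗ[R] Q)
    (fg : ∀ x, f (g x) = c • x) :
    LinearMap.trace R Q (g ∘ₗ f) = c * (Module.finrank R N : R) := by
  let K := FractionRing R
  apply IsFractionRing.injective R K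
  have hfg : f ∘ₗ g = c • LinearMap.id := LinearMap.ext fg
  rw [← LinearMap.trace_baseChange, LinearMap.baseChange_comp, LinearMap.trace_comp_comm',
    ← LinearMap.baseChange_comp, hfg, LinearMap.baseChange_smul, LinearMap.baseChange_id]
  rw [← algebraMap_smul K c (LinearMap.id : TensorProduct R K N →ₗ[K] _), map_smul,
    LinearMap.trace_id, map_mul, map_natCast, smul_eq_mul]
  congr 2
  rw [IsFractionRing.finrank_right_eq R K]
  exact IsLocalizedModule.finrank_eq (nonZeroDivisors R) (TensorProduct.mk R K N 1) le_rfl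

/-- A `c`-projective module. -/
noncomputable def Tw.base {N Q : Type u} [AddCommGroup N] [Module R N] [Module.Finite R N] [AddCommGroup Q]
    [Module R Q] [Module.Free R Q] [Module.Finite R Q] (c : R) (f : Q →ₗ[R] N) (g : N →ₗ[R] Q)
    (fg : ∀ x, f (g x) = c • x) : Tw R N c 0 where
  X := N
  E := Q
  dX := 0
  sX := LinearMap.id
  dE := 0
  sE := LinearMap.id
  ε := LinearMap.id
  f := f
  g := g
  hε := Function.surjective_id
  εd x := rfl
  εs x := rfl
  dd0 x := rfl
  sd x := by simp
  ss x := rfl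
  sdE x := by simp
  fs x := rfl
  gd x := by simp
  gs x := rfl
  fg := fg
  acyc s a n t h1 h2 := ⟨0, by simp, by rw [map_zero, sub_zero]; exact h2⟩
  lp := by
    intro T _ _ Dop F G G0 k hF hG hG0 hk n η hη θ h1 h2
    let b := Module.Free.chooseBasis R Q
    choose w hw hw2 using fun i => hk n (θ (f (b i))) (h1 _) (by simpa using h2 (f (b i)))
    refine ⟨b.constr R w, fun x => ?_, fun x => ?_⟩
    · rw [Module.Basis.constr_apply]
      exact Submodule.finsuppSum_mem _ _ _ _ fun i _ => G0.smul_mem _ (hw i)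
    · simp only [LinearMap.zero_apply, map_zero, smul_zero, sub_zero, zero_add, one_mul]
      have : ∀ x, (θ ∘ₗ f - Dop ∘ₗ b.constr R w) x ∈ F (n - k) := by
        intro x
        rw [← b.sum_repr x, map_sum]
        refine Submodule.sum_mem _ fun i _ => ?_
        rw [map_smul]
        refine Submodule.smul_mem _ _ ?_
        simpa using hw2 i
      exact this x
  tr := trace_retract c f g fg

end Base

section Step
variable {R : Type u} [CommRing R] [IsDomain R]
variable {N N' P : Type u} [AddCommGroup N] [Module R N] [AddCommGroup N'] [Module R N']
  [AddCommGroup P] [Module R P]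

lemma lp_step [Module.Free R P] [Module.Finite R P] {X E : Type u} [AddCommGroup X] [Module R X]
    [AddCommGroup E] [Module R E] (dX : X →ₗ[R] X) (dE : E →ₗ[R] E) (f : E →ₗ[R] X) (ℓ : ℕ)
    (ε : X →ₗ[R] P) (hε : ∀ x, ε (dX x) = 0) (h : LP R X E dX dE f ℓ) :
    LP R (P × X) (P × E) (LinearMap.prod (ε ∘ₗ LinearMap.snd R P X) (-dX ∘ₗ LinearMap.snd R P X))
      (LinearMap.prod (ε ∘ₗ f ∘ₗ LinearMap.snd R P E) (-dE ∘ₗ LinearMap.snd R P E))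
      (LinearMap.prodMap LinearMap.id f) (ℓ + 1) := by
  intro T _ _ Dop F G G0 k hF hG hG0 hk n η hη θ h1 h2
  let b := Module.Free.chooseBasis R P
  choose w hw hw2 using fun i => hk n (θ (b i, 0)) (h1 _) (by
    have h3 : Dop (θ (b i, 0)) - η • θ (ε 0, -dX 0) ∈ F n := h2 (b i, 0)
    rw [map_zero, map_zero, neg_zero, show ((0 : P), (0 : X)) = 0 from rfl, map_zero, smul_zero,
      sub_zero] at h3
    exact h3)
  let s0 : P →ₗ[R] T := b.constr R w
  have hs0 : ∀ p, s0 p ∈ G0 := fun p => by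
    simp only [s0]; rw [Module.Basis.constr_apply]
    exact Submodule.finsuppSum_mem _ _ _ _ fun i _ => G0.smul_mem _ (hw i)
  have hs1 : ∀ p, θ (p, 0) - Dop (s0 p) ∈ F (n - k) := by
    intro p
    have : (θ ∘ₗ LinearMap.inl R P X - Dop ∘ₗ s0) p ∈ F (n - k) := by
      rw [← b.sum_repr p, map_sum]
      refine Submodule.sum_mem _ fun i _ => ?_
      rw [map_smul]
      refine Submodule.smul_mem _ _ ?_
      simpa [s0] using hw2 i
    exact this
  have hadd : ∀ p x, θ (p, x) = θ (p, 0) + θ (0, x) := fun p x => by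
    rw [← map_add]; simp
  let θ' : X →ₗ[R] T := θ ∘ₗ LinearMap.inr R P X - η • s0 ∘ₗ ε
  have hθ' : ∀ x, θ' x = θ (0, x) - η • s0 (ε x) := fun x => rfl
  obtain ⟨s', hs', hs2⟩ := h T Dop F G G0 k hF hG hG0 hk (n - k) (-η) (by rw [neg_mul_neg, hη]) θ'
    (fun y => by
      rw [hθ']
      exact sub_mem (hG (Nat.sub_le _ _) (h1 _)) (Submodule.smul_mem _ _ (hG0 _ (hs0 _))))
    (fun y => by
      have e1 : Dop (θ (0, y)) - η • θ (ε y, -dX y) ∈ F (n - k) := hF (Nat.sub_le n k) (h2 (0, y))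
      have e2 := hs1 (ε y)
      rw [hadd (ε y)] at e1
      have e3 : θ (0, - dX y) = - θ (0, dX y) := by
        rw [← map_neg θ, Prod.neg_mk, neg_zero]
      rw [e3] at e1
      rw [hθ', hθ', hε, map_zero, smul_zero, sub_zero]
      convert add_mem e1 ((F (n - k)).smul_mem η e2) using 1
      simp only [map_sub, map_smul, smul_sub, smul_add, neg_smul, smul_neg]
      abel)
  refine ⟨LinearMap.coprod s0 s', fun x => ?_, fun x => ?_⟩
  · rw [LinearMap.coprod_apply]; exact add_mem (hs0 _) (hs' _)
  · obtain ⟨p, y⟩ := x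
    have e1 := hs2 y
    have e2 := hF (show n - k - (ℓ + 1) * k ≤ n - k by omega) (hs1 p)
    rw [hθ'] at e1
    have e3 : n - (ℓ + 1 + 1) * k = n - k - (ℓ + 1) * k := by
      rw [Nat.sub_sub]; congr 1; ring
    rw [e3]
    have e4 : θ (p, f y) - Dop (s0 p + s' y) - η • (s0 (ε (f y)) + s' (-dE y)) ∈
        F (n - k - (ℓ + 1) * k) := by
      convert add_mem e1 e2 using 1
      rw [hadd p (f y), map_add, map_neg]
      simp only [smul_add, smul_neg, neg_smul]
      abel
    exact e4

lemma acyc_step {X : Type u} [AddCommGroup X] [Module R X] (dX sX : X →ₗ[R] X) (ε : X →ₗ[R] N')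
    (hε : Function.Surjective ε) (εd : ∀ x, ε (dX x) = 0) (εs : ∀ x, ε (sX x) = ε x)
    (d0 : ∀ x, dX (dX x) = 0) (sd : ∀ x, sX (dX x) = - dX (sX x))
    (ι : N' →ₗ[R] P) (π : P →ₗ[R] N) (hι : Function.Injective ι) (hιπ : Function.Exact ι π)
    (s : ℕ) (a : Fin s → R) (n : ℕ)
    (ih : ∀ t : Cz s X, DT a sX dX t ∈ Fil R s X n →
      cm ε t ∈ Fil R s N' n → ∃ w, cm ε w = 0 ∧ t - DT a sX dX w ∈ Fil R s X n)
    (σ δ : P × X →ₗ[R] P × X) (hσ : ∀ p x, σ (p, x) = (p, - sX x))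
    (hδ : ∀ p x, δ (p, x) = (ι (ε x), - dX x))
    (t : Cz s (P × X)) (h1 : DT a σ δ t ∈ Fil R s _ n)
    (h2 : cm (π ∘ₗ LinearMap.fst R P X) t ∈ Fil R s N n) :
    ∃ w, cm (π ∘ₗ LinearMap.fst R P X) w = 0 ∧ t - DT a σ δ w ∈ Fil R s _ n := by
  have fstD : ∀ t : Cz s (P × X), cm (LinearMap.fst R P X) (DT a σ δ t) =
      dd a (cm (LinearMap.fst R P X) t) + cm ι (cm ε (cm (LinearMap.snd R P X) t)) := by
    intro t
    rw [DT_apply, map_add, cm_dd]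
    congr 1
    · congr 1; funext A α; change (σ ((t A α).1, (t A α).2)).1 = _; rw [hσ]; rfl
    · funext A α; change (δ ((t A α).1, (t A α).2)).1 = _; rw [hδ]; rfl
  have sndD : ∀ t : Cz s (P × X), cm (LinearMap.snd R P X) (DT a σ δ t) =
      - DT a sX dX (cm (LinearMap.snd R P X) t) := by
    intro t
    rw [DT_apply, DT_apply, map_add, cm_dd, neg_add, ← map_neg (dd a)]
    congr 1
    · congr 1; funext A α; change (σ ((t A α).1, (t A α).2)).2 = _; rw [hσ]; rfl
    · funext A α; change (δ ((t A α).1, (t A α).2)).2 = _; rw [hδ]; rfl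
  have hεD : ∀ t, cm ε (DT a sX dX t) = dd a (cm ε t) := by
    intro t
    rw [DT_apply, map_add, cm_dd]
    have e1 : cm ε (cm dX t) = 0 := by funext A α; simp [εd]
    have e2 : cm ε (cm sX t) = cm ε t := by funext A α; simp [εs]
    rw [e1, e2, add_zero]
  have hFil : ∀ t : Cz s (P × X), cm (LinearMap.fst R P X) t ∈ Fil R s P n →
      cm (LinearMap.snd R P X) t ∈ Fil R s X n → t ∈ Fil R s (P × X) n := by
    intro t h h' A α hα
    exact Prod.ext (h A α hα) (h' A α hα)
  have hpair : ∀ (p : Cz s P) (x : Cz s X), ∃ t : Cz s (P × X),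
      cm (LinearMap.fst R P X) t = p ∧ cm (LinearMap.snd R P X) t = x :=
    fun p x => ⟨fun A α => (p A α, x A α), rfl, rfl⟩
  have hu : ∃ u : Cz s N', cm (LinearMap.fst R P X) t - cm ι u ∈ Fil R s P n := by
    have : ∀ A α, ∃ y, dg α < n → ι y = (t A α).1 := by
      intro A α
      by_cases h : dg α < n
      · obtain ⟨y, hy⟩ := (hιπ _).1 (h2 A α h)
        exact ⟨y, fun _ => hy⟩
      · exact ⟨0, fun h' => absurd h' h⟩
    choose u hu using this
    refine ⟨u, fun A α hα => ?_⟩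
    simp [hu A α hα]
  obtain ⟨u, hu⟩ := hu
  obtain ⟨v, rfl⟩ := cm_lift ε hε u
  have hιFil : ∀ y : Cz s N', cm ι y ∈ Fil R s P n → y ∈ Fil R s N' n := by
    intro y hy A α hα
    apply hι; rw [map_zero]; exact hy A α hα
  have h3 := cm_Fil (LinearMap.fst R P X) h1
  have h4 := cm_Fil (LinearMap.snd R P X) h1
  rw [fstD] at h3
  rw [sndD, Submodule.neg_mem_iff] at h4
  obtain ⟨w1, hw1, hw2⟩ := ih (cm (LinearMap.snd R P X) t + DT a sX dX v) (by
      rw [map_add, DT_DT a sX dX d0 sd, add_zero]; exact h4) (by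
      apply hιFil
      rw [map_add, map_add, hεD, cm_dd]
      have := sub_mem h3 (dd_Fil a hu)
      rw [map_sub] at this
      convert this using 1
      abel)
  obtain ⟨w, hwp, hwx⟩ := hpair 0 (v - w1)
  refine ⟨w, by rw [← cm_cm, hwp, map_zero], hFil _ ?_ ?_⟩
  · rw [map_sub, fstD, hwp, hwx, map_zero, zero_add, map_sub, hw1, sub_zero]; exact hu
  · rw [map_sub, sndD, hwx, map_sub]
    convert hw2 using 1
    abel

/-- Prolonging a resolution by a finite free module. -/
noncomputable def Tw.step [Module.Free R P] [Module.Finite R P] {c : R} {ℓ : ℕ} (W : Tw R N' c ℓ)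
    (ι : N' →ₗ[R] P) (π : P →ₗ[R] N) (hι : Function.Injective ι) (hπ : Function.Surjective π)
    (hιπ : Function.Exact ι π) (hrank : (Module.finrank R N : R) = Module.finrank R P - Module.finrank R N') :
    Tw R N c (ℓ + 1) :=
  letI := W.iX; letI := W.mX; letI := W.iE; letI := W.mE; letI := W.fE; letI := W.nE
  { X := P × W.X
    E := P × W.E
    dX := LinearMap.prod ((ι ∘ₗ W.ε) ∘ₗ LinearMap.snd R P W.X) (-W.dX ∘ₗ LinearMap.snd R P W.X)
    sX := LinearMap.prodMap LinearMap.id (-W.sX)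
    dE := LinearMap.prod ((ι ∘ₗ W.ε) ∘ₗ W.f ∘ₗ LinearMap.snd R P W.E) (-W.dE ∘ₗ LinearMap.snd R P W.E)
    sE := LinearMap.prodMap LinearMap.id (-W.sE)
    ε := π ∘ₗ LinearMap.fst R P W.X
    f := LinearMap.prodMap LinearMap.id W.f
    g := LinearMap.prodMap (c • LinearMap.id) W.g
    hε := fun y => by obtain ⟨p, rfl⟩ := hπ y; exact ⟨(p, 0), rfl⟩
    εd := fun x => (hιπ _).2 ⟨_, rfl⟩
    εs := fun x => rfl
    dd0 := fun x => by simp [W.dd0, W.εd]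
    sd := fun x => by simp [W.sd, W.εs]
    ss := fun x => by simp [W.ss]
    sdE := fun x => by simp [W.sdE, W.fs, W.εs]
    fs := fun x => by simp [W.fs]
    gd := fun x => by simp [W.gd, W.fg]
    gs := fun x => by simp [W.gs]
    fg := fun x => by simp [W.fg, Prod.ext_iff]
    acyc := fun s a n t h1 h2 => acyc_step W.dX W.sX W.ε W.hε W.εd W.εs W.dd0 W.sd ι π hι hιπ s a n
      (W.acyc s a n) _ _ (fun p x => rfl) (fun p x => rfl) t h1 h2
    lp := lp_step W.dX W.dE W.f ℓ (ι ∘ₗ W.ε) (fun x => by simp [W.εd]) W.lp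
    tr := by
      have : (LinearMap.prodMap LinearMap.id (-W.sE)) ∘ₗ (LinearMap.prodMap (c • LinearMap.id) W.g) ∘ₗ
        (LinearMap.prodMap LinearMap.id W.f) = LinearMap.prodMap (c • (LinearMap.id : P →ₗ[R] P))
          (-(W.sE ∘ₗ W.g ∘ₗ W.f)) := by
        ext x <;> simp
      rw [this, LinearMap.trace_prodMap', map_smul, map_neg, W.tr, LinearMap.trace_id, hrank,
        smul_eq_mul]
      ring }

end Step

/-! ### The trace argument -/

section TraceLemma
variable {R : Type u} [CommRing R]

/-- The trace argument: a cochain acting on `N` by boundaries is, up to the trace of the retract,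
itself a boundary. -/
lemma Tw.trace_boundary {N : Type u} [AddCommGroup N] [Module R N] {c : R} {ℓ : ℕ} (W : Tw R N c ℓ)
    {s : ℕ} (a : Fin s → R) (k : ℕ) (hk : Kill a k N) (n : ℕ) (z : Cz s R)
    (hz : dd a z ∈ Fil R s R n)
    (hzN : ∀ x : N, ∃ w : Cz s N, w ∅ = 0 ∧ ∀ α, dg α < n → z ∅ α • x = dd a w ∅ α) :
    ∃ w : Cz s R, w ∅ = 0 ∧
      (c * (Module.finrank R N : R)) • z - dd a w ∈ Fil R s R (n - (ℓ + 1) * k) := by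
  letI := W.iX; letI := W.mX; letI := W.iE; letI := W.mE; letI := W.fE; letI := W.nE
  have hεD : ∀ t, cm W.ε (DT a W.sX W.dX t) = dd a (cm W.ε t) := by
    intro t
    rw [DT_apply, map_add, cm_dd]
    have e1 : cm W.ε (cm W.dX t) = 0 := by funext A α; simp [W.εd]
    have e2 : cm W.ε (cm W.sX t) = cm W.ε t := by funext A α; simp [W.εs]
    rw [e1, e2, add_zero]
  let G0 : Submodule R (Cz s W.X) :=
    { carrier := {t | cm W.ε t ∅ = 0}
      add_mem' := fun {x y} h h' => by
        simp only [Set.mem_ofPred_eq, map_add, Pi.add_apply] at *; rw [h, h', add_zero]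
      zero_mem' := by simp only [Set.mem_ofPred_eq, map_zero]; rfl
      smul_mem' := fun r x h => by
        simp only [Set.mem_ofPred_eq, map_smul, Pi.smul_apply] at *; rw [h, smul_zero] }
  let G : ℕ → Submodule R (Cz s W.X) := fun n =>
    { carrier := {t | ∃ w : Cz s N, w ∅ = 0 ∧ ∀ α, dg α < n → cm W.ε t ∅ α = dd a w ∅ α}
      add_mem' := by
        rintro x y ⟨w, h, h'⟩ ⟨w', h1, h1'⟩
        refine ⟨w + w', by simp [h, h1], fun α hα => ?_⟩
        rw [map_add, map_add]
        exact congrArg₂ (· + ·) (h' α hα) (h1' α hα)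
      zero_mem' := ⟨0, rfl, fun α hα => by rw [map_zero, map_zero]⟩
      smul_mem' := by
        rintro r x ⟨w, h, h'⟩
        refine ⟨r • w, by simp [h], fun α hα => ?_⟩
        rw [map_smul, map_smul]
        exact congrArg (r • ·) (h' α hα) }
  let θ : W.X →ₗ[R] Cz s W.X :=
    { toFun := fun x A α => z A α • x
      map_add' := fun x y => by funext A α; simp
      map_smul' := fun r x => by funext A α; exact smul_comm _ _ _ }
  have hkill : ∀ n, ∀ t ∈ G n, DT a W.sX W.dX t ∈ Fil R s W.X n →
      ∃ w ∈ G0, t - DT a W.sX W.dX w ∈ Fil R s W.X (n - k) := by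
    rintro n t ⟨w0, hw0, hw⟩ ht
    set y : Cz s N := cm W.ε t - dd a w0 with hy
    have hy1 : dd a y ∈ Fil R s N n := by
      rw [hy, map_sub, dd_sq, sub_zero, ← hεD]; exact cm_Fil _ ht
    have hy2 : y - Function.update y ∅ 0 ∈ Fil R s N n := by
      intro A α hα
      by_cases hA : A = ∅
      · subst hA
        simp only [Pi.sub_apply, Function.update_self, Pi.zero_apply, sub_zero, hy]
        rw [hw α hα, sub_self]
      · simp [hA]
    obtain ⟨w1, hw1, -, hw1'⟩ := hk n (Function.update y ∅ 0) (by simp) (fun _ _ => trivial)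
      (fun A α hα => by rw [dd_zero_empty]; exact hy1 A α hα)
    obtain ⟨W0, hW0, hW0'⟩ := cm_lift_empty W.ε W.hε (w0 + w1) (by simp [hw0, hw1])
    obtain ⟨w, hw2, hw2'⟩ := W.acyc s a (n - k) (t - DT a W.sX W.dX W0) (by
        rw [map_sub, DT_DT a _ _ W.dd0 W.sd, sub_zero]
        exact Fil_anti (Nat.sub_le _ _) ht) (by
        rw [map_sub, hεD, hW0', map_add, ← sub_sub, ← hy]
        have e1 : Function.update y ∅ 0 - dd a w1 ∈ Fil R s N (n - k) :=
          fun A α hα => hw1' A α (by omega)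
        convert add_mem (Fil_anti (Nat.sub_le n k) hy2) e1 using 1
        abel)
    refine ⟨W0 + w, ?_, ?_⟩
    · change cm W.ε (W0 + w) ∅ = 0
      rw [map_add, hw2, add_zero, hW0']; simp [hw0, hw1]
    · rw [map_add, ← sub_sub]; exact hw2'
  obtain ⟨S, -, hS⟩ := W.lp (Cz s W.X) (DT a W.sX W.dX) (Fil R s W.X) G G0 k Fil_anti
    (fun m n h t ⟨w, hw, hw'⟩ => ⟨w, hw, fun α hα => hw' α (by omega)⟩)
    (fun n t ht => ⟨0, rfl, fun α _ => by rw [map_zero]; exact congrFun ht α⟩) hkill n 1 (by simp) θ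
    (fun y => by
      obtain ⟨w, hw, hw'⟩ := hzN (W.ε y)
      refine ⟨w, hw, fun α hα => ?_⟩
      rw [← hw' α hα]; exact W.ε.map_smul (z ∅ α) y)
    (fun y => by
      have e1 : cm W.sX (θ y) = θ (W.sX y) := by funext A α; exact W.sX.map_smul (z A α) y
      have e2 : cm W.dX (θ y) = θ (W.dX y) := by funext A α; exact W.dX.map_smul (z A α) y
      rw [DT_apply, e1, e2, one_smul, add_sub_cancel_right]
      have e3 : θ (W.sX y) =
        mapC (LinearMap.toSpanSingleton R W.X (W.sX y)).toAddMonoidHom z := rfl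
      rw [e3, dd_mapC ((LinearMap.toSpanSingleton R W.X (W.sX y)).toAddMonoidHom) a a
        (fun j x => by simp [mul_smul]) z]
      intro A α hα
      change dd a z A α • W.sX y = 0
      rw [hz A α hα, zero_smul])
  -- the matrix coefficients of the lifted homotopy
  let V : Cz s (W.E →ₗ[R] W.E) := fun A α =>
    W.g ∘ₗ (LinearMap.proj α ∘ₗ LinearMap.proj A) ∘ₗ S
  have hV : ∀ A α x, V A α x = W.g (S x A α) := fun A α x => rfl
  have hev : ∀ x A α, dd a V A α x = dd a (cm W.g (S x)) A α := by
    intro x A α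
    have h := dd_mapC (X := W.E →ₗ[R] W.E) (LinearMap.applyₗ (R := R) x).toAddMonoidHom a a (by simp) V
    exact (congrFun (congrFun h A) α).symm
  have key : ∀ A α, dg α < n - (ℓ + 1) * k →
      z A α • (W.g ∘ₗ W.f) - W.sE ∘ₗ dd a V A α - W.dE ∘ₗ V A α - V A α ∘ₗ W.dE = 0 := by
    intro A α hα
    refine LinearMap.ext fun x => ?_
    have h := cm_Fil W.g (hS x) A α hα
    rw [map_sub, map_sub, cm_DT a W.sX W.dX W.sE W.dE W.g W.gd W.gs, DT_apply, one_smul] at h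
    have e1 : dd a (cm W.sE (cm W.g (S x))) A α = W.sE (dd a V A α x) := by
      rw [hev, ← cm_dd]; rfl
    have e2 : cm W.g (θ (W.f x)) A α = z A α • W.g (W.f x) := W.g.map_smul (z A α) _
    simp only [Pi.sub_apply, Pi.add_apply, e1, e2] at h
    simp only [LinearMap.sub_apply, LinearMap.smul_apply, LinearMap.comp_apply,
      LinearMap.zero_apply, hV]
    rw [← h]
    simp only [cm_apply]
    abel
  let w : Cz s R := fun A α => LinearMap.trace R W.E (V A α)
  refine ⟨Function.update w ∅ 0, by simp, fun A α hα => ?_⟩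
  rw [dd_zero_empty]
  have e1 : dd a w A α = LinearMap.trace R W.E (dd a V A α) := by
    have h := dd_mapC (X := W.E →ₗ[R] W.E) (LinearMap.trace R W.E).toAddMonoidHom a a (by simp) V
    exact (congrFun (congrFun h A) α)
  have hss : W.sE * W.sE = 1 := LinearMap.ext W.ss
  have hsd : W.sE * W.dE = - (W.dE * W.sE) := LinearMap.ext W.sdE
  have h0 : z A α • (W.sE * (W.g ∘ₗ W.f)) - dd a V A α -
      (W.sE * W.dE * V A α + W.sE * V A α * W.dE) = 0 := by
    have h := congrArg (fun φ => W.sE * φ) (key A α hα)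
    change W.sE * (z A α • (W.g ∘ₗ W.f) - W.sE * dd a V A α - W.dE * V A α - V A α * W.dE) =
      W.sE * 0 at h
    rw [mul_sub, mul_sub, mul_sub, mul_zero, ← mul_assoc, ← mul_assoc, ← mul_assoc, hss, one_mul,
      mul_smul_comm] at h
    rw [← h]; abel
  have h1 := congrArg (LinearMap.trace R W.E) h0
  have h2 : LinearMap.trace R W.E (W.sE * W.dE * V A α + W.sE * V A α * W.dE) = 0 := by
    rw [map_add, hsd, LinearMap.trace_mul_comm R (W.sE * V A α) W.dE, neg_mul, map_neg, mul_assoc]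
    exact neg_add_cancel _
  have h3 : LinearMap.trace R W.E (W.sE * (W.g ∘ₗ W.f)) = c * (Module.finrank R N : R) := W.tr
  rw [map_sub, map_sub, map_smul, h2, h3, ← e1, map_zero, sub_zero, smul_eq_mul] at h1
  change _ * z A α - dd a w A α = 0
  rw [← h1]; ring

lemma finrank_ideal [IsDomain R] (I : Ideal R) (hI : I ≠ ⊥) : Module.finrank R I = 1 := by
  have h1 := Submodule.finrank_quotient_add_finrank I
  rw [Module.finrank_self] at h1
  have h2 : Module.finrank R (R ⧸ I) = 0 := by
    obtain ⟨x, hx, hx0⟩ := Submodule.exists_mem_ne_zero_of_ne_bot hI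
    refine Module.finrank_eq_zero_iff_isTorsion.2 ?_
    rintro ⟨y⟩
    refine ⟨⟨x, mem_nonZeroDivisors_of_ne_zero hx0⟩, ?_⟩
    exact Ideal.Quotient.eq_zero_iff_mem.2 (I.mul_mem_right _ hx)
  omega

/-- Multiplication by `c` kills uniformly if all ideals have `c`-retract resolutions of length `ℓ`. -/
lemma GEN.of_tw [IsDomain R] [IsNoetherianRing R] (c : R) (hc : c ≠ 0) (ℓ : ℕ)
    (h : ∀ N : Ideal R, N ≠ ⊥ → Nonempty (Tw R N c ℓ)) : GEN R := by
  have hkill : ∀ {s : ℕ} (a : Fin s → R) (m : ℕ) (K : Ideal R),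
      KillOn a 1 (K ^ m : Ideal R) → Kill a 1 (K ^ m : Ideal R) := by
    intro s a m K h n z hz _ hz1
    obtain ⟨w, hw, hw1, hw2⟩ := h n (mapC (K ^ m : Ideal R).subtype z) (by funext α; simp [mapC, hz])
      (fun A α => (z A α).2) (fun A α hα => by
        have h5 := dd_mapC (K ^ m : Ideal R).subtype.toAddMonoidHom a a (fun j x => by simp) z
        have h6 := congrFun (congrFun h5 A) α
        exact h6.trans (by simp [mapC, hz1 A α hα]))
    refine ⟨fun A α => ⟨w A α, hw1 A α⟩, by funext α; simp [hw], fun _ _ => trivial,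
      fun A α hα => ?_⟩
    have h5 := dd_mapC (K ^ m : Ideal R).subtype.toAddMonoidHom a a (fun j x => by simp)
      (fun A α => ⟨w A α, hw1 A α⟩)
    have h6 := congrFun (congrFun h5 A) α
    have h7 := hw2 A α hα
    apply Subtype.ext
    simp only [Pi.sub_apply] at h7 ⊢
    refine Eq.trans ?_ h7
    exact congrArg₂ (· - ·) rfl h6.symm
  refine ⟨c, hc, ⟨(ℓ + 1) + 1, fun s a n z hz hz1 => ?_⟩, ⟨ℓ + 1, fun J K hJK n x hx => ?_⟩⟩
  · by_cases ha : ∀ j, a j = 0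
    · obtain ⟨w, hw, -, hw2⟩ := killOn_zero (⊤ : Submodule R R) a ha n z hz (fun _ _ => trivial) hz1
      refine ⟨c • w, by simp [hw], fun A α hα => ?_⟩
      rw [map_smul, ← smul_sub]
      simp only [Pi.smul_apply, hw2 A α (by omega), smul_zero]
    · push Not at ha
      obtain ⟨j, hj⟩ := ha
      let J := Ideal.span (Set.range a)
      have hJ : J ≠ ⊥ := fun h0 => hj (by
        have : a j ∈ J := Ideal.subset_span ⟨j, rfl⟩
        rw [h0] at this; simpa using this)
      obtain ⟨m, hm⟩ := killOn_pow a J (fun j => Ideal.subset_span ⟨j, rfl⟩)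
        ⟨0, by rw [pow_zero, mul_one, zero_add, pow_one]⟩
      have hJm : J ^ m ≠ ⊥ := pow_ne_zero m hJ
      obtain ⟨W⟩ := h (J ^ m) hJm
      obtain ⟨w, hw, hw1⟩ := W.trace_boundary a 1 (hkill a m J (hm m le_rfl)) n z hz1
        (fun x => ⟨0, rfl, fun α _ => by rw [map_zero, hz]; simp⟩)
      refine ⟨w, hw, fun A α hα => ?_⟩
      rw [finrank_ideal _ hJm, Nat.cast_one, mul_one, mul_one] at hw1
      exact hw1 A α (by omega)
  · rw [smul_eq_mul, Ideal.mul_top] at hx ⊢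
    obtain ⟨s, a, ha⟩ : ∃ (s : ℕ) (a : Fin s → R), Ideal.span (Set.range a) = J := by
      obtain ⟨s, a, h⟩ := exists_fin_span J
      exact ⟨s, a, h.symm⟩
    by_cases hK : K = ⊥
    · subst hK
      rcases Nat.eq_zero_or_pos n with rfl | hn
      · simp
      · rw [Ideal.bot_pow hn.ne', Ideal.mem_bot] at hx
        rw [hx, smul_zero]; exact zero_mem _
    obtain ⟨hle, m₁, hm₁⟩ := hJK
    obtain ⟨m₀, hm₀⟩ := killOn_pow a K (fun j => hle (ha ▸ Ideal.subset_span ⟨j, rfl⟩))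
      ⟨m₁, by rw [ha]; exact hm₁⟩
    let m := m₀ + m₁
    have hpow : ∀ i, K ^ (i + m) ≤ J ^ i * K ^ m := by
      have h1 : K ^ (m + 1) ≤ J * K ^ m := by
        have e : m + 1 = (m₁ + 1) + m₀ := by simp only [m]; omega
        have e' : m = m₁ + m₀ := by simp only [m]; omega
        rw [e, e', pow_add K (m₁ + 1) m₀, pow_add K m₁ m₀, ← mul_assoc J]
        exact Ideal.mul_mono_left hm₁
      intro i
      induction i with
      | zero => rw [zero_add, pow_zero, one_mul]
      | succ i ih =>
        rw [show i + 1 + m = (i + m) + 1 by omega, pow_succ]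
        refine (Ideal.mul_mono_left ih).trans ?_
        rw [mul_assoc, ← pow_succ, pow_succ J, mul_assoc]
        exact Ideal.mul_mono_right h1
    have hKm : K ^ m ≠ ⊥ := pow_ne_zero m hK
    obtain ⟨W⟩ := h (K ^ m) hKm
    obtain ⟨w, hw, hw1⟩ := W.trace_boundary a 1 (hkill a m K (hm₀ m (by omega))) n (kap _ x)
      (by rw [dd_kap]; exact zero_mem _) (fun y => by
        have hxy : x • y ∈ Ideal.span (Set.range a) ^ n • (⊤ : Submodule R (K ^ m : Ideal R)) := by
          have h1 : x * (y : R) ∈ J ^ n * K ^ m :=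
            hpow n (by rw [pow_add]; exact Ideal.mul_mem_mul hx y.2)
          have h2 : Submodule.map (K ^ m : Ideal R).subtype
              (Ideal.span (Set.range a) ^ n • (⊤ : Submodule R (K ^ m : Ideal R))) = J ^ n * K ^ m := by
            rw [Submodule.map_smul'', Submodule.map_top, Submodule.range_subtype, ha, smul_eq_mul]
          rw [← h2] at h1
          obtain ⟨y', hy', hy''⟩ := h1
          have : y' = x • y := Subtype.ext hy''
          exact this ▸ hy'
        obtain ⟨w, hw, hw1⟩ := exists_dd_eq_kap a n (x • y) hxy
        refine ⟨w, hw, fun α hα => ?_⟩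
        rw [hw1 _ _ hα]
        simp only [kap]; split_ifs <;> simp)
    rw [finrank_ideal _ hKm, Nat.cast_one, mul_one, mul_one] at hw1
    have h2 := mem_of_dd_eq_kap a ⊤ (n - (ℓ + 1)) (c • x) trivial w (fun α hα => by
      have h3 := hw1 ∅ α hα
      rw [kap_smul]
      exact (sub_eq_zero.1 h3).symm) (fun _ _ _ => trivial)
    rwa [ha, smul_eq_mul, smul_eq_mul, Ideal.mul_top] at h2

end TraceLemma

/-! ### Root-linear maps -/

section FS

/-- `φ` is additive and `q`-th-root linear. -/
def PL {D : Type*} [CommRing D] (q : ℕ) (φ : D → D) : Prop :=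
  (∀ x y, φ (x + y) = φ x + φ y) ∧ ∀ r y, φ (r ^ q * y) = r * φ y

lemma PL.zero {D : Type*} [CommRing D] {q : ℕ} {φ : D → D} (h : PL q φ) : φ 0 = 0 := by
  have := h.1 0 0; simpa using this

lemma PL.sum {D : Type*} [CommRing D] {q : ℕ} {φ : D → D} (h : PL q φ) {ι : Type*}
    (s : Finset ι) (f : ι → D) : φ (∑ i ∈ s, f i) = ∑ i ∈ s, φ (f i) := by
  classical
  induction s using Finset.induction_on with
  | empty => simp [h.zero]
  | insert a s ha ih => rw [Finset.sum_insert ha, Finset.sum_insert ha, h.1, ih]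

lemma PL.comp {D : Type*} [CommRing D] {q q' : ℕ} {φ ψ : D → D} (h : PL q φ) (h' : PL q' ψ) :
    PL (q' * q) fun y => φ (ψ y) :=
  ⟨fun x y => by beta_reduce; rw [h'.1, h.1], fun r y => by beta_reduce; rw [mul_comm q' q, pow_mul, h'.2, h.2]⟩

lemma PL.mulr {D : Type*} [CommRing D] {q : ℕ} {φ : D → D} (h : PL q φ) (u : D) :
    PL q fun y => φ (u * y) :=
  ⟨fun x y => by beta_reduce; rw [mul_add, h.1], fun r y => by beta_reduce; rw [mul_left_comm, h.2]⟩

lemma PL.add {D : Type*} [CommRing D] {q : ℕ} {φ ψ : D → D} (h : PL q φ) (h' : PL q ψ) :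
    PL q fun y => φ y + ψ y :=
  ⟨fun x y => by beta_reduce; rw [h.1, h'.1]; ring, fun r y => by beta_reduce; rw [h.2, h'.2]; ring⟩

lemma PL.mull {D : Type*} [CommRing D] {q : ℕ} {φ : D → D} (h : PL q φ) (u : D) :
    PL q fun y => u * φ y :=
  ⟨fun x y => by beta_reduce; rw [h.1, mul_add], fun r y => by beta_reduce; rw [h.2]; ring⟩

/-- A generic free basis of `D` over its subring of `p`-th powers, with denominator `c`. -/
def FS (p : ℕ) (D : Type*) [CommRing D] (c : D) : Prop :=
  ∃ (n : ℕ) (x : Fin n → D) (lam : Fin n → D → D), (∀ i, PL p (lam i)) ∧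
    (∀ y, c ^ p * y = ∑ i, lam i y ^ p * x i) ∧ ∃ μ : D → D, PL p μ ∧ μ 1 = c

/-- The ideal of values at `d` of `q`-th-root linear maps. -/
def valIdeal {D : Type*} [CommRing D] (q : ℕ) (d : D) : Ideal D where
  carrier := {u | ∃ φ, PL q φ ∧ φ d = u}
  add_mem' := by
    rintro _ _ ⟨φ, h, rfl⟩ ⟨ψ, h', rfl⟩
    exact ⟨_, h.add h', rfl⟩
  zero_mem' := ⟨fun _ => 0, ⟨fun _ _ => by simp, fun _ _ => by simp⟩, rfl⟩
  smul_mem' := by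
    rintro r _ ⟨φ, h, rfl⟩
    exact ⟨_, h.mull r, rfl⟩

variable {D : Type*} [CommRing D] {p : ℕ} {c : D}

lemma FS.theta (h : FS p D c) (hp : 2 ≤ p) (j : ℕ) : ∃ θ : D → D, PL (p ^ j) θ ∧ θ 1 = c ^ 2 := by
  obtain ⟨n, x, lam, hl, hx, μ, hm, hi⟩ := h
  induction j with
  | zero => exact ⟨fun y => c ^ 2 * y, ⟨fun _ _ => by ring, fun _ _ => by ring⟩, by simp⟩
  | succ j ih =>
    obtain ⟨θ, h1, h2⟩ := ih
    refine ⟨_, (hm.mulr (c ^ (p - 2))).comp h1, ?_⟩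
    rw [h2, ← pow_add, Nat.sub_add_cancel hp, ← mul_one (c ^ p), hm.2, hi, sq]

lemma valIdeal_step (h : FS p D c) (hp : 2 ≤ p) (e j : ℕ) (d u : D)
    (hu : u ∈ valIdeal (p ^ e) d) : c ^ 2 * u ∈ valIdeal (p ^ (e + j)) d := by
  obtain ⟨φ, h1, rfl⟩ := hu
  obtain ⟨θ, h2, h3⟩ := h.theta hp j
  refine ⟨_, pow_add p e j ▸ (h2.mulr (φ d ^ (p ^ j - 1))).comp h1, ?_⟩
  have : 1 ≤ p ^ j := Nat.one_le_pow _ _ (by omega)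
  rw [← pow_succ, Nat.sub_add_cancel this, ← mul_one (φ d ^ p ^ j), h2.2, h3, mul_comm]

/-- Every element is, up to a power of `c`, a combination of `q`-th powers of values. -/
lemma FS.expand (h : FS p D c) (hp : 2 ≤ p) (e : ℕ) (d : D) (I : Ideal D)
    (hI : valIdeal (p ^ e) d ≤ I) [hc : Fact p.Prime] [CharP D p] :
    c ^ (2 * p ^ e) * d ∈ I ^ p ^ e := by
  have h' := h
  obtain ⟨n, x, lam, hl, hx, -⟩ := h'
  -- induct on `e`, keeping track of the exact exponent `p + ⋯ + p ^ e`
  have key : ∀ e : ℕ, ∃ N ≤ 2 * p ^ e - 2, ∃ (m : ℕ) (φ : Fin m → D → D) (y : Fin m → D),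
      (∀ i, PL (p ^ e) (φ i)) ∧ ∀ d, c ^ N * d = ∑ i, φ i d ^ p ^ e * y i := by
    intro e
    induction e with
    | zero => exact ⟨0, by omega, 1, fun _ y => y, fun _ => 1,
        fun _ => ⟨fun _ _ => rfl, fun _ _ => by simp⟩, fun d => by simp⟩
    | succ e ih =>
      obtain ⟨N, hN, m, φ, y, h1, h2⟩ := ih
      refine ⟨N + p ^ (e + 1), ?_, m * n,
        fun k => fun z => lam (finProdFinEquiv.symm k).2 (φ (finProdFinEquiv.symm k).1 z),
        fun k => x (finProdFinEquiv.symm k).2 ^ p ^ e * y (finProdFinEquiv.symm k).1, ?_, ?_⟩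
      · rw [pow_succ]
        have : 1 ≤ p ^ e := Nat.one_le_pow _ _ (by omega)
        have : p ^ e * 2 ≤ p ^ e * p := Nat.mul_le_mul_left _ hp
        omega
      · intro k
        have := (hl (finProdFinEquiv.symm k).2).comp (h1 (finProdFinEquiv.symm k).1)
        rwa [pow_succ]
      · intro d
        rw [← finProdFinEquiv.sum_comp]
        simp only [Equiv.symm_apply_apply]
        rw [Fintype.sum_prod_type, pow_add, mul_right_comm, h2, Finset.sum_mul]
        refine Finset.sum_congr rfl fun i _ => ?_
        have e1 : φ i d ^ p ^ e * c ^ p ^ (e + 1) = (c ^ p * φ i d) ^ p ^ e := by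
          rw [mul_pow, ← pow_mul, pow_succ, mul_comm (p ^ e) p, mul_comm]
        rw [mul_right_comm, e1, hx, sum_pow_char_pow, Finset.sum_mul]
        refine Finset.sum_congr rfl fun j _ => ?_
        rw [mul_pow, ← pow_mul, pow_succ, mul_comm (p ^ e) p]; ring
  obtain ⟨N, hN, m, φ, y, h1, h2⟩ := key e
  have : c ^ (2 * p ^ e) * d = c ^ (2 * p ^ e - N) * (c ^ N * d) := by
    rw [← mul_assoc, ← pow_add]; congr 2; omega
  rw [this, h2]
  refine Ideal.mul_mem_left _ _ (Ideal.sum_mem _ fun i _ => Ideal.mul_mem_right _ _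
    (Ideal.pow_mem_pow (hI ⟨_, h1 i, rfl⟩) _))

/-- Every nonzero `d` is sent to the fixed `c ^ 3` by a root-linear map: up to powers of
`c`, `d` lies in the `p ^ i`-th power of the ideal of all values at `d`, for every `i`, so that Krull's
intersection theorem puts a power of `c` into that ideal. -/
theorem FS.te [IsDomain D] [IsNoetherianRing D] [hp' : Fact p.Prime] [CharP D p]
    (h : FS p D c) (hc : c ≠ 0) (d : D) (hd : d ≠ 0) :
    ∃ (e : ℕ) (φ : D → D), PL (p ^ e) φ ∧ φ d = c ^ 3 := by
  have hp : 2 ≤ p := hp'.out.two_le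
  let 𝔟 : Ideal D := ⨆ i : ℕ, valIdeal (p ^ i) d
  have h1 : ∃ N, c ^ N ∈ 𝔟 := by
    by_contra! hN
    let L := Localization.Away c
    have hle : Submonoid.powers c ≤ nonZeroDivisors D := powers_le_nonZeroDivisors_of_noZeroDivisors hc
    haveI : IsDomain L := IsLocalization.isDomain_localization hle
    haveI : IsNoetherianRing L := IsLocalization.isNoetherianRing (Submonoid.powers c) L inferInstance
    have htop : 𝔟.map (algebraMap D L) ≠ ⊤ := by
      intro htop
      obtain ⟨x, hx⟩ := Set.not_disjoint_iff.1 (mt (IsLocalization.map_algebraMap_ne_top_iff_disjoint (Submonoid.powers c) L 𝔟).2 (not_not.2 htop))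
      obtain ⟨N, hN'⟩ := hx.1
      exact hN N (by simpa [hN'] using hx.2)
    have hbot := Ideal.iInf_pow_eq_bot_of_isDomain _ htop
    have : algebraMap D L d ∈ (⨅ i : ℕ, 𝔟.map (algebraMap D L) ^ i) := by
      rw [Ideal.mem_iInf]
      intro i
      have hi : i ≤ p ^ i := (Nat.lt_pow_self (by omega)).le
      refine Ideal.pow_le_pow_right hi ?_
      have := h.expand hp i d 𝔟 (le_iSup (fun i => valIdeal (p ^ i) d) i)
      have h2 := Ideal.mem_map_of_mem (algebraMap D L) this
      rw [Ideal.map_pow, map_mul, map_pow] at h2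
      exact (Ideal.unit_mul_mem_iff_mem _ ((IsLocalization.Away.algebraMap_isUnit c).pow _)).1 h2
    rw [hbot, Ideal.mem_bot] at this
    exact hd (IsLocalization.injective L hle (by simpa using this))
  obtain ⟨N, hN⟩ := h1
  have h2 : ∃ E, c ^ (N + 2) ∈ valIdeal (p ^ E) d := by
    have : ∀ u ∈ 𝔟, ∃ E, ∀ E' ≥ E, c ^ 2 * u ∈ valIdeal (p ^ E') d := by
      intro u hu
      refine Submodule.iSup_induction _ (motive := fun u => ∃ E, ∀ E' ≥ E, c ^ 2 * u ∈ valIdeal (p ^ E') d)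
        hu ?_ ?_ ?_
      · intro i u hu
        refine ⟨i, fun E' hE => ?_⟩
        obtain ⟨j, rfl⟩ := Nat.exists_eq_add_of_le hE
        exact valIdeal_step h hp i j d u hu
      · exact ⟨0, fun _ _ => by simp⟩
      · rintro x y ⟨E1, h1⟩ ⟨E2, h2⟩
        exact ⟨max E1 E2, fun E' hE => by
          rw [mul_add]
          exact add_mem (h1 _ (le_trans (le_max_left _ _) hE)) (h2 _ (le_trans (le_max_right _ _) hE))⟩
    obtain ⟨E, hE⟩ := this _ hN
    exact ⟨E, by have := hE E le_rfl; rwa [← pow_add, add_comm] at this⟩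
  obtain ⟨E, φ, h3, h4⟩ := h2
  have hj : N + 2 ≤ p ^ (N + 2) := (Nat.lt_pow_self (by omega)).le
  obtain ⟨θ, h5, h6⟩ := h.theta hp (N + 2)
  refine ⟨E + (N + 2), _, pow_add p E (N + 2) ▸ (h5.mulr (c ^ (p ^ (N + 2) - (N + 2)))).comp h3, ?_⟩
  rw [h4, ← pow_add, Nat.sub_add_cancel hj, ← mul_one (c ^ _), h5.2, h6]; ring

end FS

/-! ### Generic bases over `p`-th powers -/

section FSexists

lemma exists_li_span {A M : Type*} [CommRing A] [IsDomain A] [AddCommGroup M] [Module A M]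
    [Module.Finite A M] : ∃ (n : ℕ) (v : Fin n → M) (c : A), c ≠ 0 ∧ LinearIndependent A v ∧
      ∀ y, c • y ∈ Submodule.span A (Set.range v) := by
  classical
  obtain ⟨m, g, hg⟩ := Module.Finite.exists_fin (R := A) (M := M)
  obtain ⟨s, hs, hs2⟩ := exists_maximal_linearIndepOn A g
  have h2 : ∀ i, ∃ a : A, a ≠ 0 ∧ a • g i ∈ Submodule.span A (g '' s) := by
    intro i
    by_cases h : i ∈ s
    · exact ⟨1, one_ne_zero, by rw [one_smul]; exact Submodule.subset_span ⟨i, h, rfl⟩⟩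
    · exact hs2 i h
  choose a ha ha2 using h2
  let e := Fintype.equivFin s
  refine ⟨Fintype.card s, fun i => g (e.symm i), ∏ i, a i, Finset.prod_ne_zero_iff.2 fun i _ => ha i,
    hs.comp _ e.symm.injective, fun y => ?_⟩
  have hr : Set.range (fun i => g (e.symm i)) = g '' s := by
    ext x
    simp only [Set.mem_range, Set.mem_image]
    constructor
    · rintro ⟨i, rfl⟩; exact ⟨_, (e.symm i).2, rfl⟩
    · rintro ⟨i, hi, rfl⟩; exact ⟨e ⟨i, hi⟩, by simp⟩
  rw [hr]
  have hy : y ∈ Submodule.span A (Set.range g) := by rw [hg]; trivial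
  induction hy using Submodule.span_induction with
  | mem x hx =>
    obtain ⟨i, rfl⟩ := hx
    rw [← Finset.prod_erase_mul _ _ (Finset.mem_univ i), mul_smul]
    exact Submodule.smul_mem _ _ (ha2 i)
  | zero => simp
  | add x y _ _ h1 h2 => rw [smul_add]; exact add_mem h1 h2
  | smul r x _ h => rw [smul_comm]; exact Submodule.smul_mem _ _ h

lemma exists_coords {A B : Type*} [CommRing A] [IsDomain A] [CommRing B] (f : A →+* B)
    (hf : f.Finite) : ∃ (n : ℕ) (x : Fin n → B) (c : A) (lam : Fin n → B → A), c ≠ 0 ∧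
      (∀ i x y, lam i (x + y) = lam i x + lam i y) ∧ (∀ i r y, lam i (f r * y) = r * lam i y) ∧
      ∀ y, f c * y = ∑ i, f (lam i y) * x i := by
  letI := f.toAlgebra
  haveI : Module.Finite A B := hf
  obtain ⟨n, v, c, hc, hv, h⟩ := exists_li_span (A := A) (M := B)
  have hsm : ∀ (a : A) (b : B), a • b = f a * b := fun a b => Algebra.smul_def a b
  refine ⟨n, v, c, fun i y => hv.repr ⟨c • y, h y⟩ i, hc, ?_, ?_, ?_⟩
  · intro i x y
    have : (⟨c • (x + y), h _⟩ : Submodule.span A (Set.range v)) = ⟨c • x, h x⟩ + ⟨c • y, h y⟩ :=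
      Subtype.ext (smul_add _ _ _)
    beta_reduce
    rw [this, map_add]; rfl
  · intro i r y
    have : (⟨c • (f r * y), h _⟩ : Submodule.span A (Set.range v)) = r • ⟨c • y, h y⟩ :=
      Subtype.ext (by rw [← hsm]; exact smul_comm _ _ _)
    beta_reduce
    rw [this, map_smul]; rfl
  · intro y
    have := hv.linearCombination_repr ⟨c • y, h y⟩
    rw [Finsupp.linearCombination_apply, Finsupp.sum_fintype _ _ (by simp)] at this
    simp only [hsm] at this
    exact this.symm

lemma exists_FS {D : Type*} [CommRing D] [IsDomain D] {p : ℕ} (f : D →+* D) (hf : f.Finite)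
    (hfp : ∀ x, f x = x ^ p) : ∃ c : D, c ≠ 0 ∧ FS p D c := by
  obtain ⟨n, x, c, lam, hc, h1, h2, h3⟩ := exists_coords f hf
  simp only [hfp] at h2 h3
  have : ∃ i, lam i 1 ≠ 0 := by
    by_contra! hh
    have h := h3 1
    have hp : p ≠ 0 := by
      rintro rfl
      have := hfp 0
      simp at this
    simp only [hh, zero_pow hp, zero_mul, Finset.sum_const_zero, mul_one] at h
    exact hc (pow_eq_zero_iff hp |>.1 h)
  obtain ⟨i, hi⟩ := this
  have hl : ∀ i, PL p (lam i) := fun i => ⟨h1 i, h2 i⟩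
  refine ⟨lam i 1 * c, mul_ne_zero hi hc, n, x, fun j y => lam i 1 * lam j y,
    fun j => (hl j).mull _, fun y => ?_, fun y => c * lam i y, (hl i).mull _, mul_comm _ _⟩
  rw [mul_pow, mul_assoc, h3, Finset.mul_sum]
  exact Finset.sum_congr rfl fun j _ => by ring

lemma FS.of_equiv {D E : Type*} [CommRing D] [CommRing E] (e : D ≃+* E) {p : ℕ} {c : D}
    (h : FS p D c) : FS p E (e c) := by
  obtain ⟨n, x, lam, hl, hx, μ, hm, h1⟩ := h
  have key : ∀ φ : D → D, PL p φ → PL p fun y => e (φ (e.symm y)) := fun φ h =>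
    ⟨fun x y => by simp [h.1], fun r y => by simp [h.2]⟩
  refine ⟨n, fun i => e (x i), fun i y => e (lam i (e.symm y)), fun i => key _ (hl i), fun y => ?_,
    fun y => e (μ (e.symm y)), key _ hm, by simp [h1]⟩
  have := congrArg e (hx (e.symm y))
  simpa using this

open Polynomial in
lemma FS.polynomial {D : Type*} [CommRing D] {p : ℕ} [hp : Fact p.Prime] [CharP D p] {c : D}
    (h : FS p D c) : FS p D[X] (C c) := by
  obtain ⟨n, x, lam, hl, hx, μ, hm, h1⟩ := h
  have hp0 : 0 < p := hp.out.pos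
  -- extraction of the coefficients in degrees congruent to `s`
  let E : (D → D) → ℕ → D[X] → D[X] := fun φ s f =>
    ∑ i ∈ Finset.range (f.natDegree + 1), monomial i (φ (f.coeff (i * p + s)))
  have hE : ∀ φ, PL p φ → ∀ s f i, (E φ s f).coeff i = φ (f.coeff (i * p + s)) := by
    intro φ hφ s f i
    simp only [E, finsetSum_coeff, coeff_monomial]
    rw [Finset.sum_ite_eq']
    split_ifs with hi
    · rfl
    · rw [coeff_eq_zero_of_natDegree_lt, hφ.zero]
      simp only [Finset.mem_range, not_lt] at hi
      nlinarith
  have hcoe : ∀ (r y : D[X]) (j : ℕ), (r ^ p * y).coeff j =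
      ∑ i ∈ Finset.range (r.natDegree + 1), if i * p ≤ j then r.coeff i ^ p * y.coeff (j - i * p) else 0 := by
    intro r y j
    conv_lhs => rw [r.as_sum_range, sum_pow_char, Finset.sum_mul, finsetSum_coeff]
    refine Finset.sum_congr rfl fun i _ => ?_
    rw [monomial_pow, ← C_mul_X_pow_eq_monomial, mul_assoc, coeff_C_mul, coeff_X_pow_mul']
    split_ifs <;> simp
  have hPL : ∀ φ, PL p φ → ∀ s < p, PL p (E φ s) := by
    intro φ hφ s hs
    refine ⟨fun x y => ?_, fun r y => ?_⟩
    · ext i; simp [hE φ hφ, hφ.1]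
    · ext i
      rw [hE φ hφ, hcoe, hφ.sum]
      conv_rhs => rw [r.as_sum_range, Finset.sum_mul, finsetSum_coeff]
      refine Finset.sum_congr rfl fun j _ => ?_
      rw [← C_mul_X_pow_eq_monomial, mul_assoc, coeff_C_mul, coeff_X_pow_mul']
      have : j * p ≤ i * p + s ↔ j ≤ i := by
        constructor
        · intro h
          by_contra hji
          push Not at hji
          nlinarith
        · intro h; nlinarith
      simp only [this]
      split_ifs with hji
      · rw [hφ.2, hE φ hφ]
        congr 3
        obtain ⟨k, rfl⟩ := Nat.exists_eq_add_of_le hji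
        rw [Nat.add_sub_cancel_left]
        have : (j + k) * p = j * p + k * p := add_mul _ _ _
        omega
      · rw [hφ.zero, mul_zero]
  refine ⟨n * p, fun k => C (x (finProdFinEquiv.symm k).1) * X ^ ((finProdFinEquiv.symm k).2 : ℕ),
    fun k => E (lam (finProdFinEquiv.symm k).1) (finProdFinEquiv.symm k).2,
    fun k => hPL _ (hl _) _ (finProdFinEquiv.symm k).2.2, fun y => ?_, E μ 0, hPL _ hm _ hp0, ?_⟩
  · have hpow : ∀ (f : D[X]) j, (f ^ p).coeff j = if p ∣ j then f.coeff (j / p) ^ p else 0 := by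
      intro f j
      rw [← map_frobenius_expand p, coeff_map, coeff_expand hp0]
      split_ifs <;> simp [frobenius_def, hp0.ne']
    rw [← finProdFinEquiv.sum_comp]
    simp only [Equiv.symm_apply_apply]
    rw [Fintype.sum_prod_type]
    ext j
    rw [← C_pow, coeff_C_mul, hx, finsetSum_coeff]
    refine Finset.sum_congr rfl fun i _ => ?_
    rw [finsetSum_coeff]
    have hjp : j % p < p := Nat.mod_lt _ hp0
    have hj := Nat.div_add_mod j p
    have hterm : ∀ b : Fin p, (E (lam i) b y ^ p * (C (x i) * X ^ (b : ℕ))).coeff j =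
        if (b : ℕ) ≤ j then (if p ∣ j - b then lam i (y.coeff ((j - b) / p * p + b)) ^ p else 0) * x i
        else 0 := by
      intro b
      rw [← mul_assoc, coeff_mul_X_pow', mul_comm _ (C _)]
      split_ifs with h1 h2
      · rw [coeff_C_mul, hpow, if_pos h2, hE _ (hl i), mul_comm]
      · rw [coeff_C_mul, hpow, if_neg h2, zero_mul, mul_zero]
      · rfl
    simp only [hterm]
    rw [Finset.sum_eq_single ⟨j % p, hjp⟩]
    · have e1 : j - j % p = p * (j / p) := by omega
      simp only
      rw [if_pos (Nat.mod_le _ _), e1, if_pos (dvd_mul_right _ _), Nat.mul_div_cancel_left _ hp0,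
        mul_comm (j / p), hj]
    · intro b _ hb
      split_ifs with h1 h2
      · exfalso
        apply hb
        obtain ⟨k, hk⟩ := h2
        have : j = b + p * k := by omega
        ext
        simp only
        rw [this, Nat.add_mul_mod_self_left, Nat.mod_eq_of_lt b.2]
      · rw [zero_mul]
      · rfl
    · simp
  · ext i
    rw [hE μ hm, coeff_one, coeff_C]
    simp only [add_zero, mul_eq_zero, hp0.ne', or_false]
    split_ifs
    · exact h1
    · exact hm.zero

lemma FS.mvPolynomial {D : Type*} [CommRing D] {p : ℕ} [hp : Fact p.Prime] [CharP D p] {c : D}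
    (h : FS p D c) (m : ℕ) : FS p (MvPolynomial (Fin m) D) (MvPolynomial.C c) := by
  induction m with
  | zero =>
    have := h.of_equiv (MvPolynomial.isEmptyRingEquiv D (Fin 0)).symm
    rwa [MvPolynomial.isEmptyRingEquiv_symm_apply] at this
  | succ m ih =>
    haveI : CharP (MvPolynomial (Fin m) D) p := inferInstance
    have := ih.polynomial.of_equiv (MvPolynomial.finSuccEquiv D m).symm.toRingEquiv
    convert this using 1
    symm
    change (MvPolynomial.finSuccEquiv D m).symm _ = _
    rw [AlgEquiv.symm_apply_eq]
    rw [MvPolynomial.finSuccEquiv_apply]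
    simp

lemma FS.away {D : Type*} [CommRing D] [IsDomain D] {p : ℕ} [hp : Fact p.Prime] {c : D}
    (h : FS p D c) (G : D) (hG : G ≠ 0) (L : Type*) [CommRing L] [Algebra D L]
    [IsLocalization.Away G L] : FS p L (algebraMap D L c) := by
  obtain ⟨n, x, lam, hl, hx, μ, hm, h1⟩ := h
  have hp0 : p ≠ 0 := hp.out.ne_zero
  have hle : Submonoid.powers G ≤ nonZeroDivisors D := powers_le_nonZeroDivisors_of_noZeroDivisors hG
  have hinj : Function.Injective (algebraMap D L) := IsLocalization.injective L hle
  -- extension of a `p`-th-root linear map to the localization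
  have hex : ∀ φ : D → D, PL p φ → ∃ ψ : L → L, PL p ψ ∧ ∀ y, ψ (algebraMap D L y) = algebraMap D L (φ y) := by
    intro φ hφ
    let g : L → D := fun y => (IsLocalization.sec (Submonoid.powers G) y).2
    let a : L → D := fun y => (IsLocalization.sec (Submonoid.powers G) y).1
    have hga : ∀ y, algebraMap D L (g y) * y = algebraMap D L (a y) := fun y => by
      rw [mul_comm]; exact IsLocalization.sec_spec (Submonoid.powers G) y
    have hgu : ∀ y, IsUnit (algebraMap D L (g y)) := fun y =>
      IsLocalization.map_units L (IsLocalization.sec (Submonoid.powers G) y).2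
    let ψ : L → L := fun y => ((hgu y).unit⁻¹ : Lˣ) * algebraMap D L (φ (a y * g y ^ (p - 1)))
    have hψ : ∀ y, algebraMap D L (g y) * ψ y = algebraMap D L (φ (a y * g y ^ (p - 1))) := fun y => by
      simp only [ψ]; rw [← mul_assoc, IsUnit.mul_val_inv, one_mul]
    have hpp : ∀ r : D, r * r ^ (p - 1) = r ^ p := fun r => by rw [← pow_succ', Nat.sub_add_cancel hp.out.one_le]
    have hspec : ∀ (y : L) (b u : D), algebraMap D L (u ^ p) * y = algebraMap D L b →
        algebraMap D L u * ψ y = algebraMap D L (φ b) := by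
      intro y b u hb
      refine (hgu y).mul_left_cancel ?_
      have e1 : u ^ p * (a y * g y ^ (p - 1)) = g y ^ p * b := by
        apply hinj
        rw [map_mul, map_mul, map_mul, ← hga, ← hb]
        simp only [map_mul, ← hpp (g y)]; ring
      calc algebraMap D L (g y) * (algebraMap D L u * ψ y)
          = algebraMap D L u * (algebraMap D L (g y) * ψ y) := by ring
        _ = algebraMap D L (u * φ (a y * g y ^ (p - 1))) := by rw [hψ, map_mul]
        _ = _ := by rw [← hφ.2, e1, hφ.2, map_mul]
    have hden : ∀ y : L, ∃ u b : D, IsUnit (algebraMap D L u) ∧ algebraMap D L (u ^ p) * y = algebraMap D L b :=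
      fun y => ⟨g y, g y ^ (p - 1) * a y, hgu y, by rw [map_mul, ← hga, ← hpp (g y)]; simp only [map_mul]; ring⟩
    refine ⟨ψ, ⟨fun y z => ?_, fun r y => ?_⟩, fun y => ?_⟩
    · obtain ⟨u, b, hu, hb⟩ := hden y
      obtain ⟨u', b', hu', hb'⟩ := hden z
      refine (hu.mul hu').mul_left_cancel ?_
      have e := hspec (y + z) (u' ^ p * b + u ^ p * b') (u * u') (by
        rw [map_add, map_mul, map_mul _ (u ^ p), ← hb, ← hb', mul_pow, map_mul]; ring)
      rw [map_mul] at e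
      rw [e, hφ.1, hφ.2, hφ.2, map_add, map_mul, map_mul, ← hspec y b u hb, ← hspec z b' u' hb']
      ring
    · obtain ⟨u, b, hu, hb⟩ := hden y
      refine (hu.mul (hgu r)).mul_left_cancel ?_
      have e := hspec (r ^ p * y) (a r ^ p * b) (u * g r) (by
        rw [map_mul, ← hb, map_pow _ (a r), ← hga, mul_pow, mul_pow, map_mul, map_pow _ (g r)]; ring)
      rw [map_mul] at e
      rw [e, hφ.2, map_mul, ← hspec y b u hb, ← hga]
      ring
    · have := hspec (algebraMap D L y) y 1 (by simp)
      simpa using this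
  choose! e he1 he2 using hex
  refine ⟨n, fun i => algebraMap D L (x i), fun i => e (lam i), fun i => he1 _ (hl i), fun y => ?_,
    e μ, he1 _ hm, by rw [← map_one (algebraMap D L), he2 _ hm, h1]⟩
  obtain ⟨⟨b, s⟩, hb⟩ := IsLocalization.surj (Submonoid.powers G) y
  have hu := IsLocalization.map_units L s
  simp only at hb
  refine (hu.pow p).mul_left_cancel ?_
  have e3 : algebraMap D L s ^ p * y = algebraMap D L ((s : D) ^ (p - 1) * b) := by
    rw [map_mul, ← hb, map_pow, ← mul_pow_sub_one hp0]; ring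
  rw [mul_left_comm, e3, ← map_pow, ← map_mul, hx, map_sum, Finset.mul_sum]
  refine Finset.sum_congr rfl fun i _ => ?_
  rw [map_mul, map_pow, ← mul_assoc, ← mul_pow]
  congr 2
  rw [← (he1 _ (hl i)).2, e3, he2 _ (hl i)]

end FSexists

/-! ### Filtered exactness of Koszul complexes -/

section PowerKoszul
variable {σ : Type*} [Fintype σ] [LinearOrder σ] {D : Type*} [CommRing D]

lemma da_ex (b : σ → D) (j : σ) (z : Finset σ → D) :
    da b (ex D D j z) = b j • z - ex D D j (da b z) := by
  have h := LinearMap.congr_fun (kd_ex (R := D) (N := D) (fun j => b j • 1) j) z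
  rw [LinearMap.add_apply, Module.End.mul_apply, Module.End.mul_apply] at h
  rw [eq_sub_iff_add_eq, h]; rfl

lemma pd_pd (j : σ) (z : Finset σ → D) : pd D D j (pd D D j z) = 0 :=
  LinearMap.congr_fun (pd_sq (R := D) (N := D) j) z

lemma pd_add_ex (j : σ) (z : Finset σ → D) : pd D D j (ex D D j z) + ex D D j (pd D D j z) = z :=
  LinearMap.congr_fun (pd_ex_self (R := D) (N := D) j) z

lemma da_eq_sum (b : σ → D) (z : Finset σ → D) : da b z = ∑ i, b i • pd D D i z := by
  simp only [kd, LinearMap.sum_apply]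
  rfl

lemma da_pd (b : σ → D) (j : σ) (z : Finset σ → D) :
    da b (pd D D j z) = - pd D D j (da b z) := by
  rw [da_eq_sum, da_eq_sum, map_sum, ← Finset.sum_neg_distrib]
  refine Finset.sum_congr rfl fun i _ => ?_
  rw [(pd D D j).map_smul, ← smul_neg]
  congr 1
  exact LinearMap.congr_fun (pd_anti (R := D) (N := D) i j) z

lemma da_update (b : σ → D) (j : σ) (r : D) (z : Finset σ → D) :
    da (Function.update b j r) z = da b z + (r - b j) • pd D D j z := by
  rw [da_eq_sum, da_eq_sum, ← Finset.add_sum_erase _ _ (Finset.mem_univ j),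
    ← Finset.add_sum_erase Finset.univ (fun i => b i • pd D D i z) (Finset.mem_univ j)]
  rw [Function.update_self, Finset.sum_congr rfl (fun i hi => by
    rw [Function.update_of_ne (Finset.ne_of_mem_erase hi)])]
  rw [sub_smul]; abel

lemma da_da (b : σ → D) (z : Finset σ → D) : da b (da b z) = 0 := by
  rw [← Module.End.mul_apply, kd_sq]; rfl
  intro i j
  ext; simp; ring

/-- Filtered exactness with loss one above level `r`. -/
def Ex1 (b : σ → D) (M : ℕ → Ideal D) (r : ℕ) : Prop :=
  ∀ v, r < v → ∀ ζ : Finset σ → D, (∀ A, ζ A ∈ M v) → da b ζ = 0 →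
    ∃ ω : Finset σ → D, (∀ A, ω A ∈ M (v - 1)) ∧ da b ω = ζ

lemma pd_mem' {I : Ideal D} (j : σ) {z : Finset σ → D} (hz : ∀ A, z A ∈ I) (A : Finset σ) :
    pd D D j z A ∈ I := by
  rw [pd_apply]; split_ifs
  · exact zero_mem _
  · exact I.toAddSubgroup.zsmul_mem (hz _) _

lemma ex_mem' {I : Ideal D} (j : σ) {z : Finset σ → D} (hz : ∀ A, z A ∈ I) (A : Finset σ) :
    ex D D j z A ∈ I := by
  rw [ex_apply]; split_ifs
  · exact I.toAddSubgroup.zsmul_mem (hz _) _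
  · exact zero_mem _

/-- Adjoining an element of filtration degree one. -/
lemma Ex1.adjoin {b : σ → D} {M : ℕ → Ideal D} {r : ℕ} (j : σ)
    (h : Ex1 (Function.update b j 0) M r) (hb : ∀ v, ∀ i, ∀ x ∈ M v, b i * x ∈ M (v + 1)) :
    Ex1 b M r := by
  intro v hv ζ hζ hd
  have hz : ∀ z, pd D D j z = 0 → da (Function.update b j 0) z = da b z := fun z h => by
    rw [da_update, h, smul_zero, add_zero]
  -- a preimage may be taken not to involve the index `j`
  have hno : ∀ ξ, (∀ A, ξ A ∈ M v) → pd D D j ξ = 0 → da b ξ = 0 →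
      ∃ ω : Finset σ → D, (∀ A, ω A ∈ M (v - 1)) ∧ pd D D j ω = 0 ∧ da b ω = ξ := by
    intro ξ h1 h2 h3
    obtain ⟨ω, h4, h5⟩ := h v hv ξ h1 (by rw [hz _ h2, h3])
    refine ⟨pd D D j (ex D D j ω), pd_mem' j (ex_mem' j h4), pd_pd _ _, ?_⟩
    rw [← hz _ (pd_pd _ _), da_pd, da_ex, Function.update_self, zero_smul, zero_sub, map_neg, neg_neg,
      h5]
    have := pd_add_ex j ξ
    rwa [h2, map_zero, add_zero] at this
  obtain ⟨ω', a1, a2, a3⟩ := hno (pd D D j ζ) (pd_mem' j hζ) (pd_pd _ _) (by rw [da_pd, hd, map_zero, neg_zero])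
  have e : ζ + da b (ex D D j ω') = pd D D j (ex D D j ζ) + b j • ω' := by
    rw [da_ex, a3]
    conv_lhs => rw [← pd_add_ex j ζ]
    rw [map_add, pd_pd, zero_add]
    have : ex D D j (pd D D j (ex D D j (pd D D j ζ))) = ex D D j (pd D D j ζ) := by
      conv_rhs => rw [← pd_add_ex j (pd D D j ζ), pd_pd, map_zero, add_zero]
    rw [this]; abel
  obtain ⟨ω, c1, c2, c3⟩ := hno (ζ + da b (ex D D j ω')) (fun A => add_mem (hζ A) (by
      refine da_mem b (P := M (v - 1)) (Q := M v) (fun i x hx => ?_) _ (ex_mem' j a1) A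
      have := hb (v - 1) i x hx
      rwa [Nat.sub_add_cancel (by omega)] at this))
    (by rw [e, map_add, pd_pd, (pd D D j).map_smul, a2, smul_zero, add_zero])
    (by rw [map_add, hd, da_da, add_zero])
  exact ⟨ω - ex D D j ω', fun A => sub_mem (c1 A) (ex_mem' j a1 A), by rw [map_sub, c3]; abel⟩

/-- Dropping an element which is a combination of the others. -/
lemma Ex1.drop {b : σ → D} {M : ℕ → Ideal D} {r : ℕ} (j : σ) (h : Ex1 b M r) (ρ : σ → D)
    (hρ0 : ρ j = 0) (hρ : b j = ∑ i, ρ i * b i) : Ex1 (Function.update b j 0) M r := by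
  let N : Module.End D (Finset σ → D) := ∑ i, ρ i • (ex D D i * pd D D j)
  have hNap : ∀ z, N z = ∑ i, ρ i • ex D D i (pd D D j z) := fun z => by
    simp only [N, LinearMap.sum_apply]; rfl
  have hNm : ∀ I : Ideal D, ∀ z : Finset σ → D, (∀ A, z A ∈ I) → ∀ A, N z A ∈ I := by
    intro I z hz A
    rw [hNap, Finset.sum_apply]
    exact Ideal.sum_mem _ fun i _ => I.mul_mem_left _ (ex_mem' i (pd_mem' j hz) A)
  have hpN : ∀ z, pd D D j (N z) = 0 := by
    intro z
    rw [hNap, map_sum]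
    refine Finset.sum_eq_zero fun i _ => ?_
    rw [(pd D D j).map_smul]
    by_cases hi : i = j
    · rw [hi, hρ0, zero_smul]
    · have := LinearMap.congr_fun (pd_ex (R := D) (N := D) j i (Ne.symm hi)) (pd D D j z)
      rw [LinearMap.add_apply, Module.End.mul_apply, Module.End.mul_apply, pd_pd, map_zero, add_zero] at this
      rw [this]; exact smul_zero _
  have hcomm : ∀ z, da b (N z) = N (da b z) + b j • pd D D j z := by
    intro z
    rw [hNap, hNap, map_sum, hρ, Finset.sum_smul, ← Finset.sum_add_distrib]
    refine Finset.sum_congr rfl fun i _ => ?_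
    rw [(da b).map_smul, da_ex, da_pd, map_neg, sub_neg_eq_add, smul_add, smul_smul, add_comm]
  have hNN : ∀ z, N (N z) = 0 := fun z => by
    rw [hNap, hpN]; simp
  intro v hv ζ hζ hd
  rw [da_update, zero_sub, neg_smul, ← sub_eq_add_neg, sub_eq_zero] at hd
  obtain ⟨ω, h1, h2⟩ := h v hv (ζ - N ζ) (fun A => sub_mem (hζ A) (hNm _ ζ hζ A)) (by
    rw [map_sub, hcomm, hd, hNap (b j • pd D D j ζ), (pd D D j).map_smul, pd_pd]; simp)
  refine ⟨ω + N ω, fun A => add_mem (h1 A) (hNm _ ω h1 A), ?_⟩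
  rw [da_update, map_add, hcomm, h2, map_add (pd D D j), hpN, map_sub, hNN]
  simp only [zero_sub, neg_smul, add_zero]; abel

end PowerKoszul

/-! ### Weight filtrations -/

section Weighted
variable {σ : Type*} [Fintype σ] [LinearOrder σ] {D : Type*} [CommRing D]

/-- Exactness of the Koszul complex of `b` for the weight filtration
`A ↦ K ^ (w - ∑ i ∈ A, wt i)` in levels `w ≥ W`. -/
def WEx (b : σ → D) (wt : σ → ℕ) (K : Ideal D) (W : ℕ) : Prop :=
  ∀ w, W ≤ w → ∀ ζ : Finset σ → D, (∀ A, ζ A ∈ K ^ (w - ∑ i ∈ A, wt i)) → da b ζ = 0 →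
    ∃ ω : Finset σ → D, (∀ A, ω A ∈ K ^ (w - ∑ i ∈ A, wt i)) ∧ da b ω = ζ

lemma da_apply_mul (b : σ → D) (z : Finset σ → D) (A : Finset σ) :
    da b z A = ∑ j, if j ∈ A then 0 else sg j A • (b j * z (insert j A)) := by
  rw [kd_apply]; rfl

lemma da_rg (Y : Finset σ) (b : σ → D) (hb : ∀ j, j ∉ Y → b j = 0) (z : ℕ → Finset σ → D)
    (A : Finset σ) :
    da b (fun A => z (A ∩ Y).card A) A = da b (z ((A ∩ Y).card + 1)) A := by
  rw [da_apply_mul, da_apply_mul]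
  refine Finset.sum_congr rfl fun j _ => ?_
  split_ifs with hj
  · rfl
  · by_cases hY : j ∈ Y
    · rw [Finset.insert_inter_of_mem hY, Finset.card_insert_of_notMem (by simp [hj])]
    · simp [hb j hY]

lemma sum_wt (Y A : Finset σ) (q : ℕ) :
    ∑ i ∈ A, (if i ∈ Y then q else 0) = (A ∩ Y).card * q := by
  rw [← Finset.sum_filter, Finset.sum_const, smul_eq_mul, Finset.filter_mem_eq_inter]

lemma WEx.start (Y : Finset σ) (b : σ → D) (hb : ∀ j, j ∉ Y → b j = 0) (K : Ideal D) (n₀ : ℕ)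
    (h : ∀ n, n₀ ≤ n → ∀ ζ : Finset σ → D, (∀ A, ζ A ∈ K ^ (n + 1)) → da b ζ = 0 →
      ∃ ω : Finset σ → D, (∀ A, ω A ∈ K ^ n) ∧ da b ω = ζ) :
    WEx b (fun i => if i ∈ Y then 1 else 0) K (Y.card + n₀ + 1) := by
  intro w hw ζ hζ hd
  simp only [sum_wt, mul_one] at hζ ⊢
  have key : ∀ g : ℕ, ∃ ω : Finset σ → D, (∀ A, (A ∩ Y).card = g + 1 → ω A ∈ K ^ (w - (g + 1))) ∧
      (∀ A, (A ∩ Y).card = g → da b ω A = ζ A) := by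
    intro g
    by_cases hg : g ≤ Y.card
    · have h1 : da b (fun A => (fun n => if n = g then ζ else 0) (A ∩ Y).card A) = 0 := by
        funext A
        rw [da_rg Y b hb (fun n => if n = g then ζ else 0)]
        split_ifs
        · rw [hd]
        · rw [map_zero]
      obtain ⟨ω, h2, h3⟩ := h (w - (g + 1)) (by omega) _ (fun A => by
        dsimp only
        split_ifs with e
        · have := hζ A
          rw [e] at this
          rwa [show w - (g + 1) + 1 = w - g by omega]
        · exact zero_mem _) h1
      refine ⟨ω, fun A _ => h2 A, fun A hA => ?_⟩
      rw [h3]; simp [hA]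
    · refine ⟨0, fun A _ => zero_mem _, fun A hA => ?_⟩
      have := Finset.card_le_card (Finset.inter_subset_right : A ∩ Y ⊆ Y)
      omega
  choose ω h1 h2 using key
  refine ⟨fun A => (fun n => if n = 0 then 0 else ω (n - 1)) (A ∩ Y).card A, fun A => ?_, ?_⟩
  · dsimp only
    split_ifs with e
    · exact zero_mem _
    · have := h1 ((A ∩ Y).card - 1) A (by omega)
      rwa [show (A ∩ Y).card - 1 + 1 = (A ∩ Y).card by omega] at this
  · funext A
    rw [da_rg Y b hb (fun n => if n = 0 then 0 else ω (n - 1))]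
    simpa using h2 _ A rfl

lemma WEx.toEx1 (Y : Finset σ) (b : σ → D) (hb : ∀ j, j ∉ Y → b j = 0) (K : Ideal D) (q W m : ℕ)
    (h : WEx b (fun i => if i ∈ Y then q else 0) K W) (hm : ∀ v, Y.card < v → W ≤ m + v * q) :
    Ex1 b (fun u => K ^ (m + u * q)) Y.card := by
  intro v hv ζ hζ hd
  have key : ∀ g : ℕ, ∃ ω : Finset σ → D, (∀ A, (A ∩ Y).card = g + 1 → ω A ∈ K ^ (m + (v - 1) * q)) ∧
      (∀ A, (A ∩ Y).card = g → da b ω A = ζ A) := by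
    intro g
    have h1 : da b (fun A => (fun n => if n = g then ζ else 0) (A ∩ Y).card A) = 0 := by
      funext A
      rw [da_rg Y b hb (fun n => if n = g then ζ else 0)]
      split_ifs
      · rw [hd]
      · rw [map_zero]
    obtain ⟨ω, h2, h3⟩ := h (m + v * q + g * q) ((hm v hv).trans (Nat.le_add_right _ _)) _ (fun A => by
      dsimp only
      rw [sum_wt]
      split_ifs with e
      · rw [e, Nat.add_sub_cancel]; exact hζ A
      · exact zero_mem _) h1
    refine ⟨ω, fun A hA => ?_, fun A hA => ?_⟩
    · have := h2 A
      rw [sum_wt, hA] at this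
      obtain ⟨v, rfl⟩ : ∃ u, v = u + 1 := ⟨v - 1, by omega⟩
      rwa [show m + (v + 1) * q + g * q - (g + 1) * q = m + (v + 1 - 1) * q by
        rw [Nat.add_sub_cancel, Nat.sub_eq_iff_eq_add (by nlinarith)]; ring] at this
    · rw [h3]; simp [hA]
  choose ω h1 h2 using key
  refine ⟨fun A => (fun n => if n = 0 then 0 else ω (n - 1)) (A ∩ Y).card A, fun A => ?_, ?_⟩
  · dsimp only
    split_ifs with e
    · exact zero_mem _
    · exact h1 ((A ∩ Y).card - 1) A (by omega)
  · funext A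
    rw [da_rg Y b hb (fun n => if n = 0 then 0 else ω (n - 1))]
    simpa using h2 _ A rfl

/-- Exactness of the mapping cone of multiplication by `g` on the part of the weight filtration
not involving the index `j`. -/
def CE (b : σ → D) (wt : σ → ℕ) (K : Ideal D) (j : σ) (g : D) (r W : ℕ) : Prop :=
  ∀ w, W ≤ w → ∀ x x' : Finset σ → D, pd D D j x = 0 → pd D D j x' = 0 →
    (∀ A, j ∉ A → x A ∈ K ^ (w - ∑ i ∈ A, wt i)) →
    (∀ A, j ∉ A → x' A ∈ K ^ (w - r - ∑ i ∈ A, wt i)) →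
    da b x + g • x' = 0 → da b x' = 0 →
    ∃ v v' : Finset σ → D, pd D D j v = 0 ∧ pd D D j v' = 0 ∧
    (∀ A, j ∉ A → v A ∈ K ^ (w - ∑ i ∈ A, wt i)) ∧
    (∀ A, j ∉ A → v' A ∈ K ^ (w - r - ∑ i ∈ A, wt i)) ∧ x = da b v + g • v' ∧ x' = - da b v'

lemma apply_of_pd_eq_zero {j : σ} {x : Finset σ → D} (h : pd D D j x = 0) {A : Finset σ} (hA : j ∈ A) :
    x A = 0 := by
  have := pd_add_ex j x
  rw [h, map_zero, add_zero] at this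
  rw [← this, pd_apply, if_pos hA]

lemma pd_ex_of_pd_eq_zero {j : σ} {x : Finset σ → D} (h : pd D D j x = 0) : pd D D j (ex D D j x) = x := by
  have := pd_add_ex j x
  rwa [h, map_zero, add_zero] at this

lemma CE.mul {b : σ → D} {wt : σ → ℕ} {K : Ideal D} {j : σ} {y g : D} {r W1 Wr : ℕ}
    (h1 : CE b wt K j y 1 W1) (hr : CE b wt K j g r Wr) (hy : y ∈ K) (hg : g ∈ K ^ r) :
    CE b wt K j (y * g) (r + 1) (max W1 (Wr + 1)) := by
  intro w hw x x' hx hx' mx mx' e e'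
  obtain ⟨ω, ω', p1, p2, m1, m2, e1, e2⟩ := h1 w (by omega) x (g • x') hx
    (by rw [(pd D D j).map_smul, hx', smul_zero]) mx (fun A hA => by
      have := Ideal.mul_mem_mul hg (mx' A hA)
      rw [← pow_add] at this
      exact Ideal.pow_le_pow_right (by omega) this) (by rw [smul_smul, e])
    (by rw [(da b).map_smul, e', smul_zero])
  obtain ⟨v, v', p3, p4, m3, m4, e3, e4⟩ := hr (w - 1) (by omega) ω' x' p2 hx' m2 (fun A hA => by
    have := mx' A hA
    rwa [show w - (r + 1) = w - 1 - r by omega] at this) (by rw [e2]; abel) e'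
  refine ⟨ω + y • v, v', by rw [map_add, (pd D D j).map_smul, p1, p3]; simp, p4, fun A hA => ?_,
    fun A hA => ?_, ?_, e4⟩
  · refine add_mem (m1 A hA) ?_
    have := Ideal.mul_mem_mul hy (m3 A hA)
    rw [← pow_succ'] at this
    exact Ideal.pow_le_pow_right (by omega) this
  · have := m4 A hA
    rwa [show w - 1 - r = w - (r + 1) by omega] at this
  · rw [e1, e3, map_add, (da b).map_smul, smul_add, smul_smul, add_assoc]

lemma WEx.toCE {b : σ → D} {wt : σ → ℕ} {K : Ideal D} {W : ℕ} (h : WEx b wt K W) (j : σ) :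
    CE (Function.update b j 0) wt K j (b j) (wt j) W := by
  intro w hw x x' hx hx' mx mx' e e'
  have hz : ∀ z, pd D D j z = 0 → da (Function.update b j 0) z = da b z := fun z h => by
    rw [da_update, h, smul_zero, add_zero]
  rw [hz _ hx] at e; rw [hz _ hx'] at e'
  obtain ⟨ω, m1, e1⟩ := h w hw (x + ex D D j x') (fun A => by
    refine add_mem ?_ ?_
    · by_cases hA : j ∈ A
      · rw [apply_of_pd_eq_zero hx hA]; exact zero_mem _
      · exact mx A hA
    · rw [ex_apply]
      split_ifs with hA
      · have := mx' (A.erase j) (by simp)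
        rw [← Finset.add_sum_erase A wt hA, ← Nat.sub_sub]
        exact Submodule.smul_of_tower_mem _ _ this
      · exact zero_mem _) (by rw [map_add, da_ex, e', map_zero, sub_zero, e])
  have hω := pd_add_ex j ω
  have p1 := pd_pd j (ex D D j ω)
  have p2 := pd_pd j ω
  have eq1 : da b (pd D D j (ex D D j ω)) + b j • pd D D j ω - ex D D j (da b (pd D D j ω)) =
      x + ex D D j x' := by
    rw [← e1]
    conv_rhs => rw [← hω]
    rw [map_add, da_ex]; abel
  have eq2 : x' = - da b (pd D D j ω) := by
    have := congrArg (pd D D j) eq1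
    have q : pd D D j (da b (pd D D j ω)) = 0 := by
      have := da_pd b j (pd D D j ω); rw [p2, map_zero] at this; simpa using this.symm
    have q' : pd D D j (da b (pd D D j (ex D D j ω))) = 0 := by
      have := da_pd b j (pd D D j (ex D D j ω)); rw [p1, map_zero] at this; simpa using this.symm
    rw [map_sub, map_add, (pd D D j).map_smul, p2, q', pd_ex_of_pd_eq_zero q, map_add, hx,
      pd_ex_of_pd_eq_zero hx'] at this
    rw [← zero_add x', ← this]; simp
  refine ⟨pd D D j (ex D D j ω), pd D D j ω, p1, p2, fun A hA => ?_, fun A hA => ?_, ?_, ?_⟩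
  · rw [pd_apply, if_neg hA, ex_apply, if_pos (Finset.mem_insert_self _ _), Finset.erase_insert hA]
    exact Submodule.smul_of_tower_mem _ _ (Submodule.smul_of_tower_mem _ _ (m1 A))
  · rw [pd_apply, if_neg hA]
    have := m1 (insert j A)
    rw [Finset.sum_insert hA, ← Nat.sub_sub] at this
    exact Submodule.smul_of_tower_mem _ _ this
  · rw [hz _ p1]
    rw [eq2, map_neg] at eq1
    exact (add_right_cancel (b := - ex D D j (da b (pd D D j ω))) (by rw [← eq1]; abel))
  · rw [hz _ p2]; exact eq2

lemma CE.toWEx {b : σ → D} {wt : σ → ℕ} {K : Ideal D} {W : ℕ} (j : σ) {g : D} {r : ℕ} 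
    (h : CE (Function.update b j 0) wt K j g r W) :
    WEx (Function.update b j g) (Function.update wt j r) K W := by
  intro w hw ζ mζ hd
  set b' := Function.update b j g with hb'
  have hb0 : Function.update b j 0 = Function.update b' j 0 := by simp [hb']
  rw [hb0] at h
  have hz : ∀ z, pd D D j z = 0 → da (Function.update b' j 0) z = da b' z := fun z h => by
    rw [da_update, h, smul_zero, add_zero]
  have hs : ∀ A, j ∉ A → ∑ i ∈ A, Function.update wt j r i = ∑ i ∈ A, wt i := fun A hA =>
    Finset.sum_congr rfl fun i hi => Function.update_of_ne (by rintro rfl; exact hA hi) _ _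
  have hs' : ∀ A, j ∉ A → ∑ i ∈ insert j A, Function.update wt j r i = r + ∑ i ∈ A, wt i := fun A hA => by
    rw [Finset.sum_insert hA, hs A hA, Function.update_self]
  have hζ := pd_add_ex j ζ
  have p1 := pd_pd j (ex D D j ζ)
  have p2 := pd_pd j ζ
  have hd' : da b' (pd D D j ζ) = 0 := by rw [da_pd, hd, map_zero, neg_zero]
  obtain ⟨v, v', p3, p4, m3, m4, e3, e4⟩ := h w hw (pd D D j (ex D D j ζ)) (pd D D j ζ) p1 p2
    (fun A hA => by
      rw [pd_apply, if_neg hA, ex_apply, if_pos (Finset.mem_insert_self _ _), Finset.erase_insert hA]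
      have := mζ A
      rw [hs A hA] at this
      exact Submodule.smul_of_tower_mem _ _ (Submodule.smul_of_tower_mem _ _ this))
    (fun A hA => by
      rw [pd_apply, if_neg hA]
      have := mζ (insert j A)
      rw [hs' A hA, ← Nat.sub_sub] at this
      exact Submodule.smul_of_tower_mem _ _ this)
    (by
      rw [hz _ p1, da_pd, da_ex, hd, map_zero, sub_zero, (pd D D j).map_smul]
      simp [hb'])
    (by rw [hz _ p2, hd'])
  rw [hz _ p3] at e3
  rw [hz _ p4] at e4
  refine ⟨v + ex D D j v', fun A => ?_, ?_⟩
  · refine add_mem ?_ ?_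
    · by_cases hA : j ∈ A
      · rw [apply_of_pd_eq_zero p3 hA]; exact zero_mem _
      · rw [hs A hA]; exact m3 A hA
    · rw [ex_apply]
      split_ifs with hA
      · have := m4 (A.erase j) (by simp)
        rw [Nat.sub_sub, ← hs' _ (by simp), Finset.insert_erase hA] at this
        exact Submodule.smul_of_tower_mem _ _ this
      · exact zero_mem _
  · rw [map_add, da_ex]
    conv_rhs => rw [← hζ, e3, e4, map_neg]
    simp [hb', sub_eq_add_neg, add_assoc]

lemma WEx.pow {b : σ → D} {wt : σ → ℕ} {K : Ideal D} {W : ℕ} (h : WEx b wt K W) (j : σ)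
    (hj : wt j = 1) (hb : b j ∈ K) (q : ℕ) :
    WEx (Function.update b j (b j ^ (q + 1))) (Function.update wt j (q + 1)) K (W + q) := by
  refine CE.toWEx j ?_
  have h1 := h.toCE j
  rw [hj] at h1
  induction q with
  | zero => simpa using h1
  | succ q ih =>
    have := h1.mul ih hb (Ideal.pow_mem_pow hb _)
    rw [← pow_succ'] at this
    rwa [show max W (W + q + 1) = W + (q + 1) by omega] at this

lemma WEx.pow_all {b : σ → D} (Y : Finset σ) {K : Ideal D} {W : ℕ}
    (h : WEx b (fun i => if i ∈ Y then 1 else 0) K W) (hb : ∀ j ∈ Y, b j ∈ K) (q : ℕ) :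
    WEx (fun i => if i ∈ Y then b i ^ (q + 1) else b i) (fun i => if i ∈ Y then (q + 1) else 0) K
      (W + Y.card * q) := by
  have : ∀ T ⊆ Y, WEx (fun i => if i ∈ T then b i ^ (q + 1) else b i)
      (fun i => if i ∈ T then (q + 1) else if i ∈ Y then 1 else 0) K (W + T.card * q) := by
    intro T
    induction T using Finset.induction_on with
    | empty => intro _; simpa using h
    | insert j T hj ih =>
      intro hT
      have hjY : j ∈ Y := hT (Finset.mem_insert_self _ _)
      have := (ih ((Finset.subset_insert _ _).trans hT)).pow j (by simp [hj, hjY]) (by simpa [hj] using hb j hjY) q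
      rw [Finset.card_insert_of_notMem hj, show W + (T.card + 1) * q = W + T.card * q + q by ring]
      convert this using 1
      · funext i
        by_cases hi : i = j
        · subst hi; simp [hj]
        · simp [hi]
      · funext i
        by_cases hi : i = j
        · subst hi; simp
        · simp [hi]
  convert this Y subset_rfl using 1
  funext i; split_ifs <;> rfl

end Weighted

/-! ### Frobenius powers of sequences -/

section FrobExact
variable {σ : Type*} [Fintype σ] [LinearOrder σ] {D : Type*} [CommRing D]

lemma Ex1.adjoin_all {b : σ → D} {M : ℕ → Ideal D} {r : ℕ} (Y : Finset σ)
    (h : Ex1 (fun i => if i ∈ Y then b i else 0) M r)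
    (hb : ∀ v, ∀ i, ∀ x ∈ M v, b i * x ∈ M (v + 1)) : Ex1 b M r := by
  have : ∀ T : Finset σ, Ex1 (fun i => if i ∈ Y ∪ T then b i else 0) M r := by
    intro T
    induction T using Finset.induction_on with
    | empty => simpa using h
    | insert j T hj ih =>
      by_cases hjY : j ∈ Y ∪ T
      · rwa [show Y ∪ insert j T = Y ∪ T by
          rw [Finset.union_insert, Finset.insert_eq_of_mem hjY]]
      · refine Ex1.adjoin j ?_ (fun v i x hx => ?_)
        · convert ih using 1
          funext i
          by_cases hi : i = j
          · subst hi; simp only [Function.update_self]; rw [if_neg hjY]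
          · simp [hi]
        · split_ifs
          · exact hb v i x hx
          · simp
  simpa using this Finset.univ

lemma Ex1.drop_all {b : σ → D} {M : ℕ → Ideal D} {r : ℕ} (Y : Finset σ) (h : Ex1 b M r)
    (ρ : σ → σ → D) (hρ : ∀ j ∈ Y, ∀ i ∈ Y, ρ j i = 0) (hρ' : ∀ j ∈ Y, b j = ∑ i, ρ j i * b i) :
    Ex1 (fun i => if i ∈ Y then 0 else b i) M r := by
  have : ∀ T ⊆ Y, Ex1 (fun i => if i ∈ T then 0 else b i) M r := by
    intro T
    induction T using Finset.induction_on with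
    | empty => intro _; simpa using h
    | insert j T hj ih =>
      intro hT
      have hjY : j ∈ Y := hT (Finset.mem_insert_self _ _)
      have hTY := (Finset.subset_insert _ _).trans hT
      have := Ex1.drop j (ih hTY) (ρ j) (hρ j hjY j hjY) (by
        rw [if_neg hj, hρ' j hjY]
        refine Finset.sum_congr rfl fun i _ => ?_
        split_ifs with hi
        · rw [hρ j hjY i (hTY hi)]; simp
        · rfl)
      convert this using 1
      funext i
      by_cases hi : i = j
      · subst hi; simp
      · simp [hi]
  exact this Y subset_rfl

/-- Exactness on `p ^ e`-th powers, above a level independent of `e`. The `b j` with `j ∈ Y` generate a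
reduction of `K` and are combinations of the others. -/
theorem ex1_frob [IsNoetherianRing D] (p : ℕ) [Fact p.Prime] [CharP D p] (Y : Finset σ) (b : σ → D)
    (K : Ideal D) (hb : ∀ i, b i ∈ K)
    (hK : ∃ m, K ^ (m + 1) ≤ Ideal.span (Set.range fun i => if i ∈ Y then b i else 0) * K ^ m)
    (ρ : σ → σ → D) (hρ : ∀ j ∈ Y, ∀ i ∈ Y, ρ j i = 0) (hρ' : ∀ j ∈ Y, b j = ∑ i, ρ j i * b i) :
    ∃ m, ∀ e : ℕ, Ex1 (fun i => if i ∈ Y then 0 else b i ^ p ^ e) (fun u => K ^ (m + u * p ^ e))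
      Y.card := by
  obtain ⟨n₀, h0⟩ := exact_high _ K hK
  refine ⟨Y.card + n₀ + 1, fun e => ?_⟩
  obtain ⟨q, hq⟩ : ∃ q, p ^ e = q + 1 := ⟨p ^ e - 1, by
    have : 0 < p ^ e := pow_pos (Fact.out : p.Prime).pos _
    omega⟩
  have h1 := WEx.start Y _ (fun j hj => if_neg hj) K n₀ h0
  have h2 := h1.pow_all Y (fun j hj => by simpa [hj] using hb j) q
  rw [← hq] at h2
  have h3 := WEx.toEx1 Y _ (fun j hj => by simp [hj]) K (p ^ e) _ (Y.card + n₀ + 1) h2 (fun v hv => by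
    have : Y.card * q ≤ v * p ^ e := Nat.mul_le_mul hv.le (by omega)
    omega)
  have h4 : Ex1 (fun i => b i ^ p ^ e) (fun u => K ^ (Y.card + n₀ + 1 + u * p ^ e)) Y.card := by
    refine Ex1.adjoin_all Y ?_ (fun v i x hx => ?_)
    · convert h3 using 1
      funext i
      split_ifs <;> rfl
    · have := Ideal.mul_mem_mul (Ideal.pow_mem_pow (hb i) (p ^ e)) hx
      rw [← pow_add] at this
      rwa [show Y.card + n₀ + 1 + (v + 1) * p ^ e = p ^ e + (Y.card + n₀ + 1 + v * p ^ e) by ring]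
  refine h4.drop_all Y (fun j i => ρ j i ^ p ^ e) (fun j hj i hi => by
    rw [hρ j hj i hi, zero_pow (by omega)]) (fun j hj => ?_)
  rw [hρ' j hj, sum_pow_char_pow]
  simp only [mul_pow]

section Transfer
variable {τ : Type*} [Fintype τ] [LinearOrder τ]

lemma sg_map (ι : τ ↪o σ) (j : τ) (B : Finset τ) : sg (ι j) (B.map ι.toEmbedding) = sg j B := by
  unfold sg
  congr 1
  rw [Finset.filter_map, Finset.card_map]
  congr 2
  ext i; simp

lemma da_map (ι : τ ↪o σ) (b : σ → D) (hb : ∀ j, j ∉ Set.range ι → b j = 0) (ω : Finset σ → D)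
    (B : Finset τ) : da b ω (B.map ι.toEmbedding) =
      da (fun j => b (ι j)) (fun B => ω (B.map ι.toEmbedding)) B := by
  rw [da_apply_mul, da_apply_mul]
  symm
  refine Finset.sum_of_injOn ι (ι.injective.injOn) (fun _ _ => Finset.mem_univ _) ?_ ?_
  · intro j _ hj
    rw [hb j (by simpa using hj)]; simp
  · intro j _
    rw [sg_map, Finset.map_insert]
    simp

theorem Ex1.transfer (ι : τ ↪o σ) {b : σ → D} {M : ℕ → Ideal D} {r : ℕ} (h : Ex1 b M r)
    (hb : ∀ j, j ∉ Set.range ι → b j = 0) : Ex1 (fun j => b (ι j)) M r := by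
  classical
  intro v hv ζ hζ hd
  let pr : Finset σ → Finset τ := fun A => A.preimage ι ι.injective.injOn
  have hpr : ∀ B, pr (B.map ι.toEmbedding) = B := fun B => by ext; simp [pr]
  let ζ' : Finset σ → D := fun A => if (pr A).map ι.toEmbedding = A then ζ (pr A) else 0
  have hζ' : ∀ B, ζ' (B.map ι.toEmbedding) = ζ B := fun B => by simp only [ζ', hpr, if_true]
  have hz0 : ∀ A : Finset σ, (pr A).map ι.toEmbedding ≠ A → ∀ j,
      (pr (insert j A)).map ι.toEmbedding ≠ insert j A ∨ j ∉ Set.range ι := by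
    intro A hA j
    by_contra! hc
    obtain ⟨h1, h2⟩ := hc
    apply hA
    ext i
    constructor
    · intro hi; simp only [pr, Finset.mem_map, Finset.mem_preimage] at hi
      obtain ⟨k, hk, rfl⟩ := hi; exact hk
    · intro hi
      have : i ∈ (pr (insert j A)).map ι.toEmbedding := by rw [h1]; exact Finset.mem_insert_of_mem hi
      simp only [pr, Finset.mem_map, Finset.mem_preimage] at this ⊢
      obtain ⟨k, hk, rfl⟩ := this
      exact ⟨k, hi, rfl⟩
  obtain ⟨ω, h1, h2⟩ := h v hv ζ' (fun A => by
    simp only [ζ']; split_ifs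
    · exact hζ _
    · exact zero_mem _) (by
    funext A
    by_cases hA : (pr A).map ι.toEmbedding = A
    · rw [← hA, da_map ι b hb]
      simp only [hζ']
      rw [show (fun B => ζ B) = ζ from rfl, hd]; rfl
    · rw [da_apply_mul]
      refine Finset.sum_eq_zero fun j _ => ?_
      rcases hz0 A hA j with h | h
      · simp only [ζ', if_neg h]; simp
      · rw [hb j h]; simp)
  refine ⟨fun B => ω (B.map ι.toEmbedding), fun B => h1 _, ?_⟩
  funext B
  rw [← da_map ι b hb, h2, hζ']

end Transfer

theorem Ex1.killOn {b : σ → D} {M : ℕ → Ideal D} {r : ℕ} (h : Ex1 b M r) (hM : Antitone M)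
    (hb : ∀ v, ∀ i, ∀ x ∈ M v, b i * x ∈ M (v + 1)) : KillOn b (r + 1) (M 0) :=
  killOn_of_exact b M hM (fun w j x hx => hb w j x hx) r fun u hu ζ _ hζ hd => h u hu ζ hζ hd

end FrobExact

/-! ### Multipliers in characteristic `p` -/

section FrobApply
variable {D : Type*} [CommRing D]

lemma span_pow_le_pow {s : ℕ} (y : Fin s → D) (q n N : ℕ) (hq : 0 < q) (hN : n * q + s * q ≤ N) :
    Ideal.span (Set.range y) ^ N ≤ Ideal.span (Set.range fun i => y i ^ q) ^ n := by
  intro x hx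
  rw [Ideal.mem_span_pow_iff_exists_isHomogeneous] at hx
  obtain ⟨P, hP, rfl⟩ := hx
  rw [MvPolynomial.eval_eq']
  refine Ideal.sum_mem _ fun α hα => Ideal.mul_mem_left _ _ ?_
  have hdeg : ∑ i, α i = N := by
    have := hP (MvPolynomial.mem_support_iff.1 hα)
    rw [← this, show Finsupp.weight (1 : Fin s → ℕ) α = α.degree from (DFunLike.congr_fun Finsupp.degree_eq_weight_one α).symm, Finsupp.degree_eq_sum]
  have hn : n ≤ ∑ i, α i / q := by
    have h1 : ∑ i, α i ≤ ∑ i, (α i / q * q + q) := Finset.sum_le_sum fun i _ => by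
      have := Nat.div_add_mod (α i) q
      have := Nat.mod_lt (α i) hq
      nlinarith
    rw [Finset.sum_add_distrib, ← Finset.sum_mul, Finset.sum_const, Finset.card_univ, Fintype.card_fin,
      smul_eq_mul] at h1
    have : n * q ≤ (∑ i, α i / q) * q := by omega
    exact Nat.le_of_mul_le_mul_right this hq
  refine Ideal.pow_le_pow_right hn ?_
  have h2 : ∏ i, y i ^ α i = (∏ i, (y i ^ q) ^ (α i / q)) * ∏ i, y i ^ (α i % q) := by
    rw [← Finset.prod_mul_distrib]
    refine Finset.prod_congr rfl fun i _ => ?_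
    rw [← pow_mul, ← pow_add, Nat.div_add_mod]
  rw [h2]
  refine Ideal.mul_mem_right _ _ ?_
  rw [← Finset.prod_pow_eq_pow_sum]
  exact Ideal.prod_mem_prod fun i _ => Ideal.pow_mem_pow (Ideal.subset_span (Set.mem_range_self i)) _

lemma PL.span_pow {q : ℕ} {φ : D → D} (h : PL q φ) {s : ℕ} (y : Fin s → D) (n : ℕ) {x : D}
    (hx : x ∈ Ideal.span (Set.range fun i => y i ^ q) ^ n) : φ x ∈ Ideal.span (Set.range y) ^ n := by
  rw [Ideal.mem_span_pow_iff_exists_isHomogeneous] at hx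
  obtain ⟨P, hP, rfl⟩ := hx
  rw [MvPolynomial.eval_eq', h.sum]
  refine Ideal.sum_mem _ fun α hα => ?_
  have h2 : ∏ i, (y i ^ q) ^ α i = (∏ i, y i ^ α i) ^ q := by
    rw [← Finset.prod_pow]
    exact Finset.prod_congr rfl fun i _ => pow_right_comm _ _ _
  rw [h2, mul_comm, h.2]
  refine Ideal.mul_mem_right _ _ ?_
  have hdeg : ∑ i, α i = n := by
    have := hP (MvPolynomial.mem_support_iff.1 hα)
    rw [← this, show Finsupp.weight (1 : Fin s → ℕ) α = α.degree from (DFunLike.congr_fun Finsupp.degree_eq_weight_one α).symm, Finsupp.degree_eq_sum]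
  rw [← hdeg, ← Finset.prod_pow_eq_pow_sum]
  exact Ideal.prod_mem_prod fun i _ => Ideal.pow_mem_pow (Ideal.subset_span (Set.mem_range_self i)) _

variable [IsDomain D] [IsNoetherianRing D] {p : ℕ} [Fact p.Prime] [CharP D p] {c : D}

theorem FS.bs (h : FS p D c) (hc : c ≠ 0) {s : ℕ} (y : Fin s → D) (K : Ideal D) (hK0 : K ≠ ⊥)
    (hK : IsRed (Ideal.span (Set.range y)) K) (n : ℕ) (x : D) (hx : x ∈ K ^ n) :
    c ^ 3 * x ∈ Ideal.span (Set.range y) ^ (n - s) := by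
  obtain ⟨hle, m, hm⟩ := hK
  have hKm : K ^ m ≠ ⊥ := pow_ne_zero m hK0
  obtain ⟨κ, hκ, hκ0⟩ := Submodule.exists_mem_ne_zero_of_ne_bot hKm
  obtain ⟨e, φ, hφ, hφκ⟩ := h.te hc κ hκ0
  have hmr : ∀ r, K ^ (m + r) ≤ Ideal.span (Set.range y) ^ r := by
    have : ∀ r, K ^ (m + r) ≤ Ideal.span (Set.range y) ^ r * K ^ m := by
      intro r
      induction r with
      | zero => simp
      | succ r ih =>
        rw [← add_assoc, pow_succ]
        refine (Ideal.mul_mono_left ih).trans ?_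
        rw [mul_assoc, ← pow_succ, pow_succ (Ideal.span _), mul_assoc]
        exact Ideal.mul_mono_right hm
    exact fun r => (this r).trans Ideal.mul_le_left
  have hq : 0 < p ^ e := pow_pos (Fact.out : p.Prime).pos _
  have h1 : x ^ p ^ e * κ ∈ K ^ (m + n * p ^ e) := by
    rw [add_comm, pow_add, pow_mul]
    exact Ideal.mul_mem_mul (Ideal.pow_mem_pow hx _) hκ
  by_cases hn : n ≤ s
  · rw [Nat.sub_eq_zero_of_le hn, pow_zero, Ideal.one_eq_top]; trivial
  have h2 := span_pow_le_pow y (p ^ e) (n - s) (n * p ^ e) hq (by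
    rw [← add_mul, Nat.sub_add_cancel (by omega)]) (hmr _ h1)
  have h3 := hφ.span_pow y _ h2
  rwa [hφ.2, hφκ, mul_comm] at h3

/-- The shift `s + 1` depends only on the number of generators of a reduction of `(a)`. -/
theorem FS.gk (h : FS p D c) (hc : c ≠ 0) {s t : ℕ} (y : Fin s → D) (a : Fin t → D)
    (ha0 : ∃ i, a i ≠ 0)
    (hred : IsRed (Ideal.span (Set.range y)) (Ideal.span (Set.range a)))
    (Z : Fin s → Fin t → D) (hZ : ∀ j, y j = ∑ l, Z j l * a l) (n : ℕ)
    (z : Finset (Fin t) → (Fin t → ℕ) → D) (hz0 : z ∅ = 0)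
    (hz : ∀ A α, dg α < n → dd a z A α = 0) :
    ∃ w : Finset (Fin t) → (Fin t → ℕ) → D, w ∅ = 0 ∧
      ∀ A α, dg α + (s + 1) < n → (c ^ 3 • z - dd a w) A α = 0 := by
  classical
  set K := Ideal.span (Set.range a) with hKdef
  let b : Fin (s + t) → D := Fin.addCases y a
  let Y : Finset (Fin (s + t)) := Finset.univ.filter fun i => (i : ℕ) < s
  have hYl : ∀ i : Fin s, Fin.castAdd t i ∈ Y := fun i => by simp [Y]
  have hYr : ∀ i : Fin t, Fin.natAdd s i ∉ Y := fun i => by simp [Y]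
  have hYc : Y.card = s := by
    have : Y = Finset.univ.map (Fin.castAddEmb t : Fin s ↪ Fin (s + t)) := by
      ext i
      refine Fin.addCases (fun i => ?_) (fun i => ?_) i
      · simp [hYl]
      · simp only [hYr, false_iff, Finset.mem_map, Finset.mem_univ, true_and]
        rintro ⟨j, hj⟩
        exact hYr i (hj ▸ hYl j)
    rw [this]; simp
  have hbl : ∀ i, b (Fin.castAdd t i) = y i := fun i => by simp [b]
  have hbr : ∀ i, b (Fin.natAdd s i) = a i := fun i => by simp [b]
  have haK : ∀ i, a i ∈ K := fun i => Ideal.subset_span ⟨i, rfl⟩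
  have hbK : ∀ i, b i ∈ K := fun i => by
    refine Fin.addCases (fun i => ?_) (fun i => ?_) i
    · rw [hbl]; exact hred.1 (Ideal.subset_span ⟨i, rfl⟩)
    · rw [hbr]; exact haK i
  let ρ : Fin (s + t) → Fin (s + t) → D := fun j i =>
    Fin.addCases (fun j => Fin.addCases (fun _ => 0) (fun l => Z j l) i) (fun _ => 0) j
  obtain ⟨m, hm⟩ := ex1_frob p Y b K hbK (by
    obtain ⟨m, hm⟩ := hred.2
    refine ⟨m, hm.trans (Ideal.mul_mono_left (Ideal.span_mono ?_))⟩
    rintro _ ⟨i, rfl⟩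
    exact ⟨Fin.castAdd t i, by simp [hYl, hbl]⟩) ρ (fun j hj i hi => by
      revert hj hi
      refine Fin.addCases (fun j => ?_) (fun j => ?_) j
      · refine Fin.addCases (fun i => ?_) (fun i => ?_) i
        · intro _ _; simp [ρ]
        · intro _ h; exact absurd h (hYr i)
      · intro h; exact absurd h (hYr j)) (fun j => by
      refine Fin.addCases (fun j => ?_) (fun j => ?_) j
      · intro _
        rw [hbl, hZ, Fin.sum_univ_add]
        simp [ρ, hbr]
      · intro h; exact absurd h (hYr j))
  rw [hYc] at hm
  have hKm : K ^ m ≠ ⊥ := by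
    obtain ⟨i, hi⟩ := ha0
    exact pow_ne_zero m fun h => hi (by simpa [h] using haK i)
  obtain ⟨κ, hκ, hκ0⟩ := Submodule.exists_mem_ne_zero_of_ne_bot hKm
  obtain ⟨e, φ, hφ, hφκ⟩ := h.te hc κ hκ0
  have hq : 0 < p ^ e := pow_pos (Fact.out : p.Prime).pos _
  have h1 := (hm e).transfer (Fin.natAddOrderEmb s : Fin t ↪o Fin (s + t)) (fun j hj => by
    revert hj
    refine Fin.addCases (fun j => ?_) (fun j => ?_) j
    · intro _; simp [hYl]
    · intro h; exact absurd ⟨j, rfl⟩ h)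
  have h2 : Ex1 (fun j => a j ^ p ^ e) (fun u => K ^ (m + u * p ^ e)) s := by
    convert h1 using 1
    funext j
    simp [hYr, hbr]
  have h3 := h2.killOn (fun i j hij => Ideal.pow_le_pow_right (by gcongr)) (fun v i x hx => by
    have := Ideal.mul_mem_mul (Ideal.pow_mem_pow (haK i) (p ^ e)) hx
    rw [← pow_add] at this
    rwa [show m + (v + 1) * p ^ e = p ^ e + (m + v * p ^ e) by ring])
  let g : D →+ D := (AddMonoidHom.mulLeft κ).comp (iterateFrobenius D p e).toAddMonoidHom
  have hg : ∀ x, g x = κ * x ^ p ^ e := fun x => by simp [g, iterateFrobenius_def]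
  let f : D →+ D := AddMonoidHom.mk' φ hφ.1
  have hf : ∀ x, f x = φ x := fun x => rfl
  obtain ⟨w, hw0, -, hw⟩ := h3 n (mapC g z) (by funext α; simp [mapC, hz0]) (fun A α => by
      rw [mapC, hg, zero_mul, add_zero]; exact Ideal.mul_mem_right _ _ hκ) (fun A α hα => by
      rw [dd_mapC g a _ (fun j x => by rw [hg, hg, smul_eq_mul, smul_eq_mul]; ring), mapC, hz A α hα,
        map_zero])
  refine ⟨mapC f w, by funext α; simp [mapC, hw0], fun A α hα => ?_⟩
  have := congrArg f (hw A α hα)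
  rw [Pi.sub_apply, Pi.sub_apply, map_sub, map_zero] at this
  rw [dd_mapC f (fun j => a j ^ p ^ e) a (fun j x => by rw [hf, hf, smul_eq_mul, smul_eq_mul, hφ.2])]
  rw [Pi.sub_apply, Pi.sub_apply]
  rw [← this, mapC, mapC, hf (g _), hg, mul_comm κ, hφ.2, hφκ]
  simp [mul_comm]

end FrobApply

/-! ### Generic reductions -/

section GenRed
variable {D : Type*} [CommRing D]

/-- If a power of each generator lies in `I * J ^ N`, then `I` is a reduction of `J`. -/
lemma isRed_of_gens {t : ℕ} (a : Fin t → D) (I : Ideal D) (hI : I ≤ Ideal.span (Set.range a))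
    (h : ∀ i, ∃ N, a i ^ (N + 1) ∈ I * Ideal.span (Set.range a) ^ N) :
    IsRed I (Ideal.span (Set.range a)) := by
  choose N hN using h
  set J := Ideal.span (Set.range a)
  have haJ : ∀ i, a i ∈ J := fun i => Ideal.subset_span (Set.mem_range_self i)
  let M := ∑ i, N i
  refine ⟨hI, M, ?_⟩
  intro x hx
  rw [Ideal.mem_span_pow_iff_exists_isHomogeneous] at hx
  obtain ⟨P, hP, rfl⟩ := hx
  rw [MvPolynomial.eval_eq']
  refine Ideal.sum_mem _ fun α hα => Ideal.mul_mem_left _ _ ?_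
  have hdeg : ∑ i, α i = M + 1 := by
    have := hP (MvPolynomial.mem_support_iff.1 hα)
    rw [← this, show Finsupp.weight (1 : Fin t → ℕ) α = α.degree from (DFunLike.congr_fun Finsupp.degree_eq_weight_one α).symm, Finsupp.degree_eq_sum]
  obtain ⟨i, hi⟩ : ∃ i, N i + 1 ≤ α i := by
    by_contra! hc
    have : ∑ i, α i ≤ ∑ i, N i := Finset.sum_le_sum fun i _ => by have := hc i; omega
    omega
  rw [← Finset.mul_prod_erase _ _ (Finset.mem_univ i)]
  have h1 : ∏ j ∈ Finset.univ.erase i, a j ^ α j ∈ J ^ (∑ j ∈ Finset.univ.erase i, α j) := by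
    rw [← Finset.prod_pow_eq_pow_sum]
    exact Ideal.prod_mem_prod fun j _ => Ideal.pow_mem_pow (haJ j) _
  rw [show α i = (N i + 1) + (α i - (N i + 1)) by omega, pow_add, mul_assoc]
  have h2 := Ideal.mul_mem_mul (hN i) (Ideal.mul_mem_mul (Ideal.pow_mem_pow (haJ i) (α i - (N i + 1))) h1)
  rw [← pow_add, mul_assoc, ← pow_add] at h2
  convert h2 using 3
  have := Finset.add_sum_erase Finset.univ (fun i => α i) (Finset.mem_univ i)
  beta_reduce at this
  omega

open MvPolynomial

variable {s t : ℕ}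

/-- The polynomial ring in the coefficients of `s` linear combinations of `t` elements. -/
abbrev GPoly (s t : ℕ) (D : Type*) [CommSemiring D] := MvPolynomial (Fin s × Fin t) D

/-- Generic linear combinations of `a`. -/
noncomputable def gy (s : ℕ) (a : Fin t → D) (j : Fin s) : GPoly s t D :=
  ∑ l, X (j, l) * C (a l)

/-- `a i ^ N g` is congruent modulo `(y) J ^ (N - 1)` to a form in which the variables of index
`i` have been eliminated. -/
lemma elim_step (a : Fin t → D) (i : Fin t) (g : GPoly s t D) :
    ∃ N h, C (a i) ^ (N + 1) * g - h ∈ Ideal.span (Set.range (gy s a)) *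
        ((Ideal.span (Set.range a)).map C) ^ N ∧
      h ∈ ((Ideal.span (Set.range a)).map (C : D →+* GPoly s t D)) ^ (N + 1) ∧
      h ∈ Algebra.adjoin D {x | ∃ j l, l ≠ i ∧ x = (X (j, l) : GPoly s t D)} := by
  set J := (Ideal.span (Set.range a)).map (C : D →+* GPoly s t D) with hJ
  set A := Algebra.adjoin D {x | ∃ j l, l ≠ i ∧ x = (X (j, l) : GPoly s t D)}
  have haJ : ∀ l, C (a l) ∈ J := fun l => Ideal.mem_map_of_mem _ (Ideal.subset_span (Set.mem_range_self l))
  have hCA : ∀ r : D, (C r : GPoly s t D) ∈ A := fun r => A.algebraMap_mem r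
  have raise : ∀ N h (g : GPoly s t D) k,
      C (a i) ^ (N + 1) * g - h ∈ Ideal.span (Set.range (gy s a)) * J ^ N → h ∈ J ^ (N + 1) → h ∈ A →
      C (a i) ^ (N + k + 1) * g - C (a i) ^ k * h ∈ Ideal.span (Set.range (gy s a)) * J ^ (N + k) ∧
      C (a i) ^ k * h ∈ J ^ (N + k + 1) ∧ C (a i) ^ k * h ∈ A := by
    intro N h g k h1 h2 h3
    refine ⟨?_, ?_, A.mul_mem (A.pow_mem (hCA _) _) h3⟩
    · have := Ideal.mul_mem_mul h1 (Ideal.pow_mem_pow (haJ i) k)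
      rw [mul_assoc, ← pow_add] at this
      convert this using 1; ring
    · have := Ideal.mul_mem_mul h2 (Ideal.pow_mem_pow (haJ i) k)
      rw [← pow_add] at this
      rw [mul_comm (C (a i) ^ k) h, show N + k + 1 = N + 1 + k by ring]; exact this
  induction g using MvPolynomial.induction_on with
  | C r =>
    exact ⟨0, C (a i) * C r, by simp, by simpa using Ideal.mul_mem_right _ _ (haJ i), A.mul_mem (hCA _) (hCA _)⟩
  | add g g' ih ih' =>
    obtain ⟨N, h, h1, h2, h3⟩ := ih
    obtain ⟨N', h', h1', h2', h3'⟩ := ih'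
    obtain ⟨r1, r2, r3⟩ := raise N h g N' h1 h2 h3
    obtain ⟨r1', r2', r3'⟩ := raise N' h' g' N h1' h2' h3'
    rw [add_comm N' N] at r1' r2'
    refine ⟨N + N', _, ?_, add_mem r2 r2', A.add_mem r3 r3'⟩
    convert add_mem r1 r1' using 1; ring
  | mul_X g n ih =>
    obtain ⟨j, l⟩ := n
    obtain ⟨N, h, h1, h2, h3⟩ := ih
    by_cases hl : l = i
    · subst hl
      refine ⟨N + 1, - h * ∑ m ∈ Finset.univ.erase l, X (j, m) * C (a m), ?_, ?_, ?_⟩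
      · have e : gy s a j = X (j, l) * C (a l) + ∑ m ∈ Finset.univ.erase l, X (j, m) * C (a m) := by
          exact (Finset.add_sum_erase Finset.univ (fun m => X (j, m) * C (a m)) (Finset.mem_univ l)).symm
        have m1 := Ideal.mul_mem_mul h1 (haJ l)
        rw [mul_assoc, ← pow_succ] at m1
        have m2 : gy s a j * h ∈ Ideal.span (Set.range (gy s a)) * J ^ (N + 1) :=
          Ideal.mul_mem_mul (Ideal.subset_span (Set.mem_range_self j)) h2
        convert add_mem (Ideal.mul_mem_right (X (j, l)) _ m1) m2 using 1
        rw [e]; ring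
      · rw [pow_succ]
        refine Ideal.mul_mem_mul (neg_mem h2) (Ideal.sum_mem _ fun m _ => Ideal.mul_mem_left _ _ (haJ m))
      · refine A.mul_mem (A.neg_mem h3) (A.sum_mem fun m hm => A.mul_mem ?_ (hCA _))
        exact Algebra.subset_adjoin ⟨j, m, Finset.ne_of_mem_erase hm, rfl⟩
    · refine ⟨N, h * X (j, l), ?_, Ideal.mul_mem_right _ _ h2, A.mul_mem h3 (Algebra.subset_adjoin ⟨j, l, hl, rfl⟩)⟩
      convert Ideal.mul_mem_right (X (j, l)) _ h1 using 1; ring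

variable [IsDomain D] [IsNoetherianRing D]

lemma height_map_C_le (P : Ideal D) [P.IsPrime] (ι : Type*) [Finite ι] :
    (P.map (C : D →+* MvPolynomial ι D)).IsPrime ∧
      (P.map (C : D →+* MvPolynomial ι D)).height ≤ P.height := by
  classical
  have hp : (P.map (C : D →+* MvPolynomial ι D)).IsPrime := by
    rw [← Ideal.mk_ker (I := P), ← ker_map]
    exact RingHom.ker_isPrime _
  refine ⟨hp, ?_⟩
  have : (P.map (C : D →+* MvPolynomial ι D)).LiesOver P := ⟨by
    ext x
    rw [Ideal.mem_comap, MvPolynomial.algebraMap_eq, mem_map_C_iff]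
    constructor
    · intro h m
      rw [coeff_C]; split_ifs
      · exact h
      · exact zero_mem _
    · intro h; simpa using h 0⟩
  have h := Ideal.height_le_height_add_of_liesOver P (P.map (C : D →+* MvPolynomial ι D))
  rw [MvPolynomial.algebraMap_eq, Ideal.map_quotient_self] at h
  have : Nontrivial (MvPolynomial ι D ⧸ P.map (C : D →+* MvPolynomial ι D)) :=
    Ideal.Quotient.nontrivial_iff.2 hp.ne_top
  rwa [Ideal.height_bot, add_zero] at h

section Spec
variable (F : Type*) [Field F] [Algebra D F] [IsFractionRing D F]

/-- The element eliminating the `i`-th variable of row `j`. -/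
noncomputable def elimVal (s : ℕ) (a : Fin t → D) (i : Fin t) (j : Fin s) : GPoly s t F :=
  - ∑ m ∈ Finset.univ.erase i, X (j, m) * C (algebraMap D F (a m) / algebraMap D F (a i))

/-- The generic specialization killing the first `r` generic linear combinations. -/
noncomputable def spec (s : ℕ) (a : Fin t → D) (i : Fin t) (r : ℕ) :
    GPoly s t D →+* GPoly s t F :=
  eval₂Hom (C.comp (algebraMap D F)) fun jl => if (jl.1 : ℕ) < r ∧ jl.2 = i then elimVal F s a i jl.1 else X jl

variable (a : Fin t → D) (i : Fin t) (r : ℕ)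

lemma spec_X (jl) : spec F s a i r (X jl) =
    if (jl.1 : ℕ) < r ∧ jl.2 = i then elimVal F s a i jl.1 else X jl := eval₂Hom_X' _ _ _

lemma spec_C (x : D) : spec F s a i r (C x) = C (algebraMap D F x) := eval₂Hom_C _ _ _

lemma spec_adjoin (h) (hh : h ∈ Algebra.adjoin D {x | ∃ j l, l ≠ i ∧ x = (X (j, l) : GPoly s t D)}) :
    spec F s a i r h = map (algebraMap D F) h := by
  induction hh using Algebra.adjoin_induction with
  | mem x hx =>
    obtain ⟨j, l, hl, rfl⟩ := hx
    rw [spec_X, if_neg (by simp [hl]), map_X]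
  | algebraMap x =>
    rw [MvPolynomial.algebraMap_eq, spec_C, map_C]
  | add x y _ _ hx hy => rw [map_add, map_add, hx, hy]
  | mul x y _ _ hx hy => rw [map_mul, map_mul, hx, hy]

lemma spec_gy_lt (hi : a i ≠ 0) (j : Fin s) (hj : (j : ℕ) < r) : spec F s a i r (gy s a j) = 0 := by
  have hai : algebraMap D F (a i) ≠ 0 := by simpa using hi
  have e : gy s a j = X (j, i) * C (a i) + ∑ m ∈ Finset.univ.erase i, X (j, m) * C (a m) :=
    (Finset.add_sum_erase Finset.univ (fun m => X (j, m) * C (a m)) (Finset.mem_univ i)).symm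
  rw [e, map_add, map_sum, map_mul, spec_X, if_pos ⟨hj, rfl⟩, spec_C, elimVal]
  simp only [neg_mul]
  rw [Finset.sum_mul, neg_add_eq_zero]
  refine Finset.sum_congr rfl fun m hm => ?_
  rw [map_mul, spec_X, if_neg (by simp [Finset.ne_of_mem_erase hm]), spec_C, mul_assoc, ← C_mul,
    div_mul_cancel₀ _ hai]

lemma spec_gy_ge (hi : a i ≠ 0) (j : Fin s) (hj : ¬ (j : ℕ) < r) : spec F s a i r (gy s a j) ≠ 0 := by
  intro h0
  have h1 : spec F s a i r (gy s a j) = ∑ l, X (j, l) * C (algebraMap D F (a l)) := by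
    rw [gy, map_sum]
    refine Finset.sum_congr rfl fun m _ => ?_
    rw [map_mul, spec_X, if_neg (by simp [hj]), spec_C]
  rw [h1] at h0
  have h2 := congrArg (eval (Pi.single (j, i) 1)) h0
  rw [map_sum, Finset.sum_eq_single i] at h2
  · simp at h2; exact hi h2
  · intro l _ hl; simp [hl]
  · simp

lemma spec_ker_le : RingHom.ker (spec F s a i r) ≤ RingHom.ker (spec F s a i (r + 1)) := by
  let χ : GPoly s t F →+* GPoly s t F :=
    eval₂Hom C fun jl => if (jl.1 : ℕ) = r ∧ jl.2 = i then elimVal F s a i jl.1 else X jl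
  have hχX : ∀ jl, χ (X jl) = if (jl.1 : ℕ) = r ∧ jl.2 = i then elimVal F s a i jl.1 else X jl :=
    fun jl => eval₂Hom_X' _ _ _
  have hχC : ∀ x : F, χ (C x) = C x := fun x => eval₂Hom_C _ _ _
  have hcomp : spec F s a i (r + 1) = χ.comp (spec F s a i r) := by
    refine MvPolynomial.ringHom_ext (fun x => ?_) fun jl => ?_
    · rw [RingHom.comp_apply, spec_C, spec_C, hχC]
    rw [RingHom.comp_apply, spec_X, spec_X]
    by_cases h1 : (jl.1 : ℕ) < r ∧ jl.2 = i
    · rw [if_pos h1, if_pos ⟨by omega, h1.2⟩, elimVal, map_neg, map_sum]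
      congr 1
      refine Finset.sum_congr rfl fun m hm => ?_
      rw [map_mul, hχX, hχC, if_neg (by simp [Finset.ne_of_mem_erase hm])]
    · rw [if_neg h1, hχX]
      by_cases h2 : (jl.1 : ℕ) = r ∧ jl.2 = i
      · rw [if_pos h2, if_pos ⟨by omega, h2.2⟩]
      · rw [if_neg h2, if_neg (fun h => by rcases h with ⟨h3, h4⟩; by_cases h5 : (jl.1 : ℕ) = r; exacts [h2 ⟨h5, h4⟩, h1 ⟨by omega, h4⟩])]
  intro x hx
  rw [RingHom.mem_ker] at hx ⊢
  rw [hcomp, RingHom.comp_apply, hx, map_zero]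

lemma spec_ker_height (hi : a i ≠ 0) : r ≤ s → (r : ℕ∞) ≤ (RingHom.ker (spec F s a i r)).height := by
  induction r with
  | zero => simp
  | succ r ih =>
    intro hr
    have h1 : (RingHom.ker (spec F s a i r)).IsPrime := RingHom.ker_isPrime _
    have h2 : (RingHom.ker (spec F s a i (r + 1))).IsPrime := RingHom.ker_isPrime _
    have hlt : RingHom.ker (spec F s a i r) < RingHom.ker (spec F s a i (r + 1)) := by
      refine lt_of_le_of_ne (spec_ker_le F a i r) fun h => ?_
      have h1 : gy s a ⟨r, hr⟩ ∈ RingHom.ker (spec F s a i (r + 1)) :=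
        spec_gy_lt F a i (r + 1) hi ⟨r, hr⟩ (by simp)
      rw [← h] at h1
      exact spec_gy_ge F a i r hi ⟨r, hr⟩ (by simp) h1
    push_cast
    exact (add_le_add_left (ih (by omega)) 1).trans (Ideal.height_add_one_le_of_lt_of_isPrime hlt)

end Spec

lemma exists_not_mem_of_height (a : Fin t → D) (i : Fin t) (hi : a i ≠ 0) (P : Ideal D) [P.IsPrime]
    (hP : P.height < s) : ∃ g : GPoly s t D, g ∉ P.map C ∧
      ∃ N, C (a i) ^ (N + 1) * g ∈ Ideal.span (Set.range (gy s a)) *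
        ((Ideal.span (Set.range a)).map C) ^ N := by
  obtain ⟨hPp, hPh⟩ := height_map_C_le P (Fin s × Fin t)
  have hnot : ¬ RingHom.ker (spec (FractionRing D) s a i s) ≤ P.map C := fun h =>
    absurd (((spec_ker_height (FractionRing D) a i s hi le_rfl).trans (Ideal.height_mono h)).trans hPh)
      (not_le.2 hP)
  obtain ⟨g, hg, hgP⟩ := SetLike.not_le_iff_exists.1 hnot
  refine ⟨g, hgP, ?_⟩
  obtain ⟨N, h, h1, h2, h3⟩ := elim_step a i g
  refine ⟨N, ?_⟩
  have hker : Ideal.span (Set.range (gy s a)) ≤ RingHom.ker (spec (FractionRing D) s a i s) := by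
    rw [Ideal.span_le]; rintro _ ⟨j, rfl⟩; exact spec_gy_lt _ a i s hi j j.2
  have h4 : spec (FractionRing D) s a i s (C (a i) ^ (N + 1) * g - h) = 0 := hker (Ideal.mul_le_left h1)
  rw [map_sub, map_mul, (RingHom.mem_ker).1 hg, mul_zero, zero_sub, neg_eq_zero,
    spec_adjoin (FractionRing D) a i s h h3] at h4
  have h5 : h = 0 := map_injective _ (IsFractionRing.injective D (FractionRing D)) (by rw [h4, map_zero])
  rwa [h5, sub_zero] at h1

end GenRed

/-! ### Domains with finite Frobenius -/
open MvPolynomial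

section Gen
variable {D : Type u} [CommRing D] [IsDomain D] [IsNoetherianRing D] {s t : ℕ}

/-- Away from a polynomial outside `P`, the generic linear combinations of `a` generate a reduction
of the ideal of `a`. -/
lemma gen_loc (a : Fin t → D) (P : Ideal D) [P.IsPrime] (hP : P.height < s) :
    ∃ G : GPoly s t D, G ∉ P.map (C : D →+* GPoly s t D) ∧
      ∀ (L : Type u) [CommRing L] [Algebra (GPoly s t D) L] [IsLocalization.Away G L],
        IsRed (Ideal.span (Set.range fun j => algebraMap (GPoly s t D) L (gy s a j)))
          (Ideal.span (Set.range fun i => algebraMap (GPoly s t D) L (C (a i)))) := by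
  have hPp := (height_map_C_le P (Fin s × Fin t)).1
  have h : ∀ i, ∃ g : GPoly s t D, g ∉ P.map (C : D →+* GPoly s t D) ∧
      ∃ N, C (a i) ^ (N + 1) * g ∈ Ideal.span (Set.range (gy s a)) *
        ((Ideal.span (Set.range a)).map C) ^ N := by
    intro i
    by_cases hi : a i = 0
    · exact ⟨1, fun h => hPp.ne_top ((Ideal.eq_top_iff_one _).2 h), 0, by simp [hi]⟩
    · exact exists_not_mem_of_height a i hi P hP
  choose g hg N hN using h
  refine ⟨∏ i, g i, fun h => ?_, ?_⟩
  · obtain ⟨i, _, hi⟩ := (hPp.prod_mem_iff).1 h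
    exact hg i hi
  intro L _ _ _
  set φ := algebraMap (GPoly s t D) L
  have e1 : (Ideal.span (Set.range (gy s a))).map φ = Ideal.span (Set.range fun j => φ (gy s a j)) := by
    rw [Ideal.map_span, ← Set.range_comp]; rfl
  have e2 : ((Ideal.span (Set.range a)).map C).map φ = Ideal.span (Set.range fun i => φ (C (a i))) := by
    rw [Ideal.map_span, ← Set.range_comp, Ideal.map_span, ← Set.range_comp]; rfl
  refine isRed_of_gens _ _ ?_ fun i => ⟨N i, ?_⟩
  · rw [Ideal.span_le]
    rintro _ ⟨j, rfl⟩
    simp only [gy, map_sum, map_mul]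
    exact Ideal.sum_mem _ fun l _ => Ideal.mul_mem_left _ _ (Ideal.subset_span (Set.mem_range_self l))
  · have hu : IsUnit (φ (g i)) :=
      isUnit_of_dvd_unit (map_dvd φ (Finset.dvd_prod_of_mem g (Finset.mem_univ i)))
        (IsLocalization.Away.algebraMap_isUnit (S := L) (∏ i, g i))
    have := Ideal.mem_map_of_mem φ (hN i)
    rw [Ideal.map_mul, Ideal.map_pow, e1, e2, map_mul, map_pow] at this
    exact (Ideal.mul_unit_mem_iff_mem _ hu).1 this

variable {p : ℕ} [Fact p.Prime] [CharP D p] {c : D}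

lemma FS.mv (h : FS p D c) (s t : ℕ) : FS p (GPoly s t D) (C c) := by
  have := (h.mvPolynomial (s * t)).of_equiv (renameEquiv D (finProdFinEquiv (m := s) (n := t)).symm).toRingEquiv
  simpa using this

variable (h : FS p D c) (hc : c ≠ 0) (hs : ∀ P : Ideal D, P.IsPrime → P.height < s)
include h hc hs

lemma FS.GK_of_dim : GK D D (c ^ 3) (s + 1) := by
  intro t a n z hz0 hz
  by_cases ha : ∃ i, a i ≠ 0
  swap
  · push Not at ha
    obtain ⟨w, hw0, -, hw⟩ := killOn_zero (⊤ : Submodule D D) a ha n z hz0 (fun _ _ => trivial) hz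
    refine ⟨c ^ 3 • w, by simp [hw0], fun A α hα => ?_⟩
    rw [map_smul, ← smul_sub]
    exact (congrArg (c ^ 3 • ·) (hw A α (by omega))).trans (smul_zero _)
  let I : Ideal D :=
    { carrier := {η | ∃ w : Finset (Fin t) → (Fin t → ℕ) → D, w ∅ = 0 ∧
        ∀ A α, dg α + (s + 1) < n → (η • c ^ 3 • z - dd a w) A α = 0}
      zero_mem' := ⟨0, rfl, by simp⟩
      add_mem' := by
        rintro η η' ⟨w, hw0, hw⟩ ⟨w', hw0', hw'⟩
        refine ⟨w + w', by simp [hw0, hw0'], fun A α hα => ?_⟩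
        rw [add_smul, map_add, add_sub_add_comm]
        exact (congrArg₂ (· + ·) (hw A α hα) (hw' A α hα)).trans (add_zero _)
      smul_mem' := by
        rintro r η ⟨w, hw0, hw⟩
        refine ⟨r • w, by simp [hw0], fun A α hα => ?_⟩
        rw [smul_assoc, map_smul, ← smul_sub]
        exact (congrArg (r • ·) (hw A α hα)).trans (smul_zero _) }
  suffices hI : I = ⊤ by
    obtain ⟨w, hw0, hw⟩ : (1 : D) ∈ I := hI ▸ trivial
    exact ⟨w, hw0, by simpa using hw⟩
  by_contra hI
  obtain ⟨P, hPm, hIP⟩ := Ideal.exists_le_maximal I hI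
  have hPp := hPm.isPrime
  obtain ⟨G, hG, hred⟩ := gen_loc a P (hs P hPp)
  have hG0 : G ≠ 0 := fun h => hG (h ▸ zero_mem _)
  have hle : Submonoid.powers G ≤ nonZeroDivisors (GPoly s t D) :=
    powers_le_nonZeroDivisors_of_noZeroDivisors hG0
  let L := Localization.Away G
  have hinj : Function.Injective (algebraMap (GPoly s t D) L) := IsLocalization.injective L hle
  haveI : IsDomain L := IsLocalization.isDomain_localization hle
  haveI : IsNoetherianRing L := IsLocalization.isNoetherianRing (Submonoid.powers G) L inferInstance
  haveI : CharP L p := charP_of_injective_algebraMap hinj p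
  have hFS : FS p L (algebraMap (GPoly s t D) L (C c)) := (h.mv s t).away G hG0 L
  have hd := dd_mapC ((algebraMap (GPoly s t D) L).comp C).toAddMonoidHom a (fun i => algebraMap (GPoly s t D) L (C (a i)))
    (fun j x => by simp) z
  obtain ⟨w, hw0, hw⟩ := hFS.gk (by simpa using hc) (fun j => algebraMap (GPoly s t D) L (gy s a j))
    (fun i => algebraMap (GPoly s t D) L (C (a i))) (by obtain ⟨i, hi⟩ := ha; exact ⟨i, by simpa using hi⟩)
    (hred L) (fun j l => algebraMap (GPoly s t D) L (X (j, l))) (fun j => by simp [gy]) n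
    (mapC ((algebraMap (GPoly s t D) L).comp C).toAddMonoidHom z) (by funext α; simp [mapC, hz0])
    (fun A α hα => by rw [hd, mapC, hz A α hα, map_zero])
  -- clear denominators in the relevant degrees
  have hfin : {x : Finset (Fin t) × (Fin t → ℕ) | dg x.2 < n}.Finite := by
    refine Set.Finite.subset (Set.finite_univ.prod (Set.finite_Iic (fun _ : Fin t => n))) ?_
    rintro ⟨A, α⟩ hx
    refine ⟨trivial, fun i => ?_⟩
    have h1 : α i ≤ dg α := Finset.single_le_sum (fun _ _ => Nat.zero_le _) (Finset.mem_univ i)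
    have h2 : dg α < n := hx
    show α i ≤ n
    omega
  obtain ⟨⟨b, hb⟩, hbw⟩ := IsLocalization.exist_integer_multiples (Submonoid.powers G) hfin.toFinset
    (fun x => w x.1 x.2)
  have hbP : b ∉ P.map (C : D →+* GPoly s t D) := by
    obtain ⟨k, rfl⟩ := hb
    exact fun h => hG ((height_map_C_le P (Fin s × Fin t)).1.mem_of_pow_mem k h)
  have hlift : ∀ A α, ∃ v : GPoly s t D, (dg α < n → algebraMap (GPoly s t D) L v = algebraMap (GPoly s t D) L b * w A α) ∧ (A = ∅ → v = 0) := by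
    intro A α
    by_cases hA : A = ∅
    · exact ⟨0, fun _ => by rw [hA, hw0]; simp, fun _ => rfl⟩
    by_cases hα : dg α < n
    · obtain ⟨v, hv⟩ := hbw (A, α) (by simpa using hα)
      exact ⟨v, fun _ => by rw [hv, Algebra.smul_def], fun h => absurd h hA⟩
    · exact ⟨0, fun h => absurd h hα, fun _ => rfl⟩
  choose v hv hv0 using hlift
  have key : ∀ A α, dg α + (s + 1) < n →
      b * (C (c ^ 3 * z A α)) = dd (fun i => (C (a i) : GPoly s t D)) v A α := by
    intro A α hα
    apply hinj
    have h1 := hw A α hα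
    have h2 := dd_mapC (algebraMap (GPoly s t D) L).toAddMonoidHom (fun i => (C (a i) : GPoly s t D)) (fun i => algebraMap (GPoly s t D) L (C (a i)))
      (fun j x => map_mul (algebraMap (GPoly s t D) L) _ _) v
    have h3 : algebraMap (GPoly s t D) L (dd (fun i => C (a i)) v A α) =
        dd (fun i => algebraMap (GPoly s t D) L (C (a i))) (mapC (algebraMap (GPoly s t D) L).toAddMonoidHom v) A α :=
      (congrFun (congrFun h2 A) α).symm
    have h4 : dd (fun i => algebraMap (GPoly s t D) L (C (a i))) (mapC (algebraMap (GPoly s t D) L).toAddMonoidHom v) A α =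
        algebraMap (GPoly s t D) L b * dd (fun i => algebraMap (GPoly s t D) L (C (a i))) w A α := by
      rw [dd_apply, dd_apply, Finset.mul_sum]
      refine Finset.sum_congr rfl fun j _ => ?_
      have hlo : dg (lo j α) < n := by
        by_cases h0 : α j = 0
        · rw [show lo j α = α by simp [lo, h0]]; omega
        · have := dg_lo j α h0; omega
      have e1 := hv (insert j A) (lo j α) hlo
      have e2 := hv (insert j A) α (by omega)
      simp only [mapC, RingHom.toAddMonoidHom_eq_coe, AddMonoidHom.coe_coe, e1, e2, smul_eq_mul]
      split_ifs
      · simp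
      · rw [zero_sub, zero_sub, mul_smul_comm]; congr 1; ring
      · rw [mul_smul_comm]; congr 1; ring
    rw [h3, h4, map_mul]
    congr 1
    have h5 := sub_eq_zero.1 h1
    rw [← h5]
    simp [mapC]
  rw [mem_map_C_iff] at hbP
  push Not at hbP
  obtain ⟨m, hm⟩ := hbP
  refine hm (hIP ⟨mapC (coeff m) v, ?_, fun A α hα => ?_⟩)
  · funext α; simp [mapC, hv0 ∅ α rfl]
  · have h1 := congrArg (coeff m) (key A α hα)
    rw [mul_comm, coeff_C_mul] at h1
    have h2 := dd_mapC (coeffAddMonoidHom (R := D) (σ := Fin s × Fin t) m) (fun i => (C (a i) : (GPoly s t D))) a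
      (fun j x => by simp [coeff_C_mul]) v
    have h3 := congrFun (congrFun h2 A) α
    refine sub_eq_zero.2 (Eq.trans ?_ (h1.trans h3.symm))
    simp; ring

lemma FS.GB_of_dim : GB D D (c ^ 3) s := by
  intro J K hJK n x hx
  simp only [smul_eq_mul, Ideal.mul_top] at hx ⊢
  by_cases hK0 : K = ⊥
  · subst hK0
    rcases Nat.eq_zero_or_pos n with rfl | hn
    · simp
    · rw [Ideal.bot_pow hn.ne', Ideal.mem_bot] at hx
      rw [hx, mul_zero]; exact zero_mem _
  obtain ⟨t, a, rfl⟩ := exists_fin_span J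
  set J := Ideal.span (Set.range a) with hJ
  let I : Ideal D := (J ^ (n - s)).colon {c ^ 3 * x}
  have hI : ∀ η, η ∈ I ↔ η * (c ^ 3 * x) ∈ J ^ (n - s) := fun η => Submodule.mem_colon_singleton
  suffices h1 : I = ⊤ by
    have := (hI 1).1 (h1 ▸ trivial)
    rwa [one_mul] at this
  by_contra hIt
  obtain ⟨P, hPm, hIP⟩ := Ideal.exists_le_maximal I hIt
  have hPp := hPm.isPrime
  obtain ⟨G, hG, hred⟩ := gen_loc a P (hs P hPp)
  have hG0 : G ≠ 0 := fun h => hG (h ▸ zero_mem _)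
  have hle : Submonoid.powers G ≤ nonZeroDivisors (GPoly s t D) :=
    powers_le_nonZeroDivisors_of_noZeroDivisors hG0
  let L := Localization.Away G
  have hinj : Function.Injective (algebraMap (GPoly s t D) L) := IsLocalization.injective L hle
  haveI : IsDomain L := IsLocalization.isDomain_localization hle
  haveI : IsNoetherianRing L := IsLocalization.isNoetherianRing (Submonoid.powers G) L inferInstance
  haveI : CharP L p := charP_of_injective_algebraMap hinj p
  have hFS : FS p L (algebraMap (GPoly s t D) L (C c)) := (h.mv s t).away G hG0 L
  let φ : D →+* L := (algebraMap (GPoly s t D) L).comp C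
  have hφ : Function.Injective φ := hinj.comp (C_injective _ _)
  have eJ : J.map φ = Ideal.span (Set.range fun i => algebraMap (GPoly s t D) L (C (a i))) := by
    rw [hJ, Ideal.map_span, ← Set.range_comp]; rfl
  have hredK : IsRed (Ideal.span (Set.range fun j => algebraMap (GPoly s t D) L (gy s a j))) (K.map φ) := by
    refine (hred L).trans ?_
    rw [← eJ]
    obtain ⟨h1, m, h2⟩ := hJK
    refine ⟨Ideal.map_mono h1, m, ?_⟩
    rw [← Ideal.map_pow, ← Ideal.map_pow, ← Ideal.map_mul]
    exact Ideal.map_mono h2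
  have hK0' : K.map φ ≠ ⊥ := fun h => hK0 ((Ideal.map_eq_bot_iff_of_injective hφ).1 h)
  have h1 := hFS.bs (by simpa using hc) (fun j => algebraMap (GPoly s t D) L (gy s a j)) (K.map φ) hK0' hredK n (φ x)
    (by rw [← Ideal.map_pow]; exact Ideal.mem_map_of_mem _ hx)
  have h2 : algebraMap (GPoly s t D) L (C (c ^ 3 * x)) ∈ ((J ^ (n - s)).map (C : D →+* GPoly s t D)).map (algebraMap (GPoly s t D) L) := by
    rw [Ideal.map_map, Ideal.map_pow]
    have := Ideal.pow_right_mono (show _ ≤ J.map φ from eJ ▸ (hred L).1) (n - s) h1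
    simpa [φ] using this
  obtain ⟨⟨y, ⟨b, hb⟩⟩, hyb⟩ := (IsLocalization.mem_map_algebraMap_iff (Submonoid.powers G) L).1 h2
  have hbP : b ∉ P.map (C : D →+* GPoly s t D) := by
    obtain ⟨k, rfl⟩ := hb
    exact fun h => hG ((height_map_C_le P (Fin s × Fin t)).1.mem_of_pow_mem k h)
  rw [← map_mul] at hyb
  have h3 := hinj hyb
  rw [mem_map_C_iff] at hbP
  push Not at hbP
  obtain ⟨m, hm⟩ := hbP
  refine hm (hIP ((hI _).2 ?_))
  have h4 := (mem_map_C_iff).1 y.2 m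
  rw [← h3, coeff_C_mul] at h4
  rwa [mul_comm]

end Gen

/-- Domains of characteristic `p` with finite Frobenius and finite dimension. -/
theorem GEN.of_frob {D : Type*} [CommRing D] [IsDomain D] [IsNoetherianRing D] {p : ℕ} [Fact p.Prime]
    [CharP D p] (f : D →+* D) (hf : f.Finite) (hfp : ∀ x, f x = x ^ p)
    (s : ℕ) (hs : ∀ P : Ideal D, P.IsPrime → P.height < s) : GEN D := by
  obtain ⟨c, hc, h⟩ := exists_FS f hf hfp
  exact ⟨c ^ 3, pow_ne_zero 3 hc, ⟨_, h.GK_of_dim hc hs⟩, ⟨_, h.GB_of_dim hc hs⟩⟩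

end UBS

namespace UBS

/-! ### Rings with finite Frobenius -/
variable {R : Type u} [CommRing R] [IsNoetherianRing R]

theorem intDimBound_of_gen (h : ∀ P : Ideal R, P.IsPrime → GEN (R ⧸ P)) : ∃ k, IntDimBound R k := by
  obtain ⟨-, k, hk⟩ := UB.of_gen h R
  exact ⟨k, intDimBound_of_BSk hk⟩

lemma height_lt_of_dim {D : Type*} [CommRing D] {d : ℕ} (h : ringKrullDim D ≤ d) (P : Ideal D)
    (hP : P.IsPrime) : P.height < (d + 1 : ℕ) := by
  have h1 := (Ideal.height_le_ringKrullDim_of_isPrime (I := P)).trans h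
  have h2 : P.height ≤ d := by exact_mod_cast h1
  refine lt_of_le_of_lt h2 ?_
  exact_mod_cast Nat.lt_succ_self d

/-- Quotient domains of characteristic `p` of a ring whose Frobenius modulo `p` is finite. -/
lemma GEN.of_frob_quot {p : ℕ} (hp : p.Prime) {d : ℕ} (hd : ringKrullDim R ≤ d) [CharP R p]
    (f : R →+* R) (hf : f.Finite) (hfp : ∀ x, f x = x ^ p) (P : Ideal R) [P.IsPrime] : GEN (R ⧸ P) := by
  haveI : Fact p.Prime := ⟨hp⟩
  haveI : CharP (R ⧸ P) p := by
    refine (CharP.charP_iff_prime_eq_zero hp).2 ?_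
    rw [← map_natCast (Ideal.Quotient.mk P), CharP.cast_eq_zero, map_zero]
  refine GEN.of_frob (p := p) (frobenius (R ⧸ P) p) ?_ (fun x => rfl) (d + 1)
    fun Q hQ => height_lt_of_dim ((ringKrullDim_quotient_le P).trans hd) Q hQ
  have h1 : ((Ideal.Quotient.mk P).comp f).Finite :=
    RingHom.Finite.comp (RingHom.Finite.of_surjective _ Ideal.Quotient.mk_surjective) hf
  have h2 : (Ideal.Quotient.mk P).comp f = (frobenius (R ⧸ P) p).comp (Ideal.Quotient.mk P) := by
    ext x; simp [hfp, frobenius_def]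
  rw [h2] at h1
  exact RingHom.Finite.of_comp_finite h1

theorem intDimBound_of_pth {d : ℕ} (hd : ringKrullDim R ≤ d) (h : ModuleFiniteOverPthPowers R) :
    ∃ k, IntDimBound R k := by
  obtain ⟨p, hp, hc, f, hf, hfin⟩ := h
  exact intDimBound_of_gen fun P hP => GEN.of_frob_quot hp hd f hfin hf P

end UBS

namespace UBS

/-! ### Annihilators of Ext -/
open CategoryTheory CategoryTheory.Abelian

section Ext
variable {A : Type u} [CommRing A]

/-- Every finite `A`-module has projective dimension at most `d`. -/
def GD (A : Type u) [CommRing A] (d : ℕ) : Prop :=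
  ∀ (M : Type u) [AddCommGroup M] [Module A M] [Module.Finite A M],
    HasProjectiveDimensionLT (ModuleCat.of A M) (d + 1)

/-- `a` annihilates `Ext^j(M, -)`. -/
def AK (a : A) (j : ℕ) (M : ModuleCat.{u} A) : Prop :=
  ∀ (Y : ModuleCat.{u} A) (e : Ext M Y j), a • e = 0

lemma AK.of_retract (a : A) (j : ℕ) {M F : ModuleCat.{u} A} [Projective F] (g : M ⟶ F) (f : F ⟶ M)
    (h : g ≫ f = a • 𝟙 M) : AK a (j + 1) M := by
  intro Y e
  have h1 : (Ext.mk₀ (a • 𝟙 M)).comp e (zero_add _) = a • e := by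
    rw [Ext.mk₀_smul, Ext.smul_comp, Ext.mk₀_id_comp]
  rw [← h1, ← h, ← Ext.mk₀_comp_mk₀, Ext.comp_assoc_of_second_deg_zero,
    Ext.eq_zero_of_projective ((Ext.mk₀ f).comp e (zero_add _)), Ext.comp_zero]

lemma AK.shift (a b : A) (j : ℕ) (S : ShortComplex (ModuleCat.{u} A)) (hS : S.ShortExact)
    (h2 : AK a j S.X₂) (h3 : AK b (j + 1) S.X₃) : AK (a * b) j S.X₁ := by
  intro Y e
  have h := h3 Y (hS.extClass.comp e (add_comm 1 j))
  rw [← Ext.comp_smul] at h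
  obtain ⟨e2, he2⟩ := Ext.contravariant_sequence_exact₁ hS Y (b • e) (add_comm 1 j) h
  rw [mul_smul, ← he2, ← Ext.comp_smul, h2, Ext.comp_zero]

lemma AK.lift (a : A) (S : ShortComplex (ModuleCat.{u} A)) (hS : S.ShortExact)
    (h : AK a 1 S.X₃) : ∃ g : S.X₃ ⟶ S.X₂, g ≫ S.g = a • 𝟙 S.X₃ := by
  have h1 : (Ext.mk₀ (a • 𝟙 S.X₃)).comp hS.extClass (zero_add 1) = 0 := by
    rw [Ext.mk₀_smul, Ext.smul_comp, Ext.mk₀_id_comp]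
    exact h _ _
  obtain ⟨f', hf'⟩ := Ext.covariant_sequence_exact₃ _ hS (Ext.mk₀ (a • 𝟙 S.X₃)) (zero_add 1) h1
  obtain ⟨f, rfl⟩ := (Ext.mk₀_bijective _ _).2 f'
  rw [Ext.mk₀_comp_mk₀, (Ext.mk₀_bijective _ _).1.eq_iff] at hf'
  exact ⟨f, hf'⟩

end Ext
end UBS

namespace UBS

/-! ### Finite extensions in characteristic zero -/
open CategoryTheory CategoryTheory.Abelian TensorProduct

section sep
variable {A D : Type*} [CommRing A] [CommRing D] [Algebra A D]

lemma exists_minpoly_deriv [IsDomain A] [IsDomain D] [CharZero A] [FaithfulSMul A D] (x : D) (hx : IsAlgebraic A x) :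
    ∃ m : Polynomial A, Polynomial.aeval x m = 0 ∧ Polynomial.aeval x (Polynomial.derivative m) ≠ 0 := by
  obtain ⟨m, ⟨hm0, hm⟩, hmin⟩ := WellFounded.has_min (measure (fun m : Polynomial A => m.natDegree)).wf
    {m : Polynomial A | m ≠ 0 ∧ Polynomial.aeval x m = 0} hx
  refine ⟨m, hm, fun h => ?_⟩
  have hd : m.natDegree ≠ 0 := by
    intro h0
    rw [Polynomial.eq_C_of_natDegree_eq_zero h0, Polynomial.aeval_C] at hm
    have := (FaithfulSMul.algebraMap_injective A D) (hm.trans (map_zero _).symm)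
    rw [Polynomial.eq_C_of_natDegree_eq_zero h0, this, map_zero] at hm0
    exact hm0 rfl
  have hd' : Polynomial.derivative m ≠ 0 := fun h1 => hd (Polynomial.derivative_eq_zero.1 h1)
  exact hmin _ ⟨hd', h⟩ (Polynomial.natDegree_derivative_lt hd)

lemma exists_sep_elem_one (x : D) (m : Polynomial A) (hm : Polynomial.aeval x m = 0) :
    ∃ e : D ⊗[A] D, (x ⊗ₜ 1 - 1 ⊗ₜ x) * e = 0 ∧
      Algebra.TensorProduct.lmul' A e = Polynomial.aeval x (Polynomial.derivative m) := by
  set M : Polynomial (D ⊗[A] D) := m.map (algebraMap A _) with hM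
  obtain ⟨k, hk⟩ := M.binomExpansion (1 ⊗ₜ x) (x ⊗ₜ 1 - 1 ⊗ₜ x)
  have e1 : M.eval ((1 : D) ⊗ₜ[A] x) = 0 := by
    rw [hM, Polynomial.eval_map_algebraMap]
    have := Polynomial.aeval_algHom_apply (Algebra.TensorProduct.includeRight : D →ₐ[A] D ⊗[A] D) x m
    rw [hm, map_zero] at this
    exact this
  have e2 : M.eval (x ⊗ₜ[A] (1 : D)) = 0 := by
    rw [hM, Polynomial.eval_map_algebraMap]
    have := Polynomial.aeval_algHom_apply (Algebra.TensorProduct.includeLeft : D →ₐ[A] D ⊗[A] D) x m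
    rw [hm, map_zero] at this
    exact this
  rw [add_sub_cancel, e1, e2, zero_add] at hk
  refine ⟨M.derivative.eval (1 ⊗ₜ x) + k * (x ⊗ₜ 1 - 1 ⊗ₜ x), by rw [hk]; ring, ?_⟩
  have e3 : M.derivative.eval ((1 : D) ⊗ₜ[A] x) = Algebra.TensorProduct.includeRight (Polynomial.aeval x (Polynomial.derivative m)) := by
    rw [hM, Polynomial.derivative_map, Polynomial.eval_map_algebraMap]
    exact Polynomial.aeval_algHom_apply (Algebra.TensorProduct.includeRight : D →ₐ[A] D ⊗[A] D) x _
  rw [e3]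
  simp

/-- An element of `D ⊗ D` that is annihilated by the kernel of multiplication, with nonzero
product: a separability element up to denominators. -/
lemma exists_sep_elem [IsDomain A] [IsDomain D] [CharZero A] [FaithfulSMul A D] [Module.Finite A D] :
    ∃ e : D ⊗[A] D, (∀ x : D, (x ⊗ₜ 1) * e = (1 ⊗ₜ x) * e) ∧
      Algebra.TensorProduct.lmul' A e ≠ 0 := by
  obtain ⟨s, hs⟩ := (inferInstance : Algebra.FiniteType A D).1
  have h1 : ∀ x : D, ∃ e : D ⊗[A] D, (x ⊗ₜ 1 - 1 ⊗ₜ x) * e = 0 ∧ Algebra.TensorProduct.lmul' A e ≠ 0 := by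
    intro x
    obtain ⟨m, hm, hm'⟩ := exists_minpoly_deriv (A := A) x (Algebra.IsIntegral.isIntegral x).isAlgebraic
    obtain ⟨e, he, he'⟩ := exists_sep_elem_one x m hm
    exact ⟨e, he, he' ▸ hm'⟩
  choose E hE hE' using h1
  refine ⟨∏ x ∈ s, E x, ?_, by rw [map_prod]; exact Finset.prod_ne_zero_iff.2 fun x _ => hE' x⟩
  intro x
  have hx : x ∈ Algebra.adjoin A (s : Set D) := hs ▸ Algebra.mem_top
  induction hx using Algebra.adjoin_induction with
  | mem x hx =>
    rw [← sub_eq_zero, ← sub_mul]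
    obtain ⟨c, hc⟩ := Finset.dvd_prod_of_mem E hx
    rw [hc, ← mul_assoc, hE, zero_mul]
  | algebraMap r =>
    rw [Algebra.algebraMap_eq_smul_one, TensorProduct.smul_tmul]
  | add x y _ _ hx hy => rw [TensorProduct.add_tmul, TensorProduct.tmul_add, add_mul, add_mul, hx, hy]
  | mul x y _ _ hx hy =>
    have e1 : (x * y) ⊗ₜ[A] (1 : D) = (x ⊗ₜ 1) * (y ⊗ₜ 1) := by simp
    have e2 : (1 : D) ⊗ₜ[A] (x * y) = (1 ⊗ₜ x) * (1 ⊗ₜ y) := by simp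
    rw [e1, e2, mul_assoc, hy, mul_left_comm, hx, mul_left_comm, mul_assoc]

lemma sep_retract {N G : Type*} [AddCommGroup N] [Module A N] [Module D N] [IsScalarTower A D N]
    [AddCommGroup G] [Module A G] (e : D ⊗[A] D) (he : ∀ x : D, (x ⊗ₜ 1) * e = (1 ⊗ₜ x) * e)
    (b : A) (f : G →ₗ[A] N) (g : N →ₗ[A] G) (hfg : ∀ x, f (g x) = b • x) :
    ∃ (F : D ⊗[A] G →ₗ[D] N) (H : N →ₗ[D] D ⊗[A] G),
      ∀ x, F (H x) = (algebraMap A D b * Algebra.TensorProduct.lmul' A e) • x := by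
  let φ : N → (D ⊗[A] D →ₗ[A] D ⊗[A] G) := fun w =>
    LinearMap.lTensor D (g ∘ₗ (LinearMap.toSpanSingleton D N w).restrictScalars A)
  have φt : ∀ w d1 d2, φ w (d1 ⊗ₜ d2) = d1 ⊗ₜ g (d2 • w) := fun w d1 d2 => rfl
  have φr : ∀ (x : D) w t, φ (x • w) t = φ w ((1 ⊗ₜ x) * t) := by
    intro x w t
    induction t with
    | zero => rw [mul_zero, map_zero, map_zero]
    | tmul d1 d2 => rw [Algebra.TensorProduct.tmul_mul_tmul, φt, φt, one_mul, smul_smul, mul_comm d2]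
    | add t s ht hs => rw [map_add, mul_add, map_add, ht, hs]
  have φl : ∀ (x : D) w t, x • φ w t = φ w ((x ⊗ₜ 1) * t) := by
    intro x w t
    induction t with
    | zero => rw [mul_zero, map_zero, smul_zero]
    | tmul d1 d2 => rw [Algebra.TensorProduct.tmul_mul_tmul, φt, φt, one_mul, TensorProduct.smul_tmul', smul_eq_mul]
    | add t s ht hs => rw [map_add, mul_add, map_add, smul_add, ht, hs]
  have φa : ∀ v w t, φ (v + w) t = φ v t + φ w t := by
    intro v w t
    induction t with
    | zero => simp only [map_zero, add_zero]
    | tmul d1 d2 => rw [φt, φt, φt, smul_add, map_add, TensorProduct.tmul_add]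
    | add t s ht hs => rw [map_add, map_add, map_add, ht, hs]; abel
  refine ⟨f.liftBaseChange D, ⟨⟨fun w => φ w e, fun v w => φa v w e⟩, fun x w => ?_⟩, fun w => ?_⟩
  · change φ (x • w) e = x • φ w e
    rw [φr, φl, he]
  · change f.liftBaseChange D (φ w e) = _
    clear he
    induction e with
    | zero => simp
    | tmul d1 d2 =>
      rw [φt, LinearMap.liftBaseChange_tmul, hfg, Algebra.TensorProduct.lmul'_apply_tmul, mul_smul, mul_smul,
        algebraMap_smul, smul_comm]
    | add t s ht hs => rw [map_add, map_add, ht, hs, map_add, mul_add, add_smul]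

end sep

section approx
variable {A : Type u} [CommRing A] [IsDomain A]

lemma approx_free (M : Type u) [AddCommGroup M] [Module A M] [Module.Finite A M] [Module.IsTorsionFree A M] :
    ∃ (a : A) (n : ℕ) (f : (Fin n → A) →ₗ[A] M) (g : M →ₗ[A] (Fin n → A)),
      a ≠ 0 ∧ ∀ x, f (g x) = a • x := by
  obtain ⟨s, hs, hsm⟩ := exists_maximal_linearIndepOn A (id : M → M)
  have hli : LinearIndependent A (fun x : s => (x : M)) := hs
  have h1 : ∀ x : M, ∃ a : A, a ≠ 0 ∧ a • x ∈ Submodule.span A s := by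
    intro x
    by_cases hx : x ∈ s
    · exact ⟨1, one_ne_zero, by rw [one_smul]; exact Submodule.subset_span hx⟩
    · obtain ⟨a, ha, h⟩ := hsm x hx
      exact ⟨a, ha, by simpa using h⟩
  obtain ⟨t, ht⟩ := (inferInstance : Module.Finite A M).1
  choose α hα hα' using h1
  have h2 : ∀ x, (∏ y ∈ t, α y) • x ∈ Submodule.span A s := by
    intro x
    have hx : x ∈ Submodule.span A (t : Set M) := ht ▸ Submodule.mem_top
    induction hx using Submodule.span_induction with
    | mem x hx =>
      obtain ⟨c, hc⟩ := Finset.dvd_prod_of_mem α hx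
      rw [hc, mul_comm, mul_smul]
      exact Submodule.smul_mem _ _ (hα' x)
    | zero => simp
    | add x y _ _ hx hy => rw [smul_add]; exact add_mem hx hy
    | smul r x _ hx => rw [smul_comm]; exact Submodule.smul_mem _ _ hx
  have hfin : Finite s := hli.finite
  have := Fintype.ofFinite s
  let e : s ≃ Fin (Fintype.card s) := Fintype.equivFin s
  let B := (Module.Basis.span hli).reindex e
  have hr : Submodule.span A (Set.range (fun x : s => (x:M))) = Submodule.span A s := by simp
  refine ⟨∏ y ∈ t, α y, Fintype.card s, (Submodule.subtype _) ∘ₗ B.equivFun.symm.toLinearMap,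
    B.equivFun.toLinearMap ∘ₗ LinearMap.codRestrict _ (LinearMap.lsmul A M (∏ y ∈ t, α y)) (fun x => hr ▸ h2 x),
    Finset.prod_ne_zero_iff.2 fun x _ => hα x, fun x => by simp⟩
end approx

section finite
variable {A D : Type u} [CommRing A] [CommRing D] [IsDomain A] [IsDomain D] [Algebra A D]
  [FaithfulSMul A D] [Module.Finite A D] [CharZero A] [IsNoetherianRing A]

lemma shortExact_of {A : Type u} [CommRing A] {X Y Z : Type u} [AddCommGroup X] [Module A X] [AddCommGroup Y] [Module A Y]
    [AddCommGroup Z] [Module A Z] (i : X →ₗ[A] Y) (π : Y →ₗ[A] Z) (hi : Function.Injective i)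
    (hπ : Function.Surjective π) (h : Function.Exact i π) :
    (ShortComplex.mk (ModuleCat.ofHom i) (ModuleCat.ofHom π) (by
      ext x; exact h.apply_apply_eq_zero x)).ShortExact where
  exact := (ShortComplex.ShortExact.moduleCat_exact_iff_function_exact _).2 h
  mono_f := (ModuleCat.mono_iff_injective _).2 hi
  epi_g := (ModuleCat.epi_iff_surjective _).2 hπ

lemma tw_of_AK (a : A) (n : ℕ) (f : (Fin n → A) →ₗ[A] D) (g : D →ₗ[A] (Fin n → A))
    (hfg : ∀ x, f (g x) = a • x) (e : D ⊗[A] D) (he : ∀ x : D, (x ⊗ₜ 1) * e = (1 ⊗ₜ x) * e) (j : ℕ) :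
    ∀ (b : A) (N : Type u) [AddCommGroup N] [Module A N] [Module D N] [IsScalarTower A D N]
      [Module.Finite D N], AK b (j + 1) (ModuleCat.of A N) →
      Nonempty (Tw D N (algebraMap A D (a ^ j * b) * Algebra.TensorProduct.lmul' A e) j) := by
  induction j with
  | zero =>
    intro b N _ _ _ _ _ hb
    have : Module.Finite A N := Module.Finite.trans D N
    obtain ⟨m, π, hπ⟩ := Module.Finite.exists_fin' A N
    obtain ⟨g', hg'⟩ := AK.lift b _ (shortExact_of (LinearMap.ker π).subtype π Subtype.val_injective hπ
      (LinearMap.exact_subtype_ker_map π)) hb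
    obtain ⟨F, H, hFH⟩ := sep_retract (D := D) e he b π g'.hom (fun x => by
      have := congrArg (fun t => t.hom x) hg'
      exact this)
    exact ⟨Tw.base _ F H (fun x => by rw [hFH, pow_zero, one_mul])⟩
  | succ j ih =>
    intro b N _ _ _ _ _ hb
    obtain ⟨m, π, hπ⟩ := Module.Finite.exists_fin' D N
    have hD : AK a (j + 1) (ModuleCat.of A (Fin m → D)) := by
      refine AK.of_retract a j (F := ModuleCat.of A (Fin m → Fin n → A))
        (ModuleCat.ofHom (LinearMap.pi fun i => g ∘ₗ LinearMap.proj i))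
        (ModuleCat.ofHom (LinearMap.pi fun i => f ∘ₗ LinearMap.proj i)) ?_
      refine ModuleCat.hom_ext (LinearMap.ext fun x => funext fun i => ?_)
      exact hfg (x i)
    have h1 := AK.shift a b (j + 1) _ (shortExact_of
      ((LinearMap.ker π).subtype.restrictScalars A) (π.restrictScalars A)
      Subtype.val_injective hπ (LinearMap.exact_subtype_ker_map π)) hD hb
    have : IsNoetherianRing D := IsNoetherianRing.of_finite A D
    obtain ⟨W⟩ := ih (a * b) (LinearMap.ker π) h1
    rw [← mul_assoc, ← pow_succ] at W
    refine ⟨W.step (LinearMap.ker π).subtype π Subtype.val_injective hπ (LinearMap.exact_subtype_ker_map π) ?_⟩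
    have h2 := (LinearMap.ker π).finrank_quotient_add_finrank
    rw [(π.quotKerEquivOfSurjective hπ).finrank_eq] at h2
    rw [← h2]; push_cast; ring

/-- A domain that is a finite extension of a noetherian domain of characteristic zero and finite global dimension has
a nonzero element witnessing generic uniform bounds. -/
theorem GEN.of_finite_over {d : ℕ} (hd : GD A d) : GEN D := by
  have : IsNoetherianRing D := IsNoetherianRing.of_finite A D
  have : Module.IsTorsionFree A D := inferInstance
  obtain ⟨a, n, f, g, ha, hfg⟩ := approx_free (A := A) D
  obtain ⟨e, he, he'⟩ := exists_sep_elem (A := A) (D := D)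
  refine GEN.of_tw (algebraMap A D (a ^ d * 1) * Algebra.TensorProduct.lmul' A e) (mul_ne_zero ?_ he') d ?_
  · rw [Ne, FaithfulSMul.algebraMap_eq_zero_iff]
    exact mul_ne_zero (pow_ne_zero _ ha) one_ne_zero
  · intro N hN
    refine tw_of_AK a n f g hfg e he d 1 N ?_
    intro Y x
    have : Module.Finite A N := Module.Finite.trans D N
    have := hd N
    have := HasProjectiveDimensionLT.subsingleton (ModuleCat.of A N) (d + 1) (d + 1) le_rfl Y
    exact Subsingleton.elim _ _

end finite
end UBS

namespace UBS

/-! ### Projective dimension -/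
open CategoryTheory CategoryTheory.Abelian TensorProduct

section pdim
variable {A : Type u} [CommRing A]

/-- The projective dimension of `M` is less than `n`. -/
abbrev PdL (A : Type u) [CommRing A] (M : Type u) [AddCommGroup M] [Module A M] (n : ℕ) : Prop :=
  HasProjectiveDimensionLT (ModuleCat.of A M) n

variable {X Y Z : Type u} [AddCommGroup X] [Module A X] [AddCommGroup Y] [Module A Y]
    [AddCommGroup Z] [Module A Z]

lemma PdL.mono {n m : ℕ} (h : PdL A X n) (hnm : n ≤ m) : PdL A X m :=
  hasProjectiveDimensionLT_of_ge _ n m hnm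

lemma PdL.of_retract {n : ℕ} (h : PdL A Y n) (i : X →ₗ[A] Y) (r : Y →ₗ[A] X) (hr : ∀ x, r (i x) = x) : PdL A X n := by
  have R : Retract (ModuleCat.of A X) (ModuleCat.of A Y) :=
    { i := ModuleCat.ofHom i, r := ModuleCat.ofHom r, retract := ModuleCat.hom_ext (LinearMap.ext hr) }
  exact R.hasProjectiveDimensionLT n

lemma PdL.congr {n : ℕ} (h : PdL A Y n) (e : X ≃ₗ[A] Y) : PdL A X n :=
  h.of_retract e.toLinearMap e.symm.toLinearMap (fun x => by simp)

lemma PdL.of_subsingleton [Subsingleton X] (n : ℕ) : PdL A X n :=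
  PdL.mono (n := 0) (((ModuleCat.isZero_iff_subsingleton).2 ‹_›).hasProjectiveDimensionLT_zero) (Nat.zero_le _)

lemma PdL.subsingleton (h : PdL A X 0) : Subsingleton X :=
  ModuleCat.isZero_iff_subsingleton.1 (hasProjectiveDimensionLT_zero_iff_isZero _ |>.1 h)

lemma PdL.of_projective [Module.Projective A X] (n : ℕ) : PdL A X (n + 1) := by
  refine PdL.mono (n := 1) ?_ (by omega)
  rw [PdL, ← projective_iff_hasProjectiveDimensionLT_one, ← IsProjective.iff_projective]
  infer_instance

lemma PdL.projective (h : PdL A X 1) : Module.Projective A X := by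
  rw [PdL, ← projective_iff_hasProjectiveDimensionLT_one, ← IsProjective.iff_projective] at h
  exact h

section
variable (i : X →ₗ[A] Y) (π : Y →ₗ[A] Z) (hi : Function.Injective i)
    (hπ : Function.Surjective π) (hx : Function.Exact i π)
include hi hπ hx

lemma PdL.X3 {n : ℕ} (h1 : PdL A X n) (h2 : PdL A Y (n + 1)) : PdL A Z (n + 1) :=
  (shortExact_of i π hi hπ hx).hasProjectiveDimensionLT_X₃ n h1 h2

lemma PdL.X1 {n : ℕ} (h2 : PdL A Y n) (h3 : PdL A Z (n + 1)) : PdL A X n :=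
  (shortExact_of i π hi hπ hx).hasProjectiveDimensionLT_X₁ n h2 h3

end

lemma cover_surj (A : Type u) [CommRing A] (X : Type u) [AddCommGroup X] [Module A X] :
    Function.Surjective (Finsupp.linearCombination A (id : X → X)) :=
  Finsupp.linearCombination_id_surjective A X

/-- Restriction of scalars and projective dimension. -/
lemma PdL.restrict {B : Type u} [CommRing B] [Algebra A B] (r : ℕ)
    (hB : ∀ ι : Type u, PdL A (ι →₀ B) (r + 1)) (n : ℕ) :
    ∀ (N : Type u) [AddCommGroup N] [Module A N] [Module B N] [IsScalarTower A B N],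
      PdL B N n → PdL A N (n + r) := by
  induction n with
  | zero =>
    intro N _ _ _ _ h
    have := h.subsingleton
    exact PdL.of_subsingleton _
  | succ n ih =>
    intro N _ _ _ _ h
    rcases n with - | n
    · have := h.projective
      obtain ⟨s, hs⟩ := Module.projective_lifting_property (Finsupp.linearCombination B (id : N → N)) LinearMap.id (cover_surj B N)
      exact PdL.of_retract ((hB N).mono (by omega)) (s.restrictScalars A) ((Finsupp.linearCombination B (id : N → N)).restrictScalars A)
        (fun x => LinearMap.congr_fun hs x)
    · set π := Finsupp.linearCombination B (id : N → N) with hπ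
      have h1 : PdL B (LinearMap.ker π) (n + 1) := PdL.X1 (LinearMap.ker π).subtype π Subtype.val_injective (cover_surj B N)
        (LinearMap.exact_subtype_ker_map π) (PdL.of_projective _) h
      have h2 := ih _ h1
      rw [show n + 1 + 1 + r = n + 1 + r + 1 by ring]
      exact PdL.X3 ((LinearMap.ker π).subtype.restrictScalars A) (π.restrictScalars A) Subtype.val_injective (cover_surj B N)
        (LinearMap.exact_subtype_ker_map π) h2 ((hB N).mono (by omega))

lemma finsupp_quot_PL (x : A) (hx : x ∈ nonZeroDivisors A) (ι : Type u) : PdL A (ι →₀ (A ⧸ Ideal.span {x})) 2 := by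
  refine PdL.X3 (X := ι →₀ A) (Y := ι →₀ A) (n := 1) (x • LinearMap.id)
    (Finsupp.mapRange.linearMap (Submodule.mkQ (Ideal.span {x}))) ?_ ?_ ?_ (PdL.of_projective _) (PdL.of_projective _)
  · intro f g h
    ext i
    have := DFunLike.congr_fun h i
    simp only [LinearMap.smul_apply, LinearMap.id_apply, Finsupp.smul_apply, smul_eq_mul] at this
    exact (mul_cancel_left_mem_nonZeroDivisors hx).1 this
  · exact Finsupp.mapRange_surjective _ (map_zero _) (Submodule.mkQ_surjective _)
  · intro f
    constructor
    · intro h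
      have h1 : ∀ i, ∃ y, x * y = f i := by
        intro i
        have := DFunLike.congr_fun h i
        simp only [Finsupp.mapRange.linearMap_apply, Finsupp.mapRange_apply, Finsupp.zero_apply] at this
        rw [Submodule.mkQ_apply, Submodule.Quotient.mk_eq_zero, Ideal.mem_span_singleton'] at this
        obtain ⟨y, hy⟩ := this
        exact ⟨y, by rw [← hy, mul_comm]⟩
      choose y hy using h1
      refine ⟨Finsupp.onFinset f.support y (fun i hi => ?_), ?_⟩
      · rw [Finsupp.mem_support_iff, ← hy]
        exact fun h0 => hi ((mul_right_mem_nonZeroDivisors_eq_zero_iff hx).1 (by rwa [mul_comm]))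
      · ext i; simp [hy]
    · rintro ⟨g, rfl⟩
      ext i
      simp only [Finsupp.mapRange.linearMap_apply, Finsupp.mapRange_apply, Finsupp.zero_apply]
      rw [Submodule.mkQ_apply, Submodule.Quotient.mk_eq_zero, Ideal.mem_span_singleton']
      exact ⟨g i, by simp [mul_comm]⟩

/-- Regular local rings, presented by iterated quotients by nonzerodivisors. -/
def RG : ℕ → (A : Type u) → [CommRing A] → Prop
  | 0, A, _ => IsField A
  | d + 1, A, _ => ∃ x : A, x ∈ nonZeroDivisors A ∧ ¬ IsUnit x ∧ RG d (A ⧸ Ideal.span {x})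

theorem RG.gd (d : ℕ) : ∀ (A : Type u) [CommRing A] [IsNoetherianRing A] [IsLocalRing A], RG d A → GD A d := by
  induction d with
  | zero =>
    intro A _ _ _ h M _ _ _
    letI := h.toField
    exact PdL.of_projective _
  | succ d ih =>
    intro A _ _ _ h M _ _ _
    obtain ⟨x, hx, hxu, hB⟩ := h
    have : Nontrivial (A ⧸ Ideal.span {x}) := Ideal.Quotient.nontrivial_iff.2 (by rwa [Ne, Ideal.span_singleton_eq_top])
    have : IsLocalRing (A ⧸ Ideal.span {x}) := IsLocalRing.of_surjective' _ Ideal.Quotient.mk_surjective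
    have hB := ih _ hB
    obtain ⟨k, π, hπ⟩ := Module.Finite.exists_fin' A M
    refine PdL.X3 (LinearMap.ker π).subtype π Subtype.val_injective hπ (LinearMap.exact_subtype_ker_map π) ?_ (PdL.of_projective _)
    set K := LinearMap.ker π
    have h1 := ModuleCat.projectiveDimension_quotSMulTop_eq_succ_of_isSMulRegular (ModuleCat.of A K) x (by
      intro y z h
      ext i
      have := congrFun (congrArg Subtype.val h) i
      exact (mul_cancel_left_mem_nonZeroDivisors hx).1 this) hxu
    have h2 : PdL A (QuotSMulTop x K) (d + 1 + 1) := by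
      refine PdL.congr (Y := (A ⧸ Ideal.span {x}) ⊗[A] K) ?_ (QuotSMulTop.equivQuotTensor x K)
      exact PdL.restrict 1 (fun ι => finsupp_quot_PL x hx ι) (d + 1) _ (hB _)
    have h3 := (projectiveDimension_le_iff _ (d + 1)).2 h2
    have h4 : projectiveDimension (ModuleCat.of A K) + 1 ≤ ((d + 1 : ℕ) : WithBot ℕ∞) := h1 ▸ h3
    refine (projectiveDimension_le_iff _ d).1 ?_
    push_cast at h4
    have := ENat.WithBot.add_le_add_natCast_right_iff (a := projectiveDimension (ModuleCat.of A K)) (b := (d : WithBot ℕ∞)) (c := 1)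
    exact this.1 (by simpa using h4)

end pdim
end UBS

namespace UBS

/-! ### Hilbert's syzygy theorem -/
open CategoryTheory CategoryTheory.Abelian TensorProduct

section hilbert

/-- Every module over `A` has projective dimension at most `d`. -/
def GDa (A : Type u) [CommRing A] (d : ℕ) : Prop :=
  ∀ (M : Type u) [AddCommGroup M] [Module A M], PdL A M (d + 1)

lemma GDa.gd {A : Type u} [CommRing A] {d : ℕ} (h : GDa A d) : GD A d := fun M _ _ _ => h M

lemma GDa.of_ringEquiv {A B : Type u} [CommRing A] [CommRing B] (e : A ≃+* B) {d : ℕ} (h : GDa B d) : GDa A d := by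
  intro N _ _
  letI := e.toRingHom.toAlgebra
  letI : Module B N := Module.compHom N e.symm.toRingHom
  have : IsScalarTower A B N := by
    refine ⟨fun a b n => ?_⟩
    change e.symm (e a * b) • n = a • (e.symm b • n)
    rw [map_mul, e.symm_apply_apply, mul_smul]
  refine PdL.restrict 0 (fun ι => ?_) (d + 1) N (h N)
  have e' : A ≃ₗ[A] B := { e with map_smul' := fun a b => map_mul e a b }
  exact PdL.congr (PdL.of_projective 0 (X := ι →₀ A)) (Finsupp.mapRange.linearEquiv e'.symm)

lemma injective_of_pid {A : Type u} [CommRing A] [IsDomain A] [IsPrincipalIdealRing A]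
    (Q : Type u) [AddCommGroup Q] [Module A Q] (h : ∀ a : A, a ≠ 0 → ∀ q : Q, ∃ q', a • q' = q) :
    Injective (ModuleCat.of A Q) := by
  refine Module.injective_object_of_injective_module (inj := Module.Baer.injective fun I g => ?_)
  obtain ⟨m, rfl⟩ := IsPrincipalIdealRing.principal I
  rcases eq_or_ne m 0 with rfl | h0
  · refine ⟨0, fun n hn => ?_⟩
    rw [Submodule.span_zero_singleton] at hn
    subst hn
    exact (map_zero g).symm
  · obtain ⟨q', hq⟩ := h m h0 (g ⟨m, Submodule.subset_span (Set.mem_singleton _)⟩)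
    refine ⟨LinearMap.toSpanSingleton A Q q', fun n hn => ?_⟩
    obtain ⟨n, rfl⟩ := Submodule.mem_span_singleton.mp hn
    rw [LinearMap.toSpanSingleton_apply, smul_assoc, hq, ← g.map_smul]
    rfl

lemma GDa.of_pid (A : Type u) [CommRing A] [IsDomain A] [IsPrincipalIdealRing A] : GDa A 1 := by
  have key : ∀ Y : ModuleCat.{u} A, HasInjectiveDimensionLT Y 2 := by
    intro Y
    let J := Injective.under Y
    have h2 : Injective (ModuleCat.of A J) := Injective.injective_under Y
    have hJ : Module.Injective A J := Module.injective_module_of_injective_object A J (inj := h2)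
    have hdiv : ∀ a : A, a ≠ 0 → ∀ q : J, ∃ q', a • q' = q := by
      intro a ha q
      obtain ⟨h, hh⟩ := hJ.out (LinearMap.lsmul A A a) (mul_right_injective₀ ha) (LinearMap.toSpanSingleton A J q)
      refine ⟨h 1, ?_⟩
      rw [← h.map_smul]
      simpa using hh 1
    have hi : Function.Injective (Injective.ι Y).hom := (ModuleCat.mono_iff_injective _).1 inferInstance
    have h1 := injective_of_pid (J ⧸ LinearMap.range (Injective.ι Y).hom) fun a ha q => by
      obtain ⟨q, rfl⟩ := Submodule.mkQ_surjective _ q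
      obtain ⟨q', hq⟩ := hdiv a ha q
      exact ⟨Submodule.mkQ _ q', by rw [← hq, map_smul]⟩
    have hS := shortExact_of (A := A) (Injective.ι Y).hom (LinearMap.range (Injective.ι Y).hom).mkQ hi
      (Submodule.mkQ_surjective _) (LinearMap.exact_map_mkQ_range _)
    exact hS.hasInjectiveDimensionLT_X₁ 1 (inferInstanceAs (HasInjectiveDimensionLT (ModuleCat.of A _) 1))
      (inferInstanceAs (HasInjectiveDimensionLT (ModuleCat.of A J) 2))
  intro N _ _
  let := HasExt.standard (ModuleCat.{u} A)
  refine HasProjectiveDimensionLT.mk fun i hi Y e => ?_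
  have := key Y
  exact e.eq_zero_of_hasInjectiveDimensionLT 2 hi

lemma exact_baseChange {A : Type u} (B : Type u) [CommRing A] [CommRing B] [Algebra A B] {X Y Z : Type u}
    [AddCommGroup X] [Module A X] [AddCommGroup Y] [Module A Y] [AddCommGroup Z] [Module A Z]
    (i : X →ₗ[A] Y) (π : Y →ₗ[A] Z) (hx : Function.Exact i π) (hπ : Function.Surjective π) :
    Function.Exact (i.baseChange B) (π.baseChange B) := lTensor_exact B hx hπ

lemma PdL.extend {A : Type u} (B : Type u) [CommRing A] [CommRing B] [Algebra A B] [Module.Flat A B] (n : ℕ) :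
    ∀ (M : Type u) [AddCommGroup M] [Module A M], PdL A M n → PdL B (B ⊗[A] M) n := by
  induction n with
  | zero =>
    intro M _ _ h
    have := h.subsingleton
    exact PdL.of_subsingleton _
  | succ n ih =>
    intro M _ _ h
    rcases n with - | n
    · have := h.projective
      exact PdL.of_projective _
    · set π := Finsupp.linearCombination A (id : M → M) with hπ
      have h1 : PdL A (LinearMap.ker π) (n + 1) := PdL.X1 (LinearMap.ker π).subtype π Subtype.val_injective (cover_surj A M)
        (LinearMap.exact_subtype_ker_map π) (PdL.of_projective _) h
      have h2 := ih _ h1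
      have hs : Function.Surjective π := cover_surj A M
      have hex : Function.Exact (LinearMap.ker π).subtype π := LinearMap.exact_subtype_ker_map π
      have hex' := exact_baseChange B (X := LinearMap.ker π) (LinearMap.ker π).subtype π hex hs
      exact PdL.X3 ((LinearMap.ker π).subtype.baseChange B) (π.baseChange B)
        (Module.Flat.lTensor_preserves_injective_linearMap (M := B) (LinearMap.ker π).subtype Subtype.val_injective)
        (LinearMap.lTensor_surjective B hs)
        hex' h2 (PdL.of_projective _)

open Polynomial in
/-- Hilbert's syzygy theorem for one variable. -/
theorem GDa.polynomial {A : Type u} [CommRing A] {d : ℕ} (h : GDa A d) : GDa A[X] (d + 1) := by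
  intro M _ _
  letI : Module A M := Module.compHom M (algebraMap A A[X])
  have : IsScalarTower A A[X] M := ⟨fun a b m => by
    rw [Algebra.smul_def, mul_smul]; rfl⟩
  have hM := PdL.extend A[X] (d + 1) M (h M)
  let ε : A[X] ⊗[A] M →ₗ[A[X]] M := (LinearMap.id : M →ₗ[A] M).liftBaseChange A[X]
  have hε : ∀ b m, ε (b ⊗ₜ m) = b • m := fun b m => by simp [ε]
  let ξ : M →ₗ[A] M := (LinearMap.lsmul A[X] M X).restrictScalars A
  have hξ : ∀ m, ξ m = (X : A[X]) • m := fun m => rfl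
  let φ : A[X] ⊗[A] M →ₗ[A[X]] A[X] ⊗[A] M := (X : A[X]) • LinearMap.id - ξ.baseChange A[X]
  have hφ : ∀ b m, φ (b ⊗ₜ m) = (X * b) ⊗ₜ m - b ⊗ₜ ((X : A[X]) • m) := fun b m => rfl
  let c : ℕ → A[X] ⊗[A] M →ₗ[A] M := fun i =>
    (TensorProduct.lid A M).toLinearMap ∘ₗ (lcoeff A i).rTensor M
  have hc : ∀ i b m, c i (b ⊗ₜ m) = b.coeff i • m := fun i b m => by simp [c]
  have hcφ0 : ∀ t, c 0 (φ t) = - ξ (c 0 t) := by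
    intro t
    induction t with
    | zero => simp
    | tmul b m =>
      rw [hφ, map_sub, hc, hc, hc, hξ, mul_coeff_zero, coeff_X_zero, zero_mul, zero_smul, zero_sub, smul_comm]
    | add x y hx hy => rw [map_add, map_add, hx, hy, map_add, map_add]; abel
  have hcφ : ∀ i t, c (i + 1) (φ t) = c i t - ξ (c (i + 1) t) := by
    intro i t
    induction t with
    | zero => simp
    | tmul b m =>
      rw [hφ, map_sub, hc, hc, hc, hc, hξ, coeff_X_mul, smul_comm]
    | add x y hx hy => rw [map_add, map_add, hx, hy, map_add, map_add, map_add]; abel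
  have hbig : ∀ t, ∃ N, ∀ i, N ≤ i → c i t = 0 := by
    intro t
    induction t with
    | zero => exact ⟨0, fun i _ => by simp⟩
    | tmul b m => exact ⟨b.natDegree + 1, fun i hi => by
        rw [hc, coeff_eq_zero_of_natDegree_lt (by omega), zero_smul]⟩
    | add x y hx hy =>
      obtain ⟨N, hN⟩ := hx
      obtain ⟨N', hN'⟩ := hy
      exact ⟨max N N', fun i hi => by
        rw [map_add, hN i ((le_max_left _ _).trans hi), hN' i ((le_max_right _ _).trans hi), add_zero]⟩
  have hzero : ∀ t, (∀ i, c i t = 0) → t = 0 := by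
    intro t ht
    have key : ∀ t, (TensorProduct.equivFinsuppOfBasisLeft (basisMonomials A)) t = 0 → t = 0 :=
      fun t h => (TensorProduct.equivFinsuppOfBasisLeft (N := M) (basisMonomials A)).injective (h.trans (map_zero _).symm)
    apply key
    ext i
    rw [Finsupp.zero_apply, ← ht i]
    clear ht
    induction t with
    | zero => simp
    | tmul b m => rw [hc]; simp; rfl
    | add x y hx hy => rw [map_add, Finsupp.add_apply, hx, hy, map_add]
  refine PdL.X3 φ ε ?_ ?_ ?_ hM (hM.mono (by omega))
  · rw [injective_iff_map_eq_zero]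
    intro t ht
    obtain ⟨N, hN⟩ := hbig t
    refine hzero t ?_
    have key : ∀ j i, N ≤ i + j → c i t = 0 := by
      intro j
      induction j with
      | zero => exact fun i hi => hN i hi
      | succ j ih =>
        intro i hi
        have := hcφ i t
        rw [ht, map_zero, ih (i + 1) (by omega), map_zero, sub_zero] at this
        exact this.symm
    exact fun i => key N i (by omega)
  · exact fun m => ⟨1 ⊗ₜ m, by rw [hε, one_smul]⟩
  · have hεφ : ∀ t, ε (φ t) = 0 := by
      intro t
      induction t with
      | zero => simp
      | tmul b m => rw [hφ, map_sub, hε, hε, smul_smul, mul_comm, sub_self]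
      | add x y hx hy => rw [map_add, map_add, hx, hy, add_zero]
    have hmon : ∀ (b : A[X]) (m : M), ∃ s, b ⊗ₜ m - 1 ⊗ₜ (b • m) = φ s := by
      intro b
      induction b using Polynomial.induction_on' with
      | add p q hp hq =>
        intro m
        obtain ⟨s, hs⟩ := hp m
        obtain ⟨t, ht⟩ := hq m
        refine ⟨s + t, ?_⟩
        rw [map_add, ← hs, ← ht, add_tmul, add_smul, tmul_add]; abel
      | monomial n a =>
        induction n with
        | zero =>
          intro m
          refine ⟨0, ?_⟩
          rw [map_zero, monomial_zero_left, ← algebraMap_eq, Algebra.algebraMap_eq_smul_one, smul_tmul, smul_assoc, one_smul, sub_self]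
        | succ n ih =>
          intro m
          obtain ⟨s, hs⟩ := ih ((X : A[X]) • m)
          refine ⟨monomial n a ⊗ₜ m + s, ?_⟩
          rw [map_add, ← hs, hφ, X_mul_monomial, smul_smul, monomial_mul_X]; abel
    have hall : ∀ t, ∃ s, t - 1 ⊗ₜ (ε t) = φ s := by
      intro t
      induction t with
      | zero => exact ⟨0, by simp⟩
      | tmul b m => rw [hε]; exact hmon b m
      | add x y hx hy =>
        obtain ⟨s, hs⟩ := hx
        obtain ⟨t, ht⟩ := hy
        exact ⟨s + t, by rw [map_add, map_add, ← hs, ← ht, tmul_add]; abel⟩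
    intro t
    constructor
    · intro h
      obtain ⟨s, hs⟩ := hall t
      rw [h, tmul_zero, sub_zero] at hs
      exact ⟨s, hs.symm⟩
    · rintro ⟨s, rfl⟩
      exact hεφ s

lemma GDa.mvPolynomial {A : Type u} [CommRing A] {d : ℕ} (h : GDa A d) (n : ℕ) :
    GDa (MvPolynomial (Fin n) A) (d + n) := by
  induction n with
  | zero => exact GDa.of_ringEquiv (MvPolynomial.isEmptyRingEquiv A (Fin 0)) h
  | succ n ih => exact GDa.of_ringEquiv (MvPolynomial.finSuccEquiv A n).toRingEquiv ih.polynomial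

end hilbert
end UBS

namespace UBS

/-! ### Localization of bounds -/

section loc
variable {A R : Type*} [CommRing A] [CommRing R] [Algebra A R]

lemma intClosure_le_map_of_isLocalization (M : Submonoid A) [IsLocalization M R] (J : Ideal R) :
    J.intClosure ≤ ((J.comap (algebraMap A R)).intClosure).map (algebraMap A R) := by
  refine Ideal.span_le.2 ?_
  rintro y ⟨r, hr, a, ha, hy⟩
  set J0 := J.comap (algebraMap A R) with hJ0
  have hJ : J0.map (algebraMap A R) = J := IsLocalization.map_under M R J
  have h1 : ∀ i, ∃ t : M, 1 ≤ i → i ≤ r → ∃ b ∈ J0 ^ i, a i * algebraMap A R t = algebraMap A R b := by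
    intro i
    by_cases hi : 1 ≤ i ∧ i ≤ r
    · have := ha i hi.1 hi.2
      rw [← hJ, ← Ideal.map_pow, IsLocalization.mem_map_algebraMap_iff M R] at this
      obtain ⟨⟨b, t⟩, h⟩ := this
      exact ⟨t, fun _ _ => ⟨b, b.2, h⟩⟩
    · exact ⟨1, fun h h' => absurd ⟨h, h'⟩ hi⟩
  choose t ht using h1
  obtain ⟨⟨y0, t0⟩, hy0⟩ := IsLocalization.surj M y
  set s : M := t0 * ∏ i ∈ Finset.Icc 1 r, t i with hs
  have h2 : ∀ i, ∃ c : A, 1 ≤ i → i ≤ r → c ∈ J0 ^ i ∧ (algebraMap A R s) ^ i * a i = algebraMap A R c := by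
    intro i
    by_cases hi : 1 ≤ i ∧ i ≤ r
    · obtain ⟨b, hb, hab⟩ := ht i hi.1 hi.2
      have hd : t i ∣ s := (Finset.dvd_prod_of_mem t (Finset.mem_Icc.2 hi)).mul_left _
      obtain ⟨q, hq⟩ := hd.trans (dvd_pow_self s (by omega : i ≠ 0))
      refine ⟨q * b, fun _ _ => ⟨Ideal.mul_mem_left _ _ hb, ?_⟩⟩
      have : (s : A) ^ i = (t i : A) * q := by exact_mod_cast congrArg Subtype.val hq
      rw [← map_pow, this, map_mul, map_mul, ← hab]; ring
    · exact ⟨0, fun h h' => absurd ⟨h, h'⟩ hi⟩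
  choose c hc using h2
  obtain ⟨y1, hy1⟩ : ∃ y1 : A, algebraMap A R s * y = algebraMap A R y1 := by
    refine ⟨(∏ i ∈ Finset.Icc 1 r, t i : M) * y0, ?_⟩
    rw [map_mul, ← hy0, hs]; simp only [Submonoid.coe_mul, map_mul]; ring
  have h3 : algebraMap A R (y1 ^ r + ∑ i ∈ Finset.Icc 1 r, c i * y1 ^ (r - i)) = 0 := by
    have := congrArg (fun z => (algebraMap A R s) ^ r * z) hy
    simp only [mul_zero, mul_add, Finset.mul_sum] at this
    rw [← this, map_add, map_sum, map_pow, ← hy1, mul_pow]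
    congr 1
    refine Finset.sum_congr rfl fun i hi => ?_
    obtain ⟨h1, h2⟩ := Finset.mem_Icc.1 hi
    rw [map_mul, ← (hc i h1 h2).2, map_pow, ← hy1, mul_pow]
    calc _ = (algebraMap A R s ^ i * algebraMap A R s ^ (r - i)) * (a i * y ^ (r - i)) := by ring
      _ = _ := by rw [← pow_add, Nat.add_sub_cancel' h2]
  obtain ⟨u, hu⟩ := (IsLocalization.map_eq_zero_iff M R _).1 h3
  have h4 : IsIntegralOverIdeal J0 ((u : A) * y1) := by
    refine ⟨r, hr, fun i => (u : A) ^ i * c i, fun i h1 h2 => Ideal.mul_mem_left _ _ (hc i h1 h2).1, ?_⟩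
    have : (u : A) ^ r * (y1 ^ r + ∑ i ∈ Finset.Icc 1 r, c i * y1 ^ (r - i)) = 0 := by
      obtain ⟨r', rfl⟩ := Nat.exists_eq_succ_of_ne_zero hr.ne'
      rw [pow_succ, mul_assoc, hu, mul_zero]
    rw [← this, mul_add, mul_pow, Finset.mul_sum]
    congr 1
    refine Finset.sum_congr rfl fun i hi => ?_
    obtain ⟨h1, h2⟩ := Finset.mem_Icc.1 hi
    calc _ = ((u : A) ^ i * (u : A) ^ (r - i)) * (c i * y1 ^ (r - i)) := by rw [mul_pow]; ring
      _ = _ := by rw [← pow_add, Nat.add_sub_cancel' h2]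
  rw [SetLike.mem_coe, IsLocalization.mem_map_algebraMap_iff M R]
  exact ⟨(⟨_, Ideal.subset_span h4⟩, u * s), by
    simp only [Submonoid.coe_mul, map_mul]; rw [← hy1]; ring⟩

lemma IntDimBound.of_isLocalization (M : Submonoid A) [IsLocalization M R] {k : ℕ} (h : IntDimBound A k) : IntDimBound R k := by
  intro J n hn
  have hJ : (J.comap (algebraMap A R)).map (algebraMap A R) = J := IsLocalization.map_under M R J
  calc J.intClosure ^ n ≤ (((J.comap (algebraMap A R)).intClosure).map (algebraMap A R)) ^ n :=
        Ideal.pow_right_mono (intClosure_le_map_of_isLocalization M J) n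
    _ = (((J.comap (algebraMap A R)).intClosure) ^ n).map (algebraMap A R) := (Ideal.map_pow _ _ _).symm
    _ ≤ ((J.comap (algebraMap A R)) ^ (n - k)).map (algebraMap A R) := Ideal.map_mono (h _ n hn)
    _ = J ^ (n - k) := by rw [Ideal.map_pow, hJ]

end loc

section gkloc
variable {D E : Type*} [CommRing D] [CommRing E] [Algebra D E]

lemma GB.localize (S : Submonoid D) [IsLocalization S E] [IsNoetherianRing D] (c : D) {k : ℕ} (h : GB D D c k) : GB E E (algebraMap D E c) k := by
  rintro J K ⟨hJK, m, hm⟩ n x hx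
  have top : ∀ I : Ideal E, I • (⊤ : Submodule E E) = I := fun I => by
    rw [smul_eq_mul, Ideal.mul_top]
  have top' : ∀ I : Ideal D, I • (⊤ : Submodule D D) = I := fun I => by
    rw [smul_eq_mul, Ideal.mul_top]
  rw [top] at hx ⊢
  set f := algebraMap D E
  set J0 := J.comap f
  set K0 := K.comap f
  have hJ : J0.map f = J := IsLocalization.map_under S E J
  have hK : K0.map f = K := IsLocalization.map_under S E K
  have hfin : ∃ s : S, ∀ y ∈ K0 ^ (m + 1), (s : D) * y ∈ J0 * K0 ^ m := by
    obtain ⟨T, hT⟩ := IsNoetherian.noetherian (K0 ^ (m + 1))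
    have h1 : ∀ y : D, ∃ s : S, y ∈ T → (s : D) * y ∈ J0 * K0 ^ m := by
      intro y
      by_cases hy : y ∈ T
      · have h2 : y ∈ K0 ^ (m+1) := by rw [← hT]; exact Submodule.subset_span hy
        have h3 : f y ∈ (J0 * K0 ^ m).map f := by
          rw [Ideal.map_mul, Ideal.map_pow, hJ, hK]
          apply hm
          rw [← hK, ← Ideal.map_pow]; exact Ideal.mem_map_of_mem f h2
        obtain ⟨s, hs, h⟩ := (IsLocalization.algebraMap_mem_map_algebraMap_iff S E _ _).1 h3
        exact ⟨⟨s, hs⟩, fun _ => h⟩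
      · exact ⟨1, fun h => absurd h hy⟩
    choose s hs using h1
    refine ⟨∏ y ∈ T, s y, ?_⟩
    intro y hy
    rw [← hT] at hy
    induction hy using Submodule.span_induction with
    | mem y hy =>
      obtain ⟨q, hq⟩ := Finset.dvd_prod_of_mem s hy
      rw [hq, Submonoid.coe_mul, mul_comm (s y : D), mul_assoc]
      exact Ideal.mul_mem_left _ _ (hs y hy)
    | zero => simp
    | add a b _ _ ha hb => rw [mul_add]; exact add_mem ha hb
    | smul a b _ hb => rw [smul_eq_mul, mul_left_comm]; exact Ideal.mul_mem_left _ _ hb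
  obtain ⟨s, hs⟩ := hfin
  set K1 : Ideal D := J0 ⊔ Ideal.span {(s : D)} * K0
  have hred : IsRed J0 K1 := by
    refine ⟨le_sup_left, m, ?_⟩
    have key : ∀ j, (J0 ⊔ Ideal.span {(s : D)} * K0) ^ (j+1) ≤
        J0 * K1 ^ j ⊔ (Ideal.span {(s : D)} * K0) ^ (j+1) := by
      intro j
      induction j with
      | zero => simp
      | succ j ih =>
        rw [pow_succ]
        refine (Ideal.mul_mono_left ih).trans ?_
        rw [Ideal.sup_mul]
        refine sup_le ?_ ?_
        · rw [mul_assoc, ← pow_succ]; exact le_sup_left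
        · rw [Ideal.mul_sup, ← pow_succ]
          refine sup_le ?_ le_sup_right
          rw [mul_comm]
          exact (Ideal.mul_mono_right (Ideal.pow_right_mono le_sup_right _)).trans le_sup_left
    refine (key m).trans (sup_le le_rfl ?_)
    rw [mul_pow, pow_succ, mul_assoc]
    calc _ ≤ Ideal.span {(s : D)} ^ m * (J0 * K0 ^ m) := by
          refine Ideal.mul_mono_right ?_
          rw [Ideal.span_singleton_mul_le_iff]
          exact hs
      _ = J0 * (Ideal.span {(s : D)} * K0) ^ m := by rw [mul_pow]; ring
      _ ≤ _ := Ideal.mul_mono_right (Ideal.pow_right_mono le_sup_right _)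
  have hK1 : K1.map f = K := by
    apply le_antisymm
    · rw [Ideal.map_sup, hJ, Ideal.map_mul, hK]
      exact sup_le hJK Ideal.mul_le_right
    · rw [Ideal.map_sup, Ideal.map_mul, hK, Ideal.map_span, Set.image_singleton,
        Ideal.span_singleton_eq_top.2 (IsLocalization.map_units E s), Ideal.top_mul]
      exact le_sup_right
  rw [← hK1, ← Ideal.map_pow, IsLocalization.mem_map_algebraMap_iff S E] at hx
  obtain ⟨⟨y, t⟩, hy⟩ := hx
  have h5 := h J0 K1 hred n y (by rw [top']; exact y.2)
  rw [top'] at h5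
  have h6 : f (c • (y : D)) ∈ J ^ (n - k) := by
    rw [← hJ, ← Ideal.map_pow]; exact Ideal.mem_map_of_mem f h5
  rw [smul_eq_mul, map_mul, ← hy] at h6
  have h7 : f c • x * f t ∈ J ^ (n-k) := by rw [smul_eq_mul]; convert h6 using 1; ring
  exact (Ideal.mul_unit_mem_iff_mem _ (IsLocalization.map_units E t)).1 h7

lemma finite_dg_lt {s : ℕ} (n : ℕ) : {α : Fin s → ℕ | dg α < n}.Finite := by
  refine (Set.Finite.pi' (fun _ : Fin s => Set.finite_lt_nat n)).subset ?_
  intro α hα i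
  exact lt_of_le_of_lt (Finset.single_le_sum (f := α) (fun _ _ => Nat.zero_le _) (Finset.mem_univ i)) hα

lemma GK.localize (S : Submonoid D) [IsLocalization S E] (hinj : Function.Injective (algebraMap D E))
    (c : D) {k : ℕ} (h : GK D D c k) : GK E E (algebraMap D E c) k := by
  intro s a n z hz0 hz
  set f := algebraMap D E
  have hu : ∀ t : S, IsUnit (f t) := fun t => IsLocalization.map_units E t
  obtain ⟨t, ht⟩ := IsLocalization.exist_integer_multiples S (Finset.univ : Finset (Fin s)) a
  have ha' : ∀ j, ∃ a' : D, f a' = f t * a j := fun j => by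
    obtain ⟨b, hb⟩ := ht j (Finset.mem_univ j)
    exact ⟨b, by rw [hb, Algebra.smul_def]⟩
  choose a' ha' using ha'
  have hfin : (Set.univ ×ˢ {α : Fin s → ℕ | dg α < n} : Set (Finset (Fin s) × (Fin s → ℕ))).Finite :=
    Set.finite_univ.prod (finite_dg_lt n)
  obtain ⟨T, hT⟩ := IsLocalization.exist_integer_multiples S hfin.toFinset
    (fun q : Finset (Fin s) × (Fin s → ℕ) => z q.1 q.2)
  have hz' : ∀ A α, ∃ y : D, f y = if dg α < n then f t ^ (n - dg α) * (f T * z A α) else 0 := by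
    intro A α
    by_cases hα : dg α < n
    · obtain ⟨b, hb⟩ := hT (A, α) (hfin.mem_toFinset.2 ⟨trivial, hα⟩)
      refine ⟨t ^ (n - dg α) * b, ?_⟩
      rw [if_pos hα, map_mul, map_pow, hb, Algebra.smul_def]
    · exact ⟨0, by rw [if_neg hα, map_zero]⟩
  choose z' hz' using hz'
  have hz1 : ∀ A α, dg α ≤ n → f (z' A α) = if dg α < n then f t ^ (n - dg α) * (f T * z A α) else 0 :=
    fun A α _ => hz' A α
  have hmul : ∀ (j : Fin s) (A : Finset (Fin s)) (x y : E), sg j A • (x : E) * y = sg j A • (x * y) :=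
    fun j A x y => smul_mul_assoc _ _ _
  have e1 : z' ∅ = 0 := by
    funext α
    apply hinj
    rw [hz', hz0]; simp
  have e2 : ∀ A α, dg α < n → dd a' z' A α = 0 := by
    intro A α hα
    apply hinj
    rw [map_zero]
    have h0 := congrArg (fun y => f t ^ (n - dg α + 1) * (f T * y)) (hz A α hα)
    simp only [mul_zero] at h0
    rw [← h0, dd_apply, dd_apply, map_sum, Finset.mul_sum, Finset.mul_sum]
    refine Finset.sum_congr rfl fun j _ => ?_
    by_cases hj : j ∈ A
    · simp [hj]
    · rw [if_neg hj, if_neg hj, mul_smul_comm, mul_smul_comm]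
      have : ∀ y : D, f (sg j A • y) = sg j A • f y := fun y => map_zsmul f _ _
      rw [this]
      congr 1
      rw [map_sub, smul_eq_mul, smul_eq_mul, map_mul, ha', hz' _ α, if_pos hα]
      by_cases h0 : α j = 0
      · rw [if_pos h0, if_pos h0, map_zero, pow_succ]; ring
      · have h1 := dg_lo j α h0
        rw [if_neg h0, if_neg h0, hz' _ (lo j α), if_pos (by omega),
          show n - dg (lo j α) = n - dg α + 1 by omega, pow_succ]; ring
  obtain ⟨w', hw0, hw⟩ := h s a' n z' e1 e2
  obtain ⟨it, hit⟩ := (hu t).exists_left_inv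
  obtain ⟨iT, hiT⟩ := (hu T).exists_left_inv
  refine ⟨fun A α => it ^ (n - 1 - dg α) * (iT * f (w' A α)), ?_, ?_⟩
  · funext α; simp [hw0]
  intro A α hα
  have hα' : dg α < n := by omega
  have h1 := congrArg (fun y => it ^ (n - dg α) * (iT * f y)) (hw A α hα)
  simp only [map_zero, mul_zero] at h1
  rw [← h1]
  have hpow : ∀ i, it ^ i * f t ^ i = 1 := fun i => by rw [← mul_pow, hit, one_pow]
  simp only [Pi.sub_apply, Pi.smul_apply, smul_eq_mul, map_sub, mul_sub, map_mul]
  congr 1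
  · rw [hz' A α, if_pos hα']
    calc f c * z A α = (it ^ (n - dg α) * f t ^ (n - dg α)) * (iT * f T) * (f c * z A α) := by
          rw [hpow, hiT]; ring
      _ = _ := by ring
  · rw [dd_apply, dd_apply, map_sum, Finset.mul_sum, Finset.mul_sum]
    refine Finset.sum_congr rfl fun j _ => ?_
    by_cases hj : j ∈ A
    · simp [hj]
    · have : ∀ y : D, f (sg j A • y) = sg j A • f y := fun y => map_zsmul f _ _
      rw [if_neg hj, if_neg hj, this, mul_smul_comm, mul_smul_comm]
      congr 1
      rw [map_sub, smul_eq_mul, smul_eq_mul, map_mul, ha']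
      have h2 : it ^ (n - dg α) * (f t) = it ^ (n - 1 - dg α) := by
        rw [show n - dg α = n - 1 - dg α + 1 by omega, pow_succ, mul_assoc, hit, mul_one]
      have h3 : ∀ y, it ^ (n - dg α) * (iT * (f t * a j * y)) = a j * (it ^ (n - 1 - dg α) * (iT * y)) := by
        intro y; rw [← h2]; ring
      rw [mul_sub, mul_sub, h3]
      by_cases h0 : α j = 0
      · rw [if_pos h0, if_pos h0, map_zero, mul_zero, mul_zero]
      · have h1 := dg_lo j α h0
        rw [if_neg h0, if_neg h0, show n - 1 - dg (lo j α) = n - dg α by omega]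

end gkloc

/-! ### Descent of bounds along a subring -/

section transfer
variable {B X E : Type*} [CommRing B] [AddCommGroup X] [Module B X] [CommRing E]

lemma GK.transfer (r : B →+* E) (e : X ≃+ E) (he : ∀ b x, e (b • x) = r b * e x) (c : B) {k : ℕ}
    (h : GK E E (r c) k) : GK B X c k := by
  intro s a n z hz0 hz
  have h1 : ∀ z : Finset (Fin s) → (Fin s → ℕ) → X,
      dd (fun j => r (a j)) (mapC e.toAddMonoidHom z) = mapC e.toAddMonoidHom (dd a z) := fun z =>
    dd_mapC e.toAddMonoidHom a (fun j => r (a j)) (fun j x => he _ _) z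
  obtain ⟨w, hw0, hw⟩ := h s (fun j => r (a j)) n (mapC e.toAddMonoidHom z)
    (by funext α; simp [mapC, hz0]) (fun A α hα => by rw [h1, mapC, hz A α hα, map_zero])
  have h2 : mapC e.toAddMonoidHom (mapC e.symm.toAddMonoidHom w) = w := by
    funext A α; simp [mapC]
  refine ⟨mapC e.symm.toAddMonoidHom w, by funext α; simp [mapC, hw0], fun A α hα => ?_⟩
  apply e.injective
  have h3 := hw A α hα
  rw [← h2, h1] at h3
  rw [map_zero, ← h3]
  simp [mapC, he]

lemma mem_smul_top_transfer (r : B →+* E) (e : X ≃+ E) (he : ∀ b x, e (b • x) = r b * e x)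
    (I : Ideal B) (x : X) : x ∈ I • (⊤ : Submodule B X) ↔ e x ∈ I.map r := by
  constructor
  · intro hx
    refine Submodule.smul_induction_on hx (fun a ha y _ => ?_) (fun y y' h h' => ?_)
    · rw [he]; exact Ideal.mul_mem_right _ _ (Ideal.mem_map_of_mem r ha)
    · rw [map_add]; exact add_mem h h'
  · intro hx
    have key : ∀ y ∈ I.map r, e.symm y ∈ I • (⊤ : Submodule B X) := by
      intro y hy
      refine Submodule.span_induction ?_ ?_ ?_ ?_ hy
      · rintro _ ⟨a, ha, rfl⟩
        have : e.symm (r a) = a • e.symm 1 := by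
          apply e.injective; rw [he]; simp
        rw [this]; exact Submodule.smul_mem_smul ha trivial
      · rw [map_zero]; exact zero_mem _
      · intro y y' _ _ h h'; rw [map_add]; exact add_mem h h'
      · intro t y _ h
        have h3 : ∀ v ∈ I • (⊤ : Submodule B X), e.symm (t * e v) ∈ I • (⊤ : Submodule B X) := by
          intro v hv
          refine Submodule.smul_induction_on hv (fun a ha y _ => ?_) (fun y y' h h' => ?_)
          · have : e.symm (t * e (a • y)) = a • e.symm (t * e y) := by
              apply e.injective; rw [he, he]; simp; ring
            rw [this]; exact Submodule.smul_mem_smul ha trivial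
          · rw [map_add, mul_add, map_add]; exact add_mem h h'
        simpa using h3 _ h
    simpa using key _ hx

lemma GB.transfer (r : B →+* E) (e : X ≃+ E) (he : ∀ b x, e (b • x) = r b * e x) (c : B) {k : ℕ}
    (h : GB E E (r c) k) : GB B X c k := by
  intro J K hJK n x hx
  rw [mem_smul_top_transfer r e he, Ideal.map_pow] at hx ⊢
  have := h (J.map r) (K.map r) ⟨Ideal.map_mono hJK.1, by
    obtain ⟨m, hm⟩ := hJK.2
    refine ⟨m, ?_⟩
    rw [← Ideal.map_pow, ← Ideal.map_pow, ← Ideal.map_mul]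
    exact Ideal.map_mono hm⟩ n (e x) (by simpa using hx)
  simp only [smul_eq_mul, Ideal.mul_top] at this
  rw [he]; exact this

end transfer

section stepL
variable {A : Type u} [CommRing A] [IsNoetherianRing A]

/-- The localized module as a module over the localized ring, with a uniform bound. -/
def UBL (S : Submonoid A) (N : Type u) [AddCommGroup N] [Module A N] (k l : ℕ) : Prop :=
  UARk (Localization S) (LocalizedModule S N) k ∧ BSk (Localization S) (LocalizedModule S N) l

/-- The map of localized modules, linear over the localized ring. -/
noncomputable abbrev mapL (S : Submonoid A) {N N' : Type u} [AddCommGroup N] [Module A N] [AddCommGroup N']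
    [Module A N'] (f : N →ₗ[A] N') : LocalizedModule S N →ₗ[Localization S] LocalizedModule S N' :=
  LinearMap.extendScalarsOfIsLocalization S (Localization S)
    (IsLocalizedModule.map S (LocalizedModule.mkLinearMap S N) (LocalizedModule.mkLinearMap S N') f)

lemma mapL_inj (S : Submonoid A) {N N' : Type u} [AddCommGroup N] [Module A N] [AddCommGroup N']
    [Module A N'] (f : N →ₗ[A] N') (hf : Function.Injective f) : Function.Injective (mapL S f) :=
  IsLocalizedModule.map_injective S _ _ f hf

lemma mapL_surj (S : Submonoid A) {N N' : Type u} [AddCommGroup N] [Module A N] [AddCommGroup N']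
    [Module A N'] (f : N →ₗ[A] N') (hf : Function.Surjective f) : Function.Surjective (mapL S f) :=
  IsLocalizedModule.map_surjective S _ _ f hf

lemma mapL_exact (S : Submonoid A) {N N' N'' : Type u} [AddCommGroup N] [Module A N] [AddCommGroup N']
    [Module A N'] [AddCommGroup N''] [Module A N''] (f : N →ₗ[A] N') (g : N' →ₗ[A] N'')
    (h : Function.Exact f g) : Function.Exact (mapL S f) (mapL S g) :=
  LocalizedModule.map_exact S f g h

lemma UBL.ext (S : Submonoid A) {N N' N'' : Type u} [AddCommGroup N] [Module A N] [AddCommGroup N']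
    [Module A N'] [AddCommGroup N''] [Module A N''] (f : N →ₗ[A] N') (g : N' →ₗ[A] N'')
    (hf : Function.Injective f) (hg : Function.Surjective g) (hfg : Function.Exact f g) {k l k' l' : ℕ}
    (h : UBL S N k l) (h' : UBL S N'' k' l') : UBL S N' (k + k') (l + l' + k') := by
  haveI : IsNoetherianRing (Localization S) := IsLocalization.isNoetherianRing S _ ‹_›
  exact ⟨h.1.ext _ _ (mapL_inj S f hf) (mapL_surj S g hg) (mapL_exact S f g hfg) h'.1,
    h.2.ext _ _ (mapL_inj S f hf) (mapL_surj S g hg) (mapL_exact S f g hfg) h'.2 h'.1⟩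

lemma UBL.of_equiv (S : Submonoid A) {N N' : Type u} [AddCommGroup N] [Module A N] [AddCommGroup N']
    [Module A N'] (e : N ≃ₗ[A] N') {k l : ℕ} (h : UBL S N' k l) : UBL S N k l := by
  let e' : LocalizedModule S N ≃ₗ[Localization S] LocalizedModule S N' :=
    LinearEquiv.ofBijective (mapL S e.toLinearMap) ⟨mapL_inj S _ e.injective, mapL_surj S _ e.surjective⟩
  exact ⟨h.1.of_equiv e', h.2.of_equiv e'⟩

lemma UBL.of_subsingleton (S : Submonoid A) {N : Type u} [AddCommGroup N] [Module A N]
    [Subsingleton (LocalizedModule S N)] (k l : ℕ) : UBL S N k l :=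
  ⟨.of_subsingleton k, .of_subsingleton l⟩

/-- Multiplication by a nonzero `c ∈ D ⊆ A ⧸ P` descends the bounds from `A ⧸ (P, c)`. The
bounds for `c` come from a subring `D` of `A ⧸ P` which agrees with `A ⧸ P` after localization. -/
lemma UBL.of_subring (S : Submonoid A) (P : Ideal A) [hP : P.IsPrime] (D : Subring (A ⧸ P)) [IsNoetherianRing D]
    (t : A) (ht : t ∈ S) (hD : ∀ x : A ⧸ P, ∃ e : ℕ, Ideal.Quotient.mk P t ^ e * x ∈ D)
    (htD : Ideal.Quotient.mk P t ∈ D)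
    (c : A) (hcP : c ∉ P) (hc : Ideal.Quotient.mk P c ∈ D) {k1 k2 k l : ℕ}
    (h1 : GK D D ⟨_, hc⟩ k1) (h2 : GB D D ⟨_, hc⟩ k2)
    (h3 : UBL S ((A ⧸ P) ⧸ LinearMap.range (LinearMap.lsmul A (A ⧸ P) c)) k l) :
    UBL S (A ⧸ P) (k1 + k) (k2 + l + k) := by
  haveI : IsNoetherianRing (Localization S) := IsLocalization.isNoetherianRing S _ ‹_›
  by_cases hS : ∃ s ∈ S, s ∈ P
  · obtain ⟨s, hs, hsP⟩ := hS
    haveI : Subsingleton (LocalizedModule S (A ⧸ P)) := by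
      rw [IsLocalizedModule.subsingleton_iff S (LocalizedModule.mkLinearMap S (A ⧸ P))]
      intro m
      refine ⟨s, hs, ?_⟩
      rw [Algebra.smul_def, Ideal.Quotient.algebraMap_eq, Ideal.Quotient.eq_zero_iff_mem.2 hsP, zero_mul]
    exact .of_subsingleton S _ _
  push Not at hS
  let W : Submodule A (A ⧸ P) := LinearMap.range (LinearMap.lsmul A (A ⧸ P) c)
  let S' := Algebra.algebraMapSubmonoid (A ⧸ P) S
  let E := Localization S'
  have hS' : S' ≤ nonZeroDivisors (A ⧸ P) := by
    rintro _ ⟨s, hs, rfl⟩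
    exact mem_nonZeroDivisors_of_ne_zero fun h => hS s hs (Ideal.Quotient.eq_zero_iff_mem.1 h)
  have hinj : Function.Injective (algebraMap (A ⧸ P) E) := IsLocalization.injective E hS'
  letI : Algebra D E := ((algebraMap (A ⧸ P) E).comp D.subtype).toAlgebra
  have hDE : ∀ d : D, algebraMap D E d = algebraMap (A ⧸ P) E d := fun d => rfl
  let SD : Submonoid D := S'.comap D.subtype
  have hu : IsUnit (algebraMap (A ⧸ P) E (Ideal.Quotient.mk P t)) :=
    IsLocalization.map_units E (⟨_, t, ht, rfl⟩ : S')
  haveI : IsLocalization SD E := by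
    refine ⟨⟨?_, ?_, ?_⟩⟩
    · rintro ⟨y, hy⟩
      exact IsLocalization.map_units E (⟨_, hy⟩ : S')
    · intro z
      obtain ⟨⟨x, s⟩, hz⟩ := IsLocalization.surj S' z
      obtain ⟨e, he⟩ := hD x
      obtain ⟨e', he'⟩ := hD s
      have hT : ∀ e, Ideal.Quotient.mk P t ^ e ∈ D := fun e => pow_mem htD e
      refine ⟨(⟨_, mul_mem (hT e') he⟩, ⟨⟨_, mul_mem (hT e) he'⟩, ?_⟩), ?_⟩
      · change Ideal.Quotient.mk P t ^ e * (Ideal.Quotient.mk P t ^ e' * s) ∈ S'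
        have h1 : Ideal.Quotient.mk P t ∈ S' := ⟨t, ht, rfl⟩
        exact mul_mem (pow_mem h1 _) (mul_mem (pow_mem h1 _) s.2)
      · simp only [hDE, map_mul, map_pow]
        rw [← hz]; ring
    · intro x y hxy
      have : (x : A ⧸ P) = y := hinj hxy
      exact ⟨1, by rw [Subtype.ext this]⟩
  have g1 := GK.localize SD (E := E) (fun x y hxy => Subtype.ext (hinj hxy)) _ h1
  have g2 := GB.localize SD (E := E) _ h2
  letI : Algebra (Localization S) E := localizationAlgebra S (A ⧸ P)
  haveI : IsScalarTower A (Localization S) E := IsScalarTower.of_algebraMap_eq' (by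
    change _ = (algebraMap (Localization S) E).comp _
    rw [localizationAlgebraMap_def, IsLocalization.map_comp]; rfl)
  let e0 : LocalizedModule S (A ⧸ P) ≃ₗ[A] E := IsLocalizedModule.linearEquiv S
    (LocalizedModule.mkLinearMap S (A ⧸ P)) (IsScalarTower.toAlgHom A (A ⧸ P) E).toLinearMap
  let e : LocalizedModule S (A ⧸ P) ≃ₗ[Localization S] E :=
    LinearEquiv.extendScalarsOfIsLocalization S (Localization S) e0
  have he : ∀ b x, e (b • x) = algebraMap (Localization S) E b * e x := fun b x => by
    rw [← Algebra.smul_def]; exact e.map_smul b x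
  have hc' : algebraMap (Localization S) E (algebraMap A _ c) = algebraMap D E ⟨_, hc⟩ := by
    rw [← IsScalarTower.algebraMap_apply]; rfl
  rw [← hc'] at g1 g2
  have g1' : GK (Localization S) (LocalizedModule S (A ⧸ P)) (algebraMap A _ c) k1 :=
    GK.transfer (algebraMap (Localization S) E) e.toAddEquiv he _ g1
  have g2' : GB (Localization S) (LocalizedModule S (A ⧸ P)) (algebraMap A _ c) k2 :=
    GB.transfer (algebraMap (Localization S) E) e.toAddEquiv he _ g2
  have hex : Function.Exact (LinearMap.lsmul A (A ⧸ P) c) W.mkQ := by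
    intro x
    rw [Submodule.mkQ_apply, Submodule.Quotient.mk_eq_zero]; rfl
  have hinjc : Function.Injective (LinearMap.lsmul A (A ⧸ P) c) := by
    rw [injective_iff_map_eq_zero]
    intro x hx
    rw [LinearMap.lsmul_apply, Algebra.smul_def] at hx
    exact (mul_eq_zero.1 hx).resolve_left fun h => hcP (Ideal.Quotient.eq_zero_iff_mem.1 h)
  have hmul : ∀ x, mapL S (LinearMap.lsmul A (A ⧸ P) c) x = algebraMap A (Localization S) c • x := by
    intro x
    rw [algebraMap_smul]
    have : IsLocalizedModule.map S (LocalizedModule.mkLinearMap S (A ⧸ P))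
        (LocalizedModule.mkLinearMap S (A ⧸ P)) (LinearMap.lsmul A (A ⧸ P) c) =
        LinearMap.lsmul A _ c := by
      apply IsLocalizedModule.linearMap_ext S (LocalizedModule.mkLinearMap S (A ⧸ P))
        (LocalizedModule.mkLinearMap S (A ⧸ P))
      refine LinearMap.ext fun y => ?_
      rw [LinearMap.comp_apply, LinearMap.comp_apply, IsLocalizedModule.map_apply]
      exact (LocalizedModule.mkLinearMap S (A ⧸ P)).map_smul c y
    exact LinearMap.congr_fun this x
  have hker : ∀ x, mapL S W.mkQ x = 0 ↔ ∃ y, algebraMap A (Localization S) c • y = x := by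
    intro x
    rw [mapL_exact S _ _ hex x]
    simp only [Set.mem_range, hmul]
  refine ⟨UARk.cstep (algebraMap A (Localization S) c) ?_ (mapL S W.mkQ)
    (mapL_surj S _ W.mkQ_surjective) (fun x hx => (hker x).1 hx) g1' h3.1,
    BSk.cstep (algebraMap A (Localization S) c) (mapL S W.mkQ)
    (mapL_surj S _ W.mkQ_surjective) hker g2' h3.2 h3.1⟩
  intro x hx
  rw [← hmul] at hx
  exact (injective_iff_map_eq_zero _).1 (mapL_inj S _ hinjc) x hx

end stepL

/-! ### Noether normalization -/
open TensorProduct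

section noetherInt
variable {Z D : Type u} [CommRing Z] [IsDomain Z] [IsPrincipalIdealRing Z] [CharZero Z]
  [CommRing D] [IsDomain D] [Algebra Z D] [FaithfulSMul Z D] [Algebra.FiniteType Z D]

lemma clear_denom (x : FractionRing Z ⊗[Z] D) : ∃ N : Z, N ≠ 0 ∧ ∃ d : D,
    algebraMap Z (FractionRing Z ⊗[Z] D) N * x = 1 ⊗ₜ[Z] d := by
  induction x with
  | zero => exact ⟨1, one_ne_zero, 0, by simp⟩
  | tmul a b =>
    obtain ⟨⟨y, N⟩, h⟩ := IsLocalization.surj (nonZeroDivisors Z) a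
    refine ⟨N, nonZeroDivisors.coe_ne_zero N, y • b, ?_⟩
    simp only at h
    rw [← Algebra.smul_def, TensorProduct.smul_tmul', Algebra.smul_def, mul_comm, h,
      ← TensorProduct.smul_tmul, Algebra.smul_def, mul_one]
  | add x y hx hy =>
    obtain ⟨N, hN, d, hd⟩ := hx
    obtain ⟨N', hN', d', hd'⟩ := hy
    refine ⟨N * N', mul_ne_zero hN hN', N' • d + N • d', ?_⟩
    have key : ∀ (z : Z) (e : D), (1 : FractionRing Z) ⊗ₜ[Z] (z • e) =
        algebraMap Z (FractionRing Z ⊗[Z] D) z * (1 : FractionRing Z) ⊗ₜ[Z] e := fun z e => by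
      rw [← Algebra.smul_def, TensorProduct.tmul_smul]
    rw [TensorProduct.tmul_add, key, key, ← hd, ← hd', map_mul]
    ring

lemma exists_scale {K : Type u} [Field K] {s : ℕ} (u : Fin s → K) (hu : ∀ i, u i ≠ 0) :
    ∃ re : MvPolynomial (Fin s) K ≃ₐ[K] MvPolynomial (Fin s) K,
      ∀ i, re (MvPolynomial.X i) = MvPolynomial.C (u i) * MvPolynomial.X i := by
  let r (v : Fin s → K) : MvPolynomial (Fin s) K →ₐ[K] MvPolynomial (Fin s) K :=
    MvPolynomial.aeval fun i => MvPolynomial.C (v i) * MvPolynomial.X i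
  have hX : ∀ v i, r v (MvPolynomial.X i) = MvPolynomial.C (v i) * MvPolynomial.X i := fun v i =>
    MvPolynomial.aeval_X _ _
  have hc : ∀ v w : Fin s → K, (∀ i, v i * w i = 1) → (r v).comp (r w) = AlgHom.id K _ := by
    intro v w h
    refine MvPolynomial.algHom_ext fun i => ?_
    rw [AlgHom.comp_apply, hX, map_mul, hX, MvPolynomial.algHom_C, MvPolynomial.algebraMap_eq, ← mul_assoc, ← map_mul, mul_comm, mul_comm (w i), h,
      map_one, mul_one, AlgHom.id_apply]
  exact ⟨AlgEquiv.ofAlgHom (r u) (r fun i => (u i)⁻¹) (hc _ _ fun i => mul_inv_cancel₀ (hu i))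
    (hc _ _ fun i => inv_mul_cancel₀ (hu i)), fun i => hX u i⟩

/-- Noether normalization over `Z` after inverting one element of `Z`. -/
lemma exists_normalization {K T : Type u} [Field K] [CommRing T] [Nontrivial T] [Algebra Z K]
    [IsFractionRing Z K] [Algebra K T] [Algebra Z T] [IsScalarTower Z K T] [Algebra.FiniteType K T]
    (j : D →ₐ[Z] T)
    (hcl : ∀ x : T, ∃ N : Z, N ≠ 0 ∧ ∃ d : D, algebraMap Z T N * x = j d) :
    ∃ (s : ℕ) (d : Fin s → D) (g' : MvPolynomial (Fin s) K →+* T), Function.Injective g' ∧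
      g'.IsIntegral ∧ (∀ i, g' (MvPolynomial.X i) = j (d i)) ∧
      ∀ a, g' (MvPolynomial.C a) = algebraMap K T a := by
  obtain ⟨s, g, hg, hgf⟩ := exists_finite_inj_algHom_of_fg K T
  choose N hN d hd using fun i : Fin s => hcl (g (MvPolynomial.X i))
  have hN' : ∀ i, algebraMap Z K (N i) ≠ 0 := fun i =>
    (map_ne_zero_iff _ (IsFractionRing.injective Z K)).2 (hN i)
  obtain ⟨re, hre⟩ := exists_scale (fun i => algebraMap Z K (N i)) hN'
  have hgi : (g : MvPolynomial (Fin s) K →+* T).IsIntegral := RingHom.Finite.to_isIntegral hgf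
  refine ⟨s, d, (g : MvPolynomial (Fin s) K →+* T).comp
    (re : MvPolynomial (Fin s) K →+* MvPolynomial (Fin s) K), hg.comp re.injective,
    RingHom.IsIntegral.trans _ _ (RingHom.isIntegral_of_surjective _ re.surjective) hgi, fun i => ?_,
    fun a => ?_⟩
  · have h1 : g (re (MvPolynomial.X i)) = j (d i) := by
      rw [hre, map_mul, ← hd, MvPolynomial.algHom_C, ← IsScalarTower.algebraMap_apply]
    exact h1
  · have h1 : g (re (MvPolynomial.C a)) = algebraMap K T a := by
      rw [← MvPolynomial.algebraMap_eq, AlgEquiv.commutes, AlgHom.commutes]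
    exact h1

lemma exists_gen_subring_of_tower {P PK T : Type u} [CommRing P] [IsDomain P] [CharZero P] [IsNoetherianRing P]
    [CommRing PK] [CommRing T] [Algebra Z P] [Algebra P D] [IsScalarTower Z P D] [FaithfulSMul P D]
    [Algebra P PK] [Algebra PK T] [Algebra P T] [IsScalarTower P PK T]
    [IsLocalization ((nonZeroDivisors Z).map (algebraMap Z P)) PK] (ir : D →ₐ[P] T)
    (hinj : Function.Injective ir) (hint : (algebraMap PK T).IsIntegral) {m : ℕ} (hm : GD P m) :
    ∃ (D0 : Subring D) (N : Z), N ≠ 0 ∧ algebraMap Z D N ∈ D0 ∧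
    (∀ x : D, ∃ e : ℕ, algebraMap Z D N ^ e * x ∈ D0) ∧ IsNoetherianRing D0 ∧ GEN D0 := by
  have hint' : ∀ x : D, ∃ N : Z, N ≠ 0 ∧ IsIntegral P (algebraMap Z D N * x) := by
    intro x
    obtain ⟨⟨_, N, hN, rfl⟩, hm⟩ := IsIntegral.exists_multiple_integral_of_isLocalization
      ((nonZeroDivisors Z).map (algebraMap Z P)) (Rₘ := PK)
      (ir x) (hint (ir x))
    refine ⟨N, nonZeroDivisors.ne_zero hN, ?_⟩
    rw [← isIntegral_algHom_iff ir hinj]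
    convert hm using 1
    rw [map_mul, Submonoid.smul_def, Algebra.smul_def]
    congr 1
    rw [← ir.commutes]
    congr 1
    exact IsScalarTower.algebraMap_apply Z P D N
  choose Nx hNx hNi using hint'
  obtain ⟨G, hG⟩ := (inferInstance : Algebra.FiniteType Z D)
  let NN := ∏ x ∈ G, Nx x
  have hPint : ∀ z : Z, IsIntegral P (algebraMap Z D z) := fun z => by
    have : algebraMap Z D z = algebraMap P D (algebraMap Z P z) := IsScalarTower.algebraMap_apply Z P D z
    rw [this]; exact isIntegral_algebraMap
  have hNN : ∀ x ∈ G, IsIntegral P (algebraMap Z D NN * x) := by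
    intro x hx
    obtain ⟨q, hq⟩ := Finset.dvd_prod_of_mem Nx hx
    have : algebraMap Z D NN * x = algebraMap Z D q * (algebraMap Z D (Nx x) * x) := by
      change algebraMap Z D (∏ x ∈ G, Nx x) * x = _
      rw [hq, map_mul]; ring
    rw [this]; exact (hPint q).mul (hNi x)
  let D0 : Subalgebra P D := Algebra.adjoin P ((fun x => algebraMap Z D NN * x) '' (G : Set D))
  haveI hfin : Module.Finite P D0 := Algebra.finite_adjoin_of_finite_of_isIntegral
    (G.finite_toSet.image _) (by rintro _ ⟨x, hx, rfl⟩; exact hNN x hx)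
  have hZ0 : ∀ z : Z, algebraMap Z D z ∈ D0 := fun z => by
    have : algebraMap Z D z = algebraMap P D (algebraMap Z P z) := IsScalarTower.algebraMap_apply Z P D z
    rw [this]; exact D0.algebraMap_mem _
  refine ⟨D0.toSubring, NN, Finset.prod_ne_zero_iff.2 fun x _ => hNx x, hZ0 NN, ?_, ?_, ?_⟩
  · intro x
    have hx : x ∈ Algebra.adjoin Z (G : Set D) := by rw [hG]; trivial
    change ∃ e : ℕ, _ ∈ D0
    induction hx using Algebra.adjoin_induction with
    | mem x hx => exact ⟨1, by rw [pow_one]; exact Algebra.subset_adjoin ⟨x, hx, rfl⟩⟩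
    | algebraMap z => exact ⟨0, by rw [pow_zero, one_mul]; exact hZ0 z⟩
    | add x y _ _ hx hy =>
      obtain ⟨e, he⟩ := hx
      obtain ⟨e', he'⟩ := hy
      refine ⟨e + e', ?_⟩
      have : algebraMap Z D NN ^ (e + e') * (x + y) = algebraMap Z D NN ^ e' * (algebraMap Z D NN ^ e * x)
        + algebraMap Z D NN ^ e * (algebraMap Z D NN ^ e' * y) := by ring
      rw [this]
      exact add_mem (mul_mem (pow_mem (hZ0 _) _) he) (mul_mem (pow_mem (hZ0 _) _) he')
    | mul x y _ _ hx hy =>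
      obtain ⟨e, he⟩ := hx
      obtain ⟨e', he'⟩ := hy
      refine ⟨e + e', ?_⟩
      have : algebraMap Z D NN ^ (e + e') * (x * y) = (algebraMap Z D NN ^ e * x) *
        (algebraMap Z D NN ^ e' * y) := by ring
      rw [this]
      exact mul_mem he he'
  · exact (IsNoetherianRing.of_finite P D0 : IsNoetherianRing D0)
  · haveI : FaithfulSMul P D0 := by
      rw [faithfulSMul_iff_algebraMap_injective]
      intro a b hab
      exact FaithfulSMul.algebraMap_injective P D (congrArg Subtype.val hab)
    exact GEN.of_finite_over (A := P) (D := D0) hm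

lemma exists_gen_subring_aux {K T : Type u} [Field K] [CommRing T] [Nontrivial T] [Algebra Z K]
    [IsFractionRing Z K] [Algebra K T] [Algebra Z T] [IsScalarTower Z K T] [Algebra.FiniteType K T]
    (j : D →ₐ[Z] T) (hinj : Function.Injective j)
    (hcl : ∀ x : T, ∃ N : Z, N ≠ 0 ∧ ∃ d : D, algebraMap Z T N * x = j d) : ∃ (D0 : Subring D) (N : Z), N ≠ 0 ∧ algebraMap Z D N ∈ D0 ∧
    (∀ x : D, ∃ e : ℕ, algebraMap Z D N ^ e * x ∈ D0) ∧ IsNoetherianRing D0 ∧ GEN D0 := by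
  obtain ⟨s, d, g', hg', hgf', hgX, hgC⟩ := exists_normalization (K := K) j hcl
  let P := MvPolynomial (Fin s) Z
  let ρ : P →+* MvPolynomial (Fin s) K := MvPolynomial.map (algebraMap Z K)
  have hρ : Function.Injective ρ := MvPolynomial.map_injective _ (IsFractionRing.injective Z K)
  let φ : P →ₐ[Z] D := MvPolynomial.aeval d
  have hφ : ∀ q : P, j (φ q) = g' (ρ q) := by
    have : j.toRingHom.comp φ.toRingHom = g'.comp ρ := by
      apply MvPolynomial.ringHom_ext
      · intro z
        simp only [RingHom.comp_apply, ρ, MvPolynomial.map_C, hgC]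
        rw [← IsScalarTower.algebraMap_apply]
        change j (φ (MvPolynomial.C z)) = _
        rw [MvPolynomial.algHom_C, j.commutes]
      · intro i
        simp only [RingHom.comp_apply, ρ, MvPolynomial.map_X, hgX]
        change j (φ (MvPolynomial.X i)) = _
        rw [MvPolynomial.aeval_X]
    exact fun q => RingHom.congr_fun this q
  have hφi : Function.Injective φ := by
    intro a b hab
    have := congrArg j hab
    simp only [hφ] at this
    exact hρ (hg' this)
  letI : Algebra P D := φ.toRingHom.toAlgebra
  haveI : IsScalarTower Z P D := IsScalarTower.of_algebraMap_eq fun z => (φ.commutes z).symm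
  letI aPT : Algebra P T := (g'.comp ρ).toAlgebra
  letI aKT : Algebra (MvPolynomial (Fin s) K) T := g'.toAlgebra
  letI aPK : Algebra P (MvPolynomial (Fin s) K) := ρ.toAlgebra
  haveI : IsScalarTower P (MvPolynomial (Fin s) K) T := IsScalarTower.of_algebraMap_eq' rfl
  haveI hloc : IsLocalization ((nonZeroDivisors Z).map (algebraMap Z P)) (MvPolynomial (Fin s) K) :=
    MvPolynomial.isLocalization (nonZeroDivisors Z) K
  haveI : FaithfulSMul P D := (faithfulSMul_iff_algebraMap_injective P D).2 hφi
  let ir : D →ₐ[P] T := { j.toRingHom with commutes' := hφ }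
  have h1 : GDa P (1 + s) := GDa.mvPolynomial (GDa.of_pid Z) s
  exact exists_gen_subring_of_tower (Z := Z) (PK := MvPolynomial (Fin s) K) ir hinj hgf' h1.gd

/-- A finitely generated domain over `Z` agrees, after inverting one nonzero element of `Z`, with a
subring finite over a polynomial ring. -/
lemma exists_gen_subring : ∃ (D0 : Subring D) (N : Z), N ≠ 0 ∧ algebraMap Z D N ∈ D0 ∧
    (∀ x : D, ∃ e : ℕ, algebraMap Z D N ^ e * x ∈ D0) ∧ IsNoetherianRing D0 ∧ GEN D0 := by
  have hinj : Function.Injective (Algebra.TensorProduct.includeRight : D →ₐ[Z] FractionRing Z ⊗[Z] D) :=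
    Algebra.TensorProduct.includeRight_injective (IsFractionRing.injective Z (FractionRing Z))
  haveI : Nontrivial (FractionRing Z ⊗[Z] D) := hinj.nontrivial
  exact exists_gen_subring_aux (K := FractionRing Z) _ hinj clear_denom

end noetherInt

end UBS

namespace UBS

/-! ### Generic bounds -/

lemma _root_.IsIntegralOverIdeal.map {A B : Type*} [CommRing A] [CommRing B] (f : A →+* B) {J : Ideal A} {x : A}
    (h : IsIntegralOverIdeal J x) : IsIntegralOverIdeal (J.map f) (f x) := by
  obtain ⟨n, hn, a, ha, he⟩ := h
  refine ⟨n, hn, fun i => f (a i), fun i h1 h2 => ?_, ?_⟩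
  · rw [← Ideal.map_pow]; exact Ideal.mem_map_of_mem f (ha i h1 h2)
  · have := congrArg f he
    simpa only [map_add, map_pow, map_sum, map_mul, map_zero] using this

lemma intClosure_map_le {A B : Type*} [CommRing A] [CommRing B] (f : A →+* B) (J : Ideal A) :
    J.intClosure.map f ≤ (J.map f).intClosure := by
  unfold Ideal.intClosure
  rw [Ideal.map_span, Ideal.span_le]
  rintro _ ⟨x, hx, rfl⟩
  exact Ideal.subset_span (hx.map f)

section generic
variable {Z A : Type u} [CommRing Z] [IsDomain Z] [IsPrincipalIdealRing Z] [CharZero Z]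
  [CommRing A] [Algebra Z A] [Algebra.FiniteType Z A]

/-- Generic uniform bounds: after inverting the divisors of one nonzero element of `Z`, both
bounds hold for a given finite module. -/
theorem exists_UBL [IsNoetherianRing A] (N : Type u) [AddCommGroup N] [Module A N] [Module.Finite A N] :
    ∃ a : Z, a ≠ 0 ∧ ∃ k l, ∀ S : Submonoid A, (∀ z, z ∣ a → algebraMap Z A z ∈ S) → UBL S N k l := by
  refine devissage (fun (N : Type u) [AddCommGroup N] [Module A N] => ∃ a : Z, a ≠ 0 ∧ ∃ k l,
    ∀ S : Submonoid A, (∀ z, z ∣ a → algebraMap Z A z ∈ S) → UBL S N k l) ?_ ?_ ?_ ?_ N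
  · intro N _ _ _
    refine ⟨1, one_ne_zero, 0, 0, fun S _ => ?_⟩
    haveI : Subsingleton (LocalizedModule S N) := by
      rw [IsLocalizedModule.subsingleton_iff S (LocalizedModule.mkLinearMap S N)]
      exact fun m => ⟨1, S.one_mem, Subsingleton.elim _ _⟩
    exact UBL.of_subsingleton S _ _
  · rintro N N' _ _ _ _ e ⟨a, ha, k, l, h⟩
    exact ⟨a, ha, k, l, fun S hS => (h S hS).of_equiv S e⟩
  · rintro N₁ N₂ N₃ _ _ _ _ _ _ f g hf hg hfg ⟨a, ha, k, l, h⟩ ⟨a', ha', k', l', h'⟩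
    exact ⟨a * a', mul_ne_zero ha ha', _, _, fun S hS => UBL.ext S f g hf hg hfg
      (h S fun z hz => hS z (hz.mul_right _)) (h' S fun z hz => hS z (hz.mul_left _))⟩
  · intro P hP h3
    by_cases hz : ∃ a : Z, a ≠ 0 ∧ algebraMap Z A a ∈ P
    · obtain ⟨a, ha, haP⟩ := hz
      refine ⟨a, ha, 0, 0, fun S hS => ?_⟩
      haveI : Subsingleton (LocalizedModule S (A ⧸ P)) := by
        rw [IsLocalizedModule.subsingleton_iff S (LocalizedModule.mkLinearMap S (A ⧸ P))]
        refine fun m => ⟨algebraMap Z A a, hS a dvd_rfl, ?_⟩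
        rw [Algebra.smul_def, Ideal.Quotient.algebraMap_eq, Ideal.Quotient.eq_zero_iff_mem.2 haP, zero_mul]
      exact UBL.of_subsingleton S _ _
    · haveI : FaithfulSMul Z (A ⧸ P) := by
        rw [faithfulSMul_iff_algebraMap_injective, injective_iff_map_eq_zero]
        intro z h
        by_contra hz0
        refine hz ⟨z, hz0, ?_⟩
        rwa [← Ideal.Quotient.eq_zero_iff_mem]
      haveI : Algebra.FiniteType Z (A ⧸ P) :=
        Algebra.FiniteType.of_surjective (Ideal.Quotient.mkₐ Z P) (Ideal.Quotient.mkₐ_surjective Z P)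
      obtain ⟨D, t, ht, htD, hD, hnoeth, ⟨c, hc⟩, hc0, ⟨k1, h1⟩, ⟨k2, h2⟩⟩ :=
        exists_gen_subring (Z := Z) (D := A ⧸ P)
      obtain ⟨c, rfl⟩ := Ideal.Quotient.mk_surjective c
      have hcP : c ∉ P := fun h => hc0 (Subtype.ext (Ideal.Quotient.eq_zero_iff_mem.2 h))
      obtain ⟨a, ha, k, l, h⟩ := h3 ((A ⧸ P) ⧸ LinearMap.range (LinearMap.lsmul A (A ⧸ P) c))
        (by
          rintro x hx ⟨y⟩
          obtain ⟨y, rfl⟩ := Ideal.Quotient.mk_surjective y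
          refine (Submodule.Quotient.mk_eq_zero _).2 ?_
          change x • (Ideal.Quotient.mk P y) ∈ _
          rw [Algebra.smul_def, Ideal.Quotient.algebraMap_eq, Ideal.Quotient.eq_zero_iff_mem.2 hx, zero_mul]
          exact zero_mem _)
        ⟨c, hcP, by
          rintro ⟨y⟩
          exact (Submodule.Quotient.mk_eq_zero _).2 ⟨y, rfl⟩⟩
      exact ⟨t * a, mul_ne_zero ht ha, _, _, fun S hS => UBL.of_subring S P D (algebraMap Z A t)
        (hS t (Dvd.intro _ rfl)) hD htD c hcP hc h1 h2 (h S fun z hz => hS z (hz.mul_left _))⟩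

/-- The conclusion of `exists_UBL` for `N = A`, without localizations. -/
theorem exists_generic_bound : ∃ a : Z, a ≠ 0 ∧ ∃ k, ∀ J : Ideal A, ∀ n, ∀ x ∈ J.intClosure ^ n,
    ∃ e : ℕ, algebraMap Z A a ^ e * x ∈ J ^ (n - k) := by
  haveI : IsNoetherianRing A := Algebra.FiniteType.isNoetherianRing Z A
  obtain ⟨a, ha, _, k, h⟩ := exists_UBL (Z := Z) (A := A) A
  let S : Submonoid A :=
    { carrier := {x | ∃ e : ℕ, x ∣ algebraMap Z A a ^ e}
      one_mem' := ⟨0, one_dvd _⟩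
      mul_mem' := by
        rintro x y ⟨e, he⟩ ⟨e', he'⟩
        exact ⟨e + e', by rw [pow_add]; exact mul_dvd_mul he he'⟩ }
  have hb := (h S fun z hz => ⟨1, by rw [pow_one]; exact map_dvd _ hz⟩).2
  haveI : IsNoetherianRing (Localization S) := IsLocalization.isNoetherianRing S _ ‹_›
  have e : LocalizedModule S A ≃ₗ[Localization S] Localization S :=
    (IsLocalizedModule.iso S (Algebra.linearMap A (Localization S))).extendScalarsOfIsLocalization S _
  have hI := intDimBound_of_BSk (hb.of_equiv e.symm)
  refine ⟨a, ha, k, fun J n x hx => ?_⟩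
  by_cases hn : k ≤ n
  · have h1 : algebraMap A (Localization S) x ∈ (J.map (algebraMap A (Localization S))) ^ (n - k) := by
      refine hI _ n hn ?_
      refine Ideal.pow_right_mono ?_ n (?_ : _ ∈ (J.intClosure.map (algebraMap A (Localization S))) ^ n)
      · exact intClosure_map_le _ J
      · rw [← Ideal.map_pow]; exact Ideal.mem_map_of_mem _ hx
    rw [← Ideal.map_pow, IsLocalization.algebraMap_mem_map_algebraMap_iff S] at h1
    obtain ⟨s, ⟨e, y, hy⟩, h2⟩ := h1
    refine ⟨e, ?_⟩
    rw [hy, mul_comm s, mul_assoc]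
    exact Ideal.mul_mem_left _ _ h2
  · refine ⟨0, ?_⟩
    rw [Nat.sub_eq_zero_of_le (by omega), pow_zero (M := Ideal A), Ideal.one_eq_top]; trivial
end generic

/-! ### Homogenization and finitely generated algebras -/
open Polynomial

section homog
variable {B A : Type u} [CommRing B] [CommRing A] [Algebra B A]

/-- The subalgebra of `A[X]` generated over `B` by `X` and the `x * X`, `x ∈ G`. -/
noncomputable def homA (B : Type u) {A : Type u} [CommRing B] [CommRing A] [Algebra B A] (G : Finset A) : Subalgebra B A[X] :=
  Algebra.adjoin B (insert X ((fun x => C x * X) '' (G : Set A)))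

variable (G : Finset A)

lemma X_mem_homA : (X : A[X]) ∈ homA B G := Algebra.subset_adjoin (Set.mem_insert _ _)

lemma coeff_zero_homA (f : A[X]) (hf : f ∈ homA B G) : ∃ b : B, algebraMap B A b = f.coeff 0 := by
  have h : homA B G ≤ (⊥ : Subalgebra B A).comap ((Polynomial.aeval (0 : A)).restrictScalars B) := by
    refine Algebra.adjoin_le ?_
    rintro _ (rfl | ⟨x, _, rfl⟩)
    · change Polynomial.aeval (0 : A) X ∈ (⊥ : Subalgebra B A)
      rw [aeval_X]; exact zero_mem _
    · change Polynomial.aeval (0 : A) (C x * X) ∈ (⊥ : Subalgebra B A)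
      rw [map_mul, aeval_X, mul_zero]; exact zero_mem _
  have h1 : Polynomial.aeval (0 : A) f ∈ (⊥ : Subalgebra B A) := h hf
  obtain ⟨b, hb⟩ := Algebra.mem_bot.1 h1
  refine ⟨b, ?_⟩
  rw [hb, coeff_zero_eq_aeval_zero]

lemma exists_C_mul_mem (hG : Algebra.adjoin B (G : Set A) = ⊤) (y : A) :
    ∃ M : ℕ, C y * X ^ M ∈ homA B G := by
  have hy : y ∈ Algebra.adjoin B (G : Set A) := by rw [hG]; trivial
  induction hy using Algebra.adjoin_induction with
  | mem x hx => exact ⟨1, by rw [pow_one]; exact Algebra.subset_adjoin (Or.inr ⟨x, hx, rfl⟩)⟩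
  | algebraMap z =>
    exact ⟨0, by rw [pow_zero, mul_one]; exact (homA B G).algebraMap_mem z⟩
  | add x y _ _ hx hy =>
    obtain ⟨e, he⟩ := hx
    obtain ⟨e', he'⟩ := hy
    refine ⟨e + e', ?_⟩
    have : (C (x + y) * X ^ (e + e') : A[X]) = X ^ e' * (C x * X ^ e) + X ^ e * (C y * X ^ e') := by
      rw [C_add]; ring
    rw [this]
    exact add_mem (mul_mem (pow_mem (X_mem_homA G) _) he) (mul_mem (pow_mem (X_mem_homA G) _) he')
  | mul x y _ _ hx hy =>
    obtain ⟨e, he⟩ := hx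
    obtain ⟨e', he'⟩ := hy
    refine ⟨e + e', ?_⟩
    have : (C (x * y) * X ^ (e + e') : A[X]) = (C x * X ^ e) * (C y * X ^ e') := by
      rw [C_mul]; ring
    rw [this]
    exact mul_mem he he'

section deh
variable {H : Type u} [CommRing H] {v : H →+* A[X]}

/-- `v : H → A[X]` has image containing `X` and a multiple `a * X ^ M` of every `a ∈ A`. -/
def HomCond (v : H →+* A[X]) : Prop :=
  (∃ ξ, v ξ = X) ∧ ∀ y : A, ∃ M : ℕ, ∃ f, v f = C y * X ^ M

lemma deh_mono (hv : HomCond v) {I : Ideal H} {a : A} {M M' : ℕ} (h : M ≤ M')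
    (hM : ∃ f ∈ I, v f = C a * X ^ M) : ∃ f ∈ I, v f = C a * X ^ M' := by
  obtain ⟨f, hf, he⟩ := hM
  obtain ⟨ξ, hξ⟩ := hv.1
  refine ⟨ξ ^ (M' - M) * f, I.mul_mem_left _ hf, ?_⟩
  obtain ⟨t, rfl⟩ := Nat.exists_eq_add_of_le h
  rw [map_mul, map_pow, he, hξ, Nat.add_sub_cancel_left, pow_add]
  ring

/-- Dehomogenization: the `a ∈ A` such that `a * X ^ M ∈ v I` for some `M`. -/
def deh (hv : HomCond v) (I : Ideal H) : Ideal A where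
  carrier := {a | ∃ M : ℕ, ∃ f ∈ I, v f = C a * X ^ M}
  zero_mem' := ⟨0, 0, I.zero_mem, by simp⟩
  add_mem' := by
    rintro a b ⟨M, h⟩ ⟨M', h'⟩
    obtain ⟨f, hf, he⟩ := deh_mono hv (le_max_left M M') h
    obtain ⟨f', hf', he'⟩ := deh_mono hv (le_max_right M M') h'
    exact ⟨_, f + f', I.add_mem hf hf', by rw [map_add, he, he', C_add, add_mul]⟩
  smul_mem' := by
    rintro y a ⟨M, f, hf, he⟩
    obtain ⟨M', g, h'⟩ := hv.2 y
    refine ⟨M' + M, g * f, I.mul_mem_left _ hf, ?_⟩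
    rw [map_mul, he, h', smul_eq_mul, C_mul]; ring

lemma deh_mul (hv : HomCond v) (I I' : Ideal H) : deh hv I * deh hv I' ≤ deh hv (I * I') := by
  rw [Ideal.mul_le]
  rintro a ⟨M, f, hf, he⟩ b ⟨M', f', hf', he'⟩
  refine ⟨M + M', f * f', Ideal.mul_mem_mul hf hf', ?_⟩
  rw [map_mul, he, he', C_mul]; ring

lemma deh_pow (hv : HomCond v) (I : Ideal H) (n : ℕ) : deh hv I ^ n ≤ deh hv (I ^ n) := by
  induction n with
  | zero =>
    rw [pow_zero, pow_zero]
    exact fun a _ => by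
      obtain ⟨M, g, h⟩ := hv.2 a
      exact ⟨M, g, by rw [Ideal.one_eq_top]; trivial, h⟩
  | succ n ih =>
    rw [pow_succ, pow_succ]
    exact (Ideal.mul_mono_left ih).trans (deh_mul hv _ _)

/-- The elements whose image under `v` has all its coefficients in `J`. -/
noncomputable def homI (v : H →+* A[X]) (J : Ideal A) : Ideal H := (J.map (C : A →+* A[X])).comap v

lemma le_deh_homI (hv : HomCond v) (J : Ideal A) : J ≤ deh hv (homI v J) := by
  intro a ha
  obtain ⟨M, g, h⟩ := hv.2 a
  refine ⟨M, g, ?_, h⟩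
  change v g ∈ J.map (C : A →+* A[X])
  rw [h]
  exact Ideal.mul_mem_right _ _ (Ideal.mem_map_of_mem C ha)

lemma coeff_mem_of_homI (J : Ideal A) (n : ℕ) {f : H} (hf : f ∈ homI v J ^ n) (i : ℕ) :
    (v f).coeff i ∈ J ^ n := by
  have h1 : v f ∈ (J.map (C : A →+* A[X])) ^ n := Ideal.le_comap_pow v n hf
  rw [← Ideal.map_pow] at h1
  exact Ideal.mem_map_C_iff.1 h1 i

lemma intClosure_le_deh (hv : HomCond v) (hinj : Function.Injective v) (J : Ideal A) :
    J.intClosure ≤ deh hv (homI v J).intClosure := by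
  unfold Ideal.intClosure
  rw [Ideal.span_le]
  rintro y ⟨N, hN, a, ha, he⟩
  obtain ⟨My, gy, hMy⟩ := hv.2 y
  have h1 : ∀ i ∈ Finset.Icc 1 N, ∃ M : ℕ, ∃ f ∈ homI v J ^ i, v f = C (a i) * X ^ M := by
    intro i hi
    rw [Finset.mem_Icc] at hi
    exact deh_pow hv _ i (Ideal.pow_right_mono (le_deh_homI hv J) i (ha i hi.1 hi.2))
  choose! M hM using h1
  generalize hM0 : max My (∑ i ∈ Finset.Icc 1 N, M i) = M0
  have h2 : ∀ i ∈ Finset.Icc 1 N, ∃ f ∈ homI v J ^ i, v f = C (a i) * X ^ (M0 * i) := by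
    intro i hi
    refine deh_mono hv ?_ (hM i hi)
    have h3 := Finset.single_le_sum (f := M) (fun _ _ => Nat.zero_le _) hi
    have h4 := le_max_right My (∑ i ∈ Finset.Icc 1 N, M i)
    rw [hM0] at h4
    exact (h3.trans h4).trans (Nat.le_mul_of_pos_right _ (Finset.mem_Icc.1 hi).1)
  choose! g hg hge using h2
  obtain ⟨f, -, hf⟩ := deh_mono hv (I := (⊤ : Ideal H)) (a := y)
    ((le_max_left My (∑ i ∈ Finset.Icc 1 N, M i)).trans hM0.le) ⟨gy, trivial, hMy⟩
  refine ⟨M0, f, Ideal.subset_span ⟨N, hN, g, fun i h1 h2 => hg i (Finset.mem_Icc.2 ⟨h1, h2⟩), ?_⟩, hf⟩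
  refine hinj ?_
  have key : (C (y ^ N + ∑ i ∈ Finset.Icc 1 N, a i * y ^ (N - i)) * X ^ (M0 * N) : A[X]) = 0 := by
    rw [he]; simp
  rw [map_zero, ← key, C_add, add_mul, map_add, map_pow, hf, map_sum, map_sum, Finset.sum_mul]
  congr 1
  · rw [mul_pow, C_pow, pow_mul]
  · refine Finset.sum_congr rfl fun i hi => ?_
    rw [map_mul, map_pow, hge i hi, hf, C_mul, C_pow, mul_pow, ← pow_mul]
    have : M0 * N = M0 * i + M0 * (N - i) := by
      rw [← mul_add]; congr 1; have := (Finset.mem_Icc.1 hi).2; omega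
    rw [this, pow_add]; ring

/-- Uniform bounds for noetherian local rings yield bounds for finitely generated algebras, locally on
the base: the local ring used is the localization of `H` at the elements with constant coefficient in
the image of `q`. -/
theorem exists_bound_at_prime_aux (hloc : ∀ (L : Type u) [CommRing L] [IsNoetherianRing L] [IsLocalRing L],
      ∃ k, IntDimBound L k) [IsNoetherianRing H] (hv : HomCond v) (hinj : Function.Injective v)
    (h0 : ∀ f, ∃ b : B, algebraMap B A b = (v f).coeff 0) (q : Ideal B) [hq : q.IsPrime]
    (hker : RingHom.ker (algebraMap B A) ≤ q) :
    ∃ k, ∀ J : Ideal A, ∀ n, k ≤ n → ∀ x ∈ J.intClosure ^ n, ∃ s ∉ q, algebraMap B A s * x ∈ J ^ (n - k) := by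
  let m : Ideal H :=
    { carrier := {f | ∃ b ∈ q, algebraMap B A b = (v f).coeff 0}
      zero_mem' := ⟨0, q.zero_mem, by simp⟩
      add_mem' := by
        rintro f g ⟨b, hb, h⟩ ⟨b', hb', h'⟩
        exact ⟨b + b', q.add_mem hb hb', by rw [map_add, h, h', map_add, coeff_add]⟩
      smul_mem' := by
        rintro f g ⟨b, hb, h⟩
        obtain ⟨c, hc⟩ := h0 f
        exact ⟨c * b, q.mul_mem_left _ hb, by rw [map_mul, hc, h, smul_eq_mul, map_mul, mul_coeff_zero]⟩ }
  haveI hm : m.IsPrime := by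
    refine ⟨?_, ?_⟩
    · rw [Ne, Ideal.eq_top_iff_one]
      rintro ⟨b, hb, h⟩
      refine hq.ne_top ((Ideal.eq_top_iff_one _).2 ?_)
      have : 1 - b ∈ RingHom.ker (algebraMap B A) := by
        rw [RingHom.mem_ker, map_sub, h, map_one, map_one, coeff_one_zero, sub_self]
      have := q.add_mem (hker this) hb
      rwa [sub_add_cancel] at this
    · rintro f g ⟨d, hd, h⟩
      obtain ⟨b, hb⟩ := h0 f
      obtain ⟨c, hc⟩ := h0 g
      have : b * c - d ∈ RingHom.ker (algebraMap B A) := by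
        rw [RingHom.mem_ker, map_sub, h, map_mul, hb, hc, map_mul, mul_coeff_zero, sub_self]
      have := q.add_mem (hker this) hd
      rw [sub_add_cancel] at this
      exact (hq.mem_or_mem this).imp (fun h => ⟨b, h, hb⟩) fun h => ⟨c, h, hc⟩
  haveI : IsNoetherianRing (Localization.AtPrime m) := IsLocalization.isNoetherianRing m.primeCompl _ ‹_›
  obtain ⟨k, hk⟩ := hloc (Localization.AtPrime m)
  refine ⟨k, fun J n hn x hx => ?_⟩
  obtain ⟨M, f, hf, hfe⟩ := deh_pow hv _ n (Ideal.pow_right_mono (intClosure_le_deh hv hinj J) n hx)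
  let r := algebraMap H (Localization.AtPrime m)
  have h1 : r f ∈ ((homI v J).map r) ^ (n - k) := by
    refine hk _ n hn (Ideal.pow_right_mono (intClosure_map_le r _) n ?_)
    rw [← Ideal.map_pow]; exact Ideal.mem_map_of_mem _ hf
  rw [← Ideal.map_pow, IsLocalization.algebraMap_mem_map_algebraMap_iff m.primeCompl] at h1
  obtain ⟨g, hg, h2⟩ := h1
  obtain ⟨b, hb⟩ := h0 g
  refine ⟨b, fun hbq => hg ⟨b, hbq, hb⟩, ?_⟩
  have h3 := coeff_mem_of_homI J _ h2 M
  rwa [map_mul, hfe, ← mul_assoc, coeff_mul_X_pow', if_pos le_rfl, Nat.sub_self, coeff_mul_C,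
    ← hb] at h3
end deh

theorem exists_bound_at_prime (hloc : ∀ (L : Type u) [CommRing L] [IsNoetherianRing L] [IsLocalRing L],
      ∃ k, IntDimBound L k) [IsNoetherianRing B] [hft : Algebra.FiniteType B A] (q : Ideal B) [hq : q.IsPrime] :
    ∃ k, ∀ J : Ideal A, ∀ n, k ≤ n → ∀ x ∈ J.intClosure ^ n, ∃ s ∉ q, algebraMap B A s * x ∈ J ^ (n - k) := by
  classical
  by_cases hker : RingHom.ker (algebraMap B A) ≤ q
  swap
  · obtain ⟨s, hs, hsq⟩ := SetLike.not_le_iff_exists.1 hker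
    exact ⟨0, fun J n _ x _ => ⟨s, hsq, by rw [(hs : algebraMap B A s = 0), zero_mul]; exact zero_mem _⟩⟩
  obtain ⟨G, hG⟩ := hft
  haveI : Algebra.FiniteType B (homA B G) :=
    (homA B G).fg_iff_finiteType.1 ⟨insert X (G.image fun x => C x * X), by
      rw [Finset.coe_insert, Finset.coe_image]; rfl⟩
  haveI : IsNoetherianRing (homA B G) := Algebra.FiniteType.isNoetherianRing B _
  refine exists_bound_at_prime_aux (H := homA B G) (v := (homA B G).toSubring.subtype) hloc
    ⟨⟨⟨X, X_mem_homA G⟩, rfl⟩, fun y => ?_⟩ Subtype.val_injective (fun f => coeff_zero_homA G f f.2) q hker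
  obtain ⟨M, h⟩ := exists_C_mul_mem G hG y
  exact ⟨M, ⟨_, h⟩, rfl⟩

theorem intDimBound_of_finiteType_local (hloc : ∀ (L : Type u) [CommRing L] [IsNoetherianRing L] [IsLocalRing L],
      ∃ k, IntDimBound L k) [IsNoetherianRing B] [IsLocalRing B] [Algebra.FiniteType B A] :
    ∃ k, IntDimBound A k := by
  obtain ⟨k, hk⟩ := exists_bound_at_prime (A := A) hloc (IsLocalRing.maximalIdeal B)
  refine ⟨k, fun J n hn x hx => ?_⟩
  obtain ⟨s, hs, h⟩ := hk J n hn x hx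
  have hu : IsUnit s := by rwa [IsLocalRing.mem_maximalIdeal, mem_nonunits_iff, not_not] at hs
  exact (Ideal.unit_mul_mem_iff_mem _ (hu.map (algebraMap B A))).1 h

theorem intDimBound_of_finiteType_pid (hloc : ∀ (L : Type u) [CommRing L] [IsNoetherianRing L] [IsLocalRing L],
      ∃ k, IntDimBound L k) [IsDomain B] [IsPrincipalIdealRing B] [CharZero B] [Algebra.FiniteType B A] :
    ∃ k, IntDimBound A k := by
  obtain ⟨a, ha, k0, h0⟩ := exists_generic_bound (Z := B) (A := A)
  have hfin : (Ideal.span {a}).minimalPrimes.Finite := Ideal.finite_minimalPrimes_of_isNoetherianRing B _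
  have h1 : ∀ q ∈ (Ideal.span {a}).minimalPrimes, ∃ k, ∀ J : Ideal A, ∀ n, k ≤ n → ∀ x ∈ J.intClosure ^ n,
      ∃ s ∉ q, algebraMap B A s * x ∈ J ^ (n - k) := by
    intro q hq
    haveI : q.IsPrime := hq.1.1
    exact exists_bound_at_prime hloc q
  choose! k hk using h1
  let K := max k0 (∑ q ∈ hfin.toFinset, k q)
  refine ⟨K, fun J n hn x hx => ?_⟩
  let I : Ideal B :=
    { carrier := {s | algebraMap B A s * x ∈ J ^ (n - K)}
      zero_mem' := by simp
      add_mem' := fun {s t} hs ht => by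
        change algebraMap B A (s + t) * x ∈ J ^ (n - K)
        rw [map_add, add_mul]; exact add_mem hs ht
      smul_mem' := fun s t ht => by
        change algebraMap B A (s * t) * x ∈ J ^ (n - K)
        rw [map_mul, mul_assoc]; exact Ideal.mul_mem_left _ _ ht }
  suffices h : I = ⊤ by
    have h1 : (1 : B) ∈ I := by rw [h]; trivial
    have h2 : algebraMap B A 1 * x ∈ J ^ (n - K) := h1
    rwa [map_one, one_mul] at h2
  by_contra hI
  obtain ⟨q, hq, hIq⟩ := Ideal.exists_le_maximal I hI
  have haq : a ∈ q := by
    obtain ⟨e, he⟩ := h0 J n x hx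
    refine hq.isPrime.mem_of_pow_mem e (hIq ?_)
    change algebraMap B A (a ^ e) * x ∈ J ^ (n - K)
    rw [map_pow]
    exact Ideal.pow_le_pow_right (Nat.sub_le_sub_left (le_max_left _ _) n) he
  obtain ⟨q', hq', hle⟩ := Ideal.exists_minimalPrimes_le ((Ideal.span_singleton_le_iff_mem q).2 haq)
  have hq'0 : q' ≠ ⊥ := by
    rintro rfl
    exact ha ((Ideal.span_singleton_le_iff_mem _).1 hq'.1.2)
  haveI := hq'.1.1
  have hqq : q' = q := (Ring.DimensionLEOne.maximalOfPrime hq'0 hq'.1.1).eq_of_le hq.ne_top hle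
  subst hqq
  have hkK : k q' ≤ K := (Finset.single_le_sum (f := k) (fun _ _ => Nat.zero_le _)
    (hfin.mem_toFinset.2 hq')).trans (le_max_right _ _)
  obtain ⟨s, hs, h⟩ := hk q' hq' J n (hkK.trans hn) x hx
  exact hs (hIq (Ideal.pow_le_pow_right (Nat.sub_le_sub_left hkK n) h))

end homog

theorem intDimBound_of_essInt (hloc : ∀ (L : Type u) [CommRing L] [IsNoetherianRing L] [IsLocalRing L],
      ∃ k, IntDimBound L k) {R : Type u} [CommRing R] (h : IsEssentiallyOfFiniteTypeOverInt R) :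
    ∃ k, IntDimBound R k := by
  obtain ⟨A, hA, M, hM⟩ := h
  letI : Algebra (ULift.{u} ℤ) A := ((algebraMap ℤ A).comp (ULift.ringEquiv (R := ℤ)).toRingHom).toAlgebra
  haveI : IsDomain (ULift.{u} ℤ) := (ULift.ringEquiv (R := ℤ)).toMulEquiv.isDomain _
  haveI : IsPrincipalIdealRing (ULift.{u} ℤ) :=
    IsPrincipalIdealRing.of_surjective (ULift.ringEquiv (R := ℤ)).symm.toRingHom (ULift.ringEquiv (R := ℤ)).symm.surjective
  haveI : CharZero (ULift.{u} ℤ) := ⟨fun a b h => by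
    have := congrArg ULift.down h
    simpa using this⟩
  haveI : Algebra.FiniteType (ULift.{u} ℤ) A := by
    have h1 : (algebraMap ℤ A).FiniteType := (RingHom.finiteType_algebraMap).2 hA
    exact RingHom.FiniteType.comp h1 (RingHom.FiniteType.of_surjective _ (ULift.ringEquiv (R := ℤ)).surjective)
  obtain ⟨k, hk⟩ := intDimBound_of_finiteType_pid (B := ULift.{u} ℤ) (A := A) hloc
  exact ⟨k, IntDimBound.of_isLocalization M hk⟩

theorem intDimBound_of_essLocal (hloc : ∀ (L : Type u) [CommRing L] [IsNoetherianRing L] [IsLocalRing L],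
      ∃ k, IntDimBound L k) {R : Type u} [CommRing R] (h : IsEssentiallyOfFiniteTypeOverLocalRing R) :
    ∃ k, IntDimBound R k := by
  obtain ⟨S, A, hA, M, hM⟩ := h
  obtain ⟨k, hk⟩ := intDimBound_of_finiteType_local (B := S) (A := A) hloc
  exact ⟨k, IntDimBound.of_isLocalization M hk⟩

end UBS

namespace UBS

/-! ### Contracted ideals and completion -/
open IsLocalRing

lemma intClosure_mono {R : Type*} [CommRing R] {I J : Ideal R} (h : I ≤ J) : I.intClosure ≤ J.intClosure := by
  refine Ideal.span_mono ?_
  rintro x ⟨n, hn, a, ha, hx⟩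
  exact ⟨n, hn, a, fun i h1 h2 => Ideal.pow_right_mono h i (ha i h1 h2), hx⟩

lemma sup_pow_le {R : Type*} [CommRing R] (J K : Ideal R) (j : ℕ) : (J ⊔ K) ^ j ≤ J ^ j ⊔ K := by
  induction j with
  | zero => simp
  | succ j ih =>
    rw [pow_succ]
    refine (Ideal.mul_mono_left ih).trans ?_
    rw [Ideal.sup_mul, Ideal.mul_sup, ← pow_succ]
    exact sup_le (sup_le le_sup_left (Ideal.mul_le_right.trans le_sup_right)) (Ideal.mul_le_left.trans le_sup_right)

lemma krull_closed {R : Type*} [CommRing R] [IsNoetherianRing R] [IsLocalRing R] (I : Ideal R) (x : R)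
    (h : ∀ N, x ∈ I ⊔ maximalIdeal R ^ N) : x ∈ I := by
  rw [← Ideal.Quotient.eq_zero_iff_mem]
  refine IsHausdorff.haus (I := maximalIdeal R) inferInstance _ fun N => ?_
  rw [SModEq.zero]
  obtain ⟨a, ha, b, hb, rfl⟩ := Submodule.mem_sup.1 (h N)
  have : Ideal.Quotient.mk I (a + b) = b • (1 : R ⧸ I) := by
    rw [map_add, Ideal.Quotient.eq_zero_iff_mem.2 ha, zero_add, Algebra.smul_def, mul_one]; rfl
  rw [this]
  exact Submodule.smul_mem_smul hb trivial

theorem intDimBound_of_contract {R : Type*} {S : Type*} [CommRing R] [CommRing S] [IsNoetherianRing R] [IsLocalRing R]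
    (ψ : R →+* S) (hψ : ∀ (I : Ideal R) (N : ℕ), maximalIdeal R ^ N ≤ I → (I.map ψ).comap ψ ≤ I) {k : ℕ}
    (hk : IntDimBound S k) : IntDimBound R k := by
  intro J n hn x hx
  refine krull_closed _ _ fun N => ?_
  set L := J ⊔ maximalIdeal R ^ N with hL
  have h1 : ψ x ∈ (L ^ (n - k)).map ψ := by
    rw [Ideal.map_pow]
    refine hk _ n hn ?_
    refine Ideal.pow_right_mono (intClosure_map_le ψ L) n ?_
    rw [← Ideal.map_pow]
    exact Ideal.mem_map_of_mem _ (Ideal.pow_right_mono (intClosure_mono le_sup_left) n hx)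
  have h2 : x ∈ L ^ (n - k) := by
    refine hψ _ (N * (n - k)) ?_ h1
    rw [pow_mul]
    exact Ideal.pow_right_mono le_sup_right _
  exact sup_pow_le _ _ _ h2

/-- Completing a (not necessarily noetherian) extension `T` of a noetherian local ring along the extended
maximal ideal. -/
theorem exists_completion {R T : Type u} [CommRing R] [CommRing T] [IsNoetherianRing R] [IsLocalRing R]
    (φ : R →+* T) (hφ : ∀ I : Ideal R, (I.map φ).comap φ ≤ I) (hm : ((maximalIdeal R).map φ).IsMaximal) :
    ∃ (S : Type u) (_ : CommRing S) (_ : IsLocalRing S) (ψ : R →+* S) (g : T →+* S), (maximalIdeal S).FG ∧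
      IsAdicComplete (maximalIdeal S) S ∧
      (∀ (I : Ideal R) (N : ℕ), maximalIdeal R ^ N ≤ I → (I.map ψ).comap ψ ≤ I) ∧
      (∀ s, ∃ t, s - g t ∈ maximalIdeal S) ∧ (∀ t ∈ (maximalIdeal R).map φ, g t ∈ maximalIdeal S) := by
  set n := (maximalIdeal R).map φ with hn
  have fg : n.FG := (maximalIdeal R).fg_of_isNoetherianRing.map φ
  haveI := AdicCompletion.isMaximal_map_of_le n n le_rfl fg
  haveI hc := AdicCompletion.isAdicComplete_self n fg
  haveI hl := isLocalRing_of_isAdicComplete_maximal (n.map (algebraMap T (AdicCompletion n T)))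
  have hM : maximalIdeal (AdicCompletion n T) = n.map (algebraMap T (AdicCompletion n T)) :=
    (IsLocalRing.eq_maximalIdeal inferInstance).symm
  refine ⟨AdicCompletion n T, inferInstance, hl, (algebraMap T _).comp φ, algebraMap T _, ?_, ?_, ?_, ?_, ?_⟩
  · rw [hM]; exact fg.map _
  · rw [hM]; exact hc
  · intro I N hI x hx
    refine hφ I ?_
    have h1 := Ideal.mem_map_of_mem (AdicCompletion.evalₐ n N).toRingHom (Ideal.mem_comap.1 hx)
    rw [Ideal.map_map, ← RingHom.comp_assoc, ← Ideal.map_map] at h1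
    have h2 : (AdicCompletion.evalₐ n N).toRingHom.comp (algebraMap T (AdicCompletion n T)) = Ideal.Quotient.mk (n ^ N) :=
      (AdicCompletion.evalₐ n N).comp_algebraMap
    rw [h2] at h1
    have h3 : Ideal.Quotient.mk (n ^ N) (φ x) ∈ (I.map φ).map (Ideal.Quotient.mk (n ^ N)) := by
      rw [← h2]; rw [← h2] at h1; exact h1
    rw [Ideal.mem_comap]
    rw [Ideal.mem_map_iff_of_surjective _ Ideal.Quotient.mk_surjective] at h3
    obtain ⟨y, hy, hxy⟩ := h3
    have h4 := Ideal.Quotient.eq.1 hxy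
    have h5 : n ^ N ≤ I.map φ := by rw [hn, ← Ideal.map_pow]; exact Ideal.map_mono hI
    have := sub_mem hy (h5 h4)
    rwa [sub_sub_cancel] at this
  · intro s
    obtain ⟨t, ht⟩ := Ideal.Quotient.mk_surjective (AdicCompletion.evalOneₐ n s)
    refine ⟨t, ?_⟩
    rw [hM, ← AdicCompletion.ker_evalOneₐ_eq_map n fg, RingHom.mem_ker, map_sub, sub_eq_zero]
    exact ht.symm
  · intro t ht
    rw [hM]; exact Ideal.mem_map_of_mem _ ht

end UBS

namespace UBS

/-! ### `p`-bases -/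

section pbasis
variable {K : Type u} [Field K]

/-- Evaluation of a monomial with integer exponents in the units of `K`. -/
noncomputable def ev (h : Kˣ →₀ ℤ) : Kˣ := h.prod fun b n => b ^ n

lemma ev_add (h h' : Kˣ →₀ ℤ) : ev (h + h') = ev h * ev h' :=
  Finsupp.prod_add_index' (fun _ => zpow_zero _) (fun _ _ _ => zpow_add _ _ _)

lemma ev_single (a : Kˣ) (n : ℤ) : ev (Finsupp.single a n) = a ^ n :=
  Finsupp.prod_single_index (zpow_zero _)

/-- `p`-independence: monomials in `B` with exponents distinct modulo `p` are linearly independent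
over the subfield of `p`-th powers. -/
def PInd (p : ℕ) (B : Set Kˣ) : Prop :=
  ∀ (I : Type u) (s : Finset I) (g : I → (Kˣ →₀ ℤ)), (∀ h ∈ s, ↑(g h).support ⊆ B) →
    (∀ h ∈ s, ∀ h' ∈ s, (∀ x, (p : ℤ) ∣ g h x - g h' x) → h = h') → ∀ k : I → K,
    ∑ h ∈ s, k h ^ p * (ev (g h) : K) = 0 → ∀ h ∈ s, k h = 0

variable (p : ℕ) [Fact p.Prime] [CharP K p]

lemma low_degree_zero (F : Subfield K) (hF : ∀ x : K, x ^ p ∈ F) (a : K) (ha : a ∉ F) (c : ℕ → K) (hc : ∀ i, c i ∈ F)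
    (h : ∑ i ∈ Finset.range p, c i * a ^ i = 0) : ∀ i < p, c i = 0 := by
  have hirr : Irreducible (Polynomial.X ^ p - Polynomial.C (⟨a ^ p, hF a⟩ : F)) := by
    refine X_pow_sub_C_irreducible_of_prime Fact.out fun b hb => ha ?_
    have h1 : (b : K) ^ p = a ^ p := congrArg Subtype.val hb
    have h2 : (b : K) = a := frobenius_inj K p (by simpa [frobenius_def] using h1)
    rw [← h2]; exact b.2
  have hp := (Fact.out : p.Prime).pos
  have hmin := minpoly.eq_of_irreducible_of_monic (A := F) (x := a) hirr
    (by rw [map_sub, map_pow, Polynomial.aeval_X, Polynomial.aeval_C]; exact sub_self _) (Polynomial.monic_X_pow_sub_C _ hp.ne')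
  set P : Polynomial F := ∑ i ∈ Finset.range p, Polynomial.C (⟨c i, hc i⟩ : F) * Polynomial.X ^ i with hP
  have hP0 : P = 0 := by
    by_contra h0
    have h1 := minpoly.degree_le_of_ne_zero F a h0 (by
      rw [hP, map_sum, ← h]
      refine Finset.sum_congr rfl fun i _ => ?_
      rw [map_mul, Polynomial.aeval_C, map_pow, Polynomial.aeval_X]; rfl)
    rw [← hmin, Polynomial.degree_X_pow_sub_C hp] at h1
    refine absurd h1 (not_le.2 ?_)
    refine (Polynomial.degree_sum_le _ _).trans_lt ?_
    rw [Finset.sup_lt_iff (by exact WithBot.bot_lt_coe _)]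
    intro i hi
    exact (Polynomial.degree_C_mul_X_pow_le _ _).trans_lt (by exact_mod_cast Finset.mem_range.1 hi)
  intro i hi
  have h1 : P.coeff i = ⟨c i, hc i⟩ := by
    rw [hP, Polynomial.finsetSum_coeff, Finset.sum_eq_single i]
    · simp
    · intro j _ hj; rw [Polynomial.coeff_C_mul_X_pow, if_neg hj.symm]
    · intro h; exact absurd (Finset.mem_range.2 hi) h
  rw [hP0, Polynomial.coeff_zero] at h1
  exact (congrArg Subtype.val h1).symm

lemma ev_mem (F : Subfield K) (B : Set Kˣ) (hB : ∀ b ∈ B, (b : K) ∈ F) (h : Kˣ →₀ ℤ) (hs : ↑h.support ⊆ B) :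
    (ev h : K) ∈ F := by
  rw [ev, Finsupp.prod, Units.coe_prod]
  refine prod_mem fun b hb => ?_
  rw [Units.val_zpow_eq_zpow_val]
  exact zpow_mem (hB b (hs hb)) _

lemma PInd.insert {B : Set Kˣ} (hB : PInd p B) (F : Subfield K) (hF : ∀ x : K, x ^ p ∈ F) (hBF : ∀ b ∈ B, (b : K) ∈ F)
    (a : Kˣ) (ha : (a : K) ∉ F) : PInd p (insert a B) := by
  classical
  intro I s g hs hinj k hsum
  have hp := (Fact.out : p.Prime).pos
  have haB : a ∉ B := fun h => ha (hBF a h)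
  set g0 : I → (Kˣ →₀ ℤ) := fun h => (g h).erase a with hg0
  have hg0B : ∀ h ∈ s, ↑(g0 h).support ⊆ B := by
    intro h hh x hx
    rw [Finset.mem_coe, hg0, Finsupp.support_erase, Finset.mem_erase] at hx
    exact (hs h hh hx.2).resolve_left hx.1
  set k' : I → K := fun h => k h * ((a ^ (g h a / p) : Kˣ) : K) with hk'
  set r : I → ℕ := fun h => (g h a % p).toNat with hr
  have hpz : (p : ℤ) ≠ 0 := by exact_mod_cast hp.ne'
  have hrz : ∀ h, (r h : ℤ) = g h a % p := fun h => Int.toNat_of_nonneg (Int.emod_nonneg _ hpz)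
  have hrp : ∀ h, r h < p := fun h => by
    have := Int.emod_lt_of_pos (g h a) (by exact_mod_cast hp : (0:ℤ) < p)
    rw [← hrz] at this; exact_mod_cast this
  have hev : ∀ h, k h ^ p * (ev (g h) : K) = (k' h ^ p * (ev (g0 h) : K)) * (a : K) ^ (r h) := by
    intro h
    have h1 : ev (g h) = (a ^ (g h a / p)) ^ p * ev (g0 h) * a ^ (r h) := by
      conv_lhs => rw [← Finsupp.erase_add_single a (g h), ev_add, ev_single]
      rw [← zpow_natCast (a ^ (g h a / p)), ← zpow_mul, ← zpow_natCast a (r h), hrz]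
      conv_lhs => rw [← Int.ediv_mul_add_emod (g h a) p, zpow_add]
      rw [hg0]; simp only [mul_comm, mul_left_comm, mul_assoc]
    rw [h1, hk']
    push_cast
    ring
  have hc := low_degree_zero p F hF a ha (fun i => ∑ h ∈ s with r h = i, k' h ^ p * (ev (g0 h) : K)) (fun i =>
    sum_mem fun h hh => mul_mem (hF _) (ev_mem F B hBF _ (hg0B h (Finset.mem_filter.1 hh).1))) (by
      rw [← hsum, ← Finset.sum_fiberwise_of_maps_to (g := r) (t := Finset.range p) (fun h _ => Finset.mem_range.2 (hrp h))]
      refine Finset.sum_congr rfl fun i _ => ?_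
      rw [Finset.sum_mul]
      refine Finset.sum_congr rfl fun h hh => ?_
      rw [hev, (Finset.mem_filter.1 hh).2])
  intro h hh
  have h1 := hB I (s.filter fun h' => r h' = r h) g0 (fun h' hh' => hg0B h' (Finset.mem_filter.1 hh').1) (by
    intro x hx y hy hxy
    obtain ⟨hx, hx'⟩ := Finset.mem_filter.1 hx
    obtain ⟨hy, hy'⟩ := Finset.mem_filter.1 hy
    refine hinj x hx y hy fun z => ?_
    by_cases hz : z = a
    · subst hz
      refine Int.dvd_of_emod_eq_zero (Int.emod_emod_of_dvd _ (dvd_refl _) ▸ ?_)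
      have : g x z % p = g y z % p := by rw [← hrz, ← hrz, hx', hy']
      rw [Int.emod_emod_of_dvd _ (dvd_refl _), Int.sub_emod, this, sub_self, Int.zero_emod]
    · have := hxy z
      rwa [hg0, Finsupp.erase_ne hz, Finsupp.erase_ne hz] at this) k' (hc (r h) (hrp h)) h
    (Finset.mem_filter.2 ⟨hh, rfl⟩)
  exact (mul_eq_zero.1 h1).resolve_right (Units.ne_zero _)

/-- A maximal `p`-independent set generates `K` over `K ^ p`. -/
lemma exists_pbasis : ∃ B : Set Kˣ, PInd p B ∧
    ∀ F : Subfield K, (∀ x : K, x ^ p ∈ F) → (∀ b ∈ B, (b : K) ∈ F) → F = ⊤ := by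
  classical
  obtain ⟨B, hB⟩ := zorn_subset {B : Set Kˣ | PInd p B} (by
    intro c hc hch
    refine ⟨⋃₀ c, ?_, fun s hs => Set.subset_sUnion_of_mem hs⟩
    intro I s g hs hinj k hsum
    rcases c.eq_empty_or_nonempty with rfl | hne
    · have h0 : ∀ h ∈ s, g h = 0 := fun h hh => by simpa using hs h hh
      intro h hh
      have : s = {h} := Finset.eq_singleton_iff_unique_mem.2 ⟨hh, fun x hx => hinj x hx h hh fun z => by
        rw [h0 x hx, h0 h hh, sub_self]; exact dvd_zero _⟩
      rw [this, Finset.sum_singleton] at hsum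
      exact pow_eq_zero_iff (Fact.out : p.Prime).ne_zero |>.1 ((mul_eq_zero.1 hsum).resolve_right (Units.ne_zero _))
    · obtain ⟨B, hBc, hB⟩ := DirectedOn.exists_mem_subset_of_finite_of_subset_sUnion hne hch.directedOn
        (s.biUnion fun h => (g h).support).finite_toSet (by
          intro x hx
          obtain ⟨h, hh, hx⟩ := Finset.mem_biUnion.1 (Finset.mem_coe.1 hx)
          exact hs h hh hx)
      refine hc hBc I s g (fun h hh x hx => hB (Finset.mem_coe.2 (Finset.mem_biUnion.2 ⟨h, hh, hx⟩))) hinj k hsum)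
  refine ⟨B, hB.prop, fun F hF hBF => ?_⟩
  rw [eq_top_iff]
  intro a _
  by_contra haF
  have ha0 : a ≠ 0 := fun h => haF (h ▸ F.zero_mem)
  have h1 := hB.le_of_ge (PInd.insert p hB.prop F hF hBF (Units.mk0 a ha0) haF) (Set.subset_insert _ _)
  exact haF (hBF _ (h1 (Set.mem_insert _ _)))

end pbasis

/-! ### Adjoining roots -/
open IsLocalRing

section groupalg
variable {R A G : Type u} [CommRing R] [CommRing A] [Algebra R A] [AddCommGroup G]
  {X : G → A} (hXa : ∀ a b, X (a + b) = X a * X b)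
  (hspan : Submodule.span R (Set.range X) = ⊤) (hσ : ∀ w : G → R, ∃ σ : A →ₗ[R] R, ∀ g, σ (X g) = w g)
  {H : AddSubgroup G} {β : G → R} (hβ : ∀ a ∈ H, ∀ b ∈ H, β (a + b) = β a * β b)

lemma span_hom {P : A → Prop} (hspan : Submodule.span R (Set.range X) = ⊤) (f : A) (h0 : P 0)
    (hX : ∀ g, P (X g)) (ha : ∀ x y, P x → P y → P (x + y)) (hs : ∀ (r : R) x, P x → P (r • x)) : P f := by
  have hf : f ∈ Submodule.span R (Set.range X) := hspan ▸ trivial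
  induction hf using Submodule.span_induction with
  | mem x hx => obtain ⟨g, rfl⟩ := hx; exact hX g
  | zero => exact h0
  | add x y _ _ h1 h2 => exact ha x y h1 h2
  | smul r x _ h => exact hs r x h

/-- The `R`-linear functional reading off the coefficient at the coset `d + H`; it is compatible with the
identification of `X ^ h` with `β h` for `h ∈ H`. -/
lemma exists_sigma (hXa : ∀ a b, X (a + b) = X a * X b)
    (hspan : Submodule.span R (Set.range X) = ⊤) (hσ : ∀ w : G → R, ∃ σ : A →ₗ[R] R, ∀ g, σ (X g) = w g)
    (hβ : ∀ a ∈ H, ∀ b ∈ H, β (a + b) = β a * β b) (d : G) :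
    ∃ σ : A →ₗ[R] R, (∀ g, g - d ∈ H → σ (X g) = β (g - d)) ∧ (∀ g, g - d ∉ H → σ (X g) = 0) ∧
      ∀ f ∈ Ideal.span {x | ∃ h ∈ H, x = X h - algebraMap R A (β h)}, σ f = 0 := by
  classical
  obtain ⟨σ, h⟩ := hσ (fun g => if g - d ∈ H then β (g - d) else 0)
  refine ⟨σ, fun g hg => by rw [h, if_pos hg], fun g hg => by rw [h, if_neg hg], fun f hf => ?_⟩
  suffices ∀ c, σ (c * f) = 0 by simpa using this 1
  induction hf using Submodule.span_induction with
  | mem x hx =>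
    obtain ⟨a, ha, rfl⟩ := hx
    intro c
    refine span_hom (P := fun c => σ (c * (X a - algebraMap R A (β a))) = 0) hspan c (by simp) (fun g => ?_)
      (fun x y h1 h2 => by rw [add_mul, map_add, h1, h2, add_zero]) (fun r x h1 => by rw [smul_mul_assoc, σ.map_smul, h1, smul_zero])
    rw [mul_sub, ← hXa, mul_comm (X g) (algebraMap R A _), ← Algebra.smul_def, map_sub, σ.map_smul, h, h, smul_eq_mul]
    have e : g + a - d = a + (g - d) := by abel
    by_cases hg : g - d ∈ H
    · rw [if_pos hg, e, if_pos (H.add_mem ha hg), hβ a ha _ hg, sub_self]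
    · rw [if_neg hg, e, if_neg (fun h' => hg ((H.add_mem_cancel_left ha).1 h')), mul_zero, sub_self]
  | zero => simp
  | add x y _ _ h1 h2 => intro c; rw [mul_add, map_add, h1, h2, add_zero]
  | smul r x _ h1 => intro c; rw [smul_eq_mul, ← mul_assoc, h1]

lemma map_le_of_linear {B : Type*} [CommRing B] [Algebra R B] (σ : B →ₗ[R] R) (I : Ideal R) {t : B} (ht : t ∈ I.map (algebraMap R B)) : σ t ∈ I := by
  have h1 : t ∈ I • (⊤ : Submodule R B) := by rw [Ideal.smul_top_eq_map]; exact ht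
  have h2 := Submodule.mem_map_of_mem (f := σ) h1
  rw [Submodule.map_smul''] at h2
  exact (Ideal.mul_le_right (I := Submodule.map σ ⊤) (J := I)) (by rw [mul_comm]; exact h2)

variable [IsLocalRing R] (p : ℕ) [Fact p.Prime]

/-- `A` plays the role of the group algebra of the `p`-divisible group `G`, and `T` is its quotient identifying
`X h` with the given lift `β h` for `h ∈ H`. -/
theorem exists_T_aux (hX0 : X 0 = 1) (hXa : ∀ a b, X (a + b) = X a * X b)
    (hspan : Submodule.span R (Set.range X) = ⊤) (hσ : ∀ w : G → R, ∃ σ : A →ₗ[R] R, ∀ g, σ (X g) = w g)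
    (hβ0 : β 0 = 1) (hβ : ∀ a ∈ H, ∀ b ∈ H, β (a + b) = β a * β b)
    (hpm : (p : R) ∈ maximalIdeal R) (hG : Function.Bijective fun g : G => p • g) (hGH : ∀ g : G, ∃ e : ℕ, p ^ e • g ∈ H)
    (hind : ∀ s : Finset G, (∀ h ∈ s, p • h ∈ H) → (∀ x ∈ s, ∀ y ∈ s, x - y ∈ H → x = y) → ∀ k : G → R,
      ∑ h ∈ s, k h ^ p * β (p • h) ∈ maximalIdeal R → ∀ h ∈ s, k h ∈ maximalIdeal R)
    (hgen : ∀ F : Subfield (ResidueField R), (∀ x, x ^ p ∈ F) → (∀ h ∈ H, residue R (β h) ∈ F) → F = ⊤) :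
    ∃ (T : Type u) (_ : CommRing T) (φ : R →+* T), (∀ I : Ideal R, (I.map φ).comap φ ≤ I) ∧
      ((maximalIdeal R).map φ).IsMaximal ∧ ∀ t : T, ∃ u : T, t - u ^ p ∈ (maximalIdeal R).map φ := by
  classical
  have hp : p.Prime := Fact.out
  set 𝔞 := Ideal.span {x | ∃ h ∈ H, x = X h - algebraMap R A (β h)} with h𝔞
  set 𝔟 := 𝔞 ⊔ (maximalIdeal R).map (algebraMap R A) with h𝔟
  have hσb : ∀ σ : A →ₗ[R] R, (∀ f ∈ 𝔞, σ f = 0) → ∀ f ∈ 𝔟, σ f ∈ maximalIdeal R := by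
    intro σ h f hf
    obtain ⟨a, ha, b, hb, rfl⟩ := Submodule.mem_sup.1 hf
    rw [map_add, h a ha, zero_add]
    exact map_le_of_linear σ _ hb
  have h1b : (1 : A) ∉ 𝔟 := by
    intro h1
    obtain ⟨σ, hs1, -, hs3⟩ := exists_sigma (H := H) (β := β) hXa hspan hσ hβ 0
    have h2 := hσb σ hs3 1 h1
    rw [← hX0, hs1 0 (by simp [H.zero_mem]), sub_zero, hβ0] at h2
    exact (Ideal.ne_top_iff_one _).1 (maximalIdeal.isMaximal R).ne_top h2
  haveI : Nontrivial (A ⧸ 𝔟) := Ideal.Quotient.nontrivial_iff.2 ((Ideal.ne_top_iff_one _).2 h1b)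
  set q := Ideal.Quotient.mk 𝔟 with hq
  set j : R →+* A ⧸ 𝔟 := q.comp (algebraMap R A) with hj
  have hjm : ∀ r ∈ maximalIdeal R, j r = 0 := fun r hr =>
    Ideal.Quotient.eq_zero_iff_mem.2 ((le_sup_right : _ ≤ 𝔟) (Ideal.mem_map_of_mem _ hr))
  haveI : CharP (A ⧸ 𝔟) p := (CharP.charP_iff_prime_eq_zero hp).2 (by
    have := hjm p hpm
    simpa using this)
  have hqX : ∀ h ∈ H, q (X h) = j (β h) := fun h hh =>
    Ideal.Quotient.eq.2 ((le_sup_left : _ ≤ 𝔟) (Ideal.subset_span ⟨h, hh, rfl⟩))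
  have hsm : ∀ (r : R) (f : A), q (r • f) = j r * q f := fun r f => by rw [Algebra.smul_def, map_mul]; rfl
  have hXp : ∀ g (n : ℕ), X g ^ n = X (n • g) := by
    intro g n
    induction n with
    | zero => rw [pow_zero, zero_smul, hX0]
    | succ n ih => rw [pow_succ, ih, succ_nsmul, hXa]
  -- normal form with respect to coset representatives
  set ρ : G → G := fun g => (QuotientAddGroup.mk g : G ⧸ H).out with hρ
  have hρ1 : ∀ g, g - ρ g ∈ H := by
    intro g
    have h1 : (QuotientAddGroup.mk (ρ g) : G ⧸ H) = QuotientAddGroup.mk g := Quotient.out_eq _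
    have := (QuotientAddGroup.eq).1 h1
    rwa [neg_add_eq_sub] at this
  have hρ2 : ∀ x y, x - y ∈ H → ρ x = ρ y := by
    intro x y h
    have : (QuotientAddGroup.mk y : G ⧸ H) = QuotientAddGroup.mk x := (QuotientAddGroup.eq).2 (by rwa [neg_add_eq_sub])
    rw [hρ]; simp only [this]
  have hρ3 : ∀ g, ρ (ρ g) = ρ g := fun g => (hρ2 _ _ (hρ1 g)).symm
  have hnf : ∀ f : A, ∃ k : G →₀ R, (∀ c ∈ k.support, ρ c = c) ∧ q f = q (Finsupp.linearCombination R X k) := by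
    intro f
    refine span_hom (P := fun f => ∃ k : G →₀ R, (∀ c ∈ k.support, ρ c = c) ∧ q f = q (Finsupp.linearCombination R X k)) hspan f
      ⟨0, by simp, by simp⟩ ?_ ?_ ?_
    · intro g
      refine ⟨Finsupp.single (ρ g) (β (g - ρ g)), fun c hc => ?_, ?_⟩
      · have := Finsupp.support_single_subset hc
        rw [Finset.mem_singleton.1 this]; exact hρ3 g
      · rw [Finsupp.linearCombination_single, hsm, ← hqX _ (hρ1 g), ← map_mul, ← hXa, sub_add_cancel]
    · rintro x y ⟨k, hk, hx⟩ ⟨l, hl, hy⟩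
      refine ⟨k + l, fun c hc => ?_, by rw [map_add, hx, hy, map_add, map_add]⟩
      exact (Finset.mem_union.1 (Finsupp.support_add hc)).elim (hk c) (hl c)
    · rintro r x ⟨k, hk, hx⟩
      exact ⟨r • k, fun c hc => hk c (Finsupp.support_smul hc), by rw [hsm, hx, LinearMap.map_smul, hsm]⟩
  have hred : ∀ t : A ⧸ 𝔟, t ^ p = 0 → t = 0 := by
    intro t ht
    obtain ⟨f, rfl⟩ := Ideal.Quotient.mk_surjective t
    obtain ⟨k, hk, hf⟩ := hnf f
    change q f = 0
    rw [hf, Finsupp.linearCombination_apply, Finsupp.sum, map_sum]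
    refine Finset.sum_eq_zero fun c0 hc0 => ?_
    rw [hsm]
    suffices k c0 ∈ maximalIdeal R by rw [hjm _ this, zero_mul]
    obtain ⟨σ, hs1, hs2, hs3⟩ := exists_sigma (H := H) (β := β) hXa hspan hσ hβ (p • c0)
    have h1 : q (∑ c ∈ k.support, (k c ^ p) • X (p • c)) = 0 := by
      rw [map_sum]
      change q f ^ p = 0 at ht
      rw [hf, Finsupp.linearCombination_apply, Finsupp.sum, map_sum, sum_pow_char] at ht
      rw [← ht]
      refine Finset.sum_congr rfl fun c _ => ?_
      rw [hsm, hsm, mul_pow, map_pow, ← hXp, map_pow]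
    have h2 := hσb σ hs3 _ (Ideal.Quotient.eq_zero_iff_mem.1 h1)
    rw [map_sum] at h2
    set s' := (k.support.filter fun c => p • c - p • c0 ∈ H).image fun c => c - c0 with hs'
    have h3 : ∑ h ∈ s', k (h + c0) ^ p * β (p • h) ∈ maximalIdeal R := by
      rw [hs', Finset.sum_image (fun x _ y _ h => sub_left_injective h), Finset.sum_filter]
      convert h2 using 1
      refine Finset.sum_congr rfl fun c _ => ?_
      rw [σ.map_smul]
      split_ifs with hc
      · rw [hs1 _ hc, sub_add_cancel, smul_sub, smul_eq_mul]
      · rw [hs2 _ hc, smul_zero]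
    have h4 := hind s' (by
        intro h hh
        obtain ⟨c, hc, rfl⟩ := Finset.mem_image.1 hh
        rw [smul_sub]; exact (Finset.mem_filter.1 hc).2) (by
        intro x hx y hy hxy
        obtain ⟨c, hc, rfl⟩ := Finset.mem_image.1 hx
        obtain ⟨d, hd, rfl⟩ := Finset.mem_image.1 hy
        rw [sub_sub_sub_cancel_right] at hxy
        rw [← hk c (Finset.mem_filter.1 hc).1, hρ2 _ _ hxy, hk d (Finset.mem_filter.1 hd).1]) _ h3 0
      (Finset.mem_image.2 ⟨c0, Finset.mem_filter.2 ⟨hc0, by rw [sub_self]; exact H.zero_mem⟩, sub_self _⟩)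
    rwa [zero_add] at h4
  have hred' : ∀ e (t : A ⧸ 𝔟), t ^ p ^ e = 0 → t = 0 := by
    intro e
    induction e with
    | zero => intro t ht; simpa using ht
    | succ e ih => intro t ht; exact ih t (hred _ (by rw [← pow_mul, ← pow_succ, ht]))
  have hrad : ∀ t : A ⧸ 𝔟, ∃ e r, t ^ p ^ e = j r := by
    intro t
    obtain ⟨f, rfl⟩ := Ideal.Quotient.mk_surjective t
    refine span_hom (P := fun f => ∃ e r, (q f) ^ p ^ e = j r) hspan f ⟨0, 0, by simp⟩ ?_ ?_ ?_
    · intro g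
      obtain ⟨e, he⟩ := hGH g
      exact ⟨e, _, by rw [← map_pow, hXp, hqX _ he]⟩
    · rintro x y ⟨e, r, hx⟩ ⟨e', r', hy⟩
      refine ⟨e + e', r ^ p ^ e' + r' ^ p ^ e, ?_⟩
      rw [map_add, add_pow_char_pow, map_add, map_pow, map_pow, ← hx, ← hy, ← pow_mul, ← pow_mul, ← pow_add, ← pow_add, add_comm e']
    · rintro r x ⟨e, r', hx⟩
      exact ⟨e, r ^ p ^ e * r', by rw [hsm, mul_pow, hx, map_mul, map_pow]⟩
  have hfield : IsField (A ⧸ 𝔟) := by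
    refine ⟨⟨0, 1, zero_ne_one⟩, mul_comm, fun {t} ht => ?_⟩
    obtain ⟨e, r, h⟩ := hrad t
    have hr : IsUnit r := by
      by_contra hr
      exact ht (hred' e t (by rw [h, hjm r hr]))
    obtain ⟨v, hv⟩ := (h ▸ hr.map j : IsUnit (t ^ p ^ e)).exists_right_inv
    refine ⟨t ^ (p ^ e - 1) * v, ?_⟩
    rw [← mul_assoc, ← pow_succ', Nat.sub_add_cancel (Nat.one_le_pow _ _ hp.pos), hv]
  have hmax : 𝔟.IsMaximal := Ideal.Quotient.maximal_of_isField _ hfield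
  have hfrob : ∀ t : A ⧸ 𝔟, ∃ u, t = u ^ p := by
    letI := hfield.toField
    have hcl : ∀ x : R, ∃ u : A ⧸ 𝔟, j x = u ^ p := by
      set jj : ResidueField R →+* A ⧸ 𝔟 := Ideal.Quotient.lift (maximalIdeal R) j hjm with hjj
      have h1 := hgen ((frobenius (A ⧸ 𝔟) p).fieldRange.comap jj) (fun x => ⟨jj x, by rw [frobenius_def, map_pow]⟩) (by
        intro h hh
        obtain ⟨g, rfl⟩ := hG.2 h
        refine ⟨q (X g), ?_⟩
        rw [frobenius_def, ← map_pow, hXp, hqX _ hh]; rfl)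
      intro x
      have h2 : residue R x ∈ (frobenius (A ⧸ 𝔟) p).fieldRange.comap jj := by rw [h1]; trivial
      obtain ⟨u, hu⟩ := h2
      exact ⟨u, hu.symm⟩
    intro t
    obtain ⟨f, rfl⟩ := Ideal.Quotient.mk_surjective t
    refine span_hom (P := fun f => ∃ u, q f = u ^ p) hspan f ⟨0, by rw [map_zero, zero_pow hp.ne_zero]⟩ ?_ ?_ ?_
    · intro g
      obtain ⟨g', rfl⟩ := hG.2 g
      exact ⟨q (X g'), by rw [← map_pow, hXp]⟩
    · rintro x y ⟨u, hx⟩ ⟨v, hy⟩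
      exact ⟨u + v, by rw [map_add, hx, hy, add_pow_char]⟩
    · rintro r x ⟨u, hx⟩
      obtain ⟨v, hv⟩ := hcl r
      exact ⟨v * u, by rw [hsm, hx, hv, mul_pow]⟩
  have hmapT : (maximalIdeal R).map (algebraMap R (A ⧸ 𝔞)) = 𝔟.map (Ideal.Quotient.mk 𝔞) := by
    rw [h𝔟, Ideal.map_sup, Ideal.map_quotient_self, bot_sup_eq, Ideal.map_map]; rfl
  refine ⟨A ⧸ 𝔞, inferInstance, algebraMap R (A ⧸ 𝔞), ?_, ?_, ?_⟩
  · intro I x hx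
    obtain ⟨σ, hs1, -, hs3⟩ := exists_sigma (H := H) (β := β) hXa hspan hσ hβ 0
    have h1 := map_le_of_linear ((Submodule.liftQ (𝔞.restrictScalars R) σ fun f hf => hs3 f hf) : (A ⧸ 𝔞) →ₗ[R] R) I hx
    have h2 : σ (algebraMap R A x) ∈ I := h1
    rwa [Algebra.algebraMap_eq_smul_one, σ.map_smul, ← hX0, hs1 0 (by simp [H.zero_mem]), sub_zero, hβ0, smul_eq_mul, mul_one] at h2
  · rw [hmapT]
    exact Ideal.IsMaximal.map_of_surjective_of_ker_le Ideal.Quotient.mk_surjective (by rw [Ideal.mk_ker]; exact le_sup_left)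
  · intro t
    obtain ⟨f, rfl⟩ := Ideal.Quotient.mk_surjective t
    obtain ⟨u, hu⟩ := hfrob (q f)
    obtain ⟨u, rfl⟩ := Ideal.Quotient.mk_surjective u
    refine ⟨Ideal.Quotient.mk 𝔞 u, ?_⟩
    rw [hmapT, ← map_pow, ← map_sub]
    exact Ideal.mem_map_of_mem _ (Ideal.Quotient.eq.1 (by rw [map_pow]; exact hu))

end groupalg
end UBS

namespace UBS

/-! ### Extensions with perfect residue field -/
open IsLocalRing

section
variable {B : Type u} {Q : Type} [CommRing Q] [Algebra ℤ Q] (p : ℕ) [IsLocalization.Away (p : ℤ) Q]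

lemma fs_bijective : Function.Bijective fun g : B →₀ Q => p • g := by
  have hu : IsUnit (p : Q) := by
    have := IsLocalization.Away.algebraMap_isUnit (S := Q) (p : ℤ)
    simpa using this
  have h := (hu.smul_bijective (β := B →₀ Q))
  convert h using 2 with g
  exact (Nat.cast_smul_eq_nsmul Q p g).symm

/-- Integral exponents inside exponents in `Q = ℤ[1/p]`. -/
noncomputable def fsι : (B →₀ ℤ) →+ (B →₀ Q) := Finsupp.mapRange.addMonoidHom (algebraMap ℤ Q).toAddMonoidHom

lemma fsι_pow (g : B →₀ Q) : ∃ e : ℕ, p ^ e • g ∈ (fsι (B := B) (Q := Q)).range := by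
  induction g using Finsupp.induction_linear with
  | zero => exact ⟨0, by simp [zero_mem]⟩
  | add f g hf hg =>
    obtain ⟨e, he⟩ := hf
    obtain ⟨e', he'⟩ := hg
    refine ⟨e + e', ?_⟩
    rw [smul_add]
    refine add_mem ?_ ?_
    · rw [add_comm, pow_add, mul_smul]; exact nsmul_mem he _
    · rw [pow_add, mul_smul]; exact nsmul_mem he' _
  | single b x =>
    obtain ⟨n, a, h⟩ := IsLocalization.Away.surj (p : ℤ) x
    refine ⟨n, Finsupp.single b a, ?_⟩
    rw [fsι, Finsupp.mapRange.addMonoidHom_apply, Finsupp.smul_single]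
    refine (Finsupp.mapRange_single).trans ?_
    congr 1
    change algebraMap ℤ Q a = _
    rw [← h, nsmul_eq_mul, mul_comm]; simp

lemma fsι_inj (hp : p ≠ 0) : Function.Injective (fsι (B := B) (Q := Q)) := by
  refine Finsupp.mapRange_injective _ (map_zero _) ?_
  exact IsLocalization.injective (M := Submonoid.powers (p : ℤ)) Q
    (Submonoid.powers_le.2 (mem_nonZeroDivisors_of_ne_zero (by exact_mod_cast hp)))
end

/-- An extension with contracted ideals whose maximal ideal is extended and whose residue field is
perfect. -/
theorem exists_T {R : Type u} [CommRing R] [IsLocalRing R] (p : ℕ) [Fact p.Prime] (hpm : (p : R) ∈ maximalIdeal R) :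
    ∃ (T : Type u) (_ : CommRing T) (φ : R →+* T), (∀ I : Ideal R, (I.map φ).comap φ ≤ I) ∧
      ((maximalIdeal R).map φ).IsMaximal ∧ ∀ t : T, ∃ u : T, t - u ^ p ∈ (maximalIdeal R).map φ := by
  classical
  have hp : p.Prime := Fact.out
  have hres0 : ∀ r, residue R r = 0 ↔ r ∈ maximalIdeal R := fun r => residue_eq_zero_iff r
  haveI : CharP (ResidueField R) p := (CharP.charP_iff_prime_eq_zero hp).2 (by
    rw [← map_natCast (residue R), hres0]; exact hpm)
  obtain ⟨B, hB, hBgen⟩ := exists_pbasis (K := ResidueField R) p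
  have h1 : ∀ b : B, ∃ r : Rˣ, residue R r = (b : (ResidueField R)ˣ) := by
    intro b
    obtain ⟨x, hx⟩ := residue_surjective (R := R) ((b : (ResidueField R)ˣ) : ResidueField R)
    have : IsUnit x := by
      by_contra h
      exact Units.ne_zero (b : (ResidueField R)ˣ) (by rw [← hx, hres0]; exact h)
    exact ⟨this.unit, hx⟩
  choose r hr using h1
  set pr : (B →₀ ℤ) → Rˣ := fun z => z.prod fun b n => r b ^ n with hpr
  have hpr_add : ∀ z z', pr (z + z') = pr z * pr z' := fun z z' =>
    Finsupp.prod_add_index' (fun _ => zpow_zero _) (fun _ _ _ => zpow_add _ _ _)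
  set em : B ↪ (ResidueField R)ˣ := Function.Embedding.subtype _ with hem
  have hpr_ev : ∀ z, residue R (pr z) = ev (z.embDomain em) := by
    intro z
    rw [ev, Finsupp.prod_embDomain, hpr]
    simp only [Finsupp.prod, Units.coe_prod, map_prod]
    refine Finset.prod_congr rfl fun b _ => ?_
    have : Units.map (residue R : R →* ResidueField R) (r b) = (b : (ResidueField R)ˣ) := Units.ext (hr b)
    have h2 : Units.map (residue R : R →* ResidueField R) (r b ^ z b) = (em b) ^ z b := by rw [map_zpow, this]; rfl
    exact congrArg Units.val h2
  obtain ⟨Q, _, _, _⟩ : ∃ (Q : Type) (_ : CommRing Q) (_ : Algebra ℤ Q), IsLocalization.Away (p : ℤ) Q :=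
    ⟨Localization.Away (p : ℤ), inferInstance, inferInstance, inferInstance⟩
  set ι : (B →₀ ℤ) →+ (B →₀ Q) := fsι with hι
  have hinj : Function.Injective ι := fsι_inj p hp.ne_zero
  have hbij := fs_bijective (B := B) (Q := Q) p
  set β : (B →₀ Q) → R := fun g => if h : ∃ z, ι z = g then pr h.choose else 0 with hβ
  have hβι : ∀ z, β (ι z) = pr z := by
    intro z
    have h : ∃ z', ι z' = ι z := ⟨z, rfl⟩
    rw [hβ]; simp only [dif_pos h]
    rw [hinj h.choose_spec]
  refine exists_T_aux (A := AddMonoidAlgebra R (B →₀ Q)) (X := fun g => AddMonoidAlgebra.single g 1) (H := ι.range) (β := β) p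
    rfl ?_ ?_ ?_ ?_ ?_ hpm hbij (fsι_pow p) ?_ ?_
  · intro a b; rw [AddMonoidAlgebra.single_mul_single, mul_one]
  · rw [eq_top_iff]
    rintro f -
    induction f using AddMonoidAlgebra.induction_linear with
    | zero => exact zero_mem _
    | add f g hf hg => exact add_mem hf hg
    | single g x =>
      have : AddMonoidAlgebra.single g x = x • AddMonoidAlgebra.single g (1 : R) := by
        rw [AddMonoidAlgebra.smul_single, smul_eq_mul, mul_one]
      rw [this]
      exact Submodule.smul_mem _ _ (Submodule.subset_span ⟨g, rfl⟩)
  · intro w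
    refine ⟨(Finsupp.linearCombination R w).comp (AddMonoidAlgebra.coeffLinearEquiv R).toLinearMap, fun g => ?_⟩
    change Finsupp.linearCombination R w (Finsupp.single g 1) = w g
    rw [Finsupp.linearCombination_single, one_smul]
  · rw [← map_zero ι, hβι]; simp [hpr]
  · rintro _ ⟨z, rfl⟩ _ ⟨z', rfl⟩
    rw [← map_add, hβι, hβι, hβι, hpr_add]; rfl
  · intro s hs hsinj k hk
    have h2 : ∀ h : B →₀ Q, ∃ z : B →₀ ℤ, h ∈ s → ι z = p • h := fun h => by
      by_cases hh : h ∈ s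
      · obtain ⟨z, hz⟩ := hs h hh; exact ⟨z, fun _ => hz⟩
      · exact ⟨0, fun h' => absurd h' hh⟩
    choose z hz using h2
    have h3 := hB _ s (fun h => (z h).embDomain em) (fun h hh => by
        rw [Finsupp.support_embDomain]
        intro x hx
        obtain ⟨b, -, rfl⟩ := Finset.mem_map.1 (Finset.mem_coe.1 hx)
        exact b.2) (by
        intro x hx y hy hxy
        set w := (z x - z y).mapRange (· / (p : ℤ)) (Int.zero_ediv _) with hw
        have e : p • w = z x - z y := by
          refine Finsupp.ext fun b => ?_
          have := hxy (em b)
          rw [Finsupp.embDomain_apply_self, Finsupp.embDomain_apply_self] at this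
          rw [Finsupp.smul_apply, Finsupp.mapRange_apply, Finsupp.sub_apply, nsmul_eq_mul]
          exact Int.mul_ediv_cancel' this
        refine hsinj x hx y hy ⟨w, hbij.1 ?_⟩
        calc p • ι w = ι (p • w) := (map_nsmul ι p w).symm
          _ = p • x - p • y := by rw [e, map_sub, hz x hx, hz y hy]
          _ = p • (x - y) := (smul_sub _ _ _).symm) (fun h => residue R (k h)) (by
        rw [← hres0, map_sum] at hk
        rw [← hk]
        refine Finset.sum_congr rfl fun h hh => ?_
        rw [map_mul, map_pow, ← hz h hh, hβι, hpr_ev])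
    intro h hh
    exact (hres0 _).1 (h3 h hh)
  · intro F hF hFb
    refine hBgen F hF fun b hb => ?_
    have := hFb _ ⟨Finsupp.single ⟨b, hb⟩ 1, rfl⟩
    rw [hβι, hpr_ev, Finsupp.embDomain_single, ev_single, zpow_one] at this
    exact this

end UBS

namespace UBS

/-! ### Witt vectors and coefficient fields -/
open IsLocalRing WittVector

section witt
variable {S : Type u} [CommRing S] [IsLocalRing S] (p : ℕ) [Fact p.Prime]

lemma ghost_mem (hp : (p : S) ∈ maximalIdeal S) (n : ℕ) (x : WittVector p S)
    (h : WittVector.map (residue S) x = 0) :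
    ghostComponent n x ∈ maximalIdeal S ^ (n + 1) := by
  rw [ghostComponent_apply, wittPolynomial_eq_sum_C_mul_X_pow, map_sum]
  refine Ideal.sum_mem _ fun i hi => ?_
  have hi' : i ≤ n := Nat.lt_succ_iff.mp (Finset.mem_range.mp hi)
  have hx : x.coeff i ∈ maximalIdeal S := by
    rw [← residue_eq_zero_iff, ← WittVector.map_coeff, h, zero_coeff]
  have h1 : n - i < p ^ (n - i) := Nat.lt_pow_self (Fact.out : p.Prime).one_lt
  have h2 : (p : S) ^ i * x.coeff i ^ p ^ (n - i) ∈ maximalIdeal S ^ (i + p ^ (n - i)) := by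
    rw [pow_add]
    exact Ideal.mul_mem_mul (Ideal.pow_mem_pow hp i) (Ideal.pow_mem_pow hx _)
  simpa using Ideal.pow_le_pow_right (by omega) h2

variable [CharP (ResidueField S) p] [PerfectRing (ResidueField S) p]

/-- The `n`-th ghost component of a lift to the Witt vectors of `S` is well defined modulo
`maximalIdeal S ^ (n + 1)`; twisting by Frobenius makes these maps compatible. -/
lemma exists_witt_hom [IsAdicComplete (maximalIdeal S) S] (hp : (p : S) ∈ maximalIdeal S) :
    ∃ v : WittVector p (ResidueField S) →+* S, ∀ s, ∃ a, s - v a ∈ maximalIdeal S := by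
  classical
  have hsurj : Function.Surjective (WittVector.map (p := p) (residue S)) :=
    WittVector.map_surjective _ residue_surjective
  let gh : ∀ n : ℕ, WittVector p (ResidueField S) →+* S ⧸ maximalIdeal S ^ (n + 1) := fun n =>
    RingHom.liftOfSurjective (WittVector.map (residue S)) hsurj
      ⟨(Ideal.Quotient.mk _).comp (ghostComponent n), fun x hx => by
        rw [RingHom.mem_ker, RingHom.comp_apply, Ideal.Quotient.eq_zero_iff_mem]
        exact ghost_mem p hp n x hx⟩
  have hgh : ∀ n x, gh n (WittVector.map (residue S) x) =
      Ideal.Quotient.mk _ (ghostComponent n x) := fun n x =>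
    RingHom.liftOfSurjective_comp_apply ..
  let g : ∀ n : ℕ, WittVector p (ResidueField S) →+* S ⧸ maximalIdeal S ^ (n + 1) := fun n =>
    (gh n).comp ((WittVector.frobeniusEquiv p (ResidueField S)).symm ^ n :
      WittVector p (ResidueField S) ≃+* WittVector p (ResidueField S)).toRingHom
  have hg : ∀ n x, g n x = gh n (((WittVector.frobeniusEquiv p (ResidueField S)).symm ^ n :
      WittVector p (ResidueField S) ≃+* WittVector p (ResidueField S)) x) := fun n x => rfl
  have key : ∀ n x, Ideal.Quotient.factor (Ideal.pow_le_pow_right (Nat.le_succ (n + 1)))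
      (g (n + 1) x) = g n x := by
    intro n x
    rw [hg, hg]
    obtain ⟨y, hy⟩ := hsurj (((WittVector.frobeniusEquiv p (ResidueField S)).symm ^ (n + 1) :
      WittVector p (ResidueField S) ≃+* WittVector p (ResidueField S)) x)
    have e : ((WittVector.frobeniusEquiv p (ResidueField S)).symm ^ n :
      WittVector p (ResidueField S) ≃+* WittVector p (ResidueField S)) x =
        WittVector.map (residue S) (WittVector.frobenius y) := by
      rw [(WittVector.frobenius_isPoly p).map, hy, pow_succ']
      exact ((WittVector.frobeniusEquiv p (ResidueField S)).apply_symm_apply _).symm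
    rw [e, ← hy, hgh, hgh, ghostComponent_frobenius, Ideal.Quotient.factor_mk]
  refine ⟨IsAdicComplete.StrictMono.liftRingHom (maximalIdeal S) (a := fun n => n + 1)
    (fun _ _ h => Nat.succ_lt_succ h) g (fun {m} => RingHom.ext fun x => key m x), fun s => ?_⟩
  obtain ⟨y, hy⟩ := hsurj (WittVector.map (residue S) (teichmuller p s))
  refine ⟨WittVector.map (residue S) (teichmuller p s), ?_⟩
  have h := IsAdicComplete.StrictMono.mk_liftRingHom (maximalIdeal S) (a := fun n => n + 1)
    (fun _ _ h => Nat.succ_lt_succ h) g (fun {m} => RingHom.ext fun x => key m x) (n := 0)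
    (WittVector.map (residue S) (teichmuller p s))
  rw [hg, pow_zero] at h
  erw [hgh] at h
  rw [ghostComponent_teichmuller, pow_zero, pow_one, eq_comm, Ideal.Quotient.eq] at h
  simpa using h
end witt

lemma exists_field_hom {S : Type u} [CommRing S] [IsLocalRing S] [CharZero (ResidueField S)]
    [IsAdicComplete (maximalIdeal S) S] :
    ∃ v : ResidueField S →+* S, ∀ s, ∃ a, s - v a ∈ maximalIdeal S := by
  have h0 : ∀ I : Ideal S, I ≠ ⊤ → CharZero (S ⧸ I) := fun I hI => by
    have hI' := le_maximalIdeal hI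
    haveI : CharZero (S ⧸ maximalIdeal S) := ‹CharZero (ResidueField S)›
    exact (Ideal.Quotient.factor hI').charZero
  obtain ⟨_⟩ : Nonempty (Algebra ℚ S) :=
    (_root_.EqualCharZero.nonempty_algebraRat_iff S).mpr h0
  letI : Field (S ⧸ maximalIdeal S) := Ideal.Quotient.field _
  haveI : Algebra.FormallySmooth ℚ (S ⧸ maximalIdeal S) := by
    obtain ⟨s, hs⟩ := exists_isTranscendenceBasis ℚ (S ⧸ maximalIdeal S)
    have := hs.isAlgebraic_field
    exact .of_algebraicIndependent_of_isSeparable hs.1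
  obtain ⟨g, hg⟩ := Algebra.FormallySmooth.exists_mkₐ_comp_eq_of_isAdicComplete (R := ℚ)
    (I := maximalIdeal S) (AlgHom.id ℚ (S ⧸ maximalIdeal S))
  refine ⟨(g : S ⧸ maximalIdeal S →+* S), fun s => ⟨Ideal.Quotient.mk _ s, ?_⟩⟩
  rw [← Ideal.Quotient.eq]
  exact (DFunLike.congr_fun hg (Ideal.Quotient.mk _ s)).symm
end UBS

namespace UBS

/-! ### Power series over complete local rings -/
open IsLocalRing PowerSeries

lemma RG.congr : ∀ (d : ℕ) {A B : Type u} [CommRing A] [CommRing B] (e : A ≃+* B), RG d A → RG d B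
  | 0, A, B, _, _, e, h => e.symm.toMulEquiv.isField h
  | d + 1, A, B, _, _, e, ⟨x, hx, hu, h⟩ => by
    refine ⟨e x, ?_, fun h' => hu ((MulEquiv.isUnit_map e).1 h'), ?_⟩
    · rw [mem_nonZeroDivisors_iff_right] at hx ⊢
      intro z hz
      have := hx (e.symm z) (e.injective (by simpa using hz))
      simpa using this
    · exact RG.congr d (Ideal.quotientEquiv _ _ e (by simp [Ideal.map_span])) h

lemma RG.powerSeries {d : ℕ} {A : Type u} [CommRing A] [IsDomain A] (h : RG d A) : RG (d + 1) A⟦X⟧ := by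
  refine ⟨X, mem_nonZeroDivisors_of_ne_zero X_ne_zero, fun h' => ?_, ?_⟩
  · simpa using isUnit_iff_constantCoeff.1 h'
  · have hk : RingHom.ker (constantCoeff (R := A)) = Ideal.span {X} := by
      ext f; rw [RingHom.mem_ker, Ideal.mem_span_singleton, X_dvd_iff]
    exact RG.congr d ((Ideal.quotEquivOfEq hk.symm).trans
      (RingHom.quotientKerEquivOfSurjective constantCoeff_surj)).symm h

lemma RG.dim_le : ∀ (d : ℕ) {A : Type u} [CommRing A] [IsNoetherianRing A] [IsLocalRing A], RG d A →
    ringKrullDim A ≤ d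
  | 0, A, _, _, _, h => by
    letI := IsField.toField h
    simp
  | d + 1, A, _, _, _, ⟨x, hx, hu, h⟩ => by
    have hxm : x ∈ maximalIdeal A := hu
    haveI : Nontrivial (A ⧸ Ideal.span {x}) := Ideal.Quotient.nontrivial_iff.2 fun h' =>
      hu (Ideal.span_singleton_eq_top.1 h')
    haveI : IsLocalRing (A ⧸ Ideal.span {x}) := .of_surjective' _ Ideal.Quotient.mk_surjective
    have h1 := RG.dim_le d h
    have h2 := ringKrullDim_le_ringKrullDim_quotient_add_card (R := A) {x}
      (by simpa [IsLocalRing.ringJacobson_eq_maximalIdeal] using hxm)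
    rw [Finset.coe_singleton, Finset.card_singleton] at h2
    calc _ ≤ _ := h2
      _ ≤ (d : WithBot ℕ∞) + 1 := by gcongr; simp
      _ = _ := by norm_cast

section ps
variable {A : Type*} [CommRing A] [IsLocalRing A]

lemma mem_max_ps (f : A⟦X⟧) : f ∈ maximalIdeal A⟦X⟧ ↔ constantCoeff f ∈ maximalIdeal A := by
  rw [mem_maximalIdeal, mem_nonunits_iff, isUnit_iff_constantCoeff]; rfl

lemma coeff_mem_pow (n : ℕ) : ∀ f ∈ maximalIdeal A⟦X⟧ ^ n, ∀ i, coeff i f ∈ maximalIdeal A ^ (n - i) := by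
  induction n with
  | zero => intro f _ i; simp
  | succ n ih =>
    intro f hf i
    rw [pow_succ] at hf
    induction hf using Submodule.mul_induction_on' with
    | mem_mul_mem g hg k hk =>
      rw [coeff_mul]
      refine Ideal.sum_mem _ fun ⟨a, b⟩ hab => ?_
      have hab' : a + b = i := by simpa using hab
      rcases b with _ | b
      · have h1 := Ideal.mul_mem_mul (ih g hg a) ((mem_max_ps k).1 hk)
        rw [← pow_succ, ← coeff_zero_eq_constantCoeff_apply] at h1
        exact Ideal.pow_le_pow_right (by omega) h1
      · exact Ideal.mul_mem_right _ _ (Ideal.pow_le_pow_right (by omega) (ih g hg a))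
    | add f _ g _ hf hg => rw [map_add]; exact Ideal.add_mem _ hf hg

lemma mem_pow_of_coeff (n : ℕ) : ∀ f : A⟦X⟧, (∀ i, coeff i f ∈ maximalIdeal A ^ (n - i)) →
    f ∈ maximalIdeal A⟦X⟧ ^ n := by
  have hC : (maximalIdeal A).map (C (R := A)) ≤ maximalIdeal A⟦X⟧ := Ideal.map_le_iff_le_comap.2
    fun a ha => by rw [Ideal.mem_comap, mem_max_ps]; simpa using ha
  have hX : (X : A⟦X⟧) ∈ maximalIdeal A⟦X⟧ := by rw [mem_max_ps]; simp
  induction n with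
  | zero => intro f _; simp
  | succ n ih =>
    intro f hf
    rw [eq_X_mul_shift_add_const f]
    refine Ideal.add_mem _ ?_ ?_
    · rw [pow_succ']
      refine Ideal.mul_mem_mul hX (ih _ fun i => ?_)
      rw [coeff_mk]
      simpa using hf (i + 1)
    · refine Ideal.pow_right_mono hC _ ?_
      rw [← Ideal.map_pow]
      exact Ideal.mem_map_of_mem _ (by simpa using hf 0)

instance [IsNoetherianRing A] [IsAdicComplete (maximalIdeal A) A] :
    IsAdicComplete (maximalIdeal A⟦X⟧) A⟦X⟧ where
  prec' := by
    intro f hf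
    simp only [SModEq.sub_mem, smul_eq_mul, Ideal.mul_top] at hf ⊢
    have h1 : ∀ i, ∃ L : A, ∀ n, coeff i (f (n + i)) - L ∈ maximalIdeal A ^ n := by
      intro i
      have := IsPrecomplete.prec' (I := maximalIdeal A) (M := A) (fun n => coeff i (f (n + i)))
      simp only [SModEq.sub_mem, smul_eq_mul, Ideal.mul_top] at this
      refine this fun {m n} hmn => ?_
      have := coeff_mem_pow _ _ (hf (Nat.add_le_add_right hmn i)) i
      simpa using this
    choose L hL using h1
    refine ⟨mk L, fun n => mem_pow_of_coeff _ _ fun i => ?_⟩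
    rw [map_sub, coeff_mk]
    rcases le_total i n with h | h
    · have := hL i (n - i)
      rwa [Nat.sub_add_cancel h] at this
    · simp [Nat.sub_eq_zero_of_le h]

end ps

lemma ps_lift {A S : Type*} [CommRing A] [CommRing S] (I : Ideal S) [hS : IsAdicComplete I S]
    (φ : A →+* S) (y : S) (hy : y ∈ I) : ∃ Φ : A⟦X⟧ →+* S, (∀ a, Φ (C a) = φ a) ∧ Φ X = y := by
  letI : UniformSpace A := ⊥
  haveI : DiscreteTopology A := ⟨rfl⟩
  haveI : IsUniformAddGroup A := inferInstance
  letI : WithIdeal S := ⟨I⟩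
  have hI : IsAdic I := rfl
  obtain ⟨_, _⟩ := hI.isAdicComplete_iff.1 hS
  have hφ : Continuous φ := continuous_of_discreteTopology
  have hye : HasEval y := by
    rw [HasEval, IsTopologicallyNilpotent, hI.hasBasis_nhds_zero.tendsto_right_iff]
    intro n _
    filter_upwards [Filter.eventually_ge_atTop n] with m hm
    exact Ideal.pow_le_pow_right hm (Ideal.pow_mem_pow hy m)
  haveI : IsLinearTopology S S := inferInstance
  refine ⟨eval₂Hom hφ hye, fun a => ?_, ?_⟩
  · rw [coe_eval₂Hom, eval₂_C]
  · rw [coe_eval₂Hom, eval₂_X]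

/-- The ring `A` of power series in `e` variables over `V`, with its maps to complete local rings. -/
theorem exists_A (V : Type u) [CommRing V] [IsDomain V] [IsNoetherianRing V] [IsLocalRing V]
    [IsAdicComplete (maximalIdeal V) V] (c : ℕ) (hV : RG c V) : ∀ e : ℕ,
    ∃ (A : Type u) (_ : CommRing A) (_ : IsDomain A) (_ : IsNoetherianRing A) (_ : IsLocalRing A),
      IsAdicComplete (maximalIdeal A) A ∧ RG (c + e) A ∧
      ∀ (S : Type u) [CommRing S] [IsLocalRing S] [IsAdicComplete (maximalIdeal S) S] (v : V →+* S)
        (hv : (maximalIdeal V).map v ≤ maximalIdeal S) (y : Fin e → S) (hy : ∀ i, y i ∈ maximalIdeal S),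
        ∃ φ : A →+* S, (∀ a, ∃ b, φ b = v a) ∧ (maximalIdeal A).map φ ≤ maximalIdeal S ∧
          (maximalIdeal V).map v ⊔ Ideal.span (Set.range y) ≤ (maximalIdeal A).map φ
  | 0 => ⟨V, _, ‹_›, ‹_›, ‹_›, ‹_›, hV, fun S _ _ _ v hv y hy => ⟨v, fun a => ⟨a, rfl⟩, hv, by simp⟩⟩
  | e + 1 => by
    obtain ⟨A, _, _, _, _, _, hA, h⟩ := exists_A V c hV e
    refine ⟨A⟦X⟧, inferInstance, inferInstance, inferInstance, inferInstance, inferInstance,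
      hA.powerSeries, fun S _ _ _ v hv y hy => ?_⟩
    obtain ⟨φ, h1, h2, h3⟩ := h S v hv (fun i => y i.castSucc) fun i => hy _
    obtain ⟨Φ, hC, hX⟩ := ps_lift (maximalIdeal S) φ (y (Fin.last e)) (hy _)
    refine ⟨Φ, fun a => ?_, ?_, ?_⟩
    · obtain ⟨b, hb⟩ := h1 a
      exact ⟨C b, by rw [hC, hb]⟩
    · rw [Ideal.map_le_iff_le_comap]
      intro f hf
      rw [Ideal.mem_comap, eq_X_mul_shift_add_const f, map_add, map_mul, hX, hC]
      exact Ideal.add_mem _ (Ideal.mul_mem_right _ _ (hy _))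
        (h2 (Ideal.mem_map_of_mem _ ((mem_max_ps f).1 hf)))
    · have h4 : (maximalIdeal A).map φ ≤ (maximalIdeal A⟦X⟧).map Φ := Ideal.map_le_iff_le_comap.2
        fun a ha => by
          rw [Ideal.mem_comap, ← hC]
          exact Ideal.mem_map_of_mem _ ((mem_max_ps _).2 (by simpa using ha))
      refine sup_le (le_sup_left.trans (h3.trans h4)) (Ideal.span_le.2 ?_)
      rintro _ ⟨i, rfl⟩
      induction i using Fin.lastCases with
      | last =>
        rw [← hX]
        exact Ideal.mem_map_of_mem _ ((mem_max_ps _).2 (by simp))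
      | cast i => exact h4 (h3 (Ideal.mem_sup_right (Ideal.subset_span ⟨i, rfl⟩)))
end UBS

namespace UBS

/-! ### Finiteness over complete rings and parameters -/
open IsLocalRing

lemma prec_of_surj {A M N : Type*} [CommRing A] (I : Ideal A) [AddCommGroup M] [Module A M] [AddCommGroup N] [Module A N]
    [IsPrecomplete I M] (f : M →ₗ[A] N) (hf : Function.Surjective f) : IsPrecomplete I N := by
  rw [← AdicCompletion.of_surjective_iff]
  intro y
  obtain ⟨x', rfl⟩ := AdicCompletion.map_surjective_of_mkQ_comp_surjective (I := I) (f := f)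
    ((Submodule.mkQ_surjective _).comp hf) y
  obtain ⟨x, rfl⟩ := AdicCompletion.of_surjective I M x'
  exact ⟨f x, rfl⟩

lemma prec_pi {A : Type*} [CommRing A] (I : Ideal A) [IsPrecomplete I A] (n : ℕ) : IsPrecomplete I (Fin n → A) := by
  rw [← AdicCompletion.of_surjective_iff]
  intro y
  have h : ∀ i, ∃ z : A, AdicCompletion.of I A z = AdicCompletion.piEquivFin I n y i := fun i =>
    AdicCompletion.of_surjective I A _
  choose z hz using h
  refine ⟨z, (AdicCompletion.piEquivFin I n).injective (funext fun i => ?_)⟩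
  rw [← hz, AdicCompletion.piEquivFin_apply]
  rfl

lemma complete_quotient {S : Type*} [CommRing S] [IsLocalRing S] [IsNoetherianRing S] [IsAdicComplete (maximalIdeal S) S]
    (P : Ideal S) [IsLocalRing (S ⧸ P)] : IsAdicComplete (maximalIdeal (S ⧸ P)) (S ⧸ P) := by
  have h1 : IsPrecomplete (maximalIdeal S) (S ⧸ P) :=
    prec_of_surj (maximalIdeal S) P.mkQ (Submodule.mkQ_surjective _)
  have h2 : (maximalIdeal S).map (algebraMap S (S ⧸ P)) = maximalIdeal (S ⧸ P) :=
    map_maximalIdeal_of_surjective _ Ideal.Quotient.mk_surjective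
  rw [← IsPrecomplete.map_algebraMap_iff (S := S ⧸ P), h2] at h1
  exact { }

section nak
variable {A D : Type*} [CommRing A] [CommRing D] [IsLocalRing A] [IsLocalRing D] [Algebra A D]

lemma exists_fin_sup (hm : (maximalIdeal D).FG) (hr : ∀ s : D, ∃ b : A, s - algebraMap A D b ∈ maximalIdeal D)
    (n : ℕ) : ∃ P : Submodule A D, P.FG ∧ P ⊔ (maximalIdeal D ^ n).restrictScalars A = ⊤ := by
  induction n with
  | zero => exact ⟨⊥, Submodule.fg_bot, by rw [pow_zero, bot_sup_eq, Ideal.one_eq_top]; rfl⟩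
  | succ n ih =>
    obtain ⟨P, hP, h⟩ := ih
    obtain ⟨G, hG⟩ := hm.pow (n := n)
    refine ⟨P ⊔ Submodule.span A (G : Set D), hP.sup ⟨G, rfl⟩, ?_⟩
    rw [eq_top_iff, ← h, sup_assoc]
    refine sup_le_sup_left (fun x hx => ?_) _
    replace hx : x ∈ Ideal.span (G : Set D) := by rw [hG]; exact hx
    suffices h' : x ∈ Submodule.span A (G : Set D) ⊔ (maximalIdeal D ^ (n + 1)).restrictScalars A from h'
    induction hx using Submodule.span_induction with
    | mem x hx => exact Submodule.mem_sup_left (Submodule.subset_span hx)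
    | zero => exact Submodule.zero_mem _
    | add x y _ _ hx hy => exact Submodule.add_mem _ hx hy
    | smul a x hx ih =>
      obtain ⟨b, hb⟩ := hr a
      have e : a • x = b • x + (a - algebraMap A D b) * x := by rw [Algebra.smul_def b x, smul_eq_mul]; ring
      rw [e]
      refine Submodule.add_mem _ (Submodule.smul_mem _ _ ih) (Submodule.mem_sup_right ?_)
      rw [Submodule.restrictScalars_mem, pow_succ']
      exact Ideal.mul_mem_mul hb (hG ▸ hx)

/-- Complete Nakayama lemma. -/
theorem finite_of_complete [IsNoetherianRing D] [IsAdicComplete (maximalIdeal A) A]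
    (hle : (maximalIdeal A).map (algebraMap A D) ≤ maximalIdeal D)
    (hr : ∀ s : D, ∃ b : A, s - algebraMap A D b ∈ maximalIdeal D) {N : ℕ}
    (hN : maximalIdeal D ^ N ≤ (maximalIdeal A).map (algebraMap A D)) : Module.Finite A D := by
  obtain ⟨P, hP, h⟩ := exists_fin_sup (A := A) (D := D) (IsNoetherian.noetherian _) hr N
  obtain ⟨k, g, hg⟩ := Submodule.fg_iff_exists_fin_generating_family.1 hP
  have := prec_pi (maximalIdeal A) k
  haveI : IsHausdorff (maximalIdeal A) D := by
    rw [← IsHausdorff.map_algebraMap_iff (S := D)]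
    exact IsHausdorff.of_le_jacobson _ _ (hle.trans (maximalIdeal_le_jacobson _))
  refine Module.Finite.of_surjective (Fintype.linearCombination A g)
    (surjective_of_mkQ_comp_surjective (I := maximalIdeal A) fun y => ?_)
  obtain ⟨y, rfl⟩ := Submodule.mkQ_surjective _ y
  have hy : y ∈ P ⊔ (maximalIdeal D ^ N).restrictScalars A := h ▸ Submodule.mem_top
  obtain ⟨a, ha, b, hb, rfl⟩ := Submodule.mem_sup.1 hy
  rw [← hg, ← Fintype.range_linearCombination] at ha
  obtain ⟨c, rfl⟩ := ha
  refine ⟨c, ?_⟩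
  rw [LinearMap.comp_apply, Submodule.mkQ_apply, Submodule.mkQ_apply, eq_comm, Submodule.Quotient.eq, add_sub_cancel_left,
    Ideal.smul_top_eq_map]
  exact hN hb
end nak

lemma dim_le_of_integral {A D : Type*} [CommRing A] [CommRing D] [Algebra A D] [Algebra.IsIntegral A D] :
    ringKrullDim D ≤ ringKrullDim A :=
  Order.krullDim_le_of_strictMono (PrimeSpectrum.comap (algebraMap A D)) fun I J h =>
    Ideal.IsIntegral.comap_lt_comap (R := A) h

lemma exists_params (D : Type*) [CommRing D] [IsLocalRing D] [IsNoetherianRing D] :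
    ∃ (e : ℕ) (y : Fin e → D) (N : ℕ), (∀ i, y i ∈ maximalIdeal D) ∧ (e : WithBot ℕ∞) = ringKrullDim D ∧
      maximalIdeal D ^ N ≤ Ideal.span (Set.range y) := by
  obtain ⟨s, hs, hc⟩ := (maximalIdeal D).exists_finset_card_eq_height_of_isNoetherianRing
  have hr : Set.range (fun i => (s.equivFin.symm i : D)) = s := by
    ext x
    exact ⟨fun ⟨i, hi⟩ => hi ▸ (s.equivFin.symm i).2, fun hx => ⟨s.equivFin ⟨x, hx⟩, by simp⟩⟩
  obtain ⟨N, hN⟩ := Ideal.exists_pow_le_of_le_radical_of_fg (I := maximalIdeal D) (J := Ideal.span (s : Set D)) (by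
    rw [Ideal.radical_eq_sInf]
    refine le_sInf fun J ⟨hJ, hJp⟩ => hs.2 ⟨hJp, hJ⟩ (le_maximalIdeal hJp.ne_top)) (IsNoetherian.noetherian _)
  refine ⟨s.card, fun i => s.equivFin.symm i, N, fun i => ?_, ?_, ?_⟩
  · exact hs.1.2 (Ideal.subset_span (s.equivFin.symm i).2)
  · rw [← maximalIdeal_height_eq_ringKrullDim, ← hc]; rfl
  · rwa [hr]
end UBS

namespace UBS

/-! ### Complete local domains -/
open IsLocalRing

/-- The residue field has characteristic zero or is perfect of characteristic `p`. -/
def PerfRes (S : Type*) [CommRing S] [IsLocalRing S] : Prop :=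
  CharZero (ResidueField S) ∨
    ∃ p : ℕ, p.Prime ∧ (p : S) ∈ maximalIdeal S ∧ ∀ s : S, ∃ u : S, s - u ^ p ∈ maximalIdeal S

/-- `V` is a coefficient field (`c = 0`) or the ring of Witt vectors of the residue field (`c = 1`). -/
lemma exists_V (S : Type u) [CommRing S] [IsLocalRing S] [IsAdicComplete (maximalIdeal S) S] (h : PerfRes S) :
    ∃ (V : Type u) (_ : CommRing V) (_ : IsDomain V) (_ : IsNoetherianRing V) (_ : IsLocalRing V) (v : V →+* S) (c : ℕ),
      IsAdicComplete (maximalIdeal V) V ∧ RG c V ∧ (∀ s, ∃ a, s - v a ∈ maximalIdeal S) ∧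
      (maximalIdeal V).map v ≤ maximalIdeal S ∧
      (c = 0 ∨ c = 1 ∧ ∃ p : ℕ, p ≠ 0 ∧ (p : S) ∈ maximalIdeal S ∧ (p : S) ∈ (maximalIdeal V).map v) := by
  rcases h with h | ⟨p, hp, hpm, hperf⟩
  · obtain ⟨v, hv⟩ := exists_field_hom (S := S)
    have h0 : maximalIdeal (ResidueField S) = ⊥ := maximalIdeal_eq_bot
    refine ⟨ResidueField S, inferInstance, inferInstance, inferInstance, inferInstance, v, 0, ?_,
      Field.toIsField _, hv, by simp [h0], Or.inl rfl⟩
    rw [h0]; infer_instance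
  · haveI : Fact p.Prime := ⟨hp⟩
    haveI : CharP (ResidueField S) p := by
      rw [CharP.charP_iff_prime_eq_zero hp, ← map_natCast (residue S), residue_eq_zero_iff]
      exact hpm
    haveI : PerfectRing (ResidueField S) p := PerfectRing.ofSurjective _ _ fun x => by
      obtain ⟨s, rfl⟩ := residue_surjective x
      obtain ⟨u, hu⟩ := hperf s
      refine ⟨residue S u, ?_⟩
      rw [frobenius_def, ← map_pow, eq_comm, ← sub_eq_zero, ← map_sub, residue_eq_zero_iff]
      exact hu
    obtain ⟨v, hv⟩ := exists_witt_hom p hpm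
    have hmax : maximalIdeal (WittVector p (ResidueField S)) = Ideal.span {(p : WittVector p (ResidueField S))} :=
      (WittVector.irreducible p).maximalIdeal_eq
    refine ⟨WittVector p (ResidueField S), inferInstance, inferInstance, inferInstance, inferInstance, v, 1, ?_,
      ⟨p, mem_nonZeroDivisors_of_ne_zero (WittVector.irreducible p).ne_zero, (WittVector.irreducible p).not_isUnit, ?_⟩,
      hv, ?_, Or.inr ⟨rfl, p, hp.ne_zero, hpm, ?_⟩⟩
    · rw [hmax]; infer_instance
    · rw [← hmax]
      exact (Ideal.Quotient.maximal_ideal_iff_isField_quotient _).1 inferInstance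
    · rw [hmax, Ideal.map_span, Ideal.span_le, Set.image_singleton, Set.singleton_subset_iff, map_natCast]
      exact hpm
    · rw [hmax, ← map_natCast v]
      exact Ideal.mem_map_of_mem _ (Ideal.mem_span_singleton_self _)

lemma noeth_of_complete (S : Type u) [CommRing S] [IsLocalRing S] [hS : IsAdicComplete (maximalIdeal S) S] (h : PerfRes S)
    (hm : (maximalIdeal S).FG) : IsNoetherianRing S := by
  obtain ⟨V, _, _, _, _, v, c, _, hRG, hres, hle, -⟩ := exists_V S h
  obtain ⟨r, y, hy⟩ := Submodule.fg_iff_exists_fin_generating_family.1 hm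
  have hy : Ideal.span (Set.range y) = maximalIdeal S := hy
  obtain ⟨A, _, _, _, _, _, -, hA⟩ := exists_A V c hRG r
  obtain ⟨φ, h1, h2, h3⟩ := hA S v hle y fun i => hy ▸ Ideal.subset_span ⟨i, rfl⟩
  have h4 : (maximalIdeal A).map φ = maximalIdeal S := le_antisymm h2 (by rw [← hy]; exact le_sup_right.trans h3)
  haveI : IsHausdorff ((maximalIdeal A).map φ) S := by rw [h4]; infer_instance
  refine isNoetherianRing_of_surjective A S φ (surjective_of_mk_map_comp_surjective (I := maximalIdeal A) φ fun x => ?_)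
  obtain ⟨s, rfl⟩ := Ideal.Quotient.mk_surjective x
  obtain ⟨a, ha⟩ := hres s
  obtain ⟨b, hb⟩ := h1 a
  refine ⟨b, ?_⟩
  rw [RingHom.comp_apply, hb, eq_comm, Ideal.Quotient.eq, h4]
  exact ha

lemma exists_params_of_nonZeroDivisor {D : Type*} [CommRing D] [IsLocalRing D] [IsNoetherianRing D] (x : D)
    (hx : x ∈ nonZeroDivisors D) (hxm : x ∈ maximalIdeal D) :
    ∃ (e : ℕ) (y : Fin e → D) (N : ℕ), (∀ i, y i ∈ maximalIdeal D) ∧ ((1 + e : ℕ) : WithBot ℕ∞) ≤ ringKrullDim D ∧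
      maximalIdeal D ^ N ≤ Ideal.span {x} ⊔ Ideal.span (Set.range y) := by
  haveI : Nontrivial (D ⧸ Ideal.span {x}) := Ideal.Quotient.nontrivial_iff.2 fun h' =>
    hxm (Ideal.span_singleton_eq_top.1 h')
  haveI : IsLocalRing (D ⧸ Ideal.span {x}) := .of_surjective' _ Ideal.Quotient.mk_surjective
  obtain ⟨e, y, N, hy, he, hN⟩ := exists_params (D ⧸ Ideal.span {x})
  choose z hz using fun i => Ideal.Quotient.mk_surjective (y i)
  refine ⟨e, z, N, fun i => ?_, ?_, ?_⟩
  · intro hu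
    exact hy i (hz i ▸ hu.map _)
  · refine le_trans ?_ (ringKrullDim_quotient_succ_le_of_nonZeroDivisor hx)
    rw [← he, add_comm]; norm_cast
  · have h1 : Ideal.span (Set.range y) = (Ideal.span (Set.range z)).map (Ideal.Quotient.mk (Ideal.span {x})) := by
      rw [Ideal.map_span, ← Set.range_comp]
      congr 2; ext i; exact (hz i).symm
    have h2 : maximalIdeal (D ⧸ Ideal.span {x}) = (maximalIdeal D).map (Ideal.Quotient.mk (Ideal.span {x})) :=
      (map_maximalIdeal_of_surjective _ Ideal.Quotient.mk_surjective).symm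
    rw [h1, h2, ← Ideal.map_pow, Ideal.map_le_iff_le_comap, Ideal.comap_map_of_surjective _ Ideal.Quotient.mk_surjective,
      ← RingHom.ker_eq_comap_bot, Ideal.mk_ker, sup_comm] at hN
    exact hN

theorem gen_charZero (D : Type u) [CommRing D] [IsDomain D] [IsLocalRing D] [IsNoetherianRing D]
    [IsAdicComplete (maximalIdeal D) D] [CharZero D] (h : PerfRes D) : GEN D := by
  obtain ⟨V, _, _, _, _, v, c, _, hRG, hres, hle, hc⟩ := exists_V D h
  obtain ⟨e, y, N, hy, he, hN⟩ : ∃ (e : ℕ) (y : Fin e → D) (N : ℕ), (∀ i, y i ∈ maximalIdeal D) ∧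
      ((c + e : ℕ) : WithBot ℕ∞) ≤ ringKrullDim D ∧
      maximalIdeal D ^ N ≤ (maximalIdeal V).map v ⊔ Ideal.span (Set.range y) := by
    rcases hc with rfl | ⟨rfl, p, hp0, hpm, hpv⟩
    · obtain ⟨e, y, N, hy, he, hN⟩ := exists_params D
      exact ⟨e, y, N, hy, by rw [zero_add, he], hN.trans le_sup_right⟩
    · obtain ⟨e, y, N, hy, he, hN⟩ := exists_params_of_nonZeroDivisor (p : D)
        (mem_nonZeroDivisors_of_ne_zero (Nat.cast_ne_zero.2 hp0)) hpm
      refine ⟨e, y, N, hy, he, hN.trans (sup_le_sup_right ?_ _)⟩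
      rw [Ideal.span_le, Set.singleton_subset_iff]; exact hpv
  obtain ⟨A, _, _, _, _, _, hA, hφ⟩ := exists_A V c hRG e
  obtain ⟨φ, h1, h2, h3⟩ := hφ D v hle y hy
  letI := φ.toAlgebra
  haveI : Module.Finite A D := finite_of_complete h2 (fun s => by
    obtain ⟨a, ha⟩ := hres s
    obtain ⟨b, hb⟩ := h1 a
    exact ⟨b, by rwa [RingHom.algebraMap_toAlgebra, hb]⟩) (hN.trans h3)
  have hinj : Function.Injective φ := by
    rw [injective_iff_map_eq_zero]
    intro x hx
    by_contra hx0
    letI : Algebra (A ⧸ Ideal.span {x}) D := (Ideal.Quotient.lift (Ideal.span {x}) φ (by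
      intro a ha
      obtain ⟨b, rfl⟩ := Ideal.mem_span_singleton'.1 ha
      rw [map_mul, hx, mul_zero])).toAlgebra
    haveI : IsScalarTower A (A ⧸ Ideal.span {x}) D := .of_algebraMap_eq fun a => rfl
    haveI : Algebra.IsIntegral (A ⧸ Ideal.span {x}) D := .tower_top (R := A)
    have h5 := dim_le_of_integral (A := A ⧸ Ideal.span {x}) (D := D)
    have h6 := ringKrullDim_quotient_succ_le_of_nonZeroDivisor (mem_nonZeroDivisors_of_ne_zero hx0)
    have h7 := (RG.dim_le _ hA).trans (he.trans h5)
    have h8 : ((c + e : ℕ) : WithBot ℕ∞) + 1 ≤ ((c + e : ℕ) : WithBot ℕ∞) :=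
      (add_le_add_left (he.trans h5) 1).trans (h6.trans (RG.dim_le _ hA))
    have h9 : c + e + 1 ≤ c + e := by exact_mod_cast h8
    omega
  haveI : FaithfulSMul A D := (faithfulSMul_iff_algebraMap_injective A D).2 hinj
  haveI : CharZero A := φ.charZero
  exact GEN.of_finite_over (A := A) (RG.gd _ A hA)

theorem gen_charP (D : Type u) [CommRing D] [IsDomain D] [IsLocalRing D] [IsNoetherianRing D]
    [IsAdicComplete (maximalIdeal D) D] (p : ℕ) [Fact p.Prime] [CharP D p]
    (h : ∀ s : D, ∃ u : D, s - u ^ p ∈ maximalIdeal D) : GEN D := by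
  have hp : p ≠ 0 := (Fact.out : p.Prime).ne_zero
  obtain ⟨e, y, N, hy, he, hN⟩ := exists_params D
  have h1 : (maximalIdeal D).map (frobenius D p) ≤ maximalIdeal D := Ideal.map_le_iff_le_comap.2 fun x hx =>
    Ideal.pow_mem_of_mem _ hx p (Nat.pos_of_ne_zero hp)
  obtain ⟨N, hN⟩ := Ideal.exists_pow_le_of_le_radical_of_fg (I := maximalIdeal D)
    (J := (maximalIdeal D).map (frobenius D p)) (fun x hx => ⟨p, Ideal.mem_map_of_mem (frobenius D p) hx⟩)
    (IsNoetherian.noetherian _)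
  have hf : (frobenius D p).Finite := by
    letI := (frobenius D p).toAlgebra
    exact finite_of_complete (A := D) (D := D) h1 h hN
  refine GEN.of_frob (frobenius D p) hf (fun x => rfl) (e + 1) (height_lt_of_dim he.ge)
end UBS

namespace UBS

/-! ### Local rings -/
open IsLocalRing

lemma PerfRes.quotient {S : Type*} [CommRing S] [IsLocalRing S] (h : PerfRes S) (P : Ideal S) [IsLocalRing (S ⧸ P)] :
    PerfRes (S ⧸ P) := by
  have hmap : ∀ s ∈ maximalIdeal S, Ideal.Quotient.mk P s ∈ maximalIdeal (S ⧸ P) := fun s hs => by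
    rw [← map_maximalIdeal_of_surjective (Ideal.Quotient.mk P) Ideal.Quotient.mk_surjective]
    exact Ideal.mem_map_of_mem _ hs
  rcases h with h | ⟨p, hp, hpm, hperf⟩
  · haveI : IsLocalHom (Ideal.Quotient.mk P) := .of_surjective _ Ideal.Quotient.mk_surjective
    exact Or.inl (charZero_of_injective_ringHom (ResidueField.map (Ideal.Quotient.mk P)).injective)
  · refine Or.inr ⟨p, hp, by simpa using hmap _ hpm, fun s => ?_⟩
    obtain ⟨s, rfl⟩ := Ideal.Quotient.mk_surjective s
    obtain ⟨u, hu⟩ := hperf s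
    exact ⟨Ideal.Quotient.mk P u, by simpa using hmap _ hu⟩

theorem intDimBound_of_complete (S : Type u) [CommRing S] [IsLocalRing S] [IsAdicComplete (maximalIdeal S) S]
    (h : PerfRes S) (hm : (maximalIdeal S).FG) : ∃ k, IntDimBound S k := by
  haveI := noeth_of_complete S h hm
  refine intDimBound_of_gen fun P hP => ?_
  haveI : IsLocalRing (S ⧸ P) := .of_surjective' _ Ideal.Quotient.mk_surjective
  haveI := complete_quotient P
  have hD := h.quotient P
  rcases CharP.exists' (S ⧸ P) with h0 | ⟨q, hq, hc⟩
  · exact gen_charZero (S ⧸ P) hD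
  · refine gen_charP (S ⧸ P) q ?_
    have hq0 : (q : S ⧸ P) = 0 := CharP.cast_eq_zero _ q
    rcases hD with h | ⟨p, hp, hpm, hperf⟩
    · have : (q : ResidueField (S ⧸ P)) = 0 := by rw [← map_natCast (residue (S ⧸ P)), hq0, map_zero]
      exact absurd (Nat.cast_eq_zero.1 this) hq.out.ne_zero
    · obtain rfl : p = q := by
        by_contra hpq
        have h1 : Nat.Coprime p q := (Nat.coprime_primes hp hq.out).2 hpq
        have h2 : IsCoprime (p : S ⧸ P) (q : S ⧸ P) := by
          simpa using (Nat.isCoprime_iff_coprime.2 h1).map (Int.castRingHom (S ⧸ P))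
        rw [hq0, isCoprime_zero_right] at h2
        exact hpm h2
      exact hperf

theorem intDimBound_of_local (L : Type u) [CommRing L] [IsNoetherianRing L] [IsLocalRing L] :
    ∃ k, IntDimBound L k := by
  rcases CharP.exists' (ResidueField L) with h0 | ⟨p, hp, hc⟩
  · obtain ⟨S, _, _, ψ, g, hfg, _, hψ, -, -⟩ := exists_completion (RingHom.id L) (fun I => by simp)
      (by rw [Ideal.map_id]; infer_instance)
    have hS : PerfRes S := Or.inl (charZero_of_inj_zero fun n hn => by
      by_contra hn0
      have h1 : IsUnit (n : L) := by
        by_contra h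
        have h2 := (residue_eq_zero_iff (n : L)).2 h
        rw [map_natCast] at h2
        exact hn0 (Nat.cast_eq_zero.1 h2)
      have h3 := h1.map ψ
      rw [map_natCast] at h3
      rw [← map_natCast (residue S), residue_eq_zero_iff] at hn
      exact hn h3)
    obtain ⟨k, hk⟩ := intDimBound_of_complete S hS hfg
    exact ⟨k, intDimBound_of_contract ψ hψ hk⟩
  · have hpm : (p : L) ∈ maximalIdeal L := by
      rw [← residue_eq_zero_iff, map_natCast]; exact CharP.cast_eq_zero _ p
    obtain ⟨T, _, φ, h1, h2, h3⟩ := exists_T p hpm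
    obtain ⟨S, _, _, ψ, g, hfg, _, hψ, h4, h5⟩ := exists_completion φ h1 h2
    have hS : PerfRes S := Or.inr ⟨p, hp.out, by simpa using h5 _ (Ideal.mem_map_of_mem φ hpm), fun s => by
      obtain ⟨t, ht⟩ := h4 s
      obtain ⟨u, hu⟩ := h3 t
      refine ⟨g u, ?_⟩
      have := Ideal.add_mem _ ht (h5 _ hu)
      rwa [map_sub, map_pow, sub_add_sub_cancel] at this⟩
    obtain ⟨k, hk⟩ := intDimBound_of_complete S hS hfg
    exact ⟨k, intDimBound_of_contract ψ hψ hk⟩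
end UBS

/-- Let `R` be a commutative noetherian ring of finite Krull dimension such that (i) `R` is
essentially of finite type over a noetherian local ring, or (ii) `R` has prime characteristic
`p` and is module-finite over `R^p`, or (iii) `R` is essentially of finite type over `ℤ`.
Then `i(R) < ∞`: there exists `k ≥ 0` with `\overline J ^ n ⊆ J ^ (n - k)` for every ideal
`J` of `R` and every `n ≥ k`. -/
theorem intDimBound_exists_of_conditions {R : Type u} [CommRing R] [IsNoetherianRing R]
    (hdim : ∃ d : ℕ, ringKrullDim R ≤ d)
    (hcond : IsEssentiallyOfFiniteTypeOverLocalRing R ∨ ModuleFiniteOverPthPowers R ∨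
      IsEssentiallyOfFiniteTypeOverInt R) :
    ∃ k : ℕ, IntDimBound R k := by
  obtain ⟨d, hd⟩ := hdim
  rcases hcond with h | h | h
  · exact UBS.intDimBound_of_essLocal (fun L => UBS.intDimBound_of_local L) h
  · exact UBS.intDimBound_of_pth hd h
  · exact UBS.intDimBound_of_essInt (fun L => UBS.intDimBound_of_local L) h
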